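/- Let p ≥ 11 be a prime, let ℤ_(p) ⊂ ℚ be the localization of ℤ at p, and let Γ₀ := {(a b; c d) ∈ SL₂(ℤ_(p)) : c ∈ pℤ_(p)}. Then the map H₂(Γ₀, ℤ[1/2]) → H₂(SL₂(ℤ_(p)), ℤ[1/2]) induced by inclusion is surjective, and its kernel is isomorphic to P(𝔽_p)[1/2]/⟨c_{𝔽_p}⟩ if p ≡ 2 (mod 3), and to P(𝔽_p)[1/2] if p ≢ 2 (mod 3). -/

import Mathlib

/-!
Write `A` for `ℤ_(p)`, `k` for `𝔽_p` and `κ` for `ℤ[1/2]`. Homology is studied through its dual: the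
character module `I` of `κ` is divisible, has no `2`-torsion and cogenerates the `κ`-modules, and
`I`-valued functionals on `H₂(G, κ)` are the classes of `I`-valued `2`-cocycles on `G` (`exists_lam`,
`lam_eq_zero_iff`, `char_separate`), that is, of central extensions of `G` by `I`.

*Central extensions of `Γ₀`.* Every element of `Γ₀` is uniquely `y(b) h(u) x(a)` with `b ∈ 𝔪`. In a
central extension the one-parameter groups `x` and `y` lift canonically (`CExt.exists_lift`), and the
extension is then determined by an alternating form `η` on `Aˣ` (the commutator form of the torus is
`2η`) and a function `Ψ(a, b)` measuring the failure of the commutation relation between `x` and `y`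
(`exists_GLift`, `GLift.exists_factor`). The associative law turns into functional equations `PsiEq`;
their solution (`PsiEq.solve`) says that `η(u, 1 - u)` depends only on `u` modulo `p` and that `Ψ` is
determined by `η` up to a function `ε` of square classes. Conversely all such pairs `(η, ε)` are
realized: the function of triples of vectors `η(x,y) + η(y,z) + η(z,x) + ε(xyz)` of their three
determinants has the coboundary property that produces a cocycle on `Γ₀`, and on all of `SL₂(A)` if
`η(u, 1 - u) = 0` (`GPos`, `exists_coc_of_alt`, `exists_coc_ext`).

*Comparison with `SL₂`.* A cocycle on `SL₂(A)` has a commutator form satisfying the Steinberg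
relation `η(u, 1 - u) = 0` (`om_SL2`), and it is a coboundary as soon as its restriction to `Γ₀` is
one, because the splitting over `Γ₀` extends along `SL₂ = Γ₀ ∪ Γ₀ w U` (`isCob_of_res`). The latter
dualizes to surjectivity of `H₂(Γ₀) → H₂(SL₂)`. The former, with `exists_coc_ext`, shows that the kernel
is generated by the torus classes `u ∧ (1 - u)`; these depend only on `u` modulo `p` and satisfy the
five-term relation, so they define a map `xi` from `P(k)[1/2]` onto the kernel (`range_xi`). It
kills `c_k` because `u ∧ (1 - u)` is antisymmetric under `u ↦ 1 - u`.

*The kernel of `xi`.* A functional `χ` on `P(k)[1/2]` killing `c_k` is pulled back to a function `D` on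
`ℚ` along the place `ℚ → k ∪ {∞}`; `D` satisfies the functional equations of the Bloch-Wigner
dilogarithm. The arithmetic heart is `IsBloch.exists_alt`: each such `D` is `r ↦ Φ(r, 1 - r)` for an
alternating form `Φ` on `ℚˣ`. This is an induction over the primes `q`: subtracting a form supported
at `q` makes `D` vanish on relations between integers up to `q` (`VanishBelow`), where Thue's lemma
and the five-term relation give the additivity needed to find that form. The restriction of `Φ` to
`Aˣ` is then the commutator form of a cocycle on `Γ₀` inducing `χ` (`exists_coc_char`), so the kernel
of `xi` is exactly `⟨c_k⟩`. Finally, if `p ≡ 1 (mod 3)` there is a primitive sixth root of unity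
`ζ ∈ k`, and `c_k = [ζ] + [ζ⁻¹] = 0` (`pC_eq_bot`).
-/

noncomputable section

/-- The group of square classes `R^× / (R^×)²`, denoted `G_R`. -/
def SqCl (R : Type*) [CommRing R] : Type _ :=
  Rˣ ⧸ (powMonoidHom 2 : Rˣ →* Rˣ).range

instance (R : Type*) [CommRing R] : CommGroup (SqCl R) :=
  QuotientGroup.Quotient.commGroup _

/-- The class of a unit in the group of square classes. -/
def sqc {R : Type*} [CommRing R] (u : Rˣ) : SqCl R := QuotientGroup.mk u

/-- The group ring `κ[G_R]` of square classes, denoted `R_R` in the paper (for `κ = ℤ`;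
for `κ = ℤ[1/2]` it is `R_R[1/2]`). -/
abbrev GRing (κ : Type*) [CommRing κ] (R : Type*) [CommRing R] : Type _ :=
  MonoidAlgebra κ (SqCl R)

/-- `⟨u⟩`, the square class of a unit `u` viewed in the group ring. -/
def gcl (κ : Type*) [CommRing κ] {R : Type*} [CommRing R] (u : Rˣ) : GRing κ R :=
  MonoidAlgebra.of κ (SqCl R) (sqc u)

/-- `⟨⟨u⟩⟩ := ⟨u⟩ - 1`. -/
def gcc (κ : Type*) [CommRing κ] {R : Type*} [CommRing R] (u : Rˣ) : GRing κ R :=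
  gcl κ u - 1

/-- The augmentation ideal `I_R`, generated by the elements `g - 1`, `g ∈ G_R`. -/
def augId (κ : Type*) [CommRing κ] (R : Type*) [CommRing R] : Ideal (GRing κ R) :=
  Ideal.span (Set.range fun g : SqCl R => (MonoidAlgebra.of κ (SqCl R) g - 1))

/-- `p₋₁⁺ := ⟨-1⟩ + 1`. -/
def pminus (κ : Type*) [CommRing κ] (R : Type*) [CommRing R] : GRing κ R :=
  gcl κ (-1 : Rˣ) + 1

/-- `W_R = {a ∈ R^× : 1 - a ∈ R^×}`. -/
def WU (R : Type*) [CommRing R] : Type _ := {a : Rˣ // IsUnit ((1 : R) - (a : R))}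

namespace WU

variable {R : Type*} [CommRing R]

instance : CoeHead (WU R) Rˣ := ⟨Subtype.val⟩

/-- `1 - a` as a unit, for `a ∈ W_R`. -/
def usub (a : WU R) : Rˣ := a.2.unit

@[simp] lemma usub_coe (a : WU R) : ((usub a : Rˣ) : R) = 1 - ((a : Rˣ) : R) := a.2.unit_spec

/-- `a - 1` as a unit, for `a ∈ W_R`. -/
def usub' (a : WU R) : Rˣ := -usub a

/-- `a⁻¹ - 1` as a unit, for `a ∈ W_R`. -/
def uinvsub (a : WU R) : Rˣ := (a : Rˣ)⁻¹ * usub a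

/-- `1 - a ∈ W_R` when `a ∈ W_R`. -/
def oneSub (a : WU R) : WU R :=
  ⟨usub a, by rw [usub_coe, sub_sub_cancel]; exact (a : Rˣ).isUnit⟩

/-- `a⁻¹ ∈ W_R` when `a ∈ W_R`. -/
def winv (a : WU R) : WU R := by
  refine ⟨(a : Rˣ)⁻¹, ?_⟩
  have h : (((((a : Rˣ)⁻¹ * (-usub a)) : Rˣ)) : R) = 1 - (((a : Rˣ)⁻¹ : Rˣ) : R) := by
    have h1 := Units.inv_mul (a : Rˣ)
    push_cast [usub_coe]
    linear_combination h1
  rw [← h]; exact Units.isUnit _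

/-- The image of an element of `W_A` under a ring homomorphism `A → B` carrying units to
units, as an element of `W_B`. -/
def mapRH {A B : Type*} [CommRing A] [CommRing B] (f : A →+* B) (a : WU A) : WU B :=
  ⟨Units.map (f : A →* B) (a : Aˣ), by
    have h := a.2.map f
    rw [map_sub, map_one] at h
    simpa using h⟩

end WU

/-- The free `R_R`-module on the symbols `[a]`, `a ∈ W_R`. -/
abbrev preRP (κ : Type*) [CommRing κ] (R : Type*) [CommRing R] : Type _ :=
  WU R →₀ GRing κ R

/-- The basis element `[a]` of the free module. -/
def pregen (κ : Type*) [CommRing κ] {R : Type*} [CommRing R] (a : WU R) : preRP κ R :=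
  Finsupp.single a 1

/-- The set of defining relations of `RP(R)`:  the elements
`[a] - [b] + ⟨a⟩[b/a] - ⟨a⁻¹-1⟩[(1-a⁻¹)/(1-b⁻¹)] - ⟨1-a⟩[(1-a)/(1-b)]`
whenever `a, b, a/b ∈ W_R` (here `c = b/a`, `d = (1-a⁻¹)/(1-b⁻¹)`, `e = (1-a)/(1-b)`). -/
def RPrel (κ : Type*) [CommRing κ] (R : Type*) [CommRing R] : Set (preRP κ R) :=
  { x | ∃ a b c d e : WU R,
      ((c : Rˣ) : R) * ((a : Rˣ) : R) = ((b : Rˣ) : R) ∧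
      ((d : Rˣ) : R) * (1 - (((b : Rˣ)⁻¹ : Rˣ) : R)) = 1 - (((a : Rˣ)⁻¹ : Rˣ) : R) ∧
      ((e : Rˣ) : R) * (1 - ((b : Rˣ) : R)) = 1 - ((a : Rˣ) : R) ∧
      x = pregen κ a - pregen κ b + gcl κ (a : Rˣ) • pregen κ c
          - gcl κ (WU.uinvsub a) • pregen κ d - gcl κ (WU.usub a) • pregen κ e }

/-- The submodule of relations. -/
def RPsub (κ : Type*) [CommRing κ] (R : Type*) [CommRing R] :
    Submodule (GRing κ R) (preRP κ R) :=
  Submodule.span (GRing κ R) (RPrel κ R)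

/-- The refined pre-Bloch group (refined scissors congruence group) `RP(R)`,
as a module over the group ring `R_R`. -/
abbrev RP (κ : Type*) [CommRing κ] (R : Type*) [CommRing R] : Type _ :=
  preRP κ R ⧸ RPsub κ R

/-- The generator `[a]` of `RP(R)`. -/
def rp (κ : Type*) [CommRing κ] {R : Type*} [CommRing R] (a : WU R) : RP κ R :=
  Submodule.Quotient.mk (pregen κ a)

/-- The map `λ₁ : [a] ↦ ⟨⟨a⟩⟩⟨⟨1-a⟩⟩`, defined on the free module. -/
def lamOne (κ : Type*) [CommRing κ] (R : Type*) [CommRing R] :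
    preRP κ R →ₗ[GRing κ R] GRing κ R :=
  Finsupp.linearCombination (GRing κ R)
    (fun a => gcc κ (a : Rˣ) * gcc κ (WU.usub a))

/-- The refined scissors congruence group `RP₁(R) = ker λ₁`, as a submodule of `RP(R)`. -/
def RP1 (κ : Type*) [CommRing κ] (R : Type*) [CommRing R] : Submodule (GRing κ R) (RP κ R) :=
  Submodule.map (RPsub κ R).mkQ (LinearMap.ker (lamOne κ R))

/-- `ψ₁(a) = [a] + ⟨-1⟩[a⁻¹]` for `a ∈ W_R`. -/
def psiOne (κ : Type*) [CommRing κ] {R : Type*} [CommRing R] (a : WU R) : RP κ R :=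
  rp κ a + gcl κ (-1 : Rˣ) • rp κ (WU.winv a)

/-- The submodule `K_R^{(1)}` generated by the elements `ψ₁(a)`, `a ∈ R^×`
(equivalently, by the `ψ₁(a)`, `a ∈ W_R`). -/
def Kpsi (κ : Type*) [CommRing κ] (R : Type*) [CommRing R] : Submodule (GRing κ R) (RP κ R) :=
  Submodule.span (GRing κ R) { x | ∃ a : WU R, x = psiOne κ a }

/-- `\widetilde{RP}(R) := RP(R)/K_R^{(1)}`. -/
abbrev RPt (κ : Type*) [CommRing κ] (R : Type*) [CommRing R] : Type _ :=
  RP κ R ⧸ Kpsi κ R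

/-- The generator `[a]` of `\widetilde{RP}(R)`. -/
def rpt (κ : Type*) [CommRing κ] {R : Type*} [CommRing R] (a : WU R) : RPt κ R :=
  Submodule.Quotient.mk (rp κ a)

/-- The ideal `p₋₁⁺ I_R` of the group ring. -/
def pIdeal (κ : Type*) [CommRing κ] (R : Type*) [CommRing R] : Ideal (GRing κ R) :=
  augId κ R * Ideal.span {pminus κ R}

/-- `\widetilde{RP}₁(R) = ker(λ̃₁ : \widetilde{RP}(R) → I_R²/p₋₁⁺I_R)` as a submodule
of `\widetilde{RP}(R)`. -/
def RPt1 (κ : Type*) [CommRing κ] (R : Type*) [CommRing R] :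
    Submodule (GRing κ R) (RPt κ R) :=
  Submodule.map ((Kpsi κ R).mkQ ∘ₗ (RPsub κ R).mkQ)
    (Submodule.comap (lamOne κ R) (pIdeal κ R))

/-- The expression `C_R(a) = [a] + ⟨-1⟩[1-a] + ⟨⟨1-a⟩⟩ψ₁(a)`;  the constant `C_R ∈ RP(R)` is
this element, for any (every) choice of `a ∈ W_R`. -/
def Cexpr (κ : Type*) [CommRing κ] {R : Type*} [CommRing R] (a : WU R) : RP κ R :=
  rp κ a + gcl κ (-1 : Rˣ) • rp κ (WU.oneSub a) + gcc κ (WU.usub a) • psiOne κ a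

/-- `ℤ[1/2]`, the localization of `ℤ` away from `2`. -/
abbrev Half : Type := Localization.Away (2 : ℤ)

/-- A field is *sufficiently large* if it is infinite, or finite with `p^d` elements
where `d(p-1) > 6`. -/
def SuffLarge (k : Type*) : Prop :=
  Infinite k ∨ ∃ p d : ℕ, p.Prime ∧ Nat.card k = p ^ d ∧ 6 < d * (p - 1)

/-- The map on square classes induced by a ring homomorphism. -/
def sqMapRH {A B : Type*} [CommRing A] [CommRing B] (f : A →+* B) : SqCl A →* SqCl B :=
  QuotientGroup.map _ _ (Units.map (f : A →* B))
    (by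
      rintro x ⟨y, rfl⟩
      exact ⟨Units.map (f : A →* B) y, by simp [powMonoidHom]⟩)

/-- For a module `M` over the group ring `κ[G_R]`, a group `G₀` mapping to `G_R` and a
character `χ : G₀ → {±1}`, this is the subgroup `R^χ M` generated by the elements
`g•m - χ(g)m`.  The quotient `M_χ = M/R^χM` is `M ⧸ chSub ...`. -/
def chSub (κ : Type*) [CommRing κ] {R : Type*} [CommRing R] {G₀ : Type*} [Group G₀]
    (t : G₀ →* SqCl R) (χ : G₀ →* ℤˣ)
    (M : Type*) [AddCommGroup M] [Module (GRing κ R) M] : Submodule ℤ M :=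
  Submodule.span ℤ
    {x | ∃ (g : G₀) (m : M),
      x = (MonoidAlgebra.of κ (SqCl R) (t g)) • m - ((χ g : ℤ) : ℤ) • m}

/-- The Steinberg ideal `⟨⟨⟨a⟩⟩⟨⟨1-a⟩⟩ : a ∈ W_R⟩` of the group ring. -/
def StRel (κ : Type*) [CommRing κ] (R : Type*) [CommRing R] : Ideal (GRing κ R) :=
  Ideal.span {x | ∃ a : WU R, x = gcc κ ((a : Rˣ)) * gcc κ (WU.usub a)}

/-- The Grothendieck–Witt ring `GW(R) = κ[G_R]/⟨⟨⟨a⟩⟩⟨⟨1-a⟩⟩⟩`. -/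
abbrev GWq (κ : Type*) [CommRing κ] (R : Type*) [CommRing R] : Type _ :=
  GRing κ R ⧸ StRel κ R

/-- The fundamental ideal `I(R)` of the Grothendieck–Witt ring. -/
def IfundGW (κ : Type*) [CommRing κ] (R : Type*) [CommRing R] : Ideal (GWq κ R) :=
  (augId κ R).map (Ideal.Quotient.mk (StRel κ R))

/-- The relations of the classical scissors congruence group `P(R)`:
`[a] - [b] + [b/a] - [(1-a⁻¹)/(1-b⁻¹)] + [(1-a)/(1-b)]`. -/
def PRel (κ : Type*) [CommRing κ] (R : Type*) [CommRing R] : Set (WU R →₀ κ) :=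
  { x | ∃ a b c d e : WU R,
      ((c : Rˣ) : R) * ((a : Rˣ) : R) = ((b : Rˣ) : R) ∧
      ((d : Rˣ) : R) * (1 - (((b : Rˣ)⁻¹ : Rˣ) : R)) = 1 - (((a : Rˣ)⁻¹ : Rˣ) : R) ∧
      ((e : Rˣ) : R) * (1 - ((b : Rˣ) : R)) = 1 - ((a : Rˣ) : R) ∧
      x = Finsupp.single a 1 - Finsupp.single b 1 + Finsupp.single c 1
          - Finsupp.single d 1 + Finsupp.single e 1 }

/-- The scissors congruence group (pre-Bloch group) `P(R)` of Dupont–Sah. -/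
abbrev Pgrp (κ : Type*) [CommRing κ] (R : Type*) [CommRing R] : Type _ :=
  (WU R →₀ κ) ⧸ Submodule.span κ (PRel κ R)

/-- The generator `[a]` of `P(R)`. -/
def pcl (κ : Type*) [CommRing κ] {R : Type*} [CommRing R] (a : WU R) : Pgrp κ R :=
  Submodule.Quotient.mk (Finsupp.single a 1)

/-- The subgroup `K_R` of `P(R)` generated by the elements `{a} = [a] + [a⁻¹]`. -/
def PKsub (κ : Type*) [CommRing κ] (R : Type*) [CommRing R] : Submodule κ (Pgrp κ R) :=
  Submodule.span κ {x | ∃ a : WU R, x = pcl κ a + pcl κ (WU.winv a)}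

/-- `\widetilde{P}(R) := P(R)/K_R`. -/
abbrev Ptld (κ : Type*) [CommRing κ] (R : Type*) [CommRing R] : Type _ :=
  Pgrp κ R ⧸ PKsub κ R

/-- The generator `[a]` of `\widetilde{P}(R)`. -/
def ptcl (κ : Type*) [CommRing κ] {R : Type*} [CommRing R] (a : WU R) : Ptld κ R :=
  Submodule.Quotient.mk (pcl κ a)

namespace GroupHomology

variable (κ : Type*) [CommRing κ] (G : Type*) [Group G]

/-- The group of `n`-chains of the (inhomogeneous) bar complex of `G` with coefficients
in `κ`: the free `κ`-module on `n`-tuples of elements of `G`. -/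
abbrev Ch (n : ℕ) : Type _ := (Fin n → G) →₀ κ

variable {G}

/-- The `i`-th face of an `(n+1)`-tuple (`0 ≤ i ≤ n+1`): drop the first entry (`i = 0`),
drop the last entry (`i = n+1`), or multiply two consecutive entries. -/
def face {n : ℕ} (i : ℕ) (g : Fin (n + 1) → G) : Fin n → G := fun m =>
  if ((m : ℕ) + 1 : ℕ) < i then g m.castSucc
  else if ((m : ℕ) + 1 : ℕ) = i then g m.castSucc * g m.succ
  else g m.succ

variable (G)

/-- The value of the bar differential on a basis element. -/
def dfun {n : ℕ} (g : Fin (n + 1) → G) : Ch κ G n :=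
  ∑ i ∈ Finset.range (n + 2), ((-1 : κ) ^ i) • Finsupp.single (face i g) (1 : κ)

/-- The differential of the bar complex. -/
def dd (n : ℕ) : Ch κ G (n + 1) →ₗ[κ] Ch κ G n :=
  Finsupp.linearCombination κ (dfun κ G)

/-- The cycles of the bar complex (`Z_0` is everything). -/
def cycles : (n : ℕ) → Submodule κ (Ch κ G n)
  | 0 => ⊤
  | (n + 1) => LinearMap.ker (dd κ G n)

/-- The quotient of `n`-chains by `n`-boundaries. -/
abbrev ChQ (n : ℕ) : Type _ := Ch κ G n ⧸ LinearMap.range (dd κ G n)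

/-- The `n`-th homology of `G` with coefficients in `κ`: cycles modulo boundaries,
realized as the image of the cycles in the quotient of chains by boundaries. -/
def Hsub (n : ℕ) : Submodule κ (ChQ κ G n) :=
  Submodule.map (LinearMap.range (dd κ G n)).mkQ (cycles κ G n)

/-- The `n`-th homology of `G` with coefficients in `κ`. -/
abbrev H (n : ℕ) : Type _ := ↥(Hsub κ G n)

/-- The homology class of a cycle. -/
def hcl {n : ℕ} (x : Ch κ G n) (hx : x ∈ cycles κ G n) : H κ G n :=
  ⟨Submodule.Quotient.mk x, Submodule.mem_map_of_mem hx⟩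

variable {G} {G' : Type*} [Group G']

/-- The chain map induced by a group homomorphism. -/
def chmap (f : G →* G') (n : ℕ) : Ch κ G n →ₗ[κ] Ch κ G' n :=
  Finsupp.lmapDomain κ κ (fun g => (f : G → G') ∘ g)

lemma face_comp (f : G →* G') {n : ℕ} (i : ℕ) (g : Fin (n + 1) → G) :
    face i ((f : G → G') ∘ g) = (f : G → G') ∘ face i g := by
  funext m
  simp only [Function.comp_apply]
  unfold face
  by_cases h1 : ((m : ℕ) + 1 : ℕ) < i
  · simp [h1]
  · by_cases h2 : ((m : ℕ) + 1 : ℕ) = i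
    · simp [h1, h2, map_mul]
    · simp [h1, h2]

lemma chmap_single (f : G →* G') {n : ℕ} (g : Fin n → G) (c : κ) :
    chmap κ f n (Finsupp.single g c) = Finsupp.single ((f : G → G') ∘ g) c := by
  simp [chmap, Finsupp.lmapDomain_apply, Finsupp.mapDomain_single]

lemma dd_single {n : ℕ} (g : Fin (n + 1) → G) :
    dd κ G n (Finsupp.single g 1) = dfun κ G g := by
  simp [dd, Finsupp.linearCombination_single]

lemma chmap_comm (f : G →* G') (n : ℕ) :
    (dd κ G' n) ∘ₗ (chmap κ f (n + 1)) = (chmap κ f n) ∘ₗ (dd κ G n) := by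
  refine Finsupp.lhom_ext' (fun g => LinearMap.ext_ring ?_)
  simp only [LinearMap.comp_apply, Finsupp.lsingle_apply]
  rw [chmap_single, dd_single, dd_single]
  unfold dfun
  rw [map_sum]
  refine Finset.sum_congr rfl (fun i _ => ?_)
  rw [map_smul, chmap_single, face_comp]

lemma chmap_comm_apply (f : G →* G') (n : ℕ) (x : Ch κ G (n + 1)) :
    dd κ G' n (chmap κ f (n + 1) x) = chmap κ f n (dd κ G n x) :=
  DFunLike.congr_fun (chmap_comm κ f n) x

lemma chmap_cycles (f : G →* G') (n : ℕ) {x : Ch κ G n} (hx : x ∈ cycles κ G n) :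
    chmap κ f n x ∈ cycles κ G' n := by
  cases n with
  | zero => trivial
  | succ n =>
      simp only [cycles, LinearMap.mem_ker] at hx ⊢
      rw [chmap_comm_apply, hx, map_zero]

/-- The map induced on the quotients of chains by boundaries. -/
def chqmap (f : G →* G') (n : ℕ) : ChQ κ G n →ₗ[κ] ChQ κ G' n :=
  Submodule.mapQ _ _ (chmap κ f n)
    (by
      rintro x ⟨y, hy⟩
      exact ⟨chmap κ f (n + 1) y, by rw [← hy, chmap_comm_apply]⟩)

/-- The map induced on homology by a group homomorphism. -/
def Hmap (f : G →* G') (n : ℕ) : H κ G n →ₗ[κ] H κ G' n :=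
  (chqmap κ f n).restrict (p := Hsub κ G n) (q := Hsub κ G' n)
    (by
      rintro x ⟨y, hy, rfl⟩
      exact ⟨chmap κ f n y, chmap_cycles κ f n hy, rfl⟩)

lemma Hmap_hcl (f : G →* G') (n : ℕ) (x : Ch κ G n) (hx : x ∈ cycles κ G n) :
    Hmap κ f n (hcl κ G x hx) = hcl κ G' (chmap κ f n x) (chmap_cycles κ f n hx) := rfl


/-- The 2-chain `[(s|t)] - [(t|s)]` is a cycle when `s` and `t` commute. -/
lemma pont_mem_cycles {s t : G} (h : s * t = t * s) :
    (Finsupp.single ![s, t] (1 : κ) - Finsupp.single ![t, s] 1) ∈ cycles κ G 2 := by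
  have hc : cycles κ G 2 = LinearMap.ker (dd κ G 1) := rfl
  rw [hc, LinearMap.mem_ker, map_sub, dd_single, dd_single]
  have key : ∀ a b : G, dfun κ G ![a, b] =
      Finsupp.single ![b] 1 - Finsupp.single ![a * b] 1 + Finsupp.single ![a] 1 := by
    intro a b
    have f0 : face 0 ![a, b] = ![b] := by
      funext m; fin_cases m; simp [face]
    have f1 : face 1 ![a, b] = ![a * b] := by
      funext m; fin_cases m; simp [face]
    have f2 : face 2 ![a, b] = ![a] := by
      funext m; fin_cases m; simp [face]
    unfold dfun
    rw [show (1 : ℕ) + 2 = 3 from rfl, Finset.sum_range_succ, Finset.sum_range_succ,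
      Finset.sum_range_one, f0, f1, f2]
    simp only [pow_zero, pow_one, one_smul]
    module
  rw [key, key, h]
  abel

/-- The Pontryagin (pontrjagin) product `c(s,t) ∈ H₂(G)` of two commuting elements of `G`:
the image of the canonical generator of `H₂(ℤ²)` under `(m,n) ↦ s^m t^n`,
i.e. the class of the cycle `[(s|t)] - [(t|s)]`. -/
def pontryagin (s t : G) (h : s * t = t * s) : H κ G 2 :=
  hcl κ G _ (pont_mem_cycles κ h)

end GroupHomology

/-- `SL₂(R)`. -/
abbrev SL2 (R : Type*) [CommRing R] : Type _ := Matrix.SpecialLinearGroup (Fin 2) R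

/-- The congruence subgroup `Γ₀(I) = { (a b; c d) ∈ SL₂(A) : c ∈ I }`. -/
def Gamma0 {A : Type*} [CommRing A] (I : Ideal A) : Subgroup (SL2 A) where
  carrier := { g | (g : Matrix (Fin 2) (Fin 2) A) 1 0 ∈ I }
  one_mem' := by
    simp only [Set.mem_setOf_eq, Matrix.SpecialLinearGroup.coe_one]
    rw [Matrix.one_apply_ne (by decide)]
    exact I.zero_mem
  mul_mem' := by
    intro a b ha hb
    simp only [Set.mem_setOf_eq, Matrix.SpecialLinearGroup.coe_mul] at *
    rw [Matrix.mul_apply, Fin.sum_univ_two]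
    exact I.add_mem (I.mul_mem_right _ ha) (I.mul_mem_left _ hb)
  inv_mem' := by
    intro a ha
    simp only [Set.mem_setOf_eq] at *
    rw [Matrix.SpecialLinearGroup.coe_inv, Matrix.adjugate_fin_two]
    simpa using I.neg_mem ha

private lemma conj_mul_aux {M : Type*} [Monoid M] (m mi x y : M) (h : mi * m = 1) :
    m * (x * y) * mi = (m * x * mi) * (m * y * mi) := by
  have : (m * x * mi) * (m * y * mi) = m * (x * (y * mi)) := by
    simp only [mul_assoc]
    rw [← mul_assoc mi m (y * mi), h, one_mul]
  rw [this]
  simp [mul_assoc]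

/-- Conjugation by an invertible `2 × 2`-matrix, as an endomorphism of `SL₂(R)`. -/
def conjSL {R : Type*} [CommRing R] (M : GL (Fin 2) R) : SL2 R →* SL2 R where
  toFun X := ⟨(M : Matrix (Fin 2) (Fin 2) R) * (X : Matrix (Fin 2) (Fin 2) R) *
      ((M⁻¹ : GL (Fin 2) R) : Matrix (Fin 2) (Fin 2) R), by
    rw [show ((M⁻¹ : GL (Fin 2) R) : Matrix (Fin 2) (Fin 2) R)
        = (↑M : Matrix (Fin 2) (Fin 2) R)⁻¹ from Matrix.coe_units_inv M,
      Matrix.det_conj M.isUnit, X.2]⟩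
  map_one' := by
    apply Subtype.ext
    have h : (M : Matrix (Fin 2) (Fin 2) R) * ((M⁻¹ : GL (Fin 2) R) : Matrix (Fin 2) (Fin 2) R)
        = 1 := by
      rw [← Units.val_mul, mul_inv_cancel, Units.val_one]
    simp only [Matrix.SpecialLinearGroup.coe_one, mul_one, Matrix.SpecialLinearGroup.coe_mk]
    exact h
  map_mul' X Y := by
    apply Subtype.ext
    have h : ((M⁻¹ : GL (Fin 2) R) : Matrix (Fin 2) (Fin 2) R) *
        (M : Matrix (Fin 2) (Fin 2) R) = 1 := by
      rw [← Units.val_mul, inv_mul_cancel, Units.val_one]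
    simp only [Matrix.SpecialLinearGroup.coe_mul, Matrix.SpecialLinearGroup.coe_mk]
    exact conj_mul_aux _ _ _ _ h

/-- The diagonal matrix `diag(u, 1)` as an element of `GL₂(R)`. -/
def diagU {R : Type*} [CommRing R] (u : Rˣ) : GL (Fin 2) R where
  val := !![(u : R), 0; 0, 1]
  inv := !![((u⁻¹ : Rˣ) : R), 0; 0, 1]
  val_inv := by
    ext i j
    fin_cases i <;> fin_cases j <;>
      simp [Matrix.mul_apply, Fin.sum_univ_two, Matrix.one_apply]
  inv_val := by
    ext i j
    fin_cases i <;> fin_cases j <;>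
      simp [Matrix.mul_apply, Fin.sum_univ_two, Matrix.one_apply]

/-- The diagonal matrix `diag(a, a⁻¹)` as an element of `SL₂(R)`. -/
def diagSL {R : Type*} [CommRing R] (a : Rˣ) : SL2 R :=
  ⟨!![(a : R), 0; 0, ((a⁻¹ : Rˣ) : R)], by
    rw [Matrix.det_fin_two_of]
    simp⟩

lemma mem_Gamma0 {A : Type*} [CommRing A] {I : Ideal A} {g : SL2 A} :
    g ∈ Gamma0 I ↔ (g : Matrix (Fin 2) (Fin 2) A) 1 0 ∈ I := Iff.rfl

lemma diagSL_comm {R : Type*} [CommRing R] (a b : Rˣ) :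
    diagSL a * diagSL b = diagSL b * diagSL a := by
  apply Subtype.ext
  show ((diagSL a : SL2 R) : Matrix (Fin 2) (Fin 2) R) * (diagSL b : SL2 R)
      = ((diagSL b : SL2 R) : Matrix (Fin 2) (Fin 2) R) * (diagSL a : SL2 R)
  unfold diagSL
  ext i j
  fin_cases i <;> fin_cases j <;>
    simp [Matrix.mul_apply, Fin.sum_univ_two] <;> ring

lemma diagSL_mem_Gamma0 {A : Type*} [CommRing A] (I : Ideal A) (a : Aˣ) :
    diagSL a ∈ Gamma0 I := by
  rw [mem_Gamma0]
  have h : ((diagSL a : SL2 A) : Matrix (Fin 2) (Fin 2) A) 1 0 = 0 := by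
    unfold diagSL; simp
  rw [h]; exact I.zero_mem

/-- The antidiagonal matrix `g_π = (0 -1; w 0)` as an element of `GL₂(F)`,
for a unit `w`. -/
def gpiU {F : Type*} [CommRing F] (w : Fˣ) : GL (Fin 2) F where
  val := !![0, -1; (w : F), 0]
  inv := !![0, ((w⁻¹ : Fˣ) : F); -1, 0]
  val_inv := by
    ext i j
    fin_cases i <;> fin_cases j <;>
      simp [Matrix.mul_apply, Fin.sum_univ_two, Matrix.one_apply]
  inv_val := by
    ext i j
    fin_cases i <;> fin_cases j <;>
      simp [Matrix.mul_apply, Fin.sum_univ_two, Matrix.one_apply]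

set_option synthInstance.maxHeartbeats 1000000
set_option maxHeartbeats 1000000

set_option linter.style.haveILetI false
set_option linter.unusedSectionVars false

/-! ### Coefficient groups -/

/-- Coefficient groups for cocycles: abelian groups that are injective over `ℤ` (Baer's
criterion) and have no `2`-torsion. -/
class Coef (I : Type) [AddCommGroup I] : Prop where
  two_inj : ∀ x : I, x + x = 0 → x = 0
  baer : Module.Baer ℤ I

section
variable {I : Type} [AddCommGroup I] [Coef I]

theorem Coef.eq_of_add_self {x y : I} (h : x + x = y + y) : x = y := by
  have := Coef.two_inj (x - y) (by
    have : x - y + (x - y) = (x + x) - (y + y) := by abel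
    rw [this, h, sub_self])
  exact sub_eq_zero.mp this

/-- Injectivity of `I`: a homomorphism killing the kernel of `φ` factors through `φ`. -/
theorem Coef.extend {U T : Type*} [AddCommGroup U] [AddCommGroup T] (φ : U →+ T) (D : U →+ I)
    (h : ∀ x, φ x = 0 → D x = 0) : ∃ g : T →+ I, ∀ x, g (φ x) = D x := by
  let D' : φ.range →+ I :=
    { toFun := fun t => D (Classical.choose t.2)
      map_zero' := h _ (Classical.choose_spec (0 : φ.range).2)
      map_add' := by
        intro a b
        rw [← map_add, ← sub_eq_zero, ← map_sub]
        apply h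
        rw [map_sub, map_add, Classical.choose_spec a.2, Classical.choose_spec b.2,
          Classical.choose_spec (a + b).2]
        simp }
  obtain ⟨g, hg⟩ := Module.Baer.extension_property_addMonoidHom Coef.baer
    φ.range.subtype (AddSubgroup.subtype_injective _) D'
  refine ⟨g, fun x => ?_⟩
  have := DFunLike.congr_fun hg ⟨φ x, ⟨x, rfl⟩⟩
  simp only [AddMonoidHom.comp_apply, AddSubgroup.coe_subtype] at this
  rw [this]
  change D (Classical.choose _) = D x
  have hx : ∃ y, φ y = φ x := ⟨x, rfl⟩
  rw [← sub_eq_zero, ← map_sub]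
  apply h
  rw [map_sub, sub_eq_zero]
  exact Classical.choose_spec hx

theorem Coef.exists_half (x : I) : ∃ y : I, y + y = x := by
  obtain ⟨g, hg⟩ := Coef.extend (I := I) (zmultiplesHom ℤ (2 : ℤ)) (zmultiplesHom I x)
    (by
      intro n hn
      have hn : n * 2 = 0 := by simpa using hn
      have : n = 0 := by omega
      simp [this])
  refine ⟨g 1, ?_⟩
  have := hg 1
  simp only [zmultiplesHom_apply, one_smul] at this
  rw [← map_add]
  exact this

/-- Division by two in a coefficient group. -/
def hf (x : I) : I := Classical.choose (Coef.exists_half x)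

theorem hf_add_self (x : I) : hf x + hf x = x := Classical.choose_spec (Coef.exists_half x)

theorem hf_add (x y : I) : hf (x + y) = hf x + hf y := by
  apply Coef.eq_of_add_self
  have e : hf x + hf y + (hf x + hf y) = (hf x + hf x) + (hf y + hf y) := by abel
  rw [e, hf_add_self, hf_add_self, hf_add_self]

theorem hf_neg (x : I) : hf (-x) = -hf x := by
  apply Coef.eq_of_add_self
  rw [hf_add_self, ← neg_add, hf_add_self]

theorem hf_sub (x y : I) : hf (x - y) = hf x - hf y := by
  rw [sub_eq_add_neg, hf_add, hf_neg, ← sub_eq_add_neg]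

@[simp] theorem hf_zero : hf (0 : I) = 0 := by
  apply Coef.eq_of_add_self
  rw [hf_add_self]; simp

/-- A homomorphism defined on a subgroup of a commutative (multiplicative) group extends. -/
theorem Coef.extend_mul {G : Type*} [CommGroup G] (V : Subgroup G) (n : V → I)
    (hn : ∀ v w, n (v * w) = n v + n w) :
    ∃ θ : G → I, (∀ a b, θ (a * b) = θ a + θ b) ∧ ∀ v : V, θ v = n v := by
  obtain ⟨g, hg⟩ := Coef.extend (I := I) (MonoidHom.toAdditive V.subtype)
    (AddMonoidHom.mk' (fun v : Additive V => n v.toMul) (fun a b => hn _ _)) (by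
      intro x hx
      have h1 : x.toMul = 1 := by
        have : ((x.toMul : V) : G) = 1 := hx
        exact Subtype.ext this
      have h0 : n 1 = 0 := by
        have := hn 1 1
        rw [one_mul] at this
        simpa using this
      change n x.toMul = 0
      rw [h1, h0])
  exact ⟨fun a => g (Additive.ofMul a), fun a b => map_add g _ _, fun v => hg (Additive.ofMul v)⟩

/-- Commuting partial cocycles are coboundaries up to a character: if
`f(k,u) + f(w,ku) = f(w,u) + f(k,wu)` for `k, w` in a generating family of a commutative group,
then `f(k,u) = ψ(k) + s(u) - s(ku)`.  The permutations `(u,x) ↦ (ku, x + f(k,u))` of `G × I`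
together with the translations in `I` generate a commutative group acting simply transitively,
and the translations are a direct factor of it because `I` is injective. -/
theorem Coef.partial_cocycle {G ι : Type*} [CommGroup G] (σ : ι → G)
    (hσ : Subgroup.closure (Set.range σ) = ⊤) (f : ι → G → I)
    (hcc : ∀ k w u, f k u + f w (σ k * u) = f w u + f k (σ w * u)) :
    ∃ (ψ : ι → I) (s : G → I), s 1 = 0 ∧ ∀ k u, f k u = ψ k + s u - s (σ k * u) := by
  let τ : ι → Equiv.Perm (G × I) := fun k =>
    { toFun := fun z => (σ k * z.1, z.2 + f k z.1)
      invFun := fun z => ((σ k)⁻¹ * z.1, z.2 - f k ((σ k)⁻¹ * z.1))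
      left_inv := by intro z; ext <;> simp
      right_inv := by intro z; ext <;> simp }
  let tr : I → Equiv.Perm (G × I) := fun i =>
    { toFun := fun z => (z.1, z.2 + i)
      invFun := fun z => (z.1, z.2 - i)
      left_inv := by intro z; ext <;> simp
      right_inv := by intro z; ext <;> simp }
  let K : Set (Equiv.Perm (G × I)) := Set.range τ ∪ Set.range tr
  have hK : ∀ x ∈ K, ∀ y ∈ K, x * y = y * x := by
    rintro x (⟨k, rfl⟩ | ⟨i, rfl⟩) y (⟨w, rfl⟩ | ⟨j, rfl⟩) <;> apply Equiv.ext <;> rintro ⟨u, z⟩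
    · change (σ k * (σ w * u), z + f w u + f k (σ w * u)) =
        (σ w * (σ k * u), z + f k u + f w (σ k * u))
      rw [add_assoc, add_assoc, hcc k w u, mul_left_comm]
    · change (σ k * u, z + j + f k u) = (σ k * u, z + f k u + j)
      rw [add_right_comm]
    · change (σ w * u, z + f w u + i) = (σ w * u, z + i + f w u)
      rw [add_right_comm]
    · change (u, z + j + i) = (u, z + i + j)
      rw [add_right_comm]
  let H := Subgroup.closure K
  have : IsMulCommutative H := Subgroup.isMulCommutative_closure hK
  have hcomm : ∀ a b : H, a * b = b * a := fun a b => mul_comm' a b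
  let _ : CommGroup H := { (inferInstance : Group H) with mul_comm := hcomm }
  let trH : I → H := fun i => ⟨tr i, Subgroup.subset_closure (Or.inr ⟨i, rfl⟩)⟩
  let τH : ι → H := fun k => ⟨τ k, Subgroup.subset_closure (Or.inl ⟨k, rfl⟩)⟩
  obtain ⟨ρ, hρ⟩ := Coef.extend (I := I) (T := Additive H)
    (AddMonoidHom.mk' (fun i => Additive.ofMul (trH i)) (by
      intro a b
      apply Additive.toMul.injective
      apply Subtype.ext
      apply Equiv.ext
      rintro ⟨u, z⟩
      change (u, z + (a + b)) = (u, z + b + a)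
      rw [add_comm a b, add_assoc])) (AddMonoidHom.id I) (by
      intro i hi
      have h1 : (trH i) = 1 := hi
      have h2 : (trH i : Equiv.Perm (G × I)) (1, 0) = (1, 0) := by rw [h1]; rfl
      have h3 : ((1 : G), (0 : I) + i) = (1, 0) := h2
      simpa using h3)
  have htrans : ∀ g : G, ∃ h : H, ∀ z, ((h : Equiv.Perm (G × I)) z).1 = g * z.1 := by
    intro g
    have hg : g ∈ Subgroup.closure (Set.range σ) := by rw [hσ]; trivial
    induction hg using Subgroup.closure_induction with
    | mem x hx =>
      obtain ⟨k, rfl⟩ := hx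
      exact ⟨τH k, fun z => rfl⟩
    | one => exact ⟨1, fun z => by simp⟩
    | mul x y _ _ ihx ihy =>
      obtain ⟨a, ha⟩ := ihx
      obtain ⟨b, hb⟩ := ihy
      refine ⟨a * b, fun z => ?_⟩
      rw [Subgroup.coe_mul, Equiv.Perm.mul_apply, ha, hb, mul_assoc]
    | inv x _ ih =>
      obtain ⟨a, ha⟩ := ih
      refine ⟨a⁻¹, fun z => ?_⟩
      have e : (a : Equiv.Perm (G × I)) (((a⁻¹ : H) : Equiv.Perm (G × I)) z) = z := by
        rw [← Equiv.Perm.mul_apply, ← Subgroup.coe_mul, mul_inv_cancel]; rfl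
      have h2 := ha (((a⁻¹ : H) : Equiv.Perm (G × I)) z)
      rw [e] at h2
      rw [h2]; simp
  have hex : ∀ g : G, ∃ h : H, (h : Equiv.Perm (G × I)) (1, 0) = (g, 0) := by
    intro g
    obtain ⟨h, hh⟩ := htrans g
    refine ⟨trH (-((h : Equiv.Perm (G × I)) (1, 0)).2) * h, ?_⟩
    rw [Subgroup.coe_mul, Equiv.Perm.mul_apply]
    have := hh (1, 0)
    change ((((h : Equiv.Perm (G × I)) (1, 0)).1), _ + -_) = _
    rw [this]; simp
  have hfree : ∀ a b : H, (a : Equiv.Perm (G × I)) (1, 0) = (b : Equiv.Perm (G × I)) (1, 0) →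
      a = b := by
    intro a b hab
    apply Subtype.ext
    apply Equiv.ext
    rintro ⟨u, x⟩
    obtain ⟨h, hh⟩ := hex u
    have e : ((u, x) : G × I) = ((trH x * h : H) : Equiv.Perm (G × I)) (1, 0) := by
      rw [Subgroup.coe_mul, Equiv.Perm.mul_apply, hh]
      change (u, x) = (u, 0 + x)
      rw [zero_add]
    have ea : ∀ c : H, (c : Equiv.Perm (G × I)) (u, x) =
        ((trH x * h : H) : Equiv.Perm (G × I)) ((c : Equiv.Perm (G × I)) (1, 0)) := by
      intro c
      rw [e, ← Equiv.Perm.mul_apply, ← Equiv.Perm.mul_apply, ← Subgroup.coe_mul,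
        ← Subgroup.coe_mul, hcomm]
    rw [ea, ea, hab]
  choose hh hhh using hex
  have key : ∀ k u, f k u = ρ (Additive.ofMul (τH k)) + ρ (Additive.ofMul (hh u))
      - ρ (Additive.ofMul (hh (σ k * u))) := by
    intro k u
    have e : τH k * hh u = trH (f k u) * hh (σ k * u) := by
      apply hfree
      rw [Subgroup.coe_mul, Subgroup.coe_mul, Equiv.Perm.mul_apply, Equiv.Perm.mul_apply,
        hhh, hhh]
      rfl
    have e2 := congrArg (fun x : H => ρ (Additive.ofMul x)) e
    simp only [ofMul_mul, map_add] at e2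
    have e3 : ρ (Additive.ofMul (trH (f k u))) = f k u := hρ (f k u)
    rw [e3] at e2
    rw [e2]; abel
  refine ⟨fun k => ρ (Additive.ofMul (τH k)),
    fun u => ρ (Additive.ofMul (hh u)) - ρ (Additive.ofMul (hh 1)), by simp, fun k u => ?_⟩
  rw [key k u]
  beta_reduce
  generalize ρ (Additive.ofMul (hh u)) = x1
  generalize ρ (Additive.ofMul (hh (σ k * u))) = x2
  abel

end

section
/-! ### Dilogarithm-like functions on the rationals -/

section
variable {I : Type} [AddCommGroup I]

/-- Alternating bilinear forms on `ℚˣ`, as functions on `ℚ` extended by zero. -/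
structure IsAltQ (Φ : ℚ → ℚ → I) : Prop where
  zero : ∀ b, Φ 0 b = 0
  mul : ∀ a b c, a ≠ 0 → b ≠ 0 → Φ (a * b) c = Φ a c + Φ b c
  skew : ∀ a b, Φ a b = -Φ b a

/-- Functions on `ℚ` satisfying the functional equations of the Bloch-Wigner dilogarithm.  They
are normalized to vanish at `0` and `1`; with the convention `x / 0 = 0` the five-term relation
then holds for all nonzero `α, β, γ`, including the degenerate ones. -/
structure IsBloch (D : ℚ → I) : Prop where
  zero : D 0 = 0
  one : D 1 = 0
  inv : ∀ r, D r⁻¹ = -D r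
  one_sub : ∀ r, D (1 - r) = -D r
  five : ∀ α β γ : ℚ, α ≠ 0 → β ≠ 0 → γ ≠ 0 →
    D (α / β) + D (β / γ) - D (α / γ) =
      D ((β - γ) * α / ((α - γ) * β)) - D ((β - γ) / (α - γ))

theorem IsBloch.of_generic {D : ℚ → I} (h0 : D 0 = 0) (h1 : D 1 = 0) (hi : ∀ r, D r⁻¹ = -D r)
    (hs : ∀ r, D (1 - r) = -D r)
    (h5 : ∀ α β γ : ℚ, α ≠ 0 → β ≠ 0 → γ ≠ 0 → α ≠ β → β ≠ γ → α ≠ γ →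
      D (α / β) + D (β / γ) - D (α / γ) =
        D ((β - γ) * α / ((α - γ) * β)) - D ((β - γ) / (α - γ))) : IsBloch D := by
  refine ⟨h0, h1, hi, hs, fun α β γ ha hb hc => ?_⟩
  by_cases hab : α = β
  · subst hab
    rw [div_self ha, h1]
    by_cases hz : α = γ
    · subst hz; simp [h0, h1, ha]
    · have : α - γ ≠ 0 := sub_ne_zero.mpr hz
      rw [div_self (mul_ne_zero this ha), div_self this]; simp
  by_cases hbc : β = γ
  · subst hbc; simp [h0, h1, hb]
  by_cases hac : α = γ
  · subst hac
    have := hi (α / β)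
    rw [inv_div] at this
    simp [h0, h1, ha, this]
  exact h5 α β γ ha hb hc hab hbc hac

theorem IsBloch.sub {D E : ℚ → I} (hD : IsBloch D) (hE : IsBloch E) :
    IsBloch (fun r => D r - E r) := by
  refine ⟨by simp [hD.zero, hE.zero], by simp [hD.one, hE.one], fun r => ?_, fun r => ?_,
    fun α β γ ha hb hc => ?_⟩
  · simp only [hD.inv, hE.inv]; abel
  · simp only [hD.one_sub, hE.one_sub]; abel
  · have h1 := hD.five α β γ ha hb hc
    have h2 := hE.five α β γ ha hb hc
    have : (D (α / β) - E (α / β)) + (D (β / γ) - E (β / γ)) - (D (α / γ) - E (α / γ)) =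
      (D (α / β) + D (β / γ) - D (α / γ)) - (E (α / β) + E (β / γ) - E (α / γ)) := by abel
    simp only [this, h1, h2]
    abel

variable [Coef I]

namespace IsAltQ
variable {Φ : ℚ → ℚ → I} (h : IsAltQ Φ)
include h

theorem self (a : ℚ) : Φ a a = 0 := by
  apply Coef.two_inj
  nth_rewrite 1 [h.skew]
  simp

theorem zero_right (a : ℚ) : Φ a 0 = 0 := by rw [h.skew, h.zero, neg_zero]

theorem mul_right (a b c : ℚ) (hb : b ≠ 0) (hc : c ≠ 0) : Φ a (b * c) = Φ a b + Φ a c := by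
  rw [h.skew, h.mul b c a hb hc, h.skew b, h.skew c]; abel

theorem one_left (b : ℚ) : Φ 1 b = 0 := by
  have := h.mul 1 1 b one_ne_zero one_ne_zero
  rw [one_mul] at this
  simpa using this

theorem neg_left (a b : ℚ) : Φ (-a) b = Φ a b := by
  by_cases ha : a = 0
  · simp [ha]
  have h1 : Φ (-1) b = 0 := by
    apply Coef.two_inj
    rw [← h.mul (-1) (-1) b (by norm_num) (by norm_num)]
    norm_num [h.one_left]
  rw [← neg_one_mul, h.mul _ _ _ (by norm_num) ha, h1, zero_add]

theorem neg_right (a b : ℚ) : Φ a (-b) = Φ a b := by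
  rw [h.skew, h.neg_left, ← h.skew]

theorem inv_left (a b : ℚ) : Φ a⁻¹ b = -Φ a b := by
  by_cases ha : a = 0
  · simp [ha, h.zero]
  have := h.mul a a⁻¹ b ha (inv_ne_zero ha)
  rw [mul_inv_cancel₀ ha, h.one_left] at this
  exact (neg_eq_of_add_eq_zero_right this.symm).symm

theorem div_left (a b c : ℚ) (ha : a ≠ 0) (hb : b ≠ 0) : Φ (a / b) c = Φ a c - Φ b c := by
  rw [div_eq_mul_inv, h.mul _ _ _ ha (inv_ne_zero hb), h.inv_left]; abel

theorem div_right (a b c : ℚ) (hb : b ≠ 0) (hc : c ≠ 0) : Φ a (b / c) = Φ a b - Φ a c := by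
  rw [h.skew, h.div_left _ _ _ hb hc, h.skew b, h.skew c]; abel

theorem isBloch : IsBloch (fun r => Φ r (1 - r)) := by
  have hs : ∀ r : ℚ, Φ (1 - r) (1 - (1 - r)) = -Φ r (1 - r) := by
    intro r; rw [sub_sub_cancel, h.skew]
  refine IsBloch.of_generic (by simp [h.zero]) (by simp [h.zero_right]) ?_ hs ?_
  · intro r
    by_cases h0 : r = 0
    · simp [h0, h.zero]
    by_cases h1 : r = 1
    · simp [h1, h.zero_right]
    have e : 1 - r⁻¹ = -((1 - r) / r) := by field_simp; ring
    change Φ r⁻¹ (1 - r⁻¹) = -Φ r (1 - r)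
    rw [e, h.inv_left, h.neg_right, h.div_right _ _ _ (sub_ne_zero.mpr (Ne.symm h1)) h0, h.self]
    simp
  · intro α β γ ha hb hc hab hbc hac
    have hx : α - β ≠ 0 := sub_ne_zero.mpr hab
    have hy : β - γ ≠ 0 := sub_ne_zero.mpr hbc
    have hz : α - γ ≠ 0 := sub_ne_zero.mpr hac
    have e1 : 1 - α / β = -((α - β) / β) := by field_simp; ring
    have e2 : 1 - β / γ = -((β - γ) / γ) := by field_simp; ring
    have e3 : 1 - α / γ = -((α - γ) / γ) := by field_simp; ring
    have e4 : 1 - (β - γ) * α / ((α - γ) * β) = (γ * (α - β)) / ((α - γ) * β) := by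
      field_simp; ring
    have e5 : 1 - (β - γ) / (α - γ) = (α - β) / (α - γ) := by field_simp; ring
    simp only [e1, e2, e3, e4, e5]
    generalize α - β = x at *
    generalize β - γ = y at *
    generalize α - γ = z at *
    simp only [h.neg_right, h.div_left _ _ _ ha hb, h.div_left _ _ _ hb hc,
      h.div_left _ _ _ ha hc, h.div_left _ _ _ hy hz, h.div_right _ _ _ hx hb,
      h.div_right _ _ _ hy hc, h.div_right _ _ _ hz hc, h.div_right _ _ _ hx hz,
      h.div_left _ _ _ (mul_ne_zero hy ha) (mul_ne_zero hz hb),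
      h.div_right _ _ _ (mul_ne_zero hc hx) (mul_ne_zero hz hb),
      h.mul _ _ _ hy ha, h.mul _ _ _ hz hb, h.mul_right _ _ _ hc hx, h.mul_right _ _ _ hz hb,
      h.self]
    rw [h.skew y γ, h.skew y β, h.skew z γ, h.skew z β]
    abel

end IsAltQ

namespace IsBloch
variable {D : ℚ → I} (h : IsBloch D)
include h

/-- Additivity of `D(ρ₁/ρ₂)` for the slopes `ρᵢ = kᵢ/mᵢ` of three vectors whose determinants are
`N t₁₂`, `N t₂₃`, `N t₁₃`. -/
theorem additive {k₁ m₁ k₂ m₂ k₃ m₃ N t₂₃ t₁₃ : ℤ} (hN : N ≠ 0)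
    (hk₁ : k₁ ≠ 0) (hm₁ : m₁ ≠ 0) (hk₂ : k₂ ≠ 0) (hm₂ : m₂ ≠ 0) (hk₃ : k₃ ≠ 0) (hm₃ : m₃ ≠ 0)
    (h23 : k₂ * m₃ - m₂ * k₃ = N * t₂₃) (h13 : k₁ * m₃ - m₁ * k₃ = N * t₁₃)
    (e1 : D ((t₂₃ * m₁ : ℤ) / (t₁₃ * m₂ : ℤ)) = 0)
    (e2 : D ((t₂₃ * k₁ : ℤ) / (t₁₃ * k₂ : ℤ)) = 0) :
    D ((k₁ * m₃ : ℤ) / (m₁ * k₃ : ℤ)) =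
      D ((k₁ * m₂ : ℤ) / (m₁ * k₂ : ℤ)) + D ((k₂ * m₃ : ℤ) / (m₂ * k₃ : ℤ)) := by
  have hN' : (N : ℚ) ≠ 0 := by exact_mod_cast hN
  have a1 : (k₁ : ℚ) ≠ 0 := by exact_mod_cast hk₁
  have a2 : (k₂ : ℚ) ≠ 0 := by exact_mod_cast hk₂
  have a3 : (k₃ : ℚ) ≠ 0 := by exact_mod_cast hk₃
  have b1 : (m₁ : ℚ) ≠ 0 := by exact_mod_cast hm₁
  have b2 : (m₂ : ℚ) ≠ 0 := by exact_mod_cast hm₂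
  have b3 : (m₃ : ℚ) ≠ 0 := by exact_mod_cast hm₃
  have h23' : (k₂ : ℚ) * m₃ - m₂ * k₃ = N * t₂₃ := by exact_mod_cast h23
  have h13' : (k₁ : ℚ) * m₃ - m₁ * k₃ = N * t₁₃ := by exact_mod_cast h13
  have := h.five (k₁ / m₁) (k₂ / m₂) (k₃ / m₃) (div_ne_zero a1 b1) (div_ne_zero a2 b2)
    (div_ne_zero a3 b3)
  have d23 : (k₂ : ℚ) / m₂ - k₃ / m₃ = N * t₂₃ / (m₂ * m₃) := by
    rw [← h23']; field_simp
  have d13 : (k₁ : ℚ) / m₁ - k₃ / m₃ = N * t₁₃ / (m₁ * m₃) := by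
    rw [← h13']; field_simp
  rw [d23, d13] at this
  have c1 : (N * t₂₃ / (m₂ * m₃) * (k₁ / m₁) / (N * t₁₃ / (m₁ * m₃) * (k₂ / m₂)) : ℚ) =
      (t₂₃ * k₁ : ℤ) / (t₁₃ * k₂ : ℤ) := by
    push_cast
    by_cases ht : (t₁₃ : ℚ) = 0
    · simp [ht]
    · field_simp
  have c2 : (N * t₂₃ / (m₂ * m₃) / (N * t₁₃ / (m₁ * m₃)) : ℚ) =
      (t₂₃ * m₁ : ℤ) / (t₁₃ * m₂ : ℤ) := by
    push_cast
    by_cases ht : (t₁₃ : ℚ) = 0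
    · simp [ht]
    · field_simp
  rw [c1, c2, e1, e2, sub_zero, sub_eq_zero, div_div_div_eq, div_div_div_eq, div_div_div_eq]
    at this
  push_cast
  exact this.symm

end IsBloch

/-- `D` vanishes at `xy/(zw)` whenever `xy - zw = rs` with all six integers smaller than `N`. -/
def VanishBelow (D : ℚ → I) (N : ℕ) : Prop :=
  ∀ x y z w r s : ℤ, |x| < N → |y| < N → |z| < N → |w| < N → |r| < N → |s| < N →
    x * y - z * w = r * s → D ((x * y : ℤ) / (z * w : ℤ)) = 0

end

end

section
variable {I : Type} [AddCommGroup I] [Coef I]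

theorem bloch_zero_mul {D : ℚ → I} (h : IsBloch D) {a b : ℤ} (ha : a = 0 ∨ b = 0) :
    D ((a : ℚ) / (b : ℚ)) = 0 := by
  rcases ha with h' | h' <;> simp [h', h.zero]

theorem abs_lt_of_le_of_not_dvd {N x e : ℤ} (hx : |x| ≤ N) (heN : e ∣ N) (he : ¬ e ∣ x) :
    |x| < N := by
  rcases hx.lt_or_eq with h | h
  · exact h
  · exact absurd ((dvd_abs e x).mp (h ▸ heN)) he

/-- The inductive step for `VanishBelow`: divisibility of two coprime-looking entries by the
prime `e ∣ N` is removed by cancelling `e`; the remaining relations are split into two by an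
intermediate vector `(c₁, c₂)`. -/
theorem VanishBelow.step {D : ℚ → I} (h : IsBloch D) {N : ℕ} (hN : 2 ≤ N)
    (hJ : VanishBelow D N) {d e : ℤ} (he : Prime e) (he2 : 2 ≤ e) (hd : 1 ≤ d) (hde : (N : ℤ) = d * e)
    (hc : ∀ x y z w s : ℤ, |x| < N → |y| < N → |z| < N → |w| < N →
      ¬ e ∣ x → ¬ e ∣ y → ¬ e ∣ z → ¬ e ∣ w → x * y - z * w = N * s →
      ∃ c₁ c₂ t₁ t₂ : ℤ, c₁ ≠ 0 ∧ c₂ ≠ 0 ∧ |c₁| < N ∧ |c₂| < N ∧ |t₁| < N ∧ |t₂| < N ∧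
        x * c₂ - z * c₁ = N * t₁ ∧ c₁ * y - c₂ * w = N * t₂ ∧
        D ((x * c₂ : ℤ) / (z * c₁ : ℤ)) = 0 ∧ D ((c₁ * y : ℤ) / (c₂ * w : ℤ)) = 0) :
    VanishBelow D (N + 1) := by
  let n : ℤ → ℕ := fun x => if |x| = (N : ℤ) then 1 else 0
  have n1 : ∀ x : ℤ, |x| ≤ N → n x = 0 → |x| < N := by
    intro x hx h0
    rcases hx.lt_or_eq with h | h
    · exact h
    · simp [n, h] at h0
  have n0 : ∀ x : ℤ, |x| < N → n x = 0 := by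
    intro x hx
    simp [n, hx.ne]
  have nneg : ∀ x : ℤ, n (-x) = n x := by intro x; simp [n]
  have heN : e ∣ (N : ℤ) := ⟨d, by rw [hde, mul_comm]⟩
  have hN0 : (N : ℤ) ≠ 0 := by positivity
  have hdN : d < N := by rw [hde]; nlinarith
  -- quotients by `e` are small
  have quot : ∀ x : ℤ, |e * x| ≤ N → |x| < N := by
    intro x hx
    rw [abs_mul, abs_of_nonneg (by omega : 0 ≤ e)] at hx
    have := abs_nonneg x
    have hNp : (0 : ℤ) < N := by positivity
    nlinarith
  have main : ∀ m : ℕ, ∀ x y z w r s : ℤ, |x| ≤ N → |y| ≤ N → |z| ≤ N → |w| ≤ N → |r| ≤ N →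
      |s| ≤ N → n x + n y + n z + n w + n r + n s ≤ m → x * y - z * w = r * s →
      D ((x * y : ℤ) / (z * w : ℤ)) = 0 := by
    intro m
    induction m with
    | zero =>
      intro x y z w r s hx hy hz hw hr hs hm heq
      exact hJ x y z w r s (n1 x hx (by omega)) (n1 y hy (by omega)) (n1 z hz (by omega))
        (n1 w hw (by omega)) (n1 r hr (by omega)) (n1 s hs (by omega)) heq
    | succ m ih =>
      -- the difference is divisible by `N`
      have Q : ∀ x y z w s : ℤ, |x| ≤ N → |y| ≤ N → |z| ≤ N → |w| ≤ N → |s| ≤ N →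
          n x + n y + n z + n w + n s ≤ m → x * y - z * w = N * s →
          D ((x * y : ℤ) / (z * w : ℤ)) = 0 := by
        have direct : ∀ x y z w s : ℤ, |x| ≤ N → |y| ≤ N → |z| ≤ N → |w| ≤ N → |s| ≤ N →
            n x + n y + n z + n w + n s ≤ m → x * y - z * w = N * s → e ∣ x → e ∣ z →
            D ((x * y : ℤ) / (z * w : ℤ)) = 0 := by
          rintro x y z w s hx hy hz hw hs hm heq ⟨x', rfl⟩ ⟨z', rfl⟩
          have hx' := quot x' hx
          have hz' := quot z' hz
          have hdd : |d| < (N : ℤ) := by rw [abs_of_nonneg (by omega)]; exact hdN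
          have := ih x' y z' w d s hx'.le hy hz'.le hw hdd.le hs (by
            have := n0 _ hx'
            have := n0 _ hz'
            have := n0 _ hdd
            omega) (by
            have : e * (x' * y - z' * w) = e * (d * s) := by
              rw [hde] at heq; linear_combination heq
            exact mul_left_cancel₀ (by omega) this)
          rw [← this]
          congr 1
          push_cast
          have he0 : (e : ℚ) ≠ 0 := by exact_mod_cast (by omega : e ≠ 0)
          rw [mul_assoc, mul_assoc, mul_div_mul_left _ _ he0]
        intro x y z w s hx hy hz hw hs hm heq
        have hdvd : e ∣ x * y - z * w := by rw [heq]; exact heN.mul_right s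
        by_cases exz : e ∣ x ∧ e ∣ z
        · exact direct x y z w s hx hy hz hw hs hm heq exz.1 exz.2
        by_cases exw : e ∣ x ∧ e ∣ w
        · have := direct x y w z s hx hy hw hz hs (by omega) (by linarith) exw.1 exw.2
          rwa [mul_comm w z] at this
        by_cases eyz : e ∣ y ∧ e ∣ z
        · have := direct y x z w s hy hx hz hw hs (by omega) (by linarith) eyz.1 eyz.2
          rwa [mul_comm y x] at this
        by_cases eyw : e ∣ y ∧ e ∣ w
        · have := direct y x w z s hy hx hw hz hs (by omega) (by linarith) eyw.1 eyw.2
          rwa [mul_comm y x, mul_comm w z] at this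
        have hxy : ¬ e ∣ x * y := by
          intro hd'
          have h2 : e ∣ z * w := by
            have := dvd_sub hd' hdvd
            rwa [sub_sub_cancel] at this
          rcases he.dvd_or_dvd hd' with h3 | h3 <;> rcases he.dvd_or_dvd h2 with h4 | h4 <;> tauto
        have hzw : ¬ e ∣ z * w := by
          intro hd'
          apply hxy
          have := dvd_add hdvd hd'
          rwa [sub_add_cancel] at this
        have ex : ¬ e ∣ x := fun h => hxy (h.mul_right _)
        have ey : ¬ e ∣ y := fun h => hxy (h.mul_left _)
        have ez : ¬ e ∣ z := fun h => hzw (h.mul_right _)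
        have ew : ¬ e ∣ w := fun h => hzw (h.mul_left _)
        have hx' := abs_lt_of_le_of_not_dvd hx heN ex
        have hy' := abs_lt_of_le_of_not_dvd hy heN ey
        have hz' := abs_lt_of_le_of_not_dvd hz heN ez
        have hw' := abs_lt_of_le_of_not_dvd hw heN ew
        have ne0 : ∀ {a : ℤ}, ¬ e ∣ a → a ≠ 0 := fun ha h0 => ha (h0 ▸ dvd_zero e)
        obtain ⟨c₁, c₂, t₁, t₂, hc1, hc2, bc1, bc2, bt1, bt2, e12, e23, D1, D2⟩ :=
          hc x y z w s hx' hy' hz' hw' ex ey ez ew heq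
        have key := h.additive (k₁ := x) (m₁ := z) (k₂ := c₁) (m₂ := c₂) (k₃ := w) (m₃ := y)
          (N := N) (t₂₃ := t₂) (t₁₃ := s) hN0 (ne0 ex) (ne0 ez) hc1 hc2 (ne0 ew) (ne0 ey)
          e23 heq
          (ih t₂ z s c₂ (-y) t₁ bt2.le hz hs bc2.le (by rwa [abs_neg]) bt1.le (by
            rw [nneg]
            have := n0 _ bt2
            have := n0 _ bc2
            have := n0 _ bt1
            have := n0 _ hy'
            omega) (by
            apply mul_left_cancel₀ hN0
            linear_combination (-z) * e23 - y * e12 + c₂ * heq))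
          (ih t₂ x s c₁ (-w) t₁ bt2.le hx hs bc1.le (by rwa [abs_neg]) bt1.le (by
            rw [nneg]
            have := n0 _ bt2
            have := n0 _ bc1
            have := n0 _ bt1
            have := n0 _ hw'
            omega) (by
            apply mul_left_cancel₀ hN0
            linear_combination (-x) * e23 - w * e12 + c₁ * heq))
        rw [key, D1, D2, add_zero]
      have Qr : ∀ x y z w r s : ℤ, |x| ≤ N → |y| ≤ N → |z| ≤ N → |w| ≤ N →
          |s| ≤ N → |r| = N → n x + n y + n z + n w + n r + n s ≤ m + 1 → x * y - z * w = r * s →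
          D ((x * y : ℤ) / (z * w : ℤ)) = 0 := by
        intro x y z w r s hx hy hz hw hs hr hm heq
        have nr : n r = 1 := by simp [n, hr]
        rcases abs_eq (by positivity : (0 : ℤ) ≤ N) |>.mp hr with rfl | rfl
        · exact Q x y z w s hx hy hz hw hs (by omega) heq
        · exact Q x y z w (-s) hx hy hz hw (by rwa [abs_neg]) (by rw [nneg]; omega)
            (by rw [heq]; ring)
      have Qx : ∀ x y z w r s : ℤ, |x| = N → |y| ≤ N → |z| ≤ N → |w| ≤ N → |r| ≤ N →
          |s| ≤ N → n x + n y + n z + n w + n r + n s ≤ m + 1 → x * y - z * w = r * s →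
          D ((x * y : ℤ) / (z * w : ℤ)) = 0 := by
        intro x y z w r s hx hy hz hw hr hs hm heq
        by_cases h0 : z * w = 0
        · exact bloch_zero_mul h (Or.inr h0)
        have h0' : ((z * w : ℤ) : ℚ) ≠ 0 := by exact_mod_cast h0
        have := Qr (-r) s z w (-x) y (by rwa [abs_neg]) hs hz hw hy (by rwa [abs_neg])
          (by rw [nneg, nneg]; omega) (by linarith)
        have e1 : (((-r) * s : ℤ) : ℚ) / (z * w : ℤ) = 1 - ((x * y : ℤ) : ℚ) / (z * w : ℤ) := by
          rw [eq_sub_iff_add_eq, ← add_div, div_eq_one_iff_eq h0', ← Int.cast_add]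
          congr 1
          linarith
        rw [e1, h.one_sub, neg_eq_zero] at this
        exact this
      have Qz : ∀ x y z w r s : ℤ, |x| ≤ N → |y| ≤ N → |z| = N → |w| ≤ N → |r| ≤ N →
          |s| ≤ N → n x + n y + n z + n w + n r + n s ≤ m + 1 → x * y - z * w = r * s →
          D ((x * y : ℤ) / (z * w : ℤ)) = 0 := by
        intro x y z w r s hx hy hz hw hr hs hm heq
        have := Qx z w x y (-r) s hz hw hx hy (by rwa [abs_neg]) hs (by rw [nneg]; omega)
          (by linarith)
        rw [← inv_div, h.inv, neg_eq_zero] at this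
        exact this
      intro x y z w r s hx hy hz hw hr hs hm heq
      by_cases h1 : |x| = N
      · exact Qx x y z w r s h1 hy hz hw hr hs hm heq
      by_cases h2 : |y| = N
      · have := Qx y x z w r s h2 hx hz hw hr hs (by omega) (by linarith)
        rwa [mul_comm y x] at this
      by_cases h3 : |z| = N
      · exact Qz x y z w r s hx hy h3 hw hr hs hm heq
      by_cases h4 : |w| = N
      · have := Qz x y w z r s hx hy h4 hz hr hs (by omega) (by linarith)
        rwa [mul_comm w z] at this
      by_cases h5 : |r| = N
      · exact Qr x y z w r s hx hy hz hw hs h5 hm heq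
      by_cases h6 : |s| = N
      · exact Qr x y z w s r hx hy hz hw hr h6 (by omega) (by linarith)
      exact hJ x y z w r s (lt_of_le_of_ne hx h1) (lt_of_le_of_ne hy h2) (lt_of_le_of_ne hz h3)
        (lt_of_le_of_ne hw h4) (lt_of_le_of_ne hr h5) (lt_of_le_of_ne hs h6) heq
  intro x y z w r s hx hy hz hw hr hs heq
  push_cast at hx hy hz hw hr hs
  exact main _ x y z w r s (by omega) (by omega) (by omega) (by omega) (by omega) (by omega)
    le_rfl heq

theorem VanishBelow.two {D : ℚ → I} (h : IsBloch D) : VanishBelow D 2 := by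
  intro x y z w r s hx hy hz hw hr hs heq
  have key : ∀ a b : ℤ, |a| < (2 : ℕ) → |b| < (2 : ℕ) → a * b = 0 ∨ a * b = 1 ∨ a * b = -1 := by
    intro a b ha hb
    rw [abs_lt] at ha hb
    push_cast at ha hb
    have ha' : a = -1 ∨ a = 0 ∨ a = 1 := by omega
    have hb' : b = -1 ∨ b = 0 ∨ b = 1 := by omega
    rcases ha' with rfl | rfl | rfl <;> rcases hb' with rfl | rfl | rfl <;> simp
  rcases key x y hx hy with h1 | h1 | h1 <;> rcases key z w hz hw with h2 | h2 | h2 <;>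
    rcases key r s hr hs with h3 | h3 | h3 <;> rw [h1, h2, h3] at heq <;>
    first
    | (exfalso; omega)
    | (rw [h1, h2]; simp [h.zero, h.one])

/-- The inductive step at a composite number. -/
theorem VanishBelow.composite {D : ℚ → I} (h : IsBloch D) {N : ℕ} (hN : 2 ≤ N)
    (hJ : VanishBelow D N) (hp : ¬ N.Prime) : VanishBelow D (N + 1) := by
  obtain ⟨e, he, hediv⟩ := Nat.exists_prime_and_dvd (by omega : N ≠ 1)
  obtain ⟨d, hd⟩ := hediv
  have hd2 : 2 ≤ d := by
    rcases Nat.lt_or_ge d 2 with h1 | h1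
    · interval_cases d
      · omega
      · rw [mul_one] at hd; exact absurd (hd ▸ he) hp
    · exact h1
  have he2 := he.two_le
  refine VanishBelow.step h hN hJ (d := d) (e := e) (Nat.prime_iff_prime_int.mp he)
    (by exact_mod_cast he2) (by omega) (by rw [hd]; push_cast; ring) ?_
  intro x y z w s hx hy hz hw ex ey ez ew heq
  have bm : ∀ a : ℤ, ∃ a' k : ℤ, a = a' + e * k ∧ 2 * |a'| ≤ e := by
    intro a
    refine ⟨a.bmod e, a.bdiv e, (Int.bmod_add_bdiv a e).symm, ?_⟩
    have h1 := Int.le_bmod (x := a) (m := e) (by omega)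
    have h2 := Int.bmod_lt (x := a) (m := e) (by omega)
    rcases abs_cases (a.bmod e) with h3 | h3 <;> omega
  obtain ⟨x0, kx, hx0, bx0⟩ := bm x
  obtain ⟨z0, kz, hz0, bz0⟩ := bm z
  have nx0 : x0 ≠ 0 := by
    rintro rfl
    exact ex ⟨kx, by rw [hx0, zero_add]⟩
  have nz0 : z0 ≠ 0 := by
    rintro rfl
    exact ez ⟨kz, by rw [hz0, zero_add]⟩
  have hNde : (N : ℤ) = e * d := by rw [hd]; push_cast; ring
  have bnd : ∀ a b a0 b0 t : ℤ, |a| < N → |b| < N → 2 * |a0| ≤ e → 2 * |b0| ≤ e →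
      a * b0 - b * a0 = e * t → |t| < N := by
    intro a b a0 b0 t ha hb ha0 hb0 ht
    have h1 : |(e : ℤ) * t| ≤ |a| * |b0| + |b| * |a0| := by
      rw [← ht, ← abs_mul, ← abs_mul]
      exact abs_sub _ _
    rw [abs_mul, Nat.abs_cast] at h1
    have := abs_nonneg a
    have := abs_nonneg b
    have he0 : (0 : ℤ) < e := by omega
    have h2 : 2 * ((e : ℤ) * |t|) ≤ (|a| + |b|) * e := by nlinarith
    have h3 : 2 * |t| ≤ |a| + |b| := by nlinarith
    omega
  have ht1 : x * z0 - z * x0 = e * (kx * z0 - kz * x0) := by rw [hx0, hz0]; ring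
  have ht2 : x0 * y - z0 * w = e * (d * s - kx * y + kz * w) := by
    rw [hNde] at heq
    linear_combination heq - y * hx0 + w * hz0
  have bt1 := bnd x z x0 z0 _ hx hz bx0 bz0 ht1
  have bt2 := bnd w y (-x0) (-z0) (d * s - kx * y + kz * w) hw hy (by rwa [abs_neg])
    (by rwa [abs_neg]) (by linarith)
  have be : |(e : ℤ)| < N := by
    rw [Nat.abs_cast, hNde]
    have : (2 : ℤ) ≤ d := by exact_mod_cast hd2
    have : (2 : ℤ) ≤ e := by exact_mod_cast he2
    nlinarith
  have bsm : ∀ a : ℤ, 2 * |a| ≤ e → |a| < N := by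
    intro a ha
    rw [Nat.abs_cast] at be
    have := abs_nonneg a
    omega
  have bdm : ∀ a : ℤ, 2 * |a| ≤ e → |d * a| < N := by
    intro a ha
    rw [abs_mul, Nat.abs_cast, hNde]
    have : (2 : ℤ) ≤ d := by exact_mod_cast hd2
    have : (2 : ℤ) ≤ e := by exact_mod_cast he2
    nlinarith
  have hd0 : (d : ℤ) ≠ 0 := by omega
  have hd0' : (d : ℚ) ≠ 0 := by exact_mod_cast hd0
  refine ⟨d * x0, d * z0, kx * z0 - kz * x0, d * s - kx * y + kz * w, mul_ne_zero hd0 nx0,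
    mul_ne_zero hd0 nz0, bdm _ bx0, bdm _ bz0, bt1, bt2, ?_, ?_, ?_, ?_⟩
  · rw [hNde]; linear_combination d * ht1
  · rw [hNde]; linear_combination d * ht2
  · have := hJ x z0 z x0 e _ hx (bsm _ bz0) hz (bsm _ bx0) be bt1 ht1
    rw [← this]
    congr 1
    push_cast
    rw [mul_left_comm, mul_left_comm (z : ℚ), mul_div_mul_left _ _ hd0']
  · have := hJ x0 y z0 w e _ (bsm _ bx0) hy (bsm _ bz0) hw be bt2 ht2
    rw [← this]
    congr 1
    push_cast
    rw [mul_assoc, mul_assoc, mul_div_mul_left _ _ hd0']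
end

section
variable {I : Type} [AddCommGroup I] [Coef I]

/-- Thue's lemma. -/
theorem thue (q : ℕ) [hq : Fact q.Prime] (u : ZMod q) (hu : u ≠ 0) :
    ∃ a b : ℤ, a ≠ 0 ∧ b ≠ 0 ∧ a ^ 2 < q ∧ b ^ 2 < q ∧ (b : ZMod q) = u * a := by
  let r := Nat.sqrt q
  have hr1 : r * r ≤ q := Nat.sqrt_le q
  have hr2 : q < (r + 1) * (r + 1) := Nat.lt_succ_sqrt q
  have hr3 : r * r ≠ q := fun h => by
    have := hq.out
    rw [← h] at this
    have h1 : r ≠ 1 := fun h1 => by rw [h1] at this; exact Nat.not_prime_one this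
    exact Nat.not_prime_mul h1 h1 this
  have hcard : (Finset.univ : Finset (ZMod q)).card <
      (Finset.range (r + 1) ×ˢ Finset.range (r + 1)).card := by
    rw [Finset.card_univ, ZMod.card, Finset.card_product, Finset.card_range]
    exact hr2
  obtain ⟨x, hx, y, hy, hxy, hf⟩ := Finset.exists_ne_map_eq_of_card_lt_of_maps_to hcard
    (f := fun z => (z.2 : ZMod q) - u * z.1) (fun _ _ => Finset.mem_univ _)
  simp only [Finset.mem_product, Finset.mem_range] at hx hy
  have bd : ∀ i j : ℕ, i < r + 1 → j < r + 1 → ((i : ℤ) - j) ^ 2 < q := by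
    intro i j hi hj
    have h1 : |(i : ℤ) - j| ≤ r := by rw [abs_le]; constructor <;> omega
    rw [← sq_abs]
    have h0 := abs_nonneg ((i : ℤ) - j)
    have h2 : (r : ℤ) * r < q := by
      have : r * r < q := lt_of_le_of_ne hr1 hr3
      exact_mod_cast this
    nlinarith
  have e : (((x.2 : ℤ) - y.2 : ℤ) : ZMod q) = u * (((x.1 : ℤ) - y.1 : ℤ) : ZMod q) := by
    push_cast
    linear_combination hf
  have small : ∀ i j : ℕ, i < r + 1 → j < r + 1 → (((i : ℤ) - j : ℤ) : ZMod q) = 0 → i = j := by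
    intro i j hi hj h0
    rw [ZMod.intCast_zmod_eq_zero_iff_dvd] at h0
    have h1 := bd i j hi hj
    have h2 : ((i : ℤ) - j) = 0 := by
      by_contra hne
      have h3 := Int.le_of_dvd (abs_pos.mpr hne) ((dvd_abs _ _).mpr h0)
      have h4 : 0 < |(i : ℤ) - j| := abs_pos.mpr hne
      rw [← sq_abs] at h1
      nlinarith
    omega
  have hne1 : x.1 ≠ y.1 := by
    intro h1
    apply hxy
    have : x.2 = y.2 := small _ _ hx.2 hy.2 (by rw [e, h1]; simp)
    exact Prod.ext h1 this
  have hne2 : x.2 ≠ y.2 := by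
    intro h1
    apply hne1
    apply small _ _ hx.1 hy.1
    rw [h1] at e
    have : u * (((x.1 : ℤ) - y.1 : ℤ) : ZMod q) = 0 := by rw [← e]; simp
    exact (mul_eq_zero.mp this).resolve_left hu
  exact ⟨_, _, by omega, by omega, bd _ _ hx.1 hy.1, bd _ _ hx.2 hy.2, e⟩

/-- The extension to `ℚ` of a completely additive function on the positive integers. -/
def ratExt (g : ℕ → I) (r : ℚ) : I := g r.num.natAbs - g r.den

theorem ratExt_div {g : ℕ → I} (hg : ∀ a b, a ≠ 0 → b ≠ 0 → g (a * b) = g a + g b) (a b : ℤ)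
    (ha : a ≠ 0) (hb : b ≠ 0) : ratExt g ((a : ℚ) / b) = g a.natAbs - g b.natAbs := by
  unfold ratExt
  set r : ℚ := (a : ℚ) / b with hr
  have hb' : (b : ℚ) ≠ 0 := by exact_mod_cast hb
  have hr0 : r ≠ 0 := div_ne_zero (by exact_mod_cast ha) hb'
  have e : a * r.den = r.num * b := by
    have h1 : (r.num : ℚ) / r.den = a / b := by rw [Rat.num_div_den]
    have h2 : (r.den : ℚ) ≠ 0 := by exact_mod_cast r.den_nz
    rw [div_eq_div_iff h2 hb'] at h1
    exact_mod_cast h1.symm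
  have e2 := congrArg Int.natAbs e
  rw [Int.natAbs_mul, Int.natAbs_mul, Int.natAbs_natCast] at e2
  have e3 := congrArg g e2
  rw [hg _ _ (by omega) r.den_nz, hg _ _ (by simpa using hr0) (by omega)] at e3
  rw [sub_eq_sub_iff_add_eq_add, ← e3]

theorem ratExt_mul {g : ℕ → I} (hg : ∀ a b, a ≠ 0 → b ≠ 0 → g (a * b) = g a + g b) (r s : ℚ)
    (hr : r ≠ 0) (hs : s ≠ 0) : ratExt g (r * s) = ratExt g r + ratExt g s := by
  have e : r * s = ((r.num * s.num : ℤ) : ℚ) / ((r.den * s.den : ℤ) : ℚ) := by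
    conv_lhs => rw [← Rat.num_div_den r, ← Rat.num_div_den s]
    push_cast
    rw [div_mul_div_comm]
  have h1 : r.num ≠ 0 := by simpa using hr
  have h2 : s.num ≠ 0 := by simpa using hs
  have h3 := r.den_nz
  have h4 := s.den_nz
  rw [e, ratExt_div hg _ _ (mul_ne_zero h1 h2) (by positivity), Int.natAbs_mul, Int.natAbs_mul,
    hg _ _ (by omega) (by omega), Int.natAbs_natCast, Int.natAbs_natCast, hg _ _ h3 h4]
  unfold ratExt
  abel

/-- The form `(r, r') ↦ v_q(r') g(r) - v_q(r) g(r')`. -/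
def tame (q : ℕ) (g : ℕ → I) (r r' : ℚ) : I :=
  if r = 0 ∨ r' = 0 then 0
  else padicValRat q r' • ratExt g r - padicValRat q r • ratExt g r'

theorem tame_alt (q : ℕ) [Fact q.Prime] {g : ℕ → I}
    (hg : ∀ a b, a ≠ 0 → b ≠ 0 → g (a * b) = g a + g b) : IsAltQ (tame q g) := by
  refine ⟨fun b => by simp [tame], fun a b c ha hb => ?_, fun a b => ?_⟩
  · by_cases hc : c = 0
    · simp [tame, hc]
    simp only [tame, ha, hb, hc, mul_ne_zero ha hb, or_self, if_false]
    rw [padicValRat.mul ha hb, ratExt_mul hg _ _ ha hb, smul_add, add_smul]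
    abel
  · unfold tame
    by_cases h : a = 0 ∨ b = 0
    · rw [if_pos h, if_pos h.symm, neg_zero]
    · rw [if_neg h, if_neg (fun h' => h h'.symm), neg_sub]

theorem padicValRat_small (q : ℕ) [Fact q.Prime] (a : ℤ) (h0 : a ≠ 0) (h : |a| < q) :
    padicValRat q (a : ℚ) = 0 := by
  rw [padicValRat.of_int, padicValInt.eq_zero_of_not_dvd]
  · rfl
  · intro hd
    have := Int.le_of_dvd (abs_pos.mpr h0) ((dvd_abs _ _).mpr hd)
    omega

/-- Multiplicativity of the symbols `D(ku/[ku])`, where `[·]` is the residue in `(0,q)`. -/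
theorem bloch_mult {D : ℚ → I} (h : IsBloch D) {q : ℕ} (hJ : VanishBelow D q)
    {k w a b c t₁ t₂ : ℤ} (hk : k ≠ 0) (hw : w ≠ 0) (hkw : |k * w| < q)
    (ha : 0 < a) (haq : a < q) (hb : 0 < b) (hbq : b < q) (hc : 0 < c) (hcq : c < q)
    (h1 : w * a - b = q * t₁) (h2 : k * b - c = q * t₂) :
    D ((k * w * a : ℤ) / (c : ℤ)) = D ((w * a : ℤ) / (b : ℤ)) + D ((k * b : ℤ) / (c : ℤ)) := by
  have hq : (0 : ℤ) < q := by omega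
  have bnd : ∀ n x y t : ℤ, n ≠ 0 → 0 < x → x < q → 0 < y → y < q → n * x - y = q * t →
      |t| ≤ |n| := by
    intro n x y t hn hx hxq hy hyq e
    rcases lt_or_gt_of_ne hn with h' | h'
    · rw [abs_of_neg h', abs_le]
      constructor
      · nlinarith
      · nlinarith
    · rw [abs_of_pos h', abs_le]
      constructor
      · nlinarith
      · nlinarith
  have kw0 : k * w ≠ 0 := mul_ne_zero hk hw
  have ak : 1 ≤ |k| := Int.one_le_abs hk
  have aw : 1 ≤ |w| := Int.one_le_abs hw
  have hkw' : |k| * |w| < q := by rwa [← abs_mul]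
  have h3 : k * w * a - c = q * (k * t₁ + t₂) := by linear_combination k * h1 + h2
  have b1 := bnd w a b t₁ hw ha haq hb hbq h1
  have b2 := bnd k b c t₂ hk hb hbq hc hcq h2
  have b3 := bnd (k * w) a c (k * t₁ + t₂) kw0 ha haq hc hcq h3
  have aa : |a| < q := by rwa [abs_of_pos ha]
  have ab : |b| < q := by rwa [abs_of_pos hb]
  have ac : |-c| < q := by rwa [abs_neg, abs_of_pos hc]
  have lk : |k| < q := by nlinarith
  have lw : |w| < q := by nlinarith
  have l1 : |(1 : ℤ)| < q := by rw [abs_one]; omega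
  have l2 : |w * t₂| < q := by rw [abs_mul]; nlinarith
  have key := h.additive (k₁ := a) (m₁ := 1) (k₂ := b) (m₂ := w) (k₃ := c) (m₃ := k * w)
    (N := q) (t₂₃ := w * t₂) (t₁₃ := k * t₁ + t₂) hq.ne' ha.ne' one_ne_zero hb.ne' hw hc.ne' kw0
    (by linear_combination w * h2) (by linear_combination h3)
    (by
      have := hJ t₂ 1 (k * t₁ + t₂) 1 (-k) t₁ (by omega) l1 (by omega) l1 (by rwa [abs_neg])
        (by omega) (by ring)
      rw [← this]
      congr 1
      have hw' : (w : ℚ) ≠ 0 := by exact_mod_cast hw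
      push_cast
      rw [mul_one, mul_one, mul_one, mul_comm _ (w : ℚ), mul_div_mul_left _ _ hw'])
    (hJ (w * t₂) a (k * t₁ + t₂) b (-c) t₁ l2 aa (by omega) ab ac (by omega) (by
      apply mul_left_cancel₀ hq.ne'
      linear_combination (-(w * a)) * h2 + b * h3 - c * h1))
  have e1 : ((a * (k * w) : ℤ) : ℚ) / ((1 * c : ℤ) : ℚ) = ((k * w * a : ℤ) : ℚ) / (c : ℤ) := by
    rw [one_mul, mul_comm]
  have e2 : ((a * w : ℤ) : ℚ) / ((1 * b : ℤ) : ℚ) = ((w * a : ℤ) : ℚ) / (b : ℤ) := by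
    rw [one_mul, mul_comm]
  have e3 : ((b * (k * w) : ℤ) : ℚ) / ((w * c : ℤ) : ℚ) = ((k * b : ℤ) : ℚ) / (c : ℤ) := by
    have hw' : (w : ℚ) ≠ 0 := by exact_mod_cast hw
    push_cast
    rw [show (b : ℚ) * (k * w) = w * (k * b) by ring, mul_div_mul_left _ _ hw']
  rw [e1, e2, e3] at key
  exact key
end

section
variable {I : Type} [AddCommGroup I] [Coef I]

/-- On the residues modulo a prime `q`, the symbols `D(ka/b)`, `b ≡ ka`, with `k² < q` are
described by one function `s`, which is additive for products smaller than `q`. -/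
theorem exists_residue_log {D : ℚ → I} (h : IsBloch D) {q : ℕ} [hq : Fact q.Prime]
    (hJ : VanishBelow D q) :
    ∃ s : ℕ → I, (∀ a b : ℕ, 0 < a → 0 < b → a * b < q → s (a * b) = s a + s b) ∧
      ∀ k a b t : ℤ, k ≠ 0 → k ^ 2 < q → 0 < a → a < q → 0 < b → b < q → k * a - b = q * t →
        D ((k * a : ℤ) / (b : ℤ)) = s k.natAbs + s a.natAbs - s b.natAbs := by
  have hq2 := hq.out.two_le
  have hq0 : (0 : ℤ) < q := by omega
  let ι := {k : ℤ // k ≠ 0 ∧ k ^ 2 < q}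
  have nz : ∀ a : ℤ, a ≠ 0 → |a| < q → (a : ZMod q) ≠ 0 := by
    intro a h0 ha h1
    rw [ZMod.intCast_zmod_eq_zero_iff_dvd] at h1
    have := Int.le_of_dvd (abs_pos.mpr h0) ((dvd_abs _ _).mpr h1)
    omega
  have smallk : ∀ k : ℤ, k ^ 2 < q → |k| < q := by
    intro k hk
    rw [← sq_abs] at hk
    have := abs_nonneg k
    nlinarith
  let σ : ι → (ZMod q)ˣ := fun k => Units.mk0 (k.1 : ZMod q) (nz k.1 k.2.1 (smallk _ k.2.2))
  have hσ : Subgroup.closure (Set.range σ) = ⊤ := by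
    rw [eq_top_iff]
    intro u _
    obtain ⟨a, b, ha, hb, ha2, hb2, e⟩ := thue q (u : ZMod q) u.ne_zero
    have e2 : u = σ ⟨b, hb, hb2⟩ * (σ ⟨a, ha, ha2⟩)⁻¹ := by
      rw [eq_mul_inv_iff_mul_eq]
      apply Units.ext
      rw [Units.val_mul]
      exact e.symm
    rw [e2]
    exact Subgroup.mul_mem _ (Subgroup.subset_closure ⟨_, rfl⟩)
      (Subgroup.inv_mem _ (Subgroup.subset_closure ⟨_, rfl⟩))
  let v : (ZMod q)ˣ → ℤ := fun u => ((u : ZMod q).val : ℤ)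
  have v0 : ∀ u, 0 < v u := by
    intro u
    have : (u : ZMod q).val ≠ 0 := by rw [Ne, ZMod.val_eq_zero]; exact u.ne_zero
    simp only [v]; omega
  have vq : ∀ u, v u < q := by
    intro u
    have := ZMod.val_lt (u : ZMod q)
    simp only [v]; omega
  have vc : ∀ u, ((v u : ℤ) : ZMod q) = u := by intro u; simp [v]
  have vuniq : ∀ (u : (ZMod q)ˣ) (b : ℤ), 0 < b → b < q → (b : ZMod q) = u → v u = b := by
    intro u b hb hbq e
    have h1 := vc u
    rw [← e, ZMod.intCast_eq_intCast_iff_dvd_sub] at h1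
    have h2 := v0 u
    have h3 := vq u
    obtain ⟨c, hc⟩ := h1
    have c1 : c < 1 := by by_contra h'; push Not at h'; nlinarith
    have c2 : -1 < c := by by_contra h'; push Not at h'; nlinarith
    have : c = 0 := by omega
    rw [this] at hc; omega
  have vmul : ∀ (k : ι) u, ∃ t, k.1 * v u - v (σ k * u) = q * t := by
    intro k u
    have : (q : ℤ) ∣ k.1 * v u - v (σ k * u) := by
      rw [← ZMod.intCast_zmod_eq_zero_iff_dvd]
      push_cast
      rw [vc, vc, Units.val_mul]
      simp [σ]
    exact this
  let f : ι → (ZMod q)ˣ → I := fun k u => D ((k.1 * v u : ℤ) / (v (σ k * u) : ℤ))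
  have fmul : ∀ (k w : ι) u, f w u + f k (σ w * u) =
      D ((k.1 * w.1 * v u : ℤ) / (v (σ k * (σ w * u)) : ℤ)) := by
    intro k w u
    obtain ⟨t₁, h1⟩ := vmul w u
    obtain ⟨t₂, h2⟩ := vmul k (σ w * u)
    refine (bloch_mult h hJ k.2.1 w.2.1 ?_ (v0 _) (vq _) (v0 _) (vq _) (v0 _) (vq _) h1 h2).symm
    apply abs_lt_of_sq_lt_sq _ hq0.le
    have hk := k.2.2
    have hw := w.2.2
    have := sq_nonneg k.1
    have := sq_nonneg w.1
    rw [mul_pow]; nlinarith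
  obtain ⟨ψ, s, hs1, hf⟩ := Coef.partial_cocycle σ hσ f (by
    intro k w u
    rw [fmul, fmul, mul_comm k.1 w.1, mul_left_comm])
  let sN : ℕ → I := fun n => if hn : (n : ZMod q) = 0 then 0 else s (Units.mk0 (n : ZMod q) hn)
  have sNu : ∀ (u : (ZMod q)ˣ) (a : ℤ), 0 < a → (a : ZMod q) = u → sN a.natAbs = s u := by
    intro u a ha e
    have e1 : ((a.natAbs : ℕ) : ZMod q) = u := by
      rw [← e, ← Int.cast_natCast, Int.natAbs_of_nonneg ha.le]
    simp only [sN]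
    rw [dif_neg (by rw [e1]; exact u.ne_zero)]
    congr 1
    exact Units.ext e1
  have A : ∀ (k : ι) (a b t : ℤ), 0 < a → a < q → 0 < b → b < q → k.1 * a - b = q * t →
      D ((k.1 * a : ℤ) / (b : ℤ)) = ψ k + sN a.natAbs - sN b.natAbs := by
    intro k a b t ha haq hb hbq e
    let u : (ZMod q)ˣ := Units.mk0 (a : ZMod q) (nz a ha.ne' (by rwa [abs_of_pos ha]))
    have hu : (a : ZMod q) = u := rfl
    have hb' : (b : ZMod q) = ((σ k * u : (ZMod q)ˣ) : ZMod q) := by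
      rw [Units.val_mul]
      have e' := congrArg (Int.cast : ℤ → ZMod q) e
      push_cast at e'
      rw [ZMod.natCast_self, zero_mul, sub_eq_zero] at e'
      exact e'.symm
    have := hf k u
    simp only [f] at this
    rw [vuniq u a ha haq hu, vuniq _ b hb hbq hb'] at this
    rw [this, sNu u a ha hu, sNu _ b hb hb']
  have s1 : sN 1 = 0 := by
    have := sNu 1 1 one_pos (by simp)
    rw [← hs1, ← this]; rfl
  have B : ∀ k : ι, 0 < k.1 → ψ k = sN k.1.natAbs := by
    intro k hk
    have hkq := smallk _ k.2.2
    rw [abs_of_pos hk] at hkq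
    have := A k 1 k.1 0 one_pos (by omega) hk hkq (by ring)
    rw [mul_one, div_self (by exact_mod_cast hk.ne'), h.one, Int.natAbs_one, s1, add_zero] at this
    exact (sub_eq_zero.mp this.symm)
  have i1 : (-1 : ℤ) ≠ 0 ∧ (-1 : ℤ) ^ 2 < q := ⟨by norm_num, by norm_num; omega⟩
  have C1 : ψ ⟨-1, i1⟩ = 0 := by
    have h1 := A ⟨-1, i1⟩ 1 (q - 1) (-1) one_pos (by omega) (by omega) (by omega) (by ring)
    have h2 := A ⟨-1, i1⟩ (q - 1) 1 (-1) (by omega) (by omega) (by omega) (by omega) (by ring)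
    have e : (((-1 : ℤ) * (q - 1 : ℤ) : ℤ) : ℚ) / ((1 : ℤ) : ℚ) =
        ((((-1 : ℤ) * 1 : ℤ) : ℚ) / ((q - 1 : ℤ) : ℚ))⁻¹ := by
      push_cast
      rw [inv_div]
      field_simp
    simp only at h1 h2
    rw [e, h.inv, h1] at h2
    apply Coef.two_inj
    rw [Int.natAbs_one, s1] at h2
    have h3 := sub_eq_zero.mpr h2
    have : ψ ⟨-1, i1⟩ + ψ ⟨-1, i1⟩ = -(-(ψ ⟨-1, i1⟩ + 0 - sN (q - 1 : ℤ).natAbs) - (ψ ⟨-1, i1⟩ + sN (q - 1 : ℤ).natAbs - 0)) := by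
      abel
    rw [this, h3, neg_zero]
  have C : ∀ k : ι, ψ k = sN k.1.natAbs := by
    intro k
    rcases lt_or_gt_of_ne k.2.1 with hk | hk
    · have hkq := smallk _ k.2.2
      rw [abs_of_neg hk] at hkq
      have h1 := A k 1 (q + k.1) (-1) one_pos (by omega) (by omega) (by omega) (by ring)
      have h2 := A ⟨-1, i1⟩ (-k.1) (q + k.1) (-1) (by omega) (by omega) (by omega) (by omega)
        (by ring)
      simp only at h2
      rw [mul_one] at h1
      rw [show (-1 : ℤ) * -k.1 = k.1 by ring, h1, C1, Int.natAbs_one, s1, add_zero, zero_add,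
        Int.natAbs_neg] at h2
      exact sub_left_inj.mp h2
    · exact B k hk
  refine ⟨sN, ?_, ?_⟩
  · have key : ∀ a b : ℕ, 0 < a → a ≤ b → a * b < q → sN (a * b) = sN a + sN b := by
      intro a b ha hab hlt
      have hb2 : b < q := by nlinarith
      have ia : (a : ℤ) ≠ 0 ∧ (a : ℤ) ^ 2 < q := by
        refine ⟨by omega, ?_⟩
        have : a ^ 2 < q := by nlinarith
        exact_mod_cast this
      have hlt' : ((a * b : ℕ) : ℤ) < q := by exact_mod_cast hlt
      have hpos : (0 : ℤ) < ((a * b : ℕ) : ℤ) := by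
        have : 0 < a * b := Nat.mul_pos ha (by omega)
        exact_mod_cast this
      have := A ⟨a, ia⟩ b ((a * b : ℕ) : ℤ) 0 (by omega) (by omega) hpos hlt'
        (by push_cast; ring)
      simp only at this
      rw [← Nat.cast_mul, div_self (by exact_mod_cast hpos.ne'), h.one, C, Int.natAbs_natCast,
        Int.natAbs_natCast] at this
      have h3 := sub_eq_zero.mp this.symm
      exact h3.symm
    intro a b ha hb hlt
    rcases le_total a b with hab | hab
    · exact key a b ha hab hlt
    · rw [mul_comm, add_comm]
      exact key b a hb hab (by rwa [mul_comm])
  · intro k a b t hk0 hk2 ha haq hb hbq e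
    rw [A ⟨k, hk0, hk2⟩ a b t ha haq hb hbq e, C]
end

section
variable {I : Type} [AddCommGroup I] [Coef I]

/-- A function additive for products smaller than `q` agrees below `q` with a completely additive
function. -/
theorem exists_additive_ext (q : ℕ) (s : ℕ → I)
    (hs : ∀ a b : ℕ, 0 < a → 0 < b → a * b < q → s (a * b) = s a + s b) (hq : 1 < q) :
    ∃ g : ℕ → I, (∀ a b, a ≠ 0 → b ≠ 0 → g (a * b) = g a + g b) ∧
      ∀ n, 0 < n → n < q → g n = s n := by
  refine ⟨fun n => (n.primeFactorsList.map s).sum, ?_, ?_⟩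
  · intro a b ha hb
    simp only
    rw [((Nat.perm_primeFactorsList_mul ha hb).map s).sum_eq, List.map_append, List.sum_append]
  · intro n
    induction n using Nat.strong_induction_on with
    | _ n ih =>
      intro hn hnq
      by_cases h1 : n = 1
      · subst h1
        have := hs 1 1 one_pos one_pos (by simpa using hq)
        rw [mul_one] at this
        have h0 : s 1 = 0 := by simpa using this
        simp [h0]
      have hp := Nat.minFac_prime h1
      obtain ⟨m, hm⟩ := Nat.minFac_dvd n
      have hm0 : 0 < m := Nat.pos_of_ne_zero (by rintro rfl; omega)
      have hp2 := hp.two_le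
      have hmn : m < n := by rw [hm]; nlinarith
      have e : n.primeFactorsList.Perm ((n.minFac).primeFactorsList ++ m.primeFactorsList) := by
        conv_lhs => rw [hm]
        exact Nat.perm_primeFactorsList_mul hp.ne_zero hm0.ne'
      have ihm := ih m hmn hm0 (by omega)
      simp only at ihm ⊢
      rw [(e.map s).sum_eq, List.map_append, List.sum_append, ihm, Nat.primeFactorsList_prime hp]
      have := hs n.minFac m hp.pos hm0 (by rw [← hm]; exact hnq)
      rw [← hm] at this
      simp [this]

theorem tame_vanish {q : ℕ} [hq : Fact q.Prime] (g : ℕ → I) {r r' : ℚ}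
    (h1 : padicValRat q r = 0) (h2 : padicValRat q r' = 0) : tame q g r r' = 0 := by
  unfold tame
  split_ifs
  · rfl
  · simp [h1, h2]

/-- The inductive step at a prime `q`: it is made possible by subtracting a form supported at
`q`. -/
theorem VanishBelow.prime {D : ℚ → I} (h : IsBloch D) {q : ℕ} [hq : Fact q.Prime]
    (hJ : VanishBelow D q) :
    ∃ Φ : ℚ → ℚ → I, IsAltQ Φ ∧ VanishBelow (fun r => D r - Φ r (1 - r)) (q + 1) := by
  have hq2 := hq.out.two_le
  have hq0 : (0 : ℤ) < q := by omega
  obtain ⟨s, hs, hD⟩ := exists_residue_log h hJ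
  obtain ⟨g, hg, hgs⟩ := exists_additive_ext q s hs (by omega)
  have hT := tame_alt q hg
  refine ⟨tame q g, hT, ?_⟩
  have hB : IsBloch (fun r => D r - tame q g r (1 - r)) := h.sub hT.isBloch
  set D' : ℚ → I := fun r => D r - tame q g r (1 - r) with hD'
  have one_sub_eq : ∀ a b c : ℤ, b ≠ 0 → a - b = c →
      1 - ((a : ℤ) : ℚ) / (b : ℤ) = ((-c : ℤ) : ℚ) / (b : ℤ) := by
    intro a b c hb e
    have : (b : ℚ) ≠ 0 := by exact_mod_cast hb
    rw [← e]
    push_cast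
    field_simp
    ring
  have vdiv : ∀ a b : ℚ, a ≠ 0 → b ≠ 0 →
      padicValRat q (a / b) = padicValRat q a - padicValRat q b := fun a b ha hb =>
    padicValRat.div ha hb
  have vmul : ∀ a b : ℤ, a ≠ 0 → b ≠ 0 →
      padicValRat q ((a * b : ℤ) : ℚ) = padicValRat q (a : ℚ) + padicValRat q (b : ℚ) := by
    intro a b ha hb
    push_cast
    exact padicValRat.mul (by exact_mod_cast ha) (by exact_mod_cast hb)
  have hJ' : VanishBelow D' q := by
    intro x y z w r t hx hy hz hw hr ht heq
    by_cases hzw : z * w = 0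
    · rw [hzw]; simpa using hB.zero
    by_cases hxy : x * y = 0
    · rw [hxy]; simpa using hB.zero
    have hx0 := left_ne_zero_of_mul hxy
    have hy0 := right_ne_zero_of_mul hxy
    have hz0 := left_ne_zero_of_mul hzw
    have hw0 := right_ne_zero_of_mul hzw
    have hzw' : ((z * w : ℤ) : ℚ) ≠ 0 := by exact_mod_cast hzw
    by_cases hrt : r * t = 0
    · have : x * y = z * w := by linarith
      rw [this, div_self hzw']
      exact hB.one
    have hr0 := left_ne_zero_of_mul hrt
    have ht0 := right_ne_zero_of_mul hrt
    simp only [hD']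
    rw [hJ x y z w r t hx hy hz hw hr ht heq, tame_vanish, sub_zero]
    · rw [vdiv _ _ (by exact_mod_cast hxy) hzw', vmul _ _ hx0 hy0, vmul _ _ hz0 hw0,
        padicValRat_small q _ hx0 hx, padicValRat_small q _ hy0 hy, padicValRat_small q _ hz0 hz,
        padicValRat_small q _ hw0 hw]
      simp
    · rw [one_sub_eq _ _ _ hzw heq, vdiv _ _ (by push_cast; simp [hr0, ht0]) hzw', Int.cast_neg,
        padicValRat.neg, vmul _ _ hr0 ht0, vmul _ _ hz0 hw0,
        padicValRat_small q _ hr0 hr, padicValRat_small q _ ht0 ht, padicValRat_small q _ hz0 hz,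
        padicValRat_small q _ hw0 hw]
      simp
  have smallk : ∀ k : ℤ, k ^ 2 < q → |k| < q := by
    intro k hk
    rw [← sq_abs] at hk
    have := abs_nonneg k
    nlinarith
  have A0 : ∀ k a b t : ℤ, k ≠ 0 → k ^ 2 < q → 0 < a → a < q → 0 < b → b < q →
      k * a - b = q * t → D' ((k * a : ℤ) / (b : ℤ)) = 0 := by
    intro k a b t hk0 hk2 ha haq hb hbq e
    have hb' : ((b : ℤ) : ℚ) ≠ 0 := by exact_mod_cast hb.ne'
    by_cases ht : t = 0
    · have : k * a = b := by rw [ht] at e; linarith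
      rw [this, div_self hb']
      exact hB.one
    have hka : k * a ≠ 0 := mul_ne_zero hk0 ha.ne'
    have hkq := smallk k hk2
    have ak : 1 ≤ |k| := Int.one_le_abs hk0
    have htq : |t| < q := by
      have h1 : |(q : ℤ) * t| ≤ |k * a| + |b| := by rw [← e]; exact abs_sub _ _
      rw [abs_mul, abs_mul, Nat.abs_cast, abs_of_pos ha, abs_of_pos hb] at h1
      by_contra h'
      push Not at h'
      nlinarith
    have vr : padicValRat q (((k * a : ℤ) : ℚ) / (b : ℤ)) = 0 := by
      rw [vdiv _ _ (by exact_mod_cast hka) hb', vmul _ _ hk0 ha.ne', padicValRat_small q _ hk0 hkq,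
        padicValRat_small q _ ha.ne' (by rwa [abs_of_pos ha]),
        padicValRat_small q _ hb.ne' (by rwa [abs_of_pos hb])]
      simp
    have v1 : padicValRat q (1 - ((k * a : ℤ) : ℚ) / (b : ℤ)) = 1 := by
      rw [one_sub_eq _ _ _ hb.ne' e, vdiv _ _ (by push_cast; simp [ht, hq0.ne']; omega) hb', Int.cast_neg,
        padicValRat.neg, vmul _ _ hq0.ne' ht, padicValRat_small q _ ht htq,
        padicValRat_small q _ hb.ne' (by rwa [abs_of_pos hb])]
      simp [padicValRat.self hq.out.one_lt]
    have nz1 : ((k * a : ℤ) : ℚ) / (b : ℤ) ≠ 0 := div_ne_zero (by exact_mod_cast hka) hb'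
    have nz2 : 1 - ((k * a : ℤ) : ℚ) / (b : ℤ) ≠ 0 := by
      intro h0
      rw [h0] at v1
      simp at v1
    have nat_lt : ∀ n : ℤ, |n| < q → n.natAbs < q := by
      intro n hn
      rw [Int.abs_eq_natAbs] at hn
      exact_mod_cast hn
    simp only [hD']
    rw [hD k a b t hk0 hk2 ha haq hb hbq e, tame, if_neg (by tauto), vr, v1, one_smul, zero_smul,
      sub_zero, ratExt_div hg _ _ hka hb.ne', Int.natAbs_mul, hg _ _ (by omega) (by omega),
      hgs _ (by omega) (nat_lt k hkq), hgs _ (by omega) (nat_lt a (by rwa [abs_of_pos ha])),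
      hgs _ (by omega) (nat_lt b (by rwa [abs_of_pos hb])), sub_self]
  have A : ∀ k a b t : ℤ, k ≠ 0 → k ^ 2 < q → a ≠ 0 → |a| < q → b ≠ 0 → |b| < q →
      k * a - b = q * t → D' ((k * a : ℤ) / (b : ℤ)) = 0 := by
    have A1 : ∀ k a b t : ℤ, k ≠ 0 → k ^ 2 < q → 0 < a → a < q → b ≠ 0 → |b| < q →
        k * a - b = q * t → D' ((k * a : ℤ) / (b : ℤ)) = 0 := by
      intro k a b t hk0 hk2 ha haq hb hbq e
      rw [abs_lt] at hbq
      rcases lt_or_gt_of_ne hb with h' | h'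
      · have := A0 (-k) a (-b) (-t) (by omega) (by rwa [neg_sq]) ha haq (by omega) (by omega)
          (by linarith)
        rw [← this]
        congr 1
        push_cast
        rw [neg_mul, neg_div_neg_eq]
      · exact A0 k a b t hk0 hk2 ha haq h' hbq.2 e
    intro k a b t hk0 hk2 ha haq hb hbq e
    rw [abs_lt] at haq
    rcases lt_or_gt_of_ne ha with h' | h'
    · have := A1 (-k) (-a) b t (by omega) (by rwa [neg_sq]) (by omega) (by omega) hb hbq
        (by linarith)
      rwa [neg_mul_neg] at this
    · exact A1 k a b t hk0 hk2 h' haq.2 hb hbq e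
  have bnd : ∀ a b k l t : ℤ, |a| < q → |b| < q → k ^ 2 < q → l ^ 2 < q →
      a * k - b * l = q * t → |t| < q := by
    intro a b k l t ha hb hk hl e
    have h1 : |(q : ℤ) * t| ≤ |a| * |k| + |b| * |l| := by
      rw [← e, ← abs_mul, ← abs_mul]; exact abs_sub _ _
    rw [abs_mul, Nat.abs_cast] at h1
    rw [← sq_abs] at hk hl
    have k2 : 2 * |k| ≤ q := by nlinarith [sq_nonneg (|k| - 1)]
    have l2 : 2 * |l| ≤ q := by nlinarith [sq_nonneg (|l| - 1)]
    have := abs_nonneg a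
    have := abs_nonneg b
    have h2 : 2 * ((q : ℤ) * |t|) ≤ (|a| + |b|) * q := by nlinarith
    have h3 : 2 * |t| ≤ |a| + |b| := by nlinarith
    omega
  have B : ∀ m m' k k' t : ℤ, k ≠ 0 → k ^ 2 < q → k' ≠ 0 → k' ^ 2 < q → m ≠ 0 → |m| < q →
      m' ≠ 0 → |m'| < q → m * k' - m' * k = q * t → D' ((m * k' : ℤ) / (k * m' : ℤ)) = 0 := by
    intro m m' k k' t hk0 hk hk0' hk' hm0 hm hm0' hm' e
    have nz : ∀ a : ℤ, a ≠ 0 → |a| < q → (a : ZMod q) ≠ 0 := by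
      intro a h0 ha h1
      rw [ZMod.intCast_zmod_eq_zero_iff_dvd] at h1
      have := Int.le_of_dvd (abs_pos.mpr h0) ((dvd_abs _ _).mpr h1)
      omega
    let u : ℤ := (((m : ZMod q) / (k : ZMod q)).val : ℤ)
    have kz := nz k hk0 (smallk k hk)
    have mz := nz m hm0 hm
    have u0 : 0 < u := by
      have : ((m : ZMod q) / (k : ZMod q)).val ≠ 0 := by
        rw [Ne, ZMod.val_eq_zero]; exact div_ne_zero mz kz
      simp only [u]; omega
    have uq : u < q := by
      have := ZMod.val_lt ((m : ZMod q) / (k : ZMod q))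
      simp only [u]; omega
    have uc : (u : ZMod q) = (m : ZMod q) / (k : ZMod q) := by simp [u]
    have e1 : (q : ℤ) ∣ k * u - m := by
      rw [← ZMod.intCast_zmod_eq_zero_iff_dvd]
      push_cast
      rw [uc]
      field_simp
      simp
    obtain ⟨t₁, e1⟩ := e1
    have e2 : (q : ℤ) ∣ k' * u - m' := by
      rw [← ZMod.intCast_zmod_eq_zero_iff_dvd]
      push_cast
      rw [uc]
      have e' := congrArg (Int.cast : ℤ → ZMod q) e
      push_cast at e'
      rw [ZMod.natCast_self, zero_mul] at e'
      field_simp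
      linear_combination e'
    obtain ⟨t₂, e2⟩ := e2
    have au : |u| < q := by rwa [abs_of_pos u0]
    have one2 : (1 : ℤ) ^ 2 < q := by norm_num; omega
    have l1 : |(1 : ℤ)| < q := smallk 1 one2
    have bt1 : |t₁| < q := bnd u m k 1 t₁ au hm hk one2 (by linarith)
    have bt2 : |t₂| < q := bnd u m' k' 1 t₂ au hm' hk' one2 (by linarith)
    have bt : |t| < q := bnd m m' k' k t hm hm' hk' hk e
    have D1 := A k u m t₁ hk0 hk u0.ne' au hm0 hm e1
    have D2 := A k' u m' t₂ hk0' hk' u0.ne' au hm0' hm' e2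
    have key := hB.additive (k₁ := m) (m₁ := k) (k₂ := u) (m₂ := 1) (k₃ := m') (m₃ := k')
      (N := q) (t₂₃ := t₂) (t₁₃ := t) hq0.ne' hm0 hk0 u0.ne' one_ne_zero hm0' hk0'
      (by linarith) (by linarith)
      (hJ' t₂ k t 1 k' t₁ bt2 (smallk k hk) bt l1 (smallk k' hk') bt1 (by
        apply mul_left_cancel₀ hq0.ne'
        linear_combination (-k) * e2 + e + k' * e1))
      (hJ' t₂ m t u m' t₁ bt2 hm bt au hm' bt1 (by
        apply mul_left_cancel₀ hq0.ne'
        linear_combination (-m) * e2 + u * e + m' * e1))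
    rw [← inv_div, hB.inv, neg_eq_zero] at D1
    rw [key]
    rw [mul_one, D1, one_mul, mul_comm u, D2, add_zero]
  refine VanishBelow.step hB hq2 hJ' (d := 1) (e := q) (Nat.prime_iff_prime_int.mp hq.out)
    (by exact_mod_cast hq2) le_rfl (by ring) ?_
  intro x y z w t hx hy hz hw ex ey ez ew heq
  have xz : (x : ZMod q) ≠ 0 := fun h0 => ex ((ZMod.intCast_zmod_eq_zero_iff_dvd _ _).mp h0)
  have zz : (z : ZMod q) ≠ 0 := fun h0 => ez ((ZMod.intCast_zmod_eq_zero_iff_dvd _ _).mp h0)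
  have ne0 : ∀ {a : ℤ}, ¬ (q : ℤ) ∣ a → a ≠ 0 := fun ha h0 => ha (h0 ▸ dvd_zero _)
  obtain ⟨a, b, ha0, hb0, ha, hb, hab⟩ := thue q ((x : ZMod q) / z) (div_ne_zero xz zz)
  have e1 : (q : ℤ) ∣ x * a - z * b := by
    rw [← ZMod.intCast_zmod_eq_zero_iff_dvd]
    push_cast
    rw [hab]
    field_simp
    simp
  obtain ⟨t₁, e1⟩ := e1
  have e2 : (q : ℤ) ∣ b * y - a * w := by
    rw [← ZMod.intCast_zmod_eq_zero_iff_dvd]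
    push_cast
    rw [hab]
    have e' := congrArg (Int.cast : ℤ → ZMod q) heq
    push_cast at e'
    rw [ZMod.natCast_self, zero_mul] at e'
    field_simp
    linear_combination (a : ZMod q) * e'
  obtain ⟨t₂, e2⟩ := e2
  refine ⟨b, a, t₁, t₂, hb0, ha0, smallk b hb, smallk a ha, bnd x z a b t₁ hx hz ha hb e1,
    bnd y w b a t₂ hy hw hb ha (by linarith), e1, e2, ?_, ?_⟩
  · have := B x z b a t₁ hb0 hb ha0 ha (ne0 ex) hx (ne0 ez) hz e1
    rwa [mul_comm b z] at this
  · have := B y w a b t₂ ha0 ha hb0 hb (ne0 ey) hy (ne0 ew) hw (by linarith)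
    rwa [mul_comm y b] at this

theorem IsAltQ.add {Φ Ψ : ℚ → ℚ → I} (h : IsAltQ Φ) (h' : IsAltQ Ψ) :
    IsAltQ (fun a b => Φ a b + Ψ a b) := by
  refine ⟨fun b => by simp [h.zero, h'.zero], fun a b c ha hb => ?_, fun a b => ?_⟩
  · simp only [h.mul a b c ha hb, h'.mul a b c ha hb]; abel
  · simp only [h.skew a b, h'.skew a b]; abel

theorem exists_vanishBelow {D : ℚ → I} (h : IsBloch D) (N : ℕ) :
    ∃ Φ : ℚ → ℚ → I, IsAltQ Φ ∧ VanishBelow (fun r => D r - Φ r (1 - r)) (N + 2) := by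
  induction N with
  | zero =>
    refine ⟨fun _ _ => 0, ⟨fun _ => rfl, fun _ _ _ _ _ => by simp, fun _ _ => by simp⟩, ?_⟩
    simpa using VanishBelow.two h
  | succ N ih =>
    obtain ⟨Φ, hΦ, hJ⟩ := ih
    have hB : IsBloch (fun r => D r - Φ r (1 - r)) := h.sub hΦ.isBloch
    by_cases hp : (N + 2).Prime
    · have : Fact (N + 2).Prime := ⟨hp⟩
      obtain ⟨Ψ, hΨ, hJ'⟩ := VanishBelow.prime hB hJ
      refine ⟨_, hΦ.add hΨ, ?_⟩
      convert hJ' using 2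
      abel
    · exact ⟨Φ, hΦ, VanishBelow.composite hB (by omega) hJ hp⟩

/-- Every function with the functional equations of the dilogarithm and values in a coefficient
group is of the form `r ↦ Φ(r, 1 - r)` for an alternating bilinear form `Φ` on `ℚˣ`. -/
theorem IsBloch.exists_alt {D : ℚ → I} (h : IsBloch D) :
    ∃ Φ : ℚ → ℚ → I, IsAltQ Φ ∧ ∀ r, D r = Φ r (1 - r) := by
  classical
  let T := TensorProduct ℤ (Additive ℚˣ) (Additive ℚˣ)
  let W := {r : ℚ // r ≠ 0 ∧ r ≠ 1}
  let u : W → Additive ℚˣ := fun r => Additive.ofMul (Units.mk0 r.1 r.2.1)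
  let u' : W → Additive ℚˣ := fun r =>
    Additive.ofMul (Units.mk0 (1 - r.1) (sub_ne_zero.mpr (Ne.symm r.2.2)))
  let φ : (W →₀ ℤ) →+ T :=
    (Finsupp.linearCombination ℤ (fun r => TensorProduct.tmul ℤ (u r) (u' r) -
      TensorProduct.tmul ℤ (u' r) (u r))).toAddMonoidHom
  let DD : (W →₀ ℤ) →+ I := (Finsupp.linearCombination ℤ (fun r : W => D r.1)).toAddMonoidHom
  obtain ⟨g, hg⟩ := Coef.extend φ DD (by
    intro x hx
    -- a bound for all numerators and denominators that occur in `x`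
    obtain ⟨N, hN⟩ : ∃ N : ℕ, ∀ r ∈ x.support,
        |r.1.num| < N + 2 ∧ (r.1.den : ℤ) < N + 2 ∧ |r.1.num - r.1.den| < N + 2 := by
      refine ⟨x.support.sup (fun r => r.1.num.natAbs + r.1.den), fun r hr => ?_⟩
      have := Finset.le_sup (f := fun r : W => r.1.num.natAbs + r.1.den) hr
      generalize x.support.sup (fun r : W => r.1.num.natAbs + r.1.den) = M at this
      rw [Int.abs_eq_natAbs, Int.abs_eq_natAbs]
      omega
    obtain ⟨Φ, hΦ, hJ⟩ := exists_vanishBelow h N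
    have hDr : ∀ r ∈ x.support, D r.1 = Φ r.1 (1 - r.1) := by
      intro r hr
      obtain ⟨h1, h2, h3⟩ := hN r hr
      have := hJ r.1.num 1 r.1.den 1 (r.1.num - r.1.den) 1 (by push_cast; exact h1)
        (by push_cast; rw [abs_one]; omega) (by push_cast; rw [Nat.abs_cast]; exact h2)
        (by push_cast; rw [abs_one]; omega) (by push_cast; exact h3)
        (by push_cast; rw [abs_one]; omega) (by ring)
      have e : (((r.1.num * 1 : ℤ) : ℚ) / ((r.1.den * 1 : ℤ) : ℚ)) = r.1 := by
        push_cast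
        rw [mul_one, mul_one, Rat.num_div_den]
      rw [e] at this
      exact sub_eq_zero.mp this
    let B : Additive ℚˣ →+ Additive ℚˣ →+ I :=
      AddMonoidHom.mk' (fun a => AddMonoidHom.mk' (fun b => Φ (a.toMul : ℚˣ) (b.toMul : ℚˣ))
        (fun b c => by
          change Φ _ ((b.toMul * c.toMul : ℚˣ) : ℚ) = _
          rw [Units.val_mul, hΦ.mul_right _ _ _ (Units.ne_zero _) (Units.ne_zero _)]))
        (fun a b => by
          ext c
          change Φ ((a.toMul * b.toMul : ℚˣ) : ℚ) _ = _
          rw [Units.val_mul, hΦ.mul _ _ _ (Units.ne_zero _) (Units.ne_zero _)]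
          rfl)
    let L : T →+ I := TensorProduct.liftAddHom B (by
      intro n a b
      simp)
    have hL : ∀ y : W →₀ ℤ, y.support ⊆ x.support → L (φ y) = DD y + DD y := by
      intro y hy
      simp only [φ, DD, LinearMap.toAddMonoidHom_coe, Finsupp.linearCombination_apply, Finsupp.sum]
      rw [map_sum, ← Finset.sum_add_distrib]
      refine Finset.sum_congr rfl (fun r hr => ?_)
      rw [map_zsmul, map_sub, ← smul_add]
      congr 1
      change Φ r.1 (1 - r.1) - Φ (1 - r.1) r.1 = _
      rw [hΦ.skew (1 - r.1), hDr r (hy hr)]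
      abel
    apply Coef.two_inj
    rw [← hL x (Finset.Subset.refl _), hx, map_zero])
  let Φ : ℚ → ℚ → I := fun a b =>
    if ha : a = 0 then 0 else if hb : b = 0 then 0 else
      g (TensorProduct.tmul ℤ (Additive.ofMul (Units.mk0 a ha)) (Additive.ofMul (Units.mk0 b hb)) -
        TensorProduct.tmul ℤ (Additive.ofMul (Units.mk0 b hb)) (Additive.ofMul (Units.mk0 a ha)))
  refine ⟨Φ, ⟨fun b => by simp [Φ], fun a b c ha hb => ?_, fun a b => ?_⟩, fun r => ?_⟩
  · by_cases hc : c = 0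
    · simp [Φ, hc]
    · simp only [Φ, ha, hb, hc, mul_eq_zero, or_self, dif_neg, not_false_eq_true]
      rw [Units.mk0_mul, ofMul_mul, TensorProduct.add_tmul, TensorProduct.tmul_add, ← map_add]
      congr 1
      abel
  · by_cases ha : a = 0
    · simp [Φ, ha]
    by_cases hb : b = 0
    · simp [Φ, hb]
    simp only [Φ, ha, hb, dif_neg, not_false_eq_true]
    rw [← map_neg]
    congr 1
    abel
  · by_cases h0 : r = 0
    · simp [Φ, h0, h.zero]
    by_cases h1 : r = 1
    · simp [Φ, h1, h.one]
    have h1' : 1 - r ≠ 0 := sub_ne_zero.mpr (Ne.symm h1)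
    have := hg (Finsupp.single ⟨r, h0, h1⟩ 1)
    simp only [φ, DD, LinearMap.toAddMonoidHom_coe, Finsupp.linearCombination_single,
      one_smul] at this
    simp only [Φ, h0, h1', dif_neg, not_false_eq_true]
    exact this.symm
end

section
/-! ### The local ring -/

/-- The properties of the local ring `ℤ_(p)`, `p ≥ 11`, on which the argument rests: the
reduction map `π` to `𝔽_p` (detecting units), the embedding `ι` into `ℚ`, and the fact that
every finitely generated additive subgroup is cyclic. -/
class LocR (A : Type) [CommRing A] where
  p : ℕ
  hp : p.Prime
  p11 : 11 ≤ p
  π : A →+* ZMod p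
  unit_iff : ∀ a, IsUnit a ↔ π a ≠ 0
  ι : A →+* ℚ
  ι_inj : Function.Injective ι
  cyc : ∀ a b : A, ∃ (c : A) (m n : ℤ), a = m * c ∧ b = n * c

namespace LocR
variable {A : Type} [CommRing A] [LocR A]

instance : Fact (p A).Prime := ⟨hp⟩

variable (A) in
/-- The residue field. -/
abbrev k : Type := ZMod (p A)

@[simp] theorem pi_unit (u : Aˣ) : π (u : A) ≠ 0 := (unit_iff _).mp u.isUnit

@[simp] theorem pi_inv (u : Aˣ) : π ((u⁻¹ : Aˣ) : A) = (π (u : A))⁻¹ := by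
  apply eq_inv_of_mul_eq_one_left
  rw [← map_mul, Units.inv_mul, map_one]

@[simp] theorem iota_unit (u : Aˣ) : ι (u : A) ≠ 0 := by
  intro h
  rw [← map_zero (ι : A →+* ℚ)] at h
  have := ι_inj h
  have h2 : π (u : A) = 0 := by rw [this, map_zero]
  exact pi_unit u h2

@[simp] theorem iota_inv (u : Aˣ) : ι ((u⁻¹ : Aˣ) : A) = (ι (u : A))⁻¹ := by
  apply eq_inv_of_mul_eq_one_left
  rw [← map_mul, Units.inv_mul, map_one]

theorem uext {u v : Aˣ} (h : ι (u : A) = ι (v : A)) : u = v := Units.ext (ι_inj h)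

theorem pi_surj : Function.Surjective (π : A →+* k A) := ZMod.ringHom_surjective _

open Classical in
/-- An element of `A` as a unit (`1` if it is not invertible). -/
def un (a : A) : Aˣ := if h : IsUnit a then h.unit else 1

theorem un_coe {a : A} (h : π a ≠ 0) : (un a : A) = a := by
  unfold un
  rw [dif_pos ((unit_iff a).mpr h)]
  rfl

@[simp] theorem un_unit (u : Aˣ) : un (u : A) = u := Units.ext (un_coe (pi_unit u))

theorem un_mul {a b : A} (ha : π a ≠ 0) (hb : π b ≠ 0) : un (a * b) = un a * un b := by
  apply Units.ext
  rw [un_coe (by rw [map_mul]; exact mul_ne_zero ha hb), Units.val_mul, un_coe ha, un_coe hb]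

theorem un_neg {a : A} (ha : π a ≠ 0) : un (-a) = - un a := by
  apply Units.ext
  rw [un_coe (by rw [map_neg]; exact neg_ne_zero.mpr ha), Units.val_neg, un_coe ha]

theorem exists_unit_lift {x : k A} (hx : x ≠ 0) : ∃ u : Aˣ, π (u : A) = x := by
  obtain ⟨a, rfl⟩ := pi_surj (A := A) x
  exact ⟨un a, by rw [un_coe hx]⟩

theorem natCast_ne {n : ℕ} (h0 : 0 < n) (h : n < 11) : ((n : ℕ) : k A) ≠ 0 := by
  rw [Ne, ZMod.natCast_eq_zero_iff]
  intro hd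
  have := Nat.le_of_dvd h0 hd
  have := p11 (A := A)
  omega

theorem two_ne : (2 : k A) ≠ 0 := by simpa using natCast_ne (A := A) (n := 2) (by norm_num) (by norm_num)
theorem three_ne : (3 : k A) ≠ 0 := by simpa using natCast_ne (A := A) (n := 3) (by norm_num) (by norm_num)

variable (A) in
/-- The unit `2`. -/
def u2 : Aˣ := un 2
@[simp] theorem u2_coe : (u2 A : A) = 2 := un_coe (by rw [map_ofNat]; exact two_ne)

variable (A) in
/-- The unit `3`. -/
def u3 : Aˣ := un 3
@[simp] theorem u3_coe : (u3 A : A) = 3 := un_coe (by rw [map_ofNat]; exact three_ne)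

/-! ### Squares in the residue field -/

theorem sq_mul_of_not {x y : k A} (hx : ¬ IsSquare x) (hy : ¬ IsSquare y) : IsSquare (x * y) := by
  have hx0 : x ≠ 0 := fun h => hx (h ▸ ⟨0, by simp⟩)
  have hy0 : y ≠ 0 := fun h => hy (h ▸ ⟨0, by simp⟩)
  have h2 : ringChar (k A) ≠ 2 := by
    rw [ZMod.ringChar_zmod_n]; have := p11 (A := A); omega
  rw [← quadraticChar_one_iff_isSquare (mul_ne_zero hx0 hy0), map_mul,
    quadraticChar_neg_one_iff_not_isSquare.mpr hx, quadraticChar_neg_one_iff_not_isSquare.mpr hy]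
  rfl

theorem exists_not_sq : ∃ x : k A, ¬ IsSquare x := by
  have h2 : ringChar (k A) ≠ 2 := by
    rw [ZMod.ringChar_zmod_n]; have := p11 (A := A); omega
  exact FiniteField.exists_nonsquare h2

variable (A) in
/-- Adjacent units of which the first is a square mod `p` and the second is not: the least
non-residue and its predecessor. -/
theorem exists_adj : ∃ m n : Aˣ, (n : A) = m + 1 ∧ IsSquare (π (m : A)) ∧ ¬ IsSquare (π (n : A)) := by
  classical
  have hex : ∃ n : ℕ, ¬ IsSquare ((n : ℕ) : k A) := by
    obtain ⟨x, hx⟩ := exists_not_sq (A := A)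
    exact ⟨x.val, by rwa [ZMod.natCast_zmod_val]⟩
  have hn := Nat.find_spec hex
  have hmin := fun m => Nat.find_min hex (m := m)
  set n := Nat.find hex
  have h0 : n ≠ 0 := by
    intro h; rw [h] at hn; exact hn ⟨0, by simp⟩
  have h1 : n ≠ 1 := by
    intro h; rw [h] at hn; exact hn ⟨1, by simp⟩
  obtain ⟨m, hm⟩ : ∃ m, n = m + 1 := ⟨n - 1, by omega⟩
  have hms : IsSquare ((m : ℕ) : k A) := by
    have := hmin m (by omega)
    push Not at this
    exact this
  have hnp : n ≤ p A := by
    obtain ⟨x, hx⟩ := exists_not_sq (A := A)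
    have := Nat.find_min' hex (m := x.val) (by rwa [ZMod.natCast_zmod_val])
    exact this.trans (ZMod.val_lt x).le
  have hm0 : ((m : ℕ) : k A) ≠ 0 := by
    rw [Ne, ZMod.natCast_eq_zero_iff]
    intro hd
    have := Nat.le_of_dvd (by omega) hd
    omega
  have hn0 : ((n : ℕ) : k A) ≠ 0 := by
    intro h; rw [h] at hn; exact hn ⟨0, by simp⟩
  refine ⟨un (m : A), un (n : A), ?_, ?_, ?_⟩
  · rw [un_coe (by rwa [map_natCast]), un_coe (by rwa [map_natCast]), hm]; push_cast; ring
  · rw [un_coe (by rwa [map_natCast]), map_natCast]; exact hms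
  · rw [un_coe (by rwa [map_natCast]), map_natCast]; exact hn

/-- A unit whose residue is a square is a square times a unit reducing to `1`. -/
theorem sq_decomp {a : Aˣ} (h : IsSquare (π (a : A))) : ∃ s v : Aˣ, π (v : A) = 1 ∧ a = s ^ 2 * v := by
  obtain ⟨r, hr⟩ := h
  have hr0 : r ≠ 0 := by rintro rfl; exact pi_unit a (by rw [hr]; simp)
  obtain ⟨s, hs⟩ := exists_unit_lift (A := A) hr0
  refine ⟨s, (s ^ 2)⁻¹ * a, ?_, by group⟩
  rw [Units.val_mul, map_mul, pi_inv, Units.val_pow_eq_pow_val, map_pow, hs, hr]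
  field_simp

theorem nsq_mul {x y : k A} (hx : x ≠ 0) (h : IsSquare x) (hy : ¬ IsSquare y) : ¬ IsSquare (x * y) := by
  intro hxy
  apply hy
  have : y = x⁻¹ * (x * y) := by field_simp
  rw [this]
  exact (IsSquare.inv h).mul hxy

end LocR

end

section
/-! ### Central extensions -/

/-- A central extension of `Q` by `I`, with total group `E`. -/
structure CExt (I E Q : Type) [AddCommGroup I] [Group E] [Group Q] where
  q : E →* Q
  z : I → E
  z_add : ∀ i j, z (i + j) = z i * z j
  z_comm : ∀ i e, e * z i = z i * e
  z_inj : Function.Injective z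
  q_z : ∀ i, q (z i) = 1
  ker : ∀ e, q e = 1 → ∃ i, e = z i
  surj : Function.Surjective q

namespace CExt
variable {I E Q : Type} [AddCommGroup I] [Group E] [Group Q] (X : CExt I E Q)
include X

@[simp] theorem z_zero : X.z 0 = 1 := by
  have := X.z_add 0 0
  rw [add_zero] at this
  exact (left_eq_mul.mp this)

theorem z_neg (i : I) : X.z (-i) = (X.z i)⁻¹ := by
  apply eq_inv_of_mul_eq_one_left
  rw [← X.z_add, neg_add_cancel, z_zero]

theorem z_left (i : I) (a b : E) : a * (X.z i * b) = X.z i * (a * b) := by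
  rw [← mul_assoc, X.z_comm, mul_assoc]

theorem z_z (i j : I) (a : E) : X.z i * (X.z j * a) = X.z (i + j) * a := by
  rw [X.z_add, mul_assoc]

theorem cmp {e e' : E} (h : X.q e = X.q e') : ∃ i, e = X.z i * e' := by
  obtain ⟨i, hi⟩ := X.ker (e * e'⁻¹) (by rw [map_mul, map_inv, h, mul_inv_cancel])
  exact ⟨i, by rw [← hi]; group⟩

theorem q_z_mul (i : I) (e : E) : X.q (X.z i * e) = X.q e := by rw [map_mul, X.q_z, one_mul]

theorem z_cancel {i j : I} {e : E} (h : X.z i * e = X.z j * e) : i = j :=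
  X.z_inj (mul_right_cancel h)

/-- Conjugation only depends on the image of the conjugating element. -/
theorem conj_eq {t t' : E} (h : X.q t = X.q t') (e : E) : t * e * t⁻¹ = t' * e * t'⁻¹ := by
  obtain ⟨i, rfl⟩ := X.cmp h
  rw [mul_inv_rev, ← X.z_neg, ← mul_assoc, X.z_comm]
  simp only [mul_assoc]
  rw [X.z_z, neg_add_cancel, z_zero, one_mul]

/-- Commutators only depend on the images. -/
theorem comm_eq {s s' t t' : E} (hs : X.q s = X.q s') (ht : X.q t = X.q t') :
    s * t * s⁻¹ * t⁻¹ = s' * t' * s'⁻¹ * t'⁻¹ := by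
  rw [X.conj_eq hs]
  have h1 : s' * t * s'⁻¹ * t⁻¹ = s' * (t * s'⁻¹ * t⁻¹) := by group
  rw [h1, X.conj_eq ht]
  group

end CExt

namespace LocR
variable {A : Type} [CommRing A] [LocR A]

theorem cyc' (a b : A) : ∃ (c : A) (m n r s : ℤ), a = m * c ∧ b = n * c ∧ c = r * a + s * b := by
  obtain ⟨c, m, n, ha, hb⟩ := cyc a b
  by_cases h : Int.gcd m n = 0
  · rw [Int.gcd_eq_zero_iff] at h
    refine ⟨0, 0, 0, 0, 0, ?_, ?_, by simp⟩
    · rw [ha, h.1]; simp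
    · rw [hb, h.2]; simp
  · obtain ⟨m', hm⟩ := Int.gcd_dvd_left (a := m) (b := n)
    obtain ⟨n', hn⟩ := Int.gcd_dvd_right (a := m) (b := n)
    have hg := Int.gcd_eq_gcd_ab m n
    refine ⟨(Int.gcd m n : ℤ) * c, m', n', Int.gcdA m n, Int.gcdB m n, ?_, ?_, ?_⟩
    · rw [ha]; nth_rw 1 [hm]; push_cast; ring
    · rw [hb]; nth_rw 1 [hn]; push_cast; ring
    · rw [ha, hb, hg]; push_cast; ring

end LocR

namespace CExt
open LocR
variable {I E Q : Type} [AddCommGroup I] [Group E] [Group Q] (X : CExt I E Q)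
variable {A : Type} [CommRing A] [LocR A]

/-- A one-parameter subgroup of `Q` which some `τ` scales by `4` lifts canonically: its
preimage is abelian since the parameter group is locally cyclic, and commutators with `τ` do
not depend on the choice of lifts. -/
theorem exists_lift (M : Ideal A) (n : A → Q)
    (hn : ∀ a ∈ M, ∀ b ∈ M, n (a + b) = n a * n b) (τ : Q)
    (hτ : ∀ a ∈ M, τ * n a * τ⁻¹ = n (4 * a)) :
    ∃ l : A → E, (∀ a ∈ M, X.q (l a) = n a) ∧ (∀ a ∈ M, ∀ b ∈ M, l (a + b) = l a * l b) ∧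
      (∀ (t : E) (c : A), (∀ a ∈ M, X.q t * n a * (X.q t)⁻¹ = n (c * a)) → Commute (X.q t) τ →
        ∀ a ∈ M, t * l a * t⁻¹ = l (c * a)) ∧
      (∀ t e : E, X.q t = τ → ∀ a ∈ M, X.q e = n a → t * e * t⁻¹ * e⁻¹ = l (3 * a)) := by
  classical
  let N : M →+ Additive Q :=
    { toFun := fun a => Additive.ofMul (n a)
      map_zero' := by
        have := hn 0 M.zero_mem 0 M.zero_mem
        rw [add_zero] at this
        have h1 : n 0 = 1 := (left_eq_mul.mp this)
        simp [h1]
      map_add' := fun a b => by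
        rw [← ofMul_mul, ← hn a a.2 b b.2]; rfl }
  have hz : ∀ (c : A) (hc : c ∈ M) (m : ℤ), n (m * c) = (n c) ^ m := by
    intro c hc m
    have h := map_zsmul N m ⟨c, hc⟩
    have h2 : ((m • (⟨c, hc⟩ : M) : M) : A) = m * c := by simp
    have h3 : N (m • (⟨c, hc⟩ : M)) = Additive.ofMul (n (m * c)) := by
      show Additive.ofMul (n ((m • (⟨c, hc⟩ : M) : M) : A)) = _
      rw [h2]
    rw [h3] at h
    exact h
  have hcomm : ∀ (a b : A) (_ : a ∈ M) (_ : b ∈ M) (e e' : E), X.q e = n a → X.q e' = n b →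
      e * e' = e' * e := by
    intro a b ha hb e e' he he'
    obtain ⟨c, m, m', r, s, h1, h2, h3⟩ := cyc' a b
    have hc : c ∈ M := by
      rw [h3]; exact M.add_mem (M.mul_mem_left _ ha) (M.mul_mem_left _ hb)
    obtain ⟨l, hl⟩ := X.surj (n c)
    obtain ⟨i, hi⟩ := X.cmp (e := e) (e' := l ^ m) (by rw [map_zpow, hl, he, h1, hz c hc])
    obtain ⟨j, hj⟩ := X.cmp (e := e') (e' := l ^ m') (by rw [map_zpow, hl, he', h2, hz c hc])
    rw [hi, hj, mul_assoc, X.z_left, X.z_z, mul_assoc, X.z_left, X.z_z, add_comm, ← zpow_add,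
      ← zpow_add, add_comm m]
  choose L hL using fun a => X.surj (n a)
  obtain ⟨t0, ht0⟩ := X.surj τ
  let l : A → E := fun a => t0 * L (((u3 A)⁻¹ : Aˣ) * a) * t0⁻¹ * (L (((u3 A)⁻¹ : Aˣ) * a))⁻¹
  have h3 : ∀ a : A, (((u3 A)⁻¹ : Aˣ) : A) * (3 * a) = a := by
    intro a
    rw [← u3_coe (A := A), ← mul_assoc, Units.inv_mul, one_mul]
  have h3' : ∀ a : A, 3 * ((((u3 A)⁻¹ : Aˣ) : A) * a) = a := by
    intro a
    rw [← u3_coe (A := A), ← mul_assoc, Units.mul_inv, one_mul]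
  have huniq : ∀ t e : E, X.q t = τ → ∀ a ∈ M, X.q e = n a →
      t * e * t⁻¹ * e⁻¹ = l (3 * a) := by
    intro t e ht a ha he
    simp only [l]
    rw [h3]
    exact X.comm_eq (by rw [ht, ht0]) (by rw [he, hL])
  have hql : ∀ a ∈ M, X.q (l a) = n a := by
    intro a ha
    have ha' : (((u3 A)⁻¹ : Aˣ) : A) * a ∈ M := M.mul_mem_left _ ha
    simp only [l, map_mul, map_inv, hL, ht0]
    rw [hτ _ ha', mul_inv_eq_iff_eq_mul, ← hn _ ha _ ha']
    congr 1
    nth_rw 2 [← h3' a]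
    ring
  refine ⟨l, hql, ?_, ?_, huniq⟩
  · intro a ha b hb
    have ha' : (((u3 A)⁻¹ : Aˣ) : A) * a ∈ M := M.mul_mem_left _ ha
    have hb' : (((u3 A)⁻¹ : Aˣ) : A) * b ∈ M := M.mul_mem_left _ hb
    set a' := (((u3 A)⁻¹ : Aˣ) : A) * a
    set b' := (((u3 A)⁻¹ : Aˣ) : A) * b
    have e1 : l a = t0 * L a' * t0⁻¹ * (L a')⁻¹ := rfl
    have e2 : l b = t0 * L b' * t0⁻¹ * (L b')⁻¹ := rfl
    have e3 : l (a + b) = t0 * (L a' * L b') * t0⁻¹ * (L a' * L b')⁻¹ := by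
      rw [huniq t0 (L a' * L b') ht0 (a' + b') (M.add_mem ha' hb')
        (by rw [map_mul, hL, hL, hn _ ha' _ hb']), mul_add, h3', h3']
    have h4 := hcomm a' b ha' hb (L a') (l b) (hL _) (hql b hb)
    rw [e3]
    have e4 : t0 * (L a' * L b') * t0⁻¹ * (L a' * L b')⁻¹ =
      (t0 * L a' * t0⁻¹) * (t0 * L b' * t0⁻¹ * (L b')⁻¹) * (L a')⁻¹ := by group
    rw [e4, ← e2, e1, mul_assoc _ (l b), mul_assoc _ (L a')⁻¹]
    congr 1
    rw [mul_inv_eq_iff_eq_mul, mul_assoc, ← h4]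
    group
  · intro t c hc ht a ha
    have ha' : (((u3 A)⁻¹ : Aˣ) : A) * a ∈ M := M.mul_mem_left _ ha
    set a' := (((u3 A)⁻¹ : Aˣ) : A) * a with hadef
    have e1 : l a = t0 * L a' * t0⁻¹ * (L a')⁻¹ := rfl
    have e2 : t * l a * t⁻¹ = (t * t0 * t⁻¹) * (t * L a' * t⁻¹) * (t * t0 * t⁻¹)⁻¹ *
        (t * L a' * t⁻¹)⁻¹ := by rw [e1]; group
    have h3a : c * a = 3 * (c * a') := by rw [hadef]; nth_rw 1 [← h3' a]; ring
    rw [e2, h3a]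
    apply huniq
    · rw [map_mul, map_mul, map_inv, ht0, ht.eq]; group
    · exact M.mul_mem_left _ ha'
    · rw [map_mul, map_mul, map_inv, hL, hc _ ha']

end CExt

end

section
open LocR

/-! ### Alternating forms on the unit group -/

/-- Alternating bilinear forms on `Aˣ` (there is no `2`-torsion in the values). -/
structure IsAlt {A I : Type} [CommRing A] [AddCommGroup I] (η : Aˣ → Aˣ → I) : Prop where
  mul_left : ∀ u u' v, η (u * u') v = η u v + η u' v
  skew : ∀ u v, η u v = -η v u

namespace IsAlt
variable {A I : Type} [CommRing A] [AddCommGroup I] {η : Aˣ → Aˣ → I} (h : IsAlt η)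
include h

theorem mul_right (u v v' : Aˣ) : η u (v * v') = η u v + η u v' := by
  rw [h.skew, h.mul_left, h.skew v, h.skew v']; abel

theorem one_left (v : Aˣ) : η 1 v = 0 := by
  have := h.mul_left 1 1 v
  rw [mul_one] at this
  exact left_eq_add.mp this

theorem one_right (v : Aˣ) : η v 1 = 0 := by rw [h.skew, h.one_left, neg_zero]

theorem inv_left (u v : Aˣ) : η u⁻¹ v = -η u v := by
  apply eq_neg_of_add_eq_zero_left
  rw [← h.mul_left, inv_mul_cancel, h.one_left]

theorem inv_right (u v : Aˣ) : η u v⁻¹ = -η u v := by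
  rw [h.skew, h.inv_left, h.skew v, neg_neg]

variable [Coef I]

theorem self (u : Aˣ) : η u u = 0 := by
  apply Coef.two_inj
  nth_rw 1 [h.skew u u]
  abel

theorem neg_left (u v : Aˣ) : η (-u) v = η u v := by
  have h1 : η (-1) v = 0 := by
    apply Coef.two_inj
    rw [← h.mul_left]
    simp [h.one_left]
  rw [← neg_one_mul, h.mul_left, h1, zero_add]

theorem neg_right (u v : Aˣ) : η u (-v) = η u v := by
  rw [h.skew, h.neg_left, h.skew v, neg_neg]

end IsAlt

/-! ### The group `Γ₀` by generators -/

/-- The structure of `Γ₀`: subgroups `X`, `Y`, `H` (upper unipotent, lower unipotent with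
entry in the maximal ideal, diagonal), their relations, and the unique factorization
`g = Y b * H u * X a`. -/
structure GData (A Q : Type) [CommRing A] [LocR A] [Group Q] where
  X : A → Q
  Y : A → Q
  H : Aˣ → Q
  X_add : ∀ a a', X (a + a') = X a * X a'
  Y_add : ∀ b b', π b = 0 → π b' = 0 → Y (b + b') = Y b * Y b'
  H_mul : ∀ u v, H (u * v) = H u * H v
  HX : ∀ u a, H u * X a = X ((u : A) ^ 2 * a) * H u
  HY : ∀ u b, π b = 0 → H u * Y b = Y (((u⁻¹ : Aˣ) : A) ^ 2 * b) * H u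
  XY : ∀ a b (v : Aˣ), π b = 0 → (v : A) = 1 + a * b →
    X a * Y b = Y (((v⁻¹ : Aˣ) : A) * b) * H v * X (((v⁻¹ : Aˣ) : A) * a)
  dec : ∀ g, ∃ b u a, π b = 0 ∧ g = Y b * H u * X a
  dec_inj : ∀ b u a b₂ u₂ a₂, π b = 0 → π b₂ = 0 →
    Y b * H u * X a = Y b₂ * H u₂ * X a₂ → b = b₂ ∧ u = u₂ ∧ a = a₂

/-- Lifts of the generators of `Γ₀` to a central extension, with `η` measuring the failure of
`h` to be multiplicative and `Ψ` the failure of the relation between `x` and `y`. -/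
structure GLift {I E Q A : Type} [AddCommGroup I] [Group E] [Group Q] [CommRing A] [LocR A]
    (X : CExt I E Q) (D : GData A Q) (η : Aˣ → Aˣ → I) (Ψ : A → A → I) where
  x : A → E
  y : A → E
  h : Aˣ → E
  qx : ∀ a, X.q (x a) = D.X a
  qy : ∀ b, π b = 0 → X.q (y b) = D.Y b
  qh : ∀ u, X.q (h u) = D.H u
  x_add : ∀ a a', x (a + a') = x a * x a'
  y_add : ∀ b b', π b = 0 → π b' = 0 → y (b + b') = y b * y b'
  hh : ∀ u v, h u * h v = X.z (η u v) * h (u * v)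
  hx : ∀ u a, h u * x a = x ((u : A) ^ 2 * a) * h u
  hy : ∀ u b, π b = 0 → h u * y b = y (((u⁻¹ : Aˣ) : A) ^ 2 * b) * h u
  xy : ∀ a b (v : Aˣ), π b = 0 → (v : A) = 1 + a * b →
    x a * y b = X.z (Ψ a b) * (y (((v⁻¹ : Aˣ) : A) * b) * h v * x (((v⁻¹ : Aˣ) : A) * a))

variable {I E Q A : Type} [AddCommGroup I] [Group E] [Group Q] [CommRing A] [LocR A]

theorem pi_mul_zero (c : A) {b : A} (h : π b = 0) : π (c * b) = 0 := by rw [map_mul, h, mul_zero]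

theorem one_add_unit (a : A) {b : A} (h : π b = 0) : ∃ v : Aˣ, (v : A) = 1 + a * b ∧ π (v : A) = 1 := by
  have h1 : π (1 + a * b) = 1 := by simp [h]
  exact ⟨un (1 + a * b), un_coe (by rw [h1]; exact one_ne_zero), by
    rw [un_coe (by rw [h1]; exact one_ne_zero), h1]⟩

/-- Every central extension of `Γ₀` has lifted generators. -/
theorem exists_GLift [Coef I] (X : CExt I E Q) (D : GData A Q) :
    ∃ η Ψ, IsAlt η ∧ Nonempty (GLift X D η Ψ) := by
  -- the unipotent subgroups
  have hHinv : ∀ u, D.H u⁻¹ = (D.H u)⁻¹ := by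
    intro u
    apply eq_inv_of_mul_eq_one_left
    have h1 : D.H 1 = 1 := by
      have := D.H_mul 1 1
      rw [mul_one] at this
      exact left_eq_mul.mp this
    rw [← D.H_mul, inv_mul_cancel, h1]
  have hcommH : ∀ u v, Commute (D.H u) (D.H v) := by
    intro u v
    show _ * _ = _ * _
    rw [← D.H_mul, ← D.H_mul, mul_comm]
  obtain ⟨x, hqx, hxadd, hxconj, -⟩ := X.exists_lift (A := A) ⊤ D.X (fun a _ b _ => D.X_add a b)
    (D.H (u2 A)) (fun a _ => by
      rw [D.HX, u2_coe, mul_inv_cancel_right]; norm_num)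
  obtain ⟨y, hqy, hyadd, hyconj, -⟩ := X.exists_lift (A := A) (RingHom.ker (π : A →+* k A)) D.Y
    (fun a ha b hb => D.Y_add a b ha hb)
    (D.H (u2 A)⁻¹) (fun a ha => by
      rw [D.HY _ _ ha, inv_inv, u2_coe, mul_inv_cancel_right]; norm_num)
  have hHX : ∀ u a, D.H u * D.X a * (D.H u)⁻¹ = D.X ((u : A) ^ 2 * a) := by
    intro u a; rw [D.HX, mul_inv_cancel_right]
  have hHY : ∀ u b, π b = 0 → D.H u * D.Y b * (D.H u)⁻¹ = D.Y (((u⁻¹ : Aˣ) : A) ^ 2 * b) := by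
    intro u b hb; rw [D.HY _ _ hb, mul_inv_cancel_right]
  -- the commutator pairing
  choose t ht using fun u => X.surj (D.H u)
  choose ω hω using fun u v => X.cmp (e := t u * t v) (e' := t v * t u)
    (by rw [map_mul, map_mul, ht, ht, (hcommH u v).eq])
  have hω' : ∀ u v (e e' : E), X.q e = D.H u → X.q e' = D.H v → e * e' = X.z (ω u v) * (e' * e) := by
    intro u v e e' he he'
    obtain ⟨i, rfl⟩ := X.cmp (e := e) (e' := t u) (by rw [he, ht])
    obtain ⟨j, rfl⟩ := X.cmp (e := e') (e' := t v) (by rw [he', ht])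
    rw [mul_assoc, X.z_left, X.z_z, mul_assoc, X.z_left, X.z_z, hω, X.z_z, X.z_left, X.z_z]
    congr 2
    abel
  have hωmul : ∀ u u' v, ω (u * u') v = ω u v + ω u' v := by
    intro u u' v
    have h1 := hω' (u * u') v (t u * t u') (t v) (by rw [map_mul, ht, ht, D.H_mul]) (ht v)
    have h2 : t u * t u' * t v = X.z (ω u v + ω u' v) * (t v * (t u * t u')) := by
      rw [mul_assoc, hω u' v, X.z_left, ← mul_assoc (t u), hω u v, mul_assoc, X.z_z, mul_assoc,
        add_comm]
    exact X.z_cancel (h1.symm.trans h2)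
  have hωskew : ∀ u v, ω u v = - ω v u := by
    intro u v
    apply eq_neg_of_add_eq_zero_left
    have h1 := hω u v
    rw [hω v u, X.z_z] at h1
    have : X.z 0 * (t u * t v) = X.z (ω u v + ω v u) * (t u * t v) := by
      rw [← h1, X.z_zero, one_mul]
    exact (X.z_cancel this).symm
  let η : Aˣ → Aˣ → I := fun u v => hf (ω u v)
  have hη : IsAlt η := ⟨fun u u' v => by simp only [η]; rw [hωmul, hf_add],
    fun u v => by simp only [η]; rw [hωskew, hf_neg]⟩
  -- the torus
  choose c hc using fun u v => X.cmp (e := t u * t v) (e' := t (u * v))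
    (by rw [map_mul, ht, ht, ht, D.H_mul])
  have hcc : ∀ u v w, c u v + c (u * v) w = c v w + c u (v * w) := by
    intro u v w
    have h1 : t u * t v * t w = X.z (c u v + c (u * v) w) * t (u * v * w) := by
      rw [hc, mul_assoc, hc, X.z_z]
    have h2 : t u * (t v * t w) = X.z (c v w + c u (v * w)) * t (u * v * w) := by
      rw [hc, X.z_left, hc, X.z_z, mul_assoc]
    rw [mul_assoc, h2] at h1
    exact (X.z_cancel h1).symm
  have hcω : ∀ u v, c u v = ω u v + c v u := by
    intro u v
    have h1 := hω u v
    rw [hc u v, hc v u, X.z_z, mul_comm v u] at h1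
    exact X.z_cancel h1
  let c' : Aˣ → Aˣ → I := fun u v => c u v - η u v
  have hsym : ∀ u v, c' u v = c' v u := by
    intro u v
    simp only [c']
    rw [hcω u v, hη.skew v u]
    have : ω u v = η u v + η u v := (hf_add_self _).symm
    rw [this]; abel
  have hcc' : ∀ u v w, c' u v + c' (u * v) w = c' v w + c' u (v * w) := by
    intro u v w
    simp only [c']
    rw [hη.mul_left, hη.mul_right]
    have := hcc u v w
    calc _ = (c u v + c (u * v) w) - (η u v + η u w + η v w) := by abel
      _ = _ := by rw [this]; abel
  obtain ⟨ψ, s, hs1, hs⟩ := Coef.partial_cocycle (G := Aˣ) (ι := Aˣ) id (by simp) c' (by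
    intro k w u
    have h1 := hcc' w k u
    have h2 := hcc' k w u
    simp only [id]
    rw [← h1, hsym w k, mul_comm w k, h2])
  have hψ : ∀ u, ψ u = s u + c' 1 1 := by
    intro u
    have h1 := hs u 1
    simp only [id, mul_one] at h1
    have h2 := hcc' u 1 1
    simp only [mul_one] at h2
    have h3 : c' u 1 = c' 1 1 := by
      have : c' u 1 + c' u 1 = c' 1 1 + c' u 1 := h2
      exact add_right_cancel this
    rw [h3, hs1] at h1
    rw [h1]; abel
  let h : Aˣ → E := fun u => X.z (-(s u + c' 1 1)) * t u
  have hqh : ∀ u, X.q (h u) = D.H u := fun u => by simp only [h]; rw [X.q_z_mul, ht]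
  have hhh : ∀ u v, h u * h v = X.z (η u v) * h (u * v) := by
    intro u v
    simp only [h]
    rw [mul_assoc, X.z_left, X.z_z, hc, X.z_z, X.z_z]
    congr 2
    have h1 := hs u v
    simp only [id, c'] at h1
    rw [hψ] at h1
    have : c u v = η u v + (s u + c' 1 1 + s v - s (u * v)) := by rw [← h1]; abel
    rw [this]; abel
  have hqx' : ∀ a, X.q (x a) = D.X a := fun a => hqx a trivial
  have hqy' : ∀ b, π b = 0 → X.q (y b) = D.Y b := fun b hb => hqy b hb
  -- the relation between `x` and `y`
  have hΨ : ∀ a b, ∃ ψ : I, ∀ v : Aˣ, π b = 0 → (v : A) = 1 + a * b →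
      x a * y b = X.z ψ * (y (((v⁻¹ : Aˣ) : A) * b) * h v * x (((v⁻¹ : Aˣ) : A) * a)) := by
    intro a b
    by_cases hb : π b = 0
    · obtain ⟨v, hv, -⟩ := one_add_unit a hb
      obtain ⟨i, hi⟩ := X.cmp (e := x a * y b)
        (e' := y (((v⁻¹ : Aˣ) : A) * b) * h v * x (((v⁻¹ : Aˣ) : A) * a)) (by
          rw [map_mul, map_mul, map_mul, hqx', hqy' b hb, hqy' _ (pi_mul_zero _ hb), hqh, hqx',
            D.XY a b v hb hv])
      refine ⟨i, fun v' _ hv' => ?_⟩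
      have : v' = v := Units.ext (hv'.trans hv.symm)
      rw [this, hi]
    · exact ⟨0, fun v hb' => absurd hb' hb⟩
  choose Ψ hΨ using hΨ
  refine ⟨η, Ψ, hη, ⟨⟨x, y, h, hqx', hqy', hqh, fun a a' => hxadd a trivial a' trivial,
    fun b b' hb hb' => hyadd b hb b' hb', hhh, ?_, ?_, fun a b v => hΨ a b v⟩⟩⟩
  · intro u a
    have := hxconj (h u) ((u : A) ^ 2) (fun a _ => by rw [hqh, hHX]) (by rw [hqh]; exact hcommH _ _)
      a trivial
    rw [← this]; group
  · intro u b hb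
    have := hyconj (h u) (((u⁻¹ : Aˣ) : A) ^ 2) (fun a ha => by rw [hqh, hHY u a ha])
      (by rw [hqh]; exact hcommH _ _) b hb
    rw [← this]; group

end

section
open LocR

variable {I E Q A : Type} [AddCommGroup I] [Group E] [Group Q] [CommRing A] [LocR A]

namespace GLift
variable {X : CExt I E Q} {D : GData A Q} {η : Aˣ → Aˣ → I} {Ψ : A → A → I}

/-! ### Functional equations for `Ψ` -/

theorem h_comm (L : GLift X D η Ψ) (hη : IsAlt η) (u v : Aˣ) :
    L.h u * L.h v = X.z (η u v + η u v) * (L.h v * L.h u) := by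
  rw [L.hh, L.hh v u, X.z_z, mul_comm v u]
  congr 2
  rw [hη.skew v u]; abel

theorem xh (L : GLift X D η Ψ) (u : Aˣ) (a : A) :
    L.x a * L.h u = L.h u * L.x (((u⁻¹ : Aˣ) : A) ^ 2 * a) := by
  rw [L.hx, ← mul_assoc, ← mul_pow, Units.mul_inv, one_pow, one_mul]

theorem P1 (L : GLift X D η Ψ) (hη : IsAlt η) (a b : A) (u v : Aˣ) (hb : π b = 0)
    (hv : (v : A) = 1 + a * b) :
    Ψ ((u : A) ^ 2 * a) (((u⁻¹ : Aˣ) : A) ^ 2 * b) = Ψ a b + (η u v + η u v) := by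
  have h1 := L.xy a b v hb hv
  have h2 := L.xy ((u : A) ^ 2 * a) (((u⁻¹ : Aˣ) : A) ^ 2 * b) v (pi_mul_zero _ hb) (by
    rw [hv]
    have := Units.mul_inv u
    linear_combination (-a * b * ((u : A) * ((u⁻¹ : Aˣ) : A) + 1)) * this)
  have h3 : L.h u * (L.x a * L.y b) =
      L.x ((u : A) ^ 2 * a) * L.y (((u⁻¹ : Aˣ) : A) ^ 2 * b) * L.h u := by
    rw [← mul_assoc, L.hx, mul_assoc, L.hy _ _ hb, mul_assoc]
  rw [h1, h2, X.z_left] at h3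
  have h4 : L.h u * (L.y (((v⁻¹ : Aˣ) : A) * b) * L.h v * L.x (((v⁻¹ : Aˣ) : A) * a)) =
      X.z (η u v + η u v) * (L.y (((v⁻¹ : Aˣ) : A) * (((u⁻¹ : Aˣ) : A) ^ 2 * b)) * L.h v *
        L.x (((v⁻¹ : Aˣ) : A) * ((u : A) ^ 2 * a)) * L.h u) := by
    rw [← mul_assoc, ← mul_assoc, L.hy _ _ (pi_mul_zero _ hb), mul_assoc (L.y _) (L.h u),
      L.h_comm hη, X.z_left, mul_assoc, mul_assoc (L.y _), mul_assoc (L.h v), L.hx,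
      mul_left_comm _ _ b, mul_left_comm _ _ a]
    simp only [mul_assoc]
  rw [h4, X.z_z, mul_assoc (X.z (Ψ _ _))] at h3
  exact (X.z_cancel h3).symm

theorem P2 (L : GLift X D η Ψ) (a b b' : A) (v v' : Aˣ) (hb : π b = 0) (hb' : π b' = 0)
    (hv : (v : A) = 1 + a * b) (hv' : (v' : A) = 1 + ((v⁻¹ : Aˣ) : A) * a * b') :
    Ψ a (b + b') = Ψ a b + Ψ (((v⁻¹ : Aˣ) : A) * a) b' + η v v' := by
  have e0 := Units.mul_inv v
  have e1 := Units.mul_inv v'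
  have h1 := L.xy a b v hb hv
  have h2 := L.xy (((v⁻¹ : Aˣ) : A) * a) b' v' hb' hv'
  have h3 := L.xy a (b + b') (v * v') (by simp [hb, hb']) (by
    rw [Units.val_mul, hv']; linear_combination hv + a * b' * e0)
  have h4 : L.x a * L.y (b + b') = X.z (Ψ a b + Ψ (((v⁻¹ : Aˣ) : A) * a) b' + η v v') *
      (L.y ((((v * v')⁻¹ : Aˣ) : A) * (b + b')) * L.h (v * v') *
        L.x ((((v * v')⁻¹ : Aˣ) : A) * a)) := by
    have e2 : (((v * v')⁻¹ : Aˣ) : A) * (b + b') = ((v⁻¹ : Aˣ) : A) * b +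
        ((v⁻¹ : Aˣ) : A) ^ 2 * (((v'⁻¹ : Aˣ) : A) * b') := by
      apply ι_inj
      have e3 := congrArg ι hv
      have e4 := congrArg ι hv'
      simp only [mul_inv_rev, Units.val_mul, map_mul, map_add, map_pow, iota_inv, map_one] at *
      have i1 := iota_unit v
      have i2 := iota_unit v'
      field_simp at e4 ⊢
      linear_combination (-ι b) * e4 + (ι b') * e3
    rw [L.y_add _ _ hb hb', ← mul_assoc, h1, mul_assoc, mul_assoc, h2, X.z_left, X.z_z, e2,
      L.y_add _ _ (pi_mul_zero _ hb) (pi_mul_zero _ (pi_mul_zero _ hb')), X.z_add _ (η v v'),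
      mul_assoc (X.z _) (X.z (η v v'))]
    congr 1
    rw [mul_assoc (L.y _ * L.y _), ← X.z_left, ← mul_assoc (X.z _), ← L.hh]
    have e5 := L.hy v (((v'⁻¹ : Aˣ) : A) * b') (pi_mul_zero _ hb')
    have e6 : (((v * v')⁻¹ : Aˣ) : A) * a = ((v'⁻¹ : Aˣ) : A) * (((v⁻¹ : Aˣ) : A) * a) := by
      rw [mul_inv_rev, Units.val_mul, mul_assoc]
    rw [e6]
    calc _ = L.y (((v⁻¹ : Aˣ) : A) * b) * (L.h v * L.y (((v'⁻¹ : Aˣ) : A) * b')) *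
          L.h v' * L.x (((v'⁻¹ : Aˣ) : A) * (((v⁻¹ : Aˣ) : A) * a)) := by simp only [mul_assoc]
      _ = _ := by rw [e5]; simp only [mul_assoc]
  rw [h3] at h4
  exact X.z_cancel h4

theorem P3 (L : GLift X D η Ψ) (a a' b : A) (v v' : Aˣ) (hb : π b = 0)
    (hv : (v : A) = 1 + a' * b) (hv' : (v' : A) = 1 + a * (((v⁻¹ : Aˣ) : A) * b)) :
    Ψ (a + a') b = Ψ a' b + Ψ a (((v⁻¹ : Aˣ) : A) * b) + η v' v := by
  have e0 := Units.mul_inv v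
  have h1 := L.xy a' b v hb hv
  have h2 := L.xy a (((v⁻¹ : Aˣ) : A) * b) v' (pi_mul_zero _ hb) hv'
  have h3 := L.xy (a + a') b (v' * v) hb (by
    rw [Units.val_mul, hv']; linear_combination hv + a * b * e0)
  have h4 : L.x (a + a') * L.y b = X.z (Ψ a' b + Ψ a (((v⁻¹ : Aˣ) : A) * b) + η v' v) *
      (L.y ((((v' * v)⁻¹ : Aˣ) : A) * b) * L.h (v' * v) *
        L.x ((((v' * v)⁻¹ : Aˣ) : A) * (a + a'))) := by
    have e2 : (((v' * v)⁻¹ : Aˣ) : A) * (a + a') =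
        ((v⁻¹ : Aˣ) : A) ^ 2 * (((v'⁻¹ : Aˣ) : A) * a) + ((v⁻¹ : Aˣ) : A) * a' := by
      apply ι_inj
      have e3 := congrArg ι hv
      have e4 := congrArg ι hv'
      simp only [mul_inv_rev, Units.val_mul, map_mul, map_add, map_pow, iota_inv, map_one] at *
      have i1 := iota_unit v
      have i2 := iota_unit v'
      field_simp at e4 ⊢
      linear_combination (-ι a') * e4 + (ι a) * e3
    have e6 : (((v' * v)⁻¹ : Aˣ) : A) * b = ((v'⁻¹ : Aˣ) : A) * (((v⁻¹ : Aˣ) : A) * b) := by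
      rw [mul_inv_rev, Units.val_mul]; ring
    rw [L.x_add, mul_assoc, h1, X.z_left]
    have e7 : L.x a * (L.y (((v⁻¹ : Aˣ) : A) * b) * L.h v * L.x (((v⁻¹ : Aˣ) : A) * a')) =
        (L.x a * L.y (((v⁻¹ : Aˣ) : A) * b)) * (L.h v * L.x (((v⁻¹ : Aˣ) : A) * a')) := by
      simp only [mul_assoc]
    rw [e7, h2, mul_assoc (X.z _), X.z_z, e2, e6, L.x_add, X.z_add _ (η v' v),
      mul_assoc (X.z _) (X.z (η v' v))]
    congr 1
    rw [mul_assoc (L.y _) (L.h (v' * v)), ← X.z_left, ← mul_assoc (X.z _), ← L.hh]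
    have e5 := L.xh v (((v'⁻¹ : Aˣ) : A) * a)
    calc _ = L.y (((v'⁻¹ : Aˣ) : A) * (((v⁻¹ : Aˣ) : A) * b)) * L.h v' *
          (L.x (((v'⁻¹ : Aˣ) : A) * a) * L.h v) * L.x (((v⁻¹ : Aˣ) : A) * a') := by
            simp only [mul_assoc]
      _ = _ := by rw [e5]; simp only [mul_assoc]
  rw [h3] at h4
  exact X.z_cancel h4

/-- Rescaling `h` by a homomorphism. -/
def twist (L : GLift X D η Ψ) (θ : Aˣ → I) (hθ : ∀ u v, θ (u * v) = θ u + θ v) :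
    GLift X D η (fun a b => Ψ a b - θ (un (1 + a * b))) where
  x := L.x
  y := L.y
  h := fun u => X.z (θ u) * L.h u
  qx := L.qx
  qy := L.qy
  qh := fun u => by rw [X.q_z_mul, L.qh]
  x_add := L.x_add
  y_add := L.y_add
  hh := fun u v => by
    rw [mul_assoc, X.z_left, X.z_z, L.hh, X.z_z, X.z_z, hθ]
    congr 2; abel
  hx := fun u a => by rw [mul_assoc, L.hx, X.z_left]
  hy := fun u b hb => by rw [mul_assoc, L.hy _ _ hb, X.z_left]
  xy := fun a b v hb hv => by
    rw [L.xy a b v hb hv, X.z_left, mul_assoc (X.z (θ v)), X.z_z, ← hv, un_unit]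
    congr 2; abel

end GLift

/-! ### Comparison of central extensions -/

/-- The section `Y b * H u * X a ↦ y b * h u * x a` has a factor set that depends on `η` and
`Ψ` only. -/
theorem GLift.exists_factor (D : GData A Q) (η : Aˣ → Aˣ → I) (Ψ : A → A → I) :
    ∃ c : Q → Q → I, ∀ (E : Type) (_ : Group E) (X : CExt I E Q) (Ψ' : A → A → I)
      (_ : ∀ a b, π b = 0 → Ψ' a b = Ψ a b) (_ : GLift X D η Ψ'),
      ∃ s : Q → E, (∀ g, X.q (s g) = g) ∧ ∀ g g', s g * s g' = X.z (c g g') * s (g * g') := by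
  choose b u a hb hdec using D.dec
  let v : Q → Q → Aˣ := fun g g' => un (1 + a g * b g')
  have hv : ∀ g g', (v g g' : A) = 1 + a g * b g' := fun g g' => by
    obtain ⟨w, hw, -⟩ := one_add_unit (a g) (hb g')
    simp only [v]; rw [← hw, un_unit, hw]
  refine ⟨fun g g' => Ψ (a g) (b g') + η (u g) (v g g') + η (u g * v g g') (u g'), ?_⟩
  intro E _ X Ψ' hΨ L
  let s : Q → E := fun g => L.y (b g) * L.h (u g) * L.x (a g)
  have hq : ∀ g, X.q (s g) = g := by
    intro g
    simp only [s]
    rw [map_mul, map_mul, L.qx, L.qy _ (hb g), L.qh, ← hdec]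
  refine ⟨s, hq, fun g g' => ?_⟩
  set w := v g g' with hw
  have hprod : s g * s g' = X.z (Ψ (a g) (b g') + η (u g) w + η (u g * w) (u g')) *
      (L.y (b g + ((((u g)⁻¹ : Aˣ) : A) ^ 2 * (((w⁻¹ : Aˣ) : A) * b g'))) * L.h (u g * w * u g') *
        L.x ((((u g')⁻¹ : Aˣ) : A) ^ 2 * (((w⁻¹ : Aˣ) : A) * a g) + a g')) := by
    have h1 := L.xy (a g) (b g') w (hb g') (hv g g')
    rw [L.y_add _ _ (hb g) (pi_mul_zero _ (pi_mul_zero _ (hb g'))), L.x_add]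
    calc s g * s g' = L.y (b g) * L.h (u g) * (L.x (a g) * L.y (b g')) * L.h (u g') * L.x (a g') := by
          simp only [s, mul_assoc]
      _ = X.z (Ψ (a g) (b g')) * (L.y (b g) * (L.h (u g) * L.y (((w⁻¹ : Aˣ) : A) * b g')) * L.h w *
            (L.x (((w⁻¹ : Aˣ) : A) * a g) * L.h (u g')) * L.x (a g')) := by
          rw [h1, hΨ _ _ (hb g'), X.z_left]; simp only [mul_assoc]
      _ = X.z (Ψ (a g) (b g')) * (L.y (b g) * L.y ((((u g)⁻¹ : Aˣ) : A) ^ 2 * (((w⁻¹ : Aˣ) : A) * b g'))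
            * (L.h (u g) * L.h w * L.h (u g')) *
            (L.x ((((u g')⁻¹ : Aˣ) : A) ^ 2 * (((w⁻¹ : Aˣ) : A) * a g)) * L.x (a g'))) := by
          rw [L.hy _ _ (pi_mul_zero _ (hb g')), L.xh]; simp only [mul_assoc]
      _ = _ := by
          have h2 : L.h (u g) * L.h w * L.h (u g') =
              X.z (η (u g) w + η (u g * w) (u g')) * L.h (u g * w * u g') := by
            rw [L.hh, mul_assoc, L.hh, X.z_z]
          rw [h2, X.z_left, mul_assoc (X.z _), X.z_z, add_assoc]
  rw [hprod]
  congr 1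
  have hgg : g * g' = D.Y (b g + ((((u g)⁻¹ : Aˣ) : A) ^ 2 * (((w⁻¹ : Aˣ) : A) * b g'))) *
      D.H (u g * w * u g') *
        D.X ((((u g')⁻¹ : Aˣ) : A) ^ 2 * (((w⁻¹ : Aˣ) : A) * a g) + a g') := by
    have hpi : π (b g + ((((u g)⁻¹ : Aˣ) : A) ^ 2 * (((w⁻¹ : Aˣ) : A) * b g'))) = 0 := by
      rw [map_add, hb g, pi_mul_zero _ (pi_mul_zero _ (hb g')), add_zero]
    have := congrArg X.q hprod
    rw [map_mul, hq, hq, X.q_z_mul, map_mul, map_mul, L.qy _ hpi, L.qh, L.qx] at this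
    exact this
  have hpi : π (b g + ((((u g)⁻¹ : Aˣ) : A) ^ 2 * (((w⁻¹ : Aˣ) : A) * b g'))) = 0 := by
    rw [map_add, hb g, pi_mul_zero _ (pi_mul_zero _ (hb g')), add_zero]
  obtain ⟨h1, h2, h3⟩ := D.dec_inj _ _ _ _ _ _ (hb (g * g')) hpi ((hdec (g * g')).symm.trans hgg)
  simp only [s]
  rw [h1, h2, h3]

end

section
open LocR

/-! ### The functional equations of `Ψ` -/

/-- The functional equations satisfied by the two-variable function `Ψ` that describes a central
extension of `Γ₀`. -/
structure PsiEq {I A : Type} [AddCommGroup I] [CommRing A] [LocR A]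
    (η : Aˣ → Aˣ → I) (Ψ : A → A → I) : Prop where
  alt : IsAlt η
  P1 : ∀ (a b : A) (u v : Aˣ), π b = 0 → (v : A) = 1 + a * b →
    Ψ ((u : A) ^ 2 * a) (((u⁻¹ : Aˣ) : A) ^ 2 * b) = Ψ a b + (η u v + η u v)
  P2 : ∀ (a b b' : A) (v v' : Aˣ), π b = 0 → π b' = 0 → (v : A) = 1 + a * b →
    (v' : A) = 1 + ((v⁻¹ : Aˣ) : A) * a * b' →
    Ψ a (b + b') = Ψ a b + Ψ (((v⁻¹ : Aˣ) : A) * a) b' + η v v'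
  P3 : ∀ (a a' b : A) (v v' : Aˣ), π b = 0 → (v : A) = 1 + a' * b →
    (v' : A) = 1 + a * (((v⁻¹ : Aˣ) : A) * b) →
    Ψ (a + a') b = Ψ a' b + Ψ a (((v⁻¹ : Aˣ) : A) * b) + η v' v

variable {I A : Type} [AddCommGroup I] [CommRing A] [LocR A]

theorem GLift.psiEq {E Q : Type} [Group E] [Group Q] {X : CExt I E Q} {D : GData A Q}
    {η : Aˣ → Aˣ → I} {Ψ : A → A → I} (L : GLift X D η Ψ) (hη : IsAlt η) : PsiEq η Ψ :=
  ⟨hη, fun a b u v => L.P1 hη a b u v, L.P2, L.P3⟩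

/-- The identities satisfied by the reduced function `κ(a,v) = Ψ(a,(v-1)/a) - η(a,v)`, with an
error term `e`.  Here `u + t = u₂ + t₂ = 1` with `u ≡ u₂`. -/
structure KapEq (η : Aˣ → Aˣ → I) (κ : Aˣ → Aˣ → I) : Prop where
  K1 : ∀ u a v : Aˣ, π (v : A) = 1 → κ (u ^ 2 * a) v = κ a v
  K2 : ∀ a v v' : Aˣ, π (v : A) = 1 → π (v' : A) = 1 → κ a (v * v') = κ a v + κ (a * v⁻¹) v'
  K3 : ∀ α u t u₂ t₂ : Aˣ, (u : A) + t = 1 → (u₂ : A) + t₂ = 1 → π (u : A) = π (u₂ : A) →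
    κ α (t₂ * t⁻¹ * (u * u₂⁻¹)) = κ (α * t) (u * u₂⁻¹) + κ (α * u) (t₂ * t⁻¹) +
      (η u₂ t₂ - η u t)

theorem pi_div_one {u v : Aˣ} (h : π (u : A) = π (v : A)) : π ((u * v⁻¹ : Aˣ) : A) = 1 := by
  rw [Units.val_mul, map_mul, pi_inv, h, mul_inv_cancel₀ (pi_unit v)]

theorem pi_mul_one {u v : Aˣ} (h : π (u : A) = 1) (h' : π (v : A) = 1) :
    π ((u * v : Aˣ) : A) = 1 := by
  rw [Units.val_mul, map_mul, h, h', mul_one]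

theorem pi_inv_one {u : Aˣ} (h : π (u : A) = 1) : π ((u⁻¹ : Aˣ) : A) = 1 := by
  rw [pi_inv, h, inv_one]

theorem pi_snd {u t u₂ t₂ : Aˣ} (h : (u : A) + t = 1) (h₂ : (u₂ : A) + t₂ = 1)
    (hu : π (u : A) = π (u₂ : A)) : π (t₂ : A) = π (t : A) := by
  have e1 := congrArg π h
  have e2 := congrArg π h₂
  rw [map_add, map_one] at e1 e2
  linear_combination e2 - e1 + hu

theorem PsiEq.kap {η : Aˣ → Aˣ → I} {Ψ : A → A → I} (h : PsiEq η Ψ) :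
    KapEq η (fun a v => Ψ a (((a⁻¹ : Aˣ) : A) * ((v : A) - 1)) - η a v) where
  K1 := by
    intro u a v hv
    have hb : π (((a⁻¹ : Aˣ) : A) * ((v : A) - 1)) = 0 := by simp [hv]
    have := h.P1 (a : A) (((a⁻¹ : Aˣ) : A) * ((v : A) - 1)) u v hb (by
      linear_combination (1 - (v : A)) * Units.mul_inv a)
    have e : ((((u ^ 2 * a : Aˣ))⁻¹ : Aˣ) : A) * ((v : A) - 1) =
        ((u⁻¹ : Aˣ) : A) ^ 2 * (((a⁻¹ : Aˣ) : A) * ((v : A) - 1)) := by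
      apply ι_inj
      simp only [map_mul, map_pow, iota_inv, Units.val_mul, Units.val_pow_eq_pow_val]
      field_simp
    beta_reduce
    rw [e, Units.val_mul, Units.val_pow_eq_pow_val, this, h.alt.mul_left, pow_two, h.alt.mul_left]
    abel
  K2 := by
    intro a v v' hv hv'
    have hb : π (((a⁻¹ : Aˣ) : A) * ((v : A) - 1)) = 0 := by simp [hv]
    have hb' : π (((a * v⁻¹ : Aˣ)⁻¹ : Aˣ) * ((v' : A) - 1)) = 0 := by
      rw [map_mul, map_sub, hv', map_one, sub_self, mul_zero]
    have := h.P2 (a : A) (((a⁻¹ : Aˣ) : A) * ((v : A) - 1))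
      (((a * v⁻¹ : Aˣ)⁻¹ : Aˣ) * ((v' : A) - 1)) v v' hb hb' (by
        linear_combination (1 - (v : A)) * Units.mul_inv a) (by
        apply ι_inj
        simp only [map_add, map_sub, map_one, map_mul, iota_inv, Units.val_mul]
        have := iota_unit a
        have := iota_unit v
        field_simp
        ring)
    have e : ((a⁻¹ : Aˣ) : A) * (((v * v' : Aˣ) : A) - 1) =
        (((a⁻¹ : Aˣ) : A) * ((v : A) - 1)) + (((a * v⁻¹ : Aˣ)⁻¹ : Aˣ) * ((v' : A) - 1)) := by
      apply ι_inj
      simp only [map_add, map_sub, map_one, map_mul, iota_inv, Units.val_mul]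
      have := iota_unit a
      have := iota_unit v
      field_simp
      ring
    beta_reduce
    rw [e, this, h.alt.mul_right, h.alt.mul_left, h.alt.inv_left, Units.val_mul, mul_comm (a : A)]
    abel
  K3 := by
    intro α u t u₂ t₂ hu hu₂ hpi
    have ht := pi_snd hu hu₂ hpi
    have hv1 := pi_div_one hpi
    have hv' := pi_div_one ht
    set b : A := (((α * t : Aˣ)⁻¹ : Aˣ) : A) * (((u * u₂⁻¹ : Aˣ) : A) - 1) with hb
    have hu' : (u : A) = 1 - t := by linear_combination hu
    have hu2' : (u₂ : A) = 1 - t₂ := by linear_combination hu₂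
    have i1 : (1 - ι (t : A)) ≠ 0 := by
      have := iota_unit u
      rw [hu', map_sub, map_one] at this; exact this
    have i2 : (1 - ι (t₂ : A)) ≠ 0 := by
      have := iota_unit u₂
      rw [hu2', map_sub, map_one] at this; exact this
    have := h.P3 (α * u : Aˣ) (α * t : Aˣ) b (u * u₂⁻¹) (t₂ * t⁻¹) (by
        rw [hb, map_mul, map_sub, hv1, map_one, sub_self, mul_zero]) (by
        rw [hb, Units.mul_inv_cancel_left]; ring) (by
        apply ι_inj
        simp only [hb, map_add, map_sub, map_one, map_mul, iota_inv, Units.val_mul, hu', hu2']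
        have := iota_unit t
        have := iota_unit α
        field_simp
        ring)
    have e1 : ((α⁻¹ : Aˣ) : A) * (((t₂ * t⁻¹ * (u * u₂⁻¹) : Aˣ) : A) - 1) = b := by
      apply ι_inj
      simp only [hb, map_add, map_sub, map_one, map_mul, iota_inv, Units.val_mul, hu', hu2']
      have := iota_unit t
      have := iota_unit α
      field_simp
      ring
    have e2 : (((α * u : Aˣ)⁻¹ : Aˣ) : A) * (((t₂ * t⁻¹ : Aˣ) : A) - 1) =
        (((u * u₂⁻¹)⁻¹ : Aˣ) : A) * b := by
      apply ι_inj
      simp only [hb, map_add, map_sub, map_one, map_mul, iota_inv, Units.val_mul, hu', hu2']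
      have := iota_unit t
      have := iota_unit α
      field_simp
      ring
    have e3 : ((α * u : Aˣ) : A) + (α * t : Aˣ) = α := by
      rw [Units.val_mul, Units.val_mul, ← mul_add, hu, mul_one]
    rw [e3] at this
    beta_reduce
    rw [e1, e2, this]
    simp only [h.alt.mul_right, h.alt.mul_left, h.alt.inv_left, h.alt.inv_right]
    have s1 := h.alt.skew t₂ u
    have s2 := h.alt.skew t u
    have s3 := h.alt.skew t₂ u₂
    rw [s1, s2, s3]
    abel

end

section
open LocR

variable {I A : Type} [AddCommGroup I] [CommRing A] [LocR A]

/-- For `u + t = 1` and `w ≡ 1` there is `u₂ + t₂ = 1`, congruent to `u, t`, with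
`(t₂/t)(u/u₂) = w`. -/
theorem exists_ratio (u t w : Aˣ) (h : (u : A) + t = 1) (hw : π (w : A) = 1) :
    ∃ u₂ t₂ : Aˣ, (u₂ : A) + t₂ = 1 ∧ π (u : A) = π (u₂ : A) ∧ t₂ * t⁻¹ * (u * u₂⁻¹) = w := by
  have hd : π ((u : A) + w * t) = 1 := by
    rw [map_add, map_mul, hw, one_mul, ← map_add, h, map_one]
  set d := un ((u : A) + w * t) with hdd
  have hd' : (d : A) = u + w * t := un_coe (by rw [hd]; exact one_ne_zero)
  refine ⟨u * d⁻¹, w * t * d⁻¹, ?_, ?_, ?_⟩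
  · rw [Units.val_mul, Units.val_mul, ← add_mul, Units.val_mul, ← hd', Units.mul_inv]
  · rw [Units.val_mul, map_mul, pi_inv, hd', hd, inv_one, mul_one]
  · apply uext
    simp only [map_mul, iota_inv, Units.val_mul]
    field_simp

/-- For `u + t = 1` and `u₂ ≡ u` the element `1 - u₂` is a unit. -/
theorem exists_compl (u t u₂ : Aˣ) (h : (u : A) + t = 1) (hu : π (u : A) = π (u₂ : A)) :
    ∃ t₂ : Aˣ, (u₂ : A) + t₂ = 1 := by
  refine ⟨un (1 - u₂), ?_⟩
  rw [un_coe]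
  · ring
  · rw [map_sub, map_one, ← hu, ← map_one (π : A →+* k A), ← map_sub, ← h, add_sub_cancel_left]
    exact pi_unit t

namespace KapEq
variable {η κ : Aˣ → Aˣ → I} (h : KapEq η κ)
include h

theorem at_one (a : Aˣ) : κ a 1 = 0 := by
  have := h.K2 a 1 1 (by simp) (by simp)
  simp only [mul_one, inv_one] at this
  exact left_eq_add.mp this

theorem shift (a w v : Aˣ) (hw : π (w : A) = 1) (hv : π (v : A) = 1) :
    κ (a * w) (v ^ 2) = κ a (v ^ 2) := by
  have hv2 : π ((v ^ 2 : Aˣ) : A) = 1 := by simp [hv]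
  have h1 := h.K2 (a * w) w (v ^ 2) hw hv2
  have h2 := h.K2 (a * w) (v ^ 2) w hv2 hw
  rw [mul_comm w, h2] at h1
  have e : a * w * (v ^ 2)⁻¹ = (v⁻¹) ^ 2 * (a * w) := by rw [inv_pow, mul_comm]
  rw [e, h.K1 _ _ _ hw, mul_inv_cancel_right, add_comm] at h1
  exact (add_left_cancel h1)

theorem nu_mul (a v v' : Aˣ) (hv : π (v : A) = 1) (hv' : π (v' : A) = 1) :
    κ a ((v * v') ^ 2) = κ a (v ^ 2) + κ a (v' ^ 2) := by
  have hv2 : π ((v ^ 2 : Aˣ) : A) = 1 := by simp [hv]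
  have hv2' : π ((v' ^ 2 : Aˣ) : A) = 1 := by simp [hv']
  have e : a * (v ^ 2)⁻¹ = (v⁻¹) ^ 2 * a := by rw [inv_pow, mul_comm]
  rw [mul_pow, h.K2 _ _ _ hv2 hv2', e, h.K1 _ _ _ hv2']

theorem inv (a v : Aˣ) (hv : π (v : A) = 1) : κ a v⁻¹ = κ a v - κ a (v ^ 2) := by
  have h1 := h.K2 (a * v) v v⁻¹ hv (pi_inv_one hv)
  rw [mul_inv_cancel, h.at_one, mul_inv_cancel_right] at h1
  have h2 := h.K2 a v v hv hv
  have e : a * v = v ^ 2 * (a * v⁻¹) := by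
    rw [pow_two]; rw [mul_mul_mul_comm, mul_inv_cancel, mul_one, mul_comm]
  rw [e, h.K1 _ _ _ hv] at h1
  rw [pow_two, h2]
  rw [eq_comm, add_comm] at h1
  rw [eq_neg_of_add_eq_zero_left h1]; abel

/-- `κ(a, v²)` depends only on the square class of `a` modulo `p`. -/
theorem nu_sq (a a' v : Aˣ) (hs : IsSquare (π ((a * a' : Aˣ) : A))) (hv : π (v : A) = 1) :
    κ a (v ^ 2) = κ a' (v ^ 2) := by
  have hv2 : π ((v ^ 2 : Aˣ) : A) = 1 := by simp [hv]
  obtain ⟨s, w, hw, e⟩ := sq_decomp hs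
  have e2 : a = (s * a'⁻¹) ^ 2 * (a' * w) := by
    rw [mul_pow, inv_pow]
    calc a = a * a' * a'⁻¹ := by simp
      _ = s ^ 2 * w * a'⁻¹ := by rw [e]
      _ = _ := by
        rw [pow_two a', mul_inv]
        rw [mul_assoc, mul_assoc, mul_assoc, inv_mul_cancel_left, mul_comm w]
  rw [e2, h.K1 _ _ _ hv2, h.shift _ _ _ hw hv]

variable [Coef I] (hη : IsAlt η)
include hη

theorem nu_add (α u t u₂ t₂ : Aˣ) (hu : (u : A) + t = 1) (hu₂ : (u₂ : A) + t₂ = 1)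
    (hpi : π (u : A) = π (u₂ : A)) :
    κ α ((t₂ * t⁻¹ * (u * u₂⁻¹)) ^ 2) = κ (α * t) ((u * u₂⁻¹) ^ 2) + κ (α * u) ((t₂ * t⁻¹) ^ 2) +
      ((η u₂ t₂ - η u t) + (η u₂ t₂ - η u t)) := by
  have ht := pi_snd hu hu₂ hpi
  have hv1 := pi_div_one hpi
  have hv' := pi_div_one ht
  have h1 := h.K3 α u t u₂ t₂ hu hu₂ hpi
  have h2 := h.K3 α t u t₂ u₂ (by rw [add_comm, hu]) (by rw [add_comm, hu₂]) ht.symm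
  have e1 : u₂ * u⁻¹ = (u * u₂⁻¹)⁻¹ := by simp
  have e2 : t * t₂⁻¹ = (t₂ * t⁻¹)⁻¹ := by simp
  have e3 : (u * u₂⁻¹)⁻¹ * (t₂ * t⁻¹)⁻¹ = (t₂ * t⁻¹ * (u * u₂⁻¹))⁻¹ := (mul_inv_rev _ _).symm
  rw [e1, e2, e3, h.inv _ _ hv1, h.inv _ _ hv', h.inv _ _ (pi_mul_one hv' hv1), h1] at h2
  rw [hη.skew t₂ u₂, hη.skew t u] at h2
  generalize η u₂ t₂ = x1 at *
  generalize η u t = x2 at *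
  generalize κ α ((t₂ * t⁻¹ * (u * u₂⁻¹)) ^ 2) = x3 at *
  rw [sub_eq_iff_eq_add] at h2
  rw [← sub_eq_iff_eq_add'] at h2
  rw [← h2]; abel

/-- `η(u, 1 - u)` depends only on `u` modulo `p`. -/
theorem eta_const (u t u₂ t₂ : Aˣ) (hu : (u : A) + t = 1) (hu₂ : (u₂ : A) + t₂ = 1)
    (hpi : π (u : A) = π (u₂ : A)) : η u₂ t₂ = η u t := by
  obtain ⟨m, n, -, -, hn⟩ := exists_adj A
  have ht := pi_snd hu hu₂ hpi
  have hv1 := pi_div_one hpi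
  have hv' := pi_div_one ht
  -- the sum of `κ(α, v²)` over both square classes is independent of `α`
  have hsum : ∀ α v : Aˣ, π (v : A) = 1 → κ α (v ^ 2) + κ (n * α) (v ^ 2) =
      κ 1 (v ^ 2) + κ n (v ^ 2) := by
    intro α v hv
    by_cases hα : IsSquare (π (α : A))
    · rw [h.nu_sq α 1 v (by simpa using hα) hv, h.nu_sq (n * α) n v _ hv]
      have : n * α * n = n ^ 2 * α := by rw [pow_two, mul_right_comm]
      rw [this, Units.val_mul, map_mul, Units.val_pow_eq_pow_val, map_pow]
      exact (IsSquare.sq _).mul hα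
    · have hna : IsSquare (π ((α * n : Aˣ) : A)) := by
        rw [Units.val_mul, map_mul]; exact sq_mul_of_not hα hn
      rw [h.nu_sq α n v hna hv, h.nu_sq (n * α) 1 v (by rwa [mul_one, mul_comm]) hv, add_comm]
  have h1 := h.nu_add hη 1 u t u₂ t₂ hu hu₂ hpi
  have h2 := h.nu_add hη n u t u₂ t₂ hu hu₂ hpi
  have s1 := hsum t _ hv1
  have s2 := hsum u _ hv'
  rw [h.nu_mul _ _ _ hv' hv1] at h1 h2
  rw [one_mul, one_mul] at h1
  generalize η u₂ t₂ = x1 at *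
  generalize η u t = x2 at *
  generalize κ 1 ((u * u₂⁻¹) ^ 2) = y1 at *
  generalize κ 1 ((t₂ * t⁻¹) ^ 2) = y2 at *
  generalize κ n ((u * u₂⁻¹) ^ 2) = y3 at *
  generalize κ n ((t₂ * t⁻¹) ^ 2) = y4 at *
  generalize κ (n * t) ((u * u₂⁻¹) ^ 2) = y5 at *
  generalize κ (n * u) ((t₂ * t⁻¹) ^ 2) = y6 at *
  generalize κ (t) ((u * u₂⁻¹) ^ 2) = y7 at *
  generalize κ (u) ((t₂ * t⁻¹) ^ 2) = y8 at *
  have : (x1 - x2) + (x1 - x2) + ((x1 - x2) + (x1 - x2)) = 0 := by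
    have e3 : (y2 + y1) + (y4 + y3) = (y7 + y5) + (y8 + y6) +
      ((x1 - x2) + (x1 - x2) + ((x1 - x2) + (x1 - x2))) := by rw [h1, h2]; abel
    rw [s1, s2] at e3
    have e4 : y2 + y1 + (y4 + y3) = y1 + y3 + (y2 + y4) := by abel
    rw [e4] at e3
    exact left_eq_add.mp e3
  exact sub_eq_zero.mp (Coef.two_inj _ (Coef.two_inj _ this))

/-- `κ(a, v²)` does not depend on `a`. -/
theorem nu_const (a v : Aˣ) (hv : π (v : A) = 1) : κ a (v ^ 2) = κ 1 (v ^ 2) := by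
  obtain ⟨m, n, hmn, hm, hn⟩ := exists_adj A
  have key : κ n (v ^ 2) = κ 1 (v ^ 2) := by
    have hu : ((m * n⁻¹ : Aˣ) : A) + (n⁻¹ : Aˣ) = 1 := by
      rw [Units.val_mul, ← add_one_mul, ← hmn, Units.mul_inv]
    obtain ⟨u₂, t₂, hu₂, hpi, hw⟩ := exists_ratio _ _ v hu hv
    have ht := pi_snd hu hu₂ hpi
    have hv1 := pi_div_one hpi
    have hv' := pi_div_one ht
    have h1 := h.nu_add hη n _ _ u₂ t₂ hu hu₂ hpi
    rw [hw, h.eta_const hη _ _ _ _ hu hu₂ hpi, sub_self, add_zero, add_zero, mul_inv_cancel] at h1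
    have e : n * (m * n⁻¹) = m := by rw [mul_comm m, mul_inv_cancel_left]
    rw [e, h.nu_sq m 1 _ (by simpa using hm) hv', add_comm, ← h.nu_mul _ _ _ hv' hv1, hw] at h1
    exact h1
  by_cases ha : IsSquare (π (a : A))
  · exact h.nu_sq a 1 v (by simpa using ha) hv
  · rw [← key]
    exact h.nu_sq a n v (by rw [Units.val_mul, map_mul]; exact sq_mul_of_not ha hn) hv

end KapEq

/-- The identities of `κ` once `κ(a, v²)` is removed. -/
structure KapEq0 (κ : Aˣ → Aˣ → I) : Prop where
  K1 : ∀ u a v : Aˣ, π (v : A) = 1 → κ (u ^ 2 * a) v = κ a v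
  K2 : ∀ a v v' : Aˣ, π (v : A) = 1 → π (v' : A) = 1 → κ a (v * v') = κ a v + κ (a * v⁻¹) v'
  K3 : ∀ α u t u₂ t₂ : Aˣ, (u : A) + t = 1 → (u₂ : A) + t₂ = 1 → π (u : A) = π (u₂ : A) →
    κ α (t₂ * t⁻¹ * (u * u₂⁻¹)) = κ (α * t) (u * u₂⁻¹) + κ (α * u) (t₂ * t⁻¹)
  sq : ∀ a v : Aˣ, π (v : A) = 1 → κ a (v ^ 2) = 0

theorem KapEq.exists_theta [Coef I] {η κ : Aˣ → Aˣ → I} (h : KapEq η κ) (hη : IsAlt η) :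
    ∃ θ : Aˣ → I, (∀ a b, θ (a * b) = θ a + θ b) ∧ KapEq0 (fun a v => κ a v - θ v) := by
  let V : Subgroup Aˣ :=
    { carrier := {v | π (v : A) = 1}
      mul_mem' := fun ha hb => pi_mul_one ha hb
      one_mem' := by simp
      inv_mem' := fun ha => pi_inv_one ha }
  obtain ⟨θ, hθ, hV⟩ := Coef.extend_mul V (fun v => hf (κ 1 ((v : Aˣ) ^ 2))) (fun v w => by
    rw [← hf_add, ← h.nu_mul _ _ _ v.2 w.2]; rfl)
  have hsq : ∀ v : Aˣ, π (v : A) = 1 → θ v + θ v = κ 1 (v ^ 2) := by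
    intro v hv
    have := hV ⟨v, hv⟩
    simp only at this
    rw [this, hf_add_self]
  refine ⟨θ, hθ, ?_, ?_, ?_, ?_⟩
  · intro u a v hv
    beta_reduce
    rw [h.K1 _ _ _ hv]
  · intro a v v' hv hv'
    beta_reduce
    rw [h.K2 _ _ _ hv hv', hθ]; abel
  · intro α u t u₂ t₂ hu hu₂ hpi
    beta_reduce
    rw [h.K3 _ _ _ _ _ hu hu₂ hpi, h.eta_const hη _ _ _ _ hu hu₂ hpi, hθ]; abel
  · intro a v hv
    beta_reduce
    rw [h.nu_const hη _ _ hv, pow_two, hθ, hsq v hv, pow_two, sub_self]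

end

section
open LocR

variable {I A : Type} [AddCommGroup I] [CommRing A] [LocR A]

/-- `ε` is a potential for `κ`, constant on square classes. -/
structure IsPot (κ : Aˣ → Aˣ → I) (ε : Aˣ → I) : Prop where
  sq : ∀ s x, ε (s ^ 2 * x) = ε x
  pot : ∀ a v : Aˣ, π (v : A) = 1 → κ a v = ε a - ε (a * v)

theorem KapEq0.mul_sq {κ : Aˣ → Aˣ → I} (h : KapEq0 κ) (a w s : Aˣ) (hw : π (w : A) = 1)
    (hs : π ((s ^ 2 : Aˣ) : A) = 1) : κ a (w * s ^ 2) = κ a w := by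
  have hs2 : π (s : A) = 1 ∨ π (s : A) = -1 := by
    rw [Units.val_pow_eq_pow_val, map_pow] at hs
    exact mul_self_eq_one_iff.mp (by rw [← pow_two]; exact hs)
  rw [h.K2 _ _ _ hw hs]
  rcases hs2 with hs2 | hs2
  · rw [h.sq _ _ hs2, add_zero]
  · rw [← neg_sq, h.sq _ (-s) (by rw [Units.val_neg, map_neg, hs2, neg_neg]), add_zero]

theorem KapEq0.at_inv {κ : Aˣ → Aˣ → I} (h : KapEq0 κ) (a v : Aˣ) (hv : π (v : A) = 1) :
    κ a v⁻¹ = κ a v := by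
  have e : v⁻¹ = v * (v⁻¹) ^ 2 := by rw [pow_two, mul_inv_cancel_left]
  rw [e, h.mul_sq _ _ _ hv (by simp [hv])]

theorem KapEq0.exists_pot {κ : Aˣ → Aˣ → I} (h : KapEq0 κ) : ∃ ε, IsPot κ ε := by
  classical
  obtain ⟨m, n, -, -, hn⟩ := exists_adj A
  let r : Aˣ → Aˣ := fun x => if IsSquare (π (x : A)) then 1 else n
  have hr : ∀ x, ∃ s v : Aˣ, π (v : A) = 1 ∧ x = s ^ 2 * (r x * v) := by
    intro x
    simp only [r]
    split_ifs with hx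
    · obtain ⟨s, v, hv, e⟩ := sq_decomp hx
      exact ⟨s, v, hv, by rw [one_mul, e]⟩
    · have hx2 : IsSquare (π ((x * n : Aˣ) : A)) := by
        rw [Units.val_mul, map_mul]; exact sq_mul_of_not hx hn
      obtain ⟨s, v, hv, e⟩ := sq_decomp hx2
      refine ⟨s * n⁻¹, v, hv, ?_⟩
      calc x = x * n * n⁻¹ := by simp
        _ = s ^ 2 * v * n⁻¹ := by rw [e]
        _ = _ := by
          apply uext
          simp only [map_mul, iota_inv, Units.val_mul, Units.val_pow_eq_pow_val, map_pow]
          field_simp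
  choose s v hv hx using hr
  have hrr : ∀ x y c : Aˣ, y = c ^ 2 * x → r y = r x := by
    intro x y c e
    have : IsSquare (π (y : A)) ↔ IsSquare (π (x : A)) := by
      constructor
      · intro hy
        have e2 : x = (c⁻¹) ^ 2 * y := by rw [e, ← mul_assoc, ← mul_pow, inv_mul_cancel]; simp
        rw [e2, Units.val_mul, map_mul, Units.val_pow_eq_pow_val, map_pow]
        exact (IsSquare.sq _).mul hy
      · intro hy
        rw [e, Units.val_mul, map_mul, Units.val_pow_eq_pow_val, map_pow]
        exact (IsSquare.sq _).mul hy
    simp only [r, this]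
  -- `κ (r x) (v x)` may be computed from any decomposition of `x`
  have key : ∀ x s' v' : Aˣ, π (v' : A) = 1 → x = s' ^ 2 * (r x * v') → κ (r x) (v x) = κ (r x) v' := by
    intro x s' v' hv' e
    have e1 : v x = v' * (s' * (s x)⁻¹) ^ 2 := by
      have e2 : s x ^ 2 * (r x * v x) = s' ^ 2 * (r x * v') := (hx x).symm.trans e
      apply uext
      have e3 := congrArg (fun y : Aˣ => ι (y : A)) e2
      simp only [map_mul, iota_inv, Units.val_mul, Units.val_pow_eq_pow_val, map_pow] at e3 ⊢
      have := iota_unit (r x)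
      have := iota_unit (s x)
      field_simp
      field_simp at e3
      linear_combination e3
    rw [e1]
    apply h.mul_sq _ _ _ hv'
    have e5 : (s' * (s x)⁻¹) ^ 2 = v x * v'⁻¹ := by rw [e1, mul_comm v', mul_inv_cancel_right]
    rw [e5]
    exact pi_mul_one (hv x) (pi_inv_one hv')
  refine ⟨fun x => -κ (r x) (v x), ?_, ?_⟩
  · intro c x
    have e := hrr x (c ^ 2 * x) c rfl
    beta_reduce
    rw [key (c ^ 2 * x) (c * s x) (v x) (hv x) (by
      rw [e]; nth_rw 1 [hx x]; rw [mul_pow, mul_assoc]), e]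
  · intro a w hw
    have hra : r (a * w) = r a := by
      simp only [r, Units.val_mul, map_mul, hw, mul_one]
    have e1 : κ a w = κ (r a * v a) w := by
      nth_rw 1 [hx a]
      rw [h.K1 _ _ _ hw]
    have e2 := h.K2 (r a) (v a)⁻¹ w (pi_inv_one (hv a)) hw
    rw [inv_inv, ← e1, h.at_inv _ _ (hv a)] at e2
    have e3 : (v a)⁻¹ * w = v a * w * ((v a)⁻¹) ^ 2 := by
      rw [pow_two, mul_comm (v a) w, mul_assoc w, mul_inv_cancel_left, mul_comm]
    rw [e3, h.mul_sq _ _ _ (pi_mul_one (hv a) hw) (by simp [hv a])] at e2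
    beta_reduce
    rw [key (a * w) (s a) (v a * w) (pi_mul_one (hv a) hw) (by
      rw [hra]; nth_rw 1 [hx a]; simp only [mul_assoc]), hra, e2]
    abel

/-- The defect of `ε` from being additive along `u + t = 1`. -/
def Wdef (ε : Aˣ → I) (α u t : Aˣ) : I := ε (α * u * t) - ε (α * u) - ε (α * t) + ε α

theorem Wdef_symm (ε : Aˣ → I) (α u t : Aˣ) : Wdef ε α u t = Wdef ε α t u := by
  unfold Wdef; rw [mul_right_comm]; abel

namespace IsPot
variable {κ : Aˣ → Aˣ → I} {ε : Aˣ → I} (h : IsPot κ ε)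
include h

theorem eq_of_sq {x y : Aˣ} (s : Aˣ) (e : x = s ^ 2 * y) : ε x = ε y := by rw [e, h.sq]

theorem W_sq (α s u t : Aˣ) : Wdef ε (s ^ 2 * α) u t = Wdef ε α u t := by
  unfold Wdef
  simp only [mul_assoc, h.sq]

theorem W_mul (α u t : Aˣ) : Wdef ε (α * u) u t = - Wdef ε α u t := by
  unfold Wdef
  rw [h.eq_of_sq (x := α * u * u * t) (y := α * t) u (by rw [pow_two]; ac_rfl),
    h.eq_of_sq (x := α * u * u) (y := α) u (by rw [pow_two]; ac_rfl)]
  abel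

theorem W_change (hκ : KapEq0 κ) (α u t u₂ t₂ : Aˣ) (hu : (u : A) + t = 1)
    (hu₂ : (u₂ : A) + t₂ = 1) (hpi : π (u : A) = π (u₂ : A)) :
    Wdef ε (α * (t₂ * t⁻¹ * (u * u₂⁻¹))) u₂ t₂ = Wdef ε α u t := by
  have ht := pi_snd hu hu₂ hpi
  have hv1 := pi_div_one hpi
  have hv' := pi_div_one ht
  have h1 := hκ.K3 α u t u₂ t₂ hu hu₂ hpi
  rw [h.pot _ _ hv1, h.pot _ _ hv', h.pot _ _ (pi_mul_one hv' hv1)] at h1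
  unfold Wdef
  rw [h.eq_of_sq (x := α * (t₂ * t⁻¹ * (u * u₂⁻¹)) * u₂ * t₂) (y := α * u * t) (t₂ * t⁻¹) (by
      apply uext
      simp only [map_mul, iota_inv, Units.val_mul, Units.val_pow_eq_pow_val, map_pow]
      field_simp),
    h.eq_of_sq (x := α * (t₂ * t⁻¹ * (u * u₂⁻¹)) * u₂) (y := α * u * (t₂ * t⁻¹)) 1 (by
      apply uext
      simp only [map_mul, iota_inv, Units.val_mul, Units.val_pow_eq_pow_val, map_pow]
      simp
      field_simp),
    h.eq_of_sq (x := α * (t₂ * t⁻¹ * (u * u₂⁻¹)) * t₂) (y := α * t * (u * u₂⁻¹)) (t₂ * t⁻¹) (by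
      apply uext
      simp only [map_mul, iota_inv, Units.val_mul, Units.val_pow_eq_pow_val, map_pow]
      field_simp)]
  have h2 : ε (α * (t₂ * t⁻¹ * (u * u₂⁻¹))) = ε α - (ε (α * t) - ε (α * t * (u * u₂⁻¹)) +
    (ε (α * u) - ε (α * u * (t₂ * t⁻¹)))) := by rw [← h1]; abel
  rw [h2]; abel

theorem W_zero (hκ : KapEq0 κ) (α u t : Aˣ) (hu : (u : A) + t = 1) (hs : IsSquare (π (u : A))) :
    Wdef ε α u t = 0 := by
  obtain ⟨s, v, hv, e⟩ := sq_decomp hs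
  have hpi : π (u : A) = π ((s ^ 2 : Aˣ) : A) := by rw [e, Units.val_mul, map_mul, hv, mul_one]
  obtain ⟨t₂, ht₂⟩ := exists_compl u t (s ^ 2) hu hpi
  rw [← h.W_change hκ α u t _ _ hu ht₂ hpi]
  unfold Wdef
  generalize α * (t₂ * t⁻¹ * (u * (s ^ 2)⁻¹)) = β
  rw [mul_comm β, mul_assoc, h.sq, h.sq]; abel

theorem W_zero' (hκ : KapEq0 κ) (α u t : Aˣ) (hu : (u : A) + t = 1) (hs : IsSquare (π (t : A))) :
    Wdef ε α u t = 0 := by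
  rw [Wdef_symm]; exact h.W_zero hκ α t u (by rw [add_comm, hu]) hs

/-- `W(α u/t, u) = W(α, u)`. -/
theorem W_odds (α u t : Aˣ) : Wdef ε (α * (u * t⁻¹)) u t = Wdef ε α u t := by
  have e : α * (u * t⁻¹) = (t⁻¹) ^ 2 * (α * u * t) := by
    rw [pow_two]
    apply uext
    simp only [map_mul, iota_inv, Units.val_mul]
    field_simp
  rw [e, h.W_sq, Wdef_symm, h.W_mul, Wdef_symm, h.W_mul, neg_neg]

theorem W_congr (hκ : KapEq0 κ) (α u t u₂ t₂ : Aˣ) (hu : (u : A) + t = 1)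
    (hu₂ : (u₂ : A) + t₂ = 1) (hpi : π (u : A) = π (u₂ : A)) :
    Wdef ε α u₂ t₂ = Wdef ε α u t := by
  have h1 := h.W_change hκ (α * (u * t⁻¹)⁻¹) u t u₂ t₂ hu hu₂ hpi
  rw [← h.W_odds (α * (u * t⁻¹)⁻¹) u t, inv_mul_cancel_right] at h1
  rw [← h1, ← h.W_odds (α * (u * t⁻¹)⁻¹ * (t₂ * t⁻¹ * (u * u₂⁻¹))) u₂ t₂]
  congr 1
  apply uext
  simp only [map_mul, iota_inv, Units.val_mul]
  field_simp

theorem W_shift (hκ : KapEq0 κ) (α w u t : Aˣ) (hu : (u : A) + t = 1) (hw : π (w : A) = 1) :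
    Wdef ε (α * w) u t = Wdef ε α u t := by
  obtain ⟨u₂, t₂, hu₂, hpi, e⟩ := exists_ratio u t w hu hw
  rw [← h.W_congr hκ (α * w) u t u₂ t₂ hu hu₂ hpi, ← e, h.W_change hκ _ _ _ _ _ hu hu₂ hpi]

/-- It suffices to know that `W(1, u)` vanishes. -/
theorem W_of_one (hκ : KapEq0 κ) (α u t : Aˣ) (hu : (u : A) + t = 1) (h1 : Wdef ε 1 u t = 0) :
    Wdef ε α u t = 0 := by
  have key : ∀ β : Aˣ, IsSquare (π (β : A)) → Wdef ε β u t = 0 := by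
    intro β hβ
    obtain ⟨s, v, hv, e⟩ := sq_decomp hβ
    rw [e, h.W_sq, ← one_mul v, h.W_shift hκ _ _ _ _ hu hv, h1]
  by_cases hα : IsSquare (π (α : A))
  · exact key α hα
  · by_cases hs : IsSquare (π (u : A))
    · exact h.W_zero hκ α u t hu hs
    · have := key (α * u) (by rw [Units.val_mul, map_mul]; exact sq_mul_of_not hα hs)
      rw [h.W_mul, neg_eq_zero] at this
      exact this

end IsPot

end

section
open LocR

variable {I A : Type} [AddCommGroup I] [CommRing A] [LocR A]

theorem isq_div {x y : Aˣ} (hx : ¬ IsSquare (π (x : A))) (hy : ¬ IsSquare (π (y : A))) :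
    IsSquare (π ((x * y⁻¹ : Aˣ) : A)) := by
  have e : x * y⁻¹ = (y⁻¹) ^ 2 * (x * y) := by
    rw [pow_two]; apply uext
    simp only [map_mul, iota_inv, Units.val_mul]
    field_simp
  rw [e, Units.val_mul, map_mul, Units.val_pow_eq_pow_val, map_pow, Units.val_mul, map_mul]
  exact (IsSquare.sq _).mul (sq_mul_of_not hx hy)

theorem isq_mul {x y : Aˣ} (hx : IsSquare (π (x : A))) (hy : IsSquare (π (y : A))) :
    IsSquare (π ((x * y : Aˣ) : A)) := by
  rw [Units.val_mul, map_mul]; exact hx.mul hy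

/-- By the five term relation, `W(1, u)` takes the same value at all `u` for which neither `u`
nor `1 - u` is a square modulo `p`: the other three terms vanish. -/
theorem IsPot.W_const {κ : Aˣ → Aˣ → I} {ε : Aˣ → I} (h : IsPot κ ε) (hκ : KapEq0 κ)
    (a s b t : Aˣ) (ha : (a : A) + s = 1) (hb : (b : A) + t = 1)
    (ha1 : ¬ IsSquare (π (a : A))) (ha2 : ¬ IsSquare (π (s : A)))
    (hb1 : ¬ IsSquare (π (b : A))) (hb2 : ¬ IsSquare (π (t : A))) :
    Wdef ε 1 a s = Wdef ε 1 b t := by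
  by_cases hab : π (a : A) = π (b : A)
  · exact (h.W_congr hκ 1 a s b t ha hb hab).symm
  · have hd : π ((a : A) - b) ≠ 0 := by rw [map_sub]; exact sub_ne_zero.mpr hab
    obtain ⟨d, hd⟩ : ∃ d : Aˣ, (d : A) = a - b := ⟨_, un_coe hd⟩
    have T3 : Wdef ε a (b * a⁻¹) (d * a⁻¹) = 0 := by
      apply h.W_zero hκ _ _ _ _ (isq_div hb1 ha1)
      rw [Units.val_mul, Units.val_mul, ← add_mul, hd, add_sub_cancel, Units.mul_inv]
    have T4 : Wdef ε (s * a⁻¹) (s * t⁻¹ * (b * a⁻¹)) (d * a⁻¹ * t⁻¹) = 0 := by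
      apply h.W_zero hκ _ _ _ _ (isq_mul (isq_div ha2 hb2) (isq_div hb1 ha1))
      apply ι_inj
      have e1 := congrArg ι ha
      have e2 := congrArg ι hb
      have e3 := congrArg ι hd
      simp only [map_mul, iota_inv, Units.val_mul, map_add, map_one, map_sub] at *
      have := iota_unit a
      have := iota_unit t
      field_simp
      linear_combination ι (b : A) * e1 + e3 - ι (a : A) * e2
    have T5 : Wdef ε s (s * t⁻¹) (d * t⁻¹) = 0 := by
      apply h.W_zero hκ _ _ _ _ (isq_div ha2 hb2)
      have : (s : A) + d = t := by linear_combination ha - hb + hd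
      rw [Units.val_mul, Units.val_mul, ← add_mul, this, Units.mul_inv]
    unfold Wdef at *
    rw [h.eq_of_sq (x := a * (b * a⁻¹) * (d * a⁻¹)) (y := a * b * d) (a⁻¹) (by
      apply uext
      simp only [map_mul, iota_inv, Units.val_mul, Units.val_pow_eq_pow_val, map_pow]
      field_simp),
     show a * (b * a⁻¹) = b by rw [mul_comm b, mul_inv_cancel_left],
     show a * (d * a⁻¹) = d by rw [mul_comm d, mul_inv_cancel_left]] at T3
    rw [h.eq_of_sq (x := s * a⁻¹ * (s * t⁻¹ * (b * a⁻¹)) * (d * a⁻¹ * t⁻¹)) (y := a * b * d)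
        (s * (a⁻¹) ^ 2 * t⁻¹) (by
      apply uext
      simp only [map_mul, iota_inv, Units.val_mul, Units.val_pow_eq_pow_val, map_pow]
      field_simp),
      h.eq_of_sq (x := s * a⁻¹ * (s * t⁻¹ * (b * a⁻¹))) (y := b * t) (s * a⁻¹ * t⁻¹) (by
      apply uext
      simp only [map_mul, iota_inv, Units.val_mul, Units.val_pow_eq_pow_val, map_pow]
      field_simp),
      h.eq_of_sq (x := s * a⁻¹ * (d * a⁻¹ * t⁻¹)) (y := s * d * t) (a⁻¹ * t⁻¹) (by
      apply uext
      simp only [map_mul, iota_inv, Units.val_mul, Units.val_pow_eq_pow_val, map_pow]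
      field_simp),
      h.eq_of_sq (x := s * a⁻¹) (y := a * s) (a⁻¹) (by
      apply uext
      simp only [map_mul, iota_inv, Units.val_mul, Units.val_pow_eq_pow_val, map_pow]
      field_simp)] at T4
    rw [h.eq_of_sq (x := s * (s * t⁻¹) * (d * t⁻¹)) (y := d) (s * t⁻¹) (by
      apply uext
      simp only [map_mul, iota_inv, Units.val_mul, Units.val_pow_eq_pow_val, map_pow]
      field_simp),
      h.eq_of_sq (x := s * (s * t⁻¹)) (y := t) (s * t⁻¹) (by
      apply uext
      simp only [map_mul, iota_inv, Units.val_mul, Units.val_pow_eq_pow_val, map_pow]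
      field_simp),
      h.eq_of_sq (x := s * (d * t⁻¹)) (y := s * d * t) (t⁻¹) (by
      apply uext
      simp only [map_mul, iota_inv, Units.val_mul, Units.val_pow_eq_pow_val, map_pow]
      field_simp)] at T5
    simp only [one_mul]
    rw [← sub_eq_zero]
    calc _ = -(ε (a * b * d) - ε b - ε d + ε a) +
          (ε (a * b * d) - ε (b * t) - ε (s * d * t) + ε (a * s)) -
          (ε d - ε t - ε (s * d * t) + ε s) := by abel
      _ = 0 := by rw [T3, T4, T5]; simp

/-- Normalization of the potential: additive along `u + t = 1`. -/
theorem KapEq0.exists_pot_add [Coef I] {κ : Aˣ → Aˣ → I} (h : KapEq0 κ) :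
    ∃ ε, IsPot κ ε ∧ ∀ α u t : Aˣ, (u : A) + t = 1 → Wdef ε α u t = 0 := by
  classical
  obtain ⟨ε, hε⟩ := h.exists_pot
  obtain ⟨w0, hw0⟩ : ∃ w0 : I, ∀ u t : Aˣ, (u : A) + t = 1 → ¬ IsSquare (π (u : A)) →
      ¬ IsSquare (π (t : A)) → Wdef ε 1 u t = w0 := by
    by_cases hex : ∃ u t : Aˣ, (u : A) + t = 1 ∧ ¬ IsSquare (π (u : A)) ∧ ¬ IsSquare (π (t : A))
    · obtain ⟨u, t, h1, h2, h3⟩ := hex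
      exact ⟨Wdef ε 1 u t, fun u' t' h1' h2' h3' =>
        hε.W_const h u' t' u t h1' h1 h2' h3' h2 h3⟩
    · push Not at hex
      exact ⟨0, fun u t h1 h2 h3 => absurd (hex u t h1 h2) h3⟩
  let c := hf w0
  let q : Aˣ → I := fun x => if IsSquare (π (x : A)) then 0 else c
  have hq : ∀ x y : Aˣ, (IsSquare (π (x : A)) ↔ IsSquare (π (y : A))) → q x = q y := by
    intro x y e; simp only [q, e]
  have hε' : IsPot κ (fun x => ε x + q x) := by
    constructor
    · intro s x
      beta_reduce
      rw [hε.sq, hq (s ^ 2 * x) x]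
      rw [Units.val_mul, map_mul, Units.val_pow_eq_pow_val, map_pow]
      constructor
      · intro hh
        by_contra hn
        exact nsq_mul (pow_ne_zero 2 (pi_unit s)) (IsSquare.sq _) hn hh
      · intro hh
        exact (IsSquare.sq _).mul hh
    · intro a v hv
      beta_reduce
      rw [hε.pot a v hv, hq (a * v) a (by rw [Units.val_mul, map_mul, hv, mul_one])]
      abel
  refine ⟨_, hε', fun α u t hu => ?_⟩
  by_cases h1 : IsSquare (π (u : A))
  · exact hε'.W_zero h α u t hu h1
  by_cases h2 : IsSquare (π (t : A))
  · exact hε'.W_zero' h α u t hu h2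
  apply hε'.W_of_one h α u t hu
  have q1 : q u = c := if_neg h1
  have q2 : q t = c := if_neg h2
  have q3 : q (u * t) = 0 := if_pos (by rw [Units.val_mul, map_mul]; exact sq_mul_of_not h1 h2)
  have q4 : q 1 = 0 := if_pos (by simp)
  have := hw0 u t hu h1 h2
  unfold Wdef at *
  simp only [one_mul] at *
  rw [q1, q2, q3, q4]
  calc _ = ε (u * t) - ε u - ε t + ε 1 - (c + c) := by abel
    _ = 0 := by rw [this, hf_add_self, sub_self]

/-- The data `ε` of a quasi-quadratic cocycle: a function on square classes, odd, and additive
along `u + t = 1`. -/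
structure IsEps (ε : Aˣ → I) : Prop where
  sq : ∀ s x, ε (s ^ 2 * x) = ε x
  odd : ∀ x, ε (-x) = -ε x
  add : ∀ α u t : Aˣ, (u : A) + t = 1 → ε (α * u * t) + ε α = ε (α * u) + ε (α * t)

theorem IsEps.eq_of_sq {ε : Aˣ → I} (h : IsEps ε) {x y : Aˣ} (s : Aˣ) (e : x = s ^ 2 * y) :
    ε x = ε y := by rw [e, h.sq]

theorem exists_odd [Coef I] (ε : Aˣ → I) (hsq : ∀ s x, ε (s ^ 2 * x) = ε x)
    (hW : ∀ α u t : Aˣ, (u : A) + t = 1 → Wdef ε α u t = 0) :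
    ∃ c, IsEps (fun x => ε x - c) := by
  have heq : ∀ {x y : Aˣ} (s : Aˣ) (_ : x = s ^ 2 * y), ε x = ε y := fun s e => by rw [e, hsq]
  have key : ∀ α a t : Aˣ, (a : A) + t = 1 → ε (α * a) + ε (-(α * a)) = ε α + ε (-α) := by
    intro α a t ha
    have h2 := hW α a⁻¹ (-(t * a⁻¹)) (by
      rw [Units.val_neg, Units.val_mul, ← sub_eq_add_neg, ← one_sub_mul]
      have : (1 - t : A) = a := by linear_combination -ha
      rw [this, Units.mul_inv])
    have h3 := hW (-α) a t ha
    unfold Wdef at h2 h3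
    rw [heq (x := α * a⁻¹ * -(t * a⁻¹)) (y := -(α * t)) (a⁻¹) (by
      apply uext
      simp only [map_mul, iota_inv, Units.val_mul, Units.val_pow_eq_pow_val, map_pow,
        Units.val_neg, map_neg]
      field_simp),
      heq (x := α * a⁻¹) (y := α * a) (a⁻¹) (by
      apply uext
      simp only [map_mul, iota_inv, Units.val_mul, Units.val_pow_eq_pow_val, map_pow]
      field_simp),
      heq (x := α * -(t * a⁻¹)) (y := -(α * a * t)) (a⁻¹) (by
      apply uext
      simp only [map_mul, iota_inv, Units.val_mul, Units.val_pow_eq_pow_val, map_pow,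
        Units.val_neg, map_neg]
      field_simp)] at h2
    simp only [neg_mul] at h3
    rw [← sub_eq_zero]
    calc _ = -((ε (-(α * t)) - ε (α * a) - ε (-(α * a * t)) + ε α) +
          (ε (-(α * a * t)) - ε (-(α * a)) - ε (-(α * t)) + ε (-α))) := by abel
      _ = 0 := by rw [h2, h3]; simp
  have hhalf : (((u2 A)⁻¹ : Aˣ) : A) + ((u2 A)⁻¹ : Aˣ) = 1 := by
    have := Units.mul_inv (u2 A)
    rw [u2_coe] at this
    linear_combination this
  have key2 : ∀ a : Aˣ, ε a + ε (-a) = ε 1 + ε (-1) := by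
    intro a
    by_cases ha : π (a : A) = 1
    · have h1 := key (u2 A * a) (u2 A)⁻¹ _ hhalf
      rw [mul_comm (u2 A), mul_inv_cancel_right] at h1
      rw [h1]
      have h2 : π (1 - ((a * u2 A : Aˣ) : A)) ≠ 0 := by
        rw [Units.val_mul, u2_coe, map_sub, map_one, map_mul, ha, map_ofNat]; norm_num
      have h3 := key 1 (a * u2 A) (un (1 - ((a * u2 A : Aˣ) : A))) (by rw [un_coe h2]; ring)
      rwa [one_mul] at h3
    · have h2 : π (1 - (a : A)) ≠ 0 := by
        rw [map_sub, map_one]; exact sub_ne_zero.mpr (Ne.symm ha)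
      have h3 := key 1 a (un (1 - (a : A))) (by rw [un_coe h2]; ring)
      rwa [one_mul] at h3
  refine ⟨hf (ε 1 + ε (-1)), ?_, ?_, ?_⟩
  · intro s x; beta_reduce; rw [hsq]
  · intro x
    beta_reduce
    have e1 := key2 x
    have e2 := hf_add_self (ε 1 + ε (-1))
    rw [← e1] at e2 ⊢
    generalize hf (ε x + ε (-x)) = c at *
    rw [← sub_eq_zero]
    calc _ = (ε x + ε (-x)) - (c + c) := by abel
      _ = 0 := by rw [e2, sub_self]
  · intro α u t hu
    beta_reduce
    have := hW α u t hu
    unfold Wdef at this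
    generalize hf (ε 1 + ε (-1)) = c
    rw [← sub_eq_zero, ← this]
    abel

/-- The solution of the functional equations of `Ψ`. -/
theorem PsiEq.solve [Coef I] {η : Aˣ → Aˣ → I} {Ψ : A → A → I} (h : PsiEq η Ψ) :
    ∃ θ ε : Aˣ → I, (∀ a b, θ (a * b) = θ a + θ b) ∧ IsEps ε ∧
      ∀ (a v : Aˣ) (b : A), π b = 0 → (v : A) = 1 + a * b →
        Ψ a b = θ v + ε a - ε (a * v) + η a v := by
  obtain ⟨θ, hθ, hκ⟩ := h.kap.exists_theta h.alt
  obtain ⟨ε, hε, hW⟩ := hκ.exists_pot_add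
  obtain ⟨c, hc⟩ := exists_odd ε hε.sq hW
  refine ⟨θ, _, hθ, hc, fun a v b hb hv => ?_⟩
  have hv1 : π (v : A) = 1 := by rw [hv]; simp [hb]
  have := hε.pot a v hv1
  have e : ((a⁻¹ : Aˣ) : A) * ((v : A) - 1) = b := by
    rw [hv, add_sub_cancel_left, Units.inv_mul_cancel_left]
  beta_reduce at this
  rw [e] at this
  have e2 : Ψ a b = (Ψ a b - η a v - θ v) + η a v + θ v := by abel
  rw [e2, this]
  abel

theorem PsiEq.eta_const [Coef I] {η : Aˣ → Aˣ → I} {Ψ : A → A → I} (h : PsiEq η Ψ)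
    (u t u₂ t₂ : Aˣ) (hu : (u : A) + t = 1) (hu₂ : (u₂ : A) + t₂ = 1)
    (hpi : π (u : A) = π (u₂ : A)) : η u₂ t₂ = η u t :=
  h.kap.eta_const h.alt u t u₂ t₂ hu hu₂ hpi

end

section
/-! ### Cocycles from configurations in general position -/

/-- A group acting on a set with a relation of general position `gp`, a base point `e`, and a
function `F` of triples that is invariant, antisymmetric in its last two arguments, and such
that the differences `F e - F (g e)` are coboundaries. -/
structure GPos (Q Ω I : Type) [Group Q] [AddCommGroup I] where
  act : Q → Ω → Ω
  act_mul : ∀ g h v, act (g * h) v = act g (act h v)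
  act_one : ∀ v, act 1 v = v
  gp : Ω → Ω → Prop
  symm : ∀ {v w}, gp v w → gp w v
  gp_act : ∀ g {v w}, gp v w → gp (act g v) (act g w)
  good : Ω → Prop
  gp_good : ∀ {v w}, gp v w → good v
  good_act : ∀ g {v}, good v → good (act g v)
  ex : ∀ l : List Ω, l.length ≤ 10 → (∀ v ∈ l, good v) → ∃ w, ∀ v ∈ l, gp w v
  e : Ω
  good_e : good e
  F : Ω → Ω → Ω → I
  F_act : ∀ g a b c, F (act g a) (act g b) (act g c) = F a b c
  F_swap : ∀ a b c, gp a b → gp b c → gp a c → F a c b = - F a b c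
  dF : ∀ g u v w, gp u e → gp v e → gp w e → gp u (act g e) → gp v (act g e) → gp w (act g e) →
    gp u v → gp v w → gp u w →
    (F e u v - F (act g e) u v) + (F e v w - F (act g e) v w) = F e u w - F (act g e) u w

/-- The properties of the functions `φ`, `f` constructed from a configuration: `f` is a
`2`-cocycle, trivialized by `φ` at each point in general position. -/
structure IsPhi {Q Ω I : Type} [Group Q] [AddCommGroup I] (act : Q → Ω → Ω)
    (gp : Ω → Ω → Prop) (e : Ω) (F : Ω → Ω → Ω → I) (φ : Q → Ω → I) (f : Q → Q → I) : Prop where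
  diff : ∀ g v v', gp v e → gp v (act g e) → gp v' e → gp v' (act g e) → gp v v' →
    φ g v - φ g v' = F e v v' - F (act g e) v v'
  val : ∀ g h v, gp v e → gp v (act g e) → gp v (act (g * h) e) →
    f g h = φ g v + φ h (act g⁻¹ v) - φ (g * h) v
  coc : ∀ g h k, f g h + f (g * h) k = f h k + f g (h * k)

namespace GPos
variable {Q Ω I : Type} [Group Q] [AddCommGroup I] (P : GPos Q Ω I)

theorem act_inv_act (g : Q) (v : Ω) : P.act g⁻¹ (P.act g v) = v := by
  rw [← P.act_mul, inv_mul_cancel, P.act_one]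

theorem act_act_inv (g : Q) (v : Ω) : P.act g (P.act g⁻¹ v) = v := by
  rw [← P.act_mul, mul_inv_cancel, P.act_one]

theorem gp_inv {g : Q} {v w : Ω} (h : P.gp v (P.act g w)) : P.gp (P.act g⁻¹ v) w := by
  have := P.gp_act g⁻¹ h
  rwa [P.act_inv_act] at this

theorem F_inv (g : Q) (a b c : Ω) : P.F a (P.act g⁻¹ b) (P.act g⁻¹ c) = P.F (P.act g a) b c := by
  rw [← P.F_act g, P.act_act_inv, P.act_act_inv]

/-- The difference `F e - F (g e)`. -/
def th (g : Q) (v w : Ω) : I := P.F P.e v w - P.F (P.act g P.e) v w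

/-- General position with respect to `e` and `g e`. -/
def ok (g : Q) (v : Ω) : Prop := P.gp v P.e ∧ P.gp v (P.act g P.e)

theorem th_add (g : Q) {u v w : Ω} (hu : P.ok g u) (hv : P.ok g v) (hw : P.ok g w)
    (h1 : P.gp u v) (h2 : P.gp v w) (h3 : P.gp u w) : P.th g u v + P.th g v w = P.th g u w :=
  P.dF g u v w hu.1 hv.1 hw.1 hu.2 hv.2 hw.2 h1 h2 h3

theorem th_swap (g : Q) {u v : Ω} (hu : P.ok g u) (hv : P.ok g v) (h : P.gp u v) :
    P.th g v u = - P.th g u v := by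
  unfold th
  rw [P.F_swap _ _ _ (P.symm hu.1) h (P.symm hv.1), P.F_swap _ _ _ (P.symm hu.2) h (P.symm hv.2)]
  abel

theorem exists_phi : ∃ φ f, IsPhi P.act P.gp P.e P.F φ f := by
  classical
  have hge : ∀ g, P.good (P.act g P.e) := fun g => P.good_act g P.good_e
  have h0 : ∀ g, ∃ v, P.ok g v := by
    intro g
    obtain ⟨w, hw⟩ := P.ex [P.e, P.act g P.e] (by simp) (by simp [P.good_e, hge])
    simp at hw
    exact ⟨w, hw⟩
  choose v0 hv0 using h0
  have h1 : ∀ g v, P.ok g v → ∃ w, P.ok g w ∧ P.gp w v ∧ P.gp w (v0 g) := by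
    intro g v hv
    obtain ⟨w, hw⟩ := P.ex [P.e, P.act g P.e, v, v0 g] (by simp)
      (by simp [P.good_e, hge, P.gp_good hv.1, P.gp_good (hv0 g).1])
    simp at hw
    exact ⟨w, ⟨hw.1, hw.2.1⟩, hw.2.2⟩
  choose! W hW1 hW2 hW3 using h1
  let φ : Q → Ω → I := fun g v => P.th g v (W g v) + P.th g (W g v) (v0 g)
  have indep : ∀ g v w, P.ok g v → P.ok g w → P.gp w v → P.gp w (v0 g) →
      φ g v = P.th g v w + P.th g w (v0 g) := by
    intro g v w hv hw hwv hw0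
    have hW1' := hW1 g v hv
    have hW2' := hW2 g v hv
    have hW3' := hW3 g v hv
    obtain ⟨x, hx⟩ := P.ex [P.e, P.act g P.e, v, v0 g, w, W g v] (by simp)
      (by simp [P.good_e, hge, P.gp_good hv.1, P.gp_good (hv0 g).1, P.gp_good hw.1,
        P.gp_good hW1'.1])
    simp at hx
    obtain ⟨hx1, hx2, hxv, hx0, hxw, hxW⟩ := hx
    have hx' : P.ok g x := ⟨hx1, hx2⟩
    have key : ∀ y, P.ok g y → P.gp y v → P.gp y (v0 g) → P.gp x y →
        P.th g v y + P.th g y (v0 g) = P.th g v x + P.th g x (v0 g) := by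
      intro y hy hyv hy0 hxy
      rw [← P.th_add g hv hx' hy (P.symm hxv) hxy (P.symm hyv),
        ← P.th_add g hy hx' (hv0 g) (P.symm hxy) hx0 hy0, P.th_swap g hx' hy hxy]
      abel
    show P.th g v (W g v) + P.th g (W g v) (v0 g) = _
    rw [key _ hW1' hW2' hW3' hxW, key _ hw hwv hw0 hxw]
  have diff : ∀ g v v', P.ok g v → P.ok g v' → P.gp v v' → φ g v - φ g v' = P.th g v v' := by
    intro g v v' hv hv' h
    obtain ⟨x, hx⟩ := P.ex [P.e, P.act g P.e, v, v', v0 g] (by simp)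
      (by simp [P.good_e, hge, P.gp_good hv.1, P.gp_good hv'.1, P.gp_good (hv0 g).1])
    simp at hx
    obtain ⟨hx1, hx2, hxv, hxv', hx0⟩ := hx
    have hx' : P.ok g x := ⟨hx1, hx2⟩
    rw [indep g v x hv hx' hxv hx0, indep g v' x hv' hx' hxv' hx0,
      ← P.th_add g hv hx' hv' (P.symm hxv) hxv' h, P.th_swap g hx' hv' hxv']
    abel
  let B : Q → Q → Ω → I := fun g h v => φ g v + φ h (P.act g⁻¹ v) - φ (g * h) v
  have hB : ∀ g h v v', P.gp v P.e → P.gp v (P.act g P.e) → P.gp v (P.act (g * h) P.e) →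
      P.gp v' P.e → P.gp v' (P.act g P.e) → P.gp v' (P.act (g * h) P.e) → P.gp v v' →
      B g h v = B g h v' := by
    intro g h v v' a1 a2 a3 b1 b2 b3 c
    have e1 := diff g v v' ⟨a1, a2⟩ ⟨b1, b2⟩ c
    have e2 := diff (g * h) v v' ⟨a1, a3⟩ ⟨b1, b3⟩ c
    rw [P.act_mul] at a3 b3
    have e3 := diff h (P.act g⁻¹ v) (P.act g⁻¹ v') ⟨P.gp_inv a2, P.gp_inv a3⟩
      ⟨P.gp_inv b2, P.gp_inv b3⟩ (P.gp_act _ c)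
    unfold th at e1 e2 e3
    rw [P.F_inv, P.F_inv, ← P.act_mul] at e3
    rw [← sub_eq_zero]
    show φ g v + φ h (P.act g⁻¹ v) - φ (g * h) v - (φ g v' + φ h (P.act g⁻¹ v') - φ (g * h) v') = 0
    have : φ g v + φ h (P.act g⁻¹ v) - φ (g * h) v - (φ g v' + φ h (P.act g⁻¹ v') - φ (g * h) v')
      = (φ g v - φ g v') + (φ h (P.act g⁻¹ v) - φ h (P.act g⁻¹ v')) - (φ (g * h) v - φ (g * h) v') := by
      abel
    rw [this, e1, e2, e3]
    abel
  have h2 : ∀ g h, ∃ v, P.gp v P.e ∧ P.gp v (P.act g P.e) ∧ P.gp v (P.act (g * h) P.e) := by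
    intro g h
    obtain ⟨w, hw⟩ := P.ex [P.e, P.act g P.e, P.act (g * h) P.e] (by simp) (by simp [P.good_e, hge])
    simp at hw
    exact ⟨w, hw⟩
  choose v1 hv1 using h2
  have val : ∀ g h v, P.gp v P.e → P.gp v (P.act g P.e) → P.gp v (P.act (g * h) P.e) →
      B g h (v1 g h) = φ g v + φ h (P.act g⁻¹ v) - φ (g * h) v := by
    intro g h v a1 a2 a3
    obtain ⟨b1, b2, b3⟩ := hv1 g h
    obtain ⟨x, hx⟩ := P.ex [P.e, P.act g P.e, P.act (g * h) P.e, v, v1 g h] (by simp)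
      (by simp [P.good_e, hge, P.gp_good a1, P.gp_good b1])
    simp at hx
    obtain ⟨x1, x2, x3, xv, xw⟩ := hx
    rw [hB g h _ x b1 b2 b3 x1 x2 x3 (P.symm xw)]
    exact hB g h x v x1 x2 x3 a1 a2 a3 xv
  refine ⟨φ, fun g h => B g h (v1 g h), fun g v v' a b c d h => diff g v v' ⟨a, b⟩ ⟨c, d⟩ h, val, ?_⟩
  intro g h k
  obtain ⟨x, hx⟩ := P.ex [P.e, P.act g P.e, P.act (g * h) P.e, P.act (g * h * k) P.e] (by simp)
      (by simp [P.good_e, hge])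
  simp at hx
  obtain ⟨x1, x2, x3, x4⟩ := hx
  show B g h (v1 g h) + B (g * h) k (v1 (g * h) k) = B h k (v1 h k) + B g (h * k) (v1 g (h * k))
  have x3' := x3
  have x4' := x4
  rw [P.act_mul] at x3'
  rw [mul_assoc, P.act_mul] at x4'
  rw [val g h x x1 x2 x3, val (g * h) k x x1 x3 x4, val g (h * k) x x1 x2 (by rwa [← mul_assoc]),
    val h k (P.act g⁻¹ x) (P.gp_inv x2) (P.gp_inv x3') (P.gp_inv x4'), mul_inv_rev, P.act_mul,
    mul_assoc]
  abel

end GPos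

end

section
open LocR

variable {I A : Type} [AddCommGroup I] [CommRing A] [LocR A]

/-! ### The invariant of a triple of vectors -/

/-- The value of the invariant of a triple of vectors in terms of the three determinants. -/
def Gc (η : Aˣ → Aˣ → I) (ε : Aˣ → I) (x y z : Aˣ) : I := η x y + η y z + η z x + ε (x * y * z)

theorem Gc_delta [Coef I] {η : Aˣ → Aˣ → I} {ε : Aˣ → I} (h : IsAlt η) (hε : IsEps ε)
    (p q r s t m X Y : Aˣ) (hX : X = p * m * (q * t)⁻¹) (hY : Y = r * s * (q * t)⁻¹)
    (e : (p : A) * m + r * s = q * t) :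
    Gc η ε p s (-q) + Gc η ε q m (-r) - Gc η ε p t (-r) = Gc η ε s m (-t) + η X Y := by
  have hXY : (X : A) + Y = 1 := by
    apply ι_inj
    have e1 := congrArg ι e
    simp only [map_mul, map_add] at e1
    rw [hX, hY]
    simp only [map_mul, map_add, iota_inv, Units.val_mul, map_one, mul_inv]
    field_simp
    exact e1
  have h1 := hε.add (p * t * r) X Y hXY
  have e1 : ε (p * t * r * X * Y) = ε (s * m * t) := by
    apply hε.eq_of_sq (p * r * q⁻¹ * t⁻¹)
    rw [hX, hY]; apply uext
    simp only [map_mul, iota_inv, Units.val_mul, Units.val_pow_eq_pow_val, map_pow, mul_inv]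
    field_simp
  have e2 : ε (p * t * r * X) = ε (q * m * r) := by
    apply hε.eq_of_sq (p * q⁻¹)
    rw [hX]; apply uext
    simp only [map_mul, iota_inv, Units.val_mul, Units.val_pow_eq_pow_val, map_pow, mul_inv]
    field_simp
  have e3 : ε (p * t * r * Y) = ε (p * s * q) := by
    apply hε.eq_of_sq (r * q⁻¹)
    rw [hY]; apply uext
    simp only [map_mul, iota_inv, Units.val_mul, Units.val_pow_eq_pow_val, map_pow, mul_inv]
    field_simp
  rw [e1, e2, e3] at h1
  have e4 : ε (s * m * t) = ε (q * m * r) + ε (p * s * q) - ε (p * t * r) := by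
    rw [← h1]; abel
  unfold Gc
  simp only [mul_neg, hε.odd, e4, h.neg_left, h.neg_right]
  rw [hX, hY]
  simp only [mul_inv, h.mul_left, h.mul_right, h.inv_left, h.inv_right, h.self]
  rw [h.skew q p, h.skew r p, h.skew r q, h.skew s q, h.skew m q, h.skew t q, h.skew m s]
  abel

/-- The determinant of two vectors. -/
def dt (v w : A × A) : A := v.1 * w.2 - v.2 * w.1

theorem dt_swap (v w : A × A) : dt w v = - dt v w := by unfold dt; ring

/-- The determinant of two vectors in general position, as a unit. -/
def du (v w : A × A) : Aˣ := un (dt v w)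

/-- General position: independence modulo the maximal ideal. -/
def gp2 (v w : A × A) : Prop := π (dt v w) ≠ 0

theorem gp2.symm {v w : A × A} (h : gp2 v w) : gp2 w v := by
  unfold gp2 at *; rw [dt_swap, map_neg]; exact neg_ne_zero.mpr h

theorem gp2.coe {v w : A × A} (h : gp2 v w) : (du v w : A) = dt v w := un_coe h

theorem gp2.du_swap {v w : A × A} (h : gp2 v w) : du w v = - du v w := by
  unfold du; rw [dt_swap, un_neg h]

/-- The standard action of `SL₂` on pairs. -/
def act2 (g : SL2 A) (v : A × A) : A × A := (g 0 0 * v.1 + g 0 1 * v.2, g 1 0 * v.1 + g 1 1 * v.2)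

theorem act2_mul (g h : SL2 A) (v : A × A) : act2 (g * h) v = act2 g (act2 h v) := by
  unfold act2
  simp only [Matrix.SpecialLinearGroup.coe_mul, Matrix.mul_apply, Fin.sum_univ_two]
  ext <;> simp <;> ring

theorem act2_one (v : A × A) : act2 1 v = v := by
  unfold act2; simp

theorem SL2_det (g : SL2 A) : g 0 0 * g 1 1 - g 0 1 * g 1 0 = 1 := by
  have := g.2; rwa [Matrix.det_fin_two] at this

theorem dt_act (g : SL2 A) (v w : A × A) : dt (act2 g v) (act2 g w) = dt v w := by
  have := SL2_det g
  unfold dt act2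
  simp only
  linear_combination (v.1 * w.2 - v.2 * w.1) * this

/-- The invariant of a triple of vectors. -/
def Fc (η : Aˣ → Aˣ → I) (ε : Aˣ → I) (a b c : A × A) : I := Gc η ε (du a b) (du b c) (du c a)

theorem Fc_swap [Coef I] {η : Aˣ → Aˣ → I} {ε : Aˣ → I} (h : IsAlt η) (hε : IsEps ε) (a b c : A × A)
    (h1 : gp2 a b) (h2 : gp2 b c) (h3 : gp2 a c) : Fc η ε a c b = - Fc η ε a b c := by
  unfold Fc Gc
  rw [h1.du_swap, h2.du_swap, h3.du_swap]
  simp only [h.neg_left, h.neg_right, mul_neg, neg_mul, hε.odd]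
  rw [h.skew (du a c) (du b c), h.skew (du b c) (du a b), h.skew (du a b) (du a c),
    mul_right_comm, mul_comm (du a c), mul_right_comm (du a b)]
  abel

theorem gp2_ex (l : List (A × A)) (hl : l.length ≤ 10) (h : ∀ v ∈ l, π v.1 ≠ 0 ∨ π v.2 ≠ 0) :
    ∃ w : A × A, ∀ v ∈ l, gp2 w v := by
  classical
  let s : Finset (k A) := (l.map fun v => π v.1 / π v.2).toFinset
  have hs : s.card < Fintype.card (k A) := by
    rw [ZMod.card]
    have := List.toFinset_card_le (l.map fun v => π v.1 / π v.2)
    rw [List.length_map] at this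
    have := p11 (A := A)
    simp only [s]
    omega
  obtain ⟨t, ht⟩ : ∃ t, t ∉ s := by
    by_contra hcon
    push Not at hcon
    rw [Finset.card_lt_iff_ne_univ] at hs
    exact hs (Finset.eq_univ_iff_forall.mpr hcon)
  obtain ⟨a, rfl⟩ := pi_surj (A := A) t
  refine ⟨(a, 1), fun v hv h0 => ?_⟩
  unfold dt at h0
  simp only [map_sub, map_mul, one_mul] at h0
  by_cases h2 : π v.2 = 0
  · rw [h2, mul_zero, zero_sub, neg_eq_zero] at h0
    exact (h v hv).elim (fun h => h h0) (fun h => h h2)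
  · apply ht
    simp only [s, List.mem_toFinset, List.mem_map]
    exact ⟨v, hv, by rw [div_eq_iff h2]; exact (sub_eq_zero.mp h0).symm⟩

/-- The configuration of pairs with the action of `SL₂` through `ρ`; the hypothesis on `η` makes
the differences of `F` coboundaries. -/
def GPos.mk2 [Coef I] {Q : Type} [Group Q] (ρ : Q →* SL2 A) {η : Aˣ → Aˣ → I} {ε : Aˣ → I}
    (h : IsAlt η) (hε : IsEps ε)
    (hc : ∀ (g : Q) (u t u₂ t₂ : Aˣ), (u : A) + t = 1 → (u₂ : A) + t₂ = 1 →
      (π (ρ g 1 0) = 0 → π (u : A) = π (u₂ : A)) → η u t = η u₂ t₂) : GPos Q (A × A) I where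
  act := fun g v => act2 (ρ g) v
  act_mul := fun g h v => by rw [map_mul, act2_mul]
  act_one := fun v => by rw [map_one, act2_one]
  gp := gp2
  symm := gp2.symm
  gp_act := fun g v w h => by unfold gp2; rwa [dt_act]
  good := fun v => π v.1 ≠ 0 ∨ π v.2 ≠ 0
  gp_good := fun {v w} h => by
    by_contra hcon
    push Not at hcon
    apply h
    unfold dt; simp [hcon.1, hcon.2]
  good_act := fun g {v} h => by
    by_contra hcon
    push Not at hcon
    unfold act2 at hcon
    simp only [map_add, map_mul] at hcon
    have hd := congrArg π (SL2_det (ρ g))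
    simp only [map_sub, map_mul, map_one] at hd
    obtain ⟨h1, h2⟩ := hcon
    have e1 : π v.1 = 0 := by linear_combination (-π v.1) * hd + (π (ρ g 1 1)) * h1 - (π (ρ g 0 1)) * h2
    have e2 : π v.2 = 0 := by linear_combination (-π v.2) * hd - (π (ρ g 1 0)) * h1 + (π (ρ g 0 0)) * h2
    exact h.elim (fun h => h e1) (fun h => h e2)
  ex := gp2_ex
  e := (1, 0)
  good_e := Or.inl (by simp)
  F := Fc η ε
  F_act := fun g a b c => by unfold Fc du; rw [dt_act, dt_act, dt_act]
  F_swap := fun a b c => Fc_swap h hε a b c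
  dF := by
    intro g u v w hu hv hw hu' hv' hw' huv hvw huw
    have key : ∀ e : A × A, gp2 u e → gp2 v e → gp2 w e →
        Fc η ε e u v + Fc η ε e v w - Fc η ε e u w = Fc η ε u v w +
          η (du e u * du v w * (du e v * du u w)⁻¹) (du e w * du u v * (du e v * du u w)⁻¹) ∧
        (((du e u * du v w * (du e v * du u w)⁻¹ : Aˣ) : A) +
          (du e w * du u v * (du e v * du u w)⁻¹ : Aˣ) = 1) := by
      intro e hu hv hw
      have hpl : (du e u : A) * du v w + du e w * du u v = du e v * du u w := by
        rw [hu.symm.coe, hvw.coe, hw.symm.coe, huv.coe, hv.symm.coe, huw.coe]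
        unfold dt; ring
      constructor
      · unfold Fc
        rw [hv.symm.du_swap, hw.symm.du_swap, huw.du_swap]
        exact Gc_delta h hε _ _ _ _ _ _ _ _ rfl rfl hpl
      · rw [Units.val_mul, Units.val_mul (du e w * du u v), ← add_mul, Units.val_mul, Units.val_mul,
          hpl, ← Units.val_mul, Units.mul_inv]
    obtain ⟨k1, l1⟩ := key (1, 0) hu hv hw
    obtain ⟨k2, l2⟩ := key (act2 (ρ g) (1, 0)) hu' hv' hw'
    have hη := hc g _ _ _ _ l1 l2 (by
      intro hg
      have hd := congrArg π (SL2_det (ρ g))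
      simp only [map_sub, map_mul, map_one, hg] at hd
      have h0 : π (ρ g 0 0) ≠ 0 := by
        intro h0; rw [h0] at hd; simp at hd
      have hdt : ∀ x : A × A, π (dt (act2 (ρ g) (1, 0)) x) = π (ρ g 0 0) * π (dt (1, 0) x) := by
        intro x; unfold dt act2; simp [hg]
      simp only [Units.val_mul, mul_inv, map_mul, pi_inv]
      rw [hu.symm.coe, hv.symm.coe, hu'.symm.coe, hv'.symm.coe, hdt, hdt]
      have := hv.symm
      unfold gp2 at this
      field_simp)
    rw [hη] at k1
    have : Fc η ε (1, 0) u v + Fc η ε (1, 0) v w - Fc η ε (1, 0) u w =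
      Fc η ε (act2 (ρ g) (1, 0)) u v + Fc η ε (act2 (ρ g) (1, 0)) v w -
        Fc η ε (act2 (ρ g) (1, 0)) u w := k1.trans k2.symm
    rw [← sub_eq_zero] at this ⊢
    rw [← this]
    abel

end

section
open LocR

variable {I A : Type} [AddCommGroup I] [CommRing A] [LocR A]

/-! ### Elementary matrices -/

theorem SLext {g h : SL2 A} (h00 : g 0 0 = h 0 0) (h01 : g 0 1 = h 0 1) (h10 : g 1 0 = h 1 0)
    (h11 : g 1 1 = h 1 1) : g = h := by
  apply Subtype.ext
  ext i j
  fin_cases i <;> fin_cases j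
  · exact h00
  · exact h01
  · exact h10
  · exact h11

/-- The upper unipotent matrix with entry `a`. -/
def xM (a : A) : SL2 A := ⟨!![1, a; 0, 1], by simp⟩
/-- The lower unipotent matrix with entry `b`. -/
def yM (b : A) : SL2 A := ⟨!![1, 0; b, 1], by simp⟩
/-- The Weyl element `(0 1; -1 0)`. -/
def wM : SL2 A := ⟨!![0, 1; -1, 0], by simp⟩

section entries
variable (a b : A) (u : Aˣ) (g h : SL2 A)
theorem mul00 : (g * h) 0 0 = g 0 0 * h 0 0 + g 0 1 * h 1 0 := by
  simp [Matrix.mul_apply, Fin.sum_univ_two]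
theorem mul01 : (g * h) 0 1 = g 0 0 * h 0 1 + g 0 1 * h 1 1 := by
  simp [Matrix.mul_apply, Fin.sum_univ_two]
theorem mul10 : (g * h) 1 0 = g 1 0 * h 0 0 + g 1 1 * h 1 0 := by
  simp [Matrix.mul_apply, Fin.sum_univ_two]
theorem mul11 : (g * h) 1 1 = g 1 0 * h 0 1 + g 1 1 * h 1 1 := by
  simp [Matrix.mul_apply, Fin.sum_univ_two]
theorem x00 : xM a 0 0 = 1 := rfl
theorem x01 : xM a 0 1 = a := rfl
theorem x10 : xM a 1 0 = 0 := rfl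
theorem x11 : xM a 1 1 = 1 := rfl
theorem y00 : yM b 0 0 = 1 := rfl
theorem y01 : yM b 0 1 = 0 := rfl
theorem y10 : yM b 1 0 = b := rfl
theorem y11 : yM b 1 1 = 1 := rfl
theorem h00 : diagSL u 0 0 = (u : A) := rfl
theorem h01 : diagSL u 0 1 = (0 : A) := rfl
theorem h10 : diagSL u 1 0 = (0 : A) := rfl
theorem h11 : diagSL u 1 1 = ((u⁻¹ : Aˣ) : A) := rfl
theorem w00 : (wM : SL2 A) 0 0 = 0 := rfl
theorem w01 : (wM : SL2 A) 0 1 = 1 := rfl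
theorem w10 : (wM : SL2 A) 1 0 = -1 := rfl
theorem w11 : (wM : SL2 A) 1 1 = 0 := rfl
end entries

theorem xM_add (a a' : A) : xM (a + a') = xM a * xM a' := by
  apply SLext <;> simp only [mul00, mul01, mul10, mul11, x00, x01, x10, x11] <;> ring

theorem yM_add (a a' : A) : yM (a + a') = yM a * yM a' := by
  apply SLext <;> simp only [mul00, mul01, mul10, mul11, y00, y01, y10, y11] <;> ring

theorem hM_mul (u v : Aˣ) : (diagSL (u * v) : SL2 A) = diagSL u * diagSL v := by
  apply SLext <;> simp only [mul00, mul01, mul10, mul11, h00, h01, h10, h11, mul_inv, Units.val_mul] <;>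
    ring

theorem hM_xM (u : Aˣ) (a : A) : diagSL u * xM a = xM ((u : A) ^ 2 * a) * diagSL u := by
  have := Units.mul_inv u
  apply SLext <;> simp only [mul00, mul01, mul10, mul11, h00, h01, h10, h11, x00, x01, x10, x11]
  · ring
  · linear_combination (-u * a : A) * this
  · ring
  · ring

theorem hM_yM (u : Aˣ) (b : A) : diagSL u * yM b = yM (((u⁻¹ : Aˣ) : A) ^ 2 * b) * diagSL u := by
  have := Units.mul_inv u
  apply SLext <;> simp only [mul00, mul01, mul10, mul11, h00, h01, h10, h11, y00, y01, y10, y11]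
  · ring
  · ring
  · linear_combination (-((u⁻¹ : Aˣ) : A) * b : A) * this
  · ring

theorem xM_yM (a b : A) (v : Aˣ) (hv : (v : A) = 1 + a * b) :
    xM a * yM b = yM (((v⁻¹ : Aˣ) : A) * b) * diagSL v * xM (((v⁻¹ : Aˣ) : A) * a) := by
  have := Units.mul_inv v
  apply SLext <;> simp only [mul00, mul01, mul10, mul11, h00, h01, h10, h11, y00, y01, y10, y11,
    x00, x01, x10, x11]
  · linear_combination -hv
  · linear_combination (-a) * this
  · linear_combination (-b) * this
  · linear_combination (-(1 + b * ((v⁻¹ : Aˣ) : A) * a)) * this + ((v⁻¹ : Aˣ) : A) * hv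

variable (A) in
/-- The subgroup `Γ₀`. -/
abbrev Gam : Subgroup (SL2 A) := Gamma0 (RingHom.ker (π : A →+* k A))

theorem mem_Gam {g : SL2 A} : g ∈ Gam A ↔ π (g 1 0) = 0 := Iff.rfl

theorem Gam_pi00 {g : SL2 A} (hg : g ∈ Gam A) : π (g 0 0) ≠ 0 := by
  intro h
  have hd := congrArg π (SL2_det g)
  rw [mem_Gam] at hg
  simp [hg, h] at hd

theorem Gam_dec {g : SL2 A} (hg : g ∈ Gam A) : ∃ (b : A) (u : Aˣ) (a : A), π b = 0 ∧
    g = yM b * diagSL u * xM a := by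
  obtain ⟨u, hu⟩ : ∃ u : Aˣ, (u : A) = g 0 0 := ⟨_, un_coe (Gam_pi00 hg)⟩
  have := Units.mul_inv u
  have hd := SL2_det g
  refine ⟨((u⁻¹ : Aˣ) : A) * g 1 0, u, ((u⁻¹ : Aˣ) : A) * g 0 1, pi_mul_zero _ (mem_Gam.mp hg), ?_⟩
  apply SLext <;> simp only [mul00, mul01, mul10, mul11, h00, h01, h10, h11, y00, y01, y10, y11,
    x00, x01, x10, x11]
  · linear_combination -hu
  · linear_combination (-g 0 1) * this
  · linear_combination (-g 1 0) * this
  · rw [← hu] at hd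
    linear_combination (-(g 1 1 : A) - g 1 0 * ((u⁻¹ : Aˣ) : A) * g 0 1) * this + ((u⁻¹ : Aˣ) : A) * hd

theorem yhx_inj (b : A) (u : Aˣ) (a b' : A) (u' : Aˣ) (a' : A)
    (h : yM b * diagSL u * xM a = yM b' * diagSL u' * xM a') : b = b' ∧ u = u' ∧ a = a' := by
  have e0 := congrArg (fun g : SL2 A => g 0 0) h
  have e1 := congrArg (fun g : SL2 A => g 1 0) h
  have e2 := congrArg (fun g : SL2 A => g 0 1) h
  simp only [mul00, mul01, mul10, mul11, h00, h01, h10, h11, y00, y01, y10, y11,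
    x00, x01, x10, x11] at e0 e1 e2
  have hu : u = u' := Units.ext (by linear_combination e0)
  subst hu
  have := Units.mul_inv u
  refine ⟨?_, rfl, ?_⟩
  · linear_combination ((u⁻¹ : Aˣ) : A) * e1 - (b - b') * this
  · linear_combination ((u⁻¹ : Aˣ) : A) * e2 - (a - a') * this

open Classical in
/-- The lower unipotent elements of `Γ₀` (junk value `1` if `b` is not in the maximal ideal). -/
def yG (b : A) : Gam A := if h : π b = 0 then ⟨yM b, h⟩ else 1

theorem yG_coe {b : A} (h : π b = 0) : (yG b : SL2 A) = yM b := by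
  unfold yG; rw [dif_pos h]

variable (A) in
/-- The presentation data of `Γ₀`. -/
def gdat : GData A (Gam A) where
  X := fun a => ⟨xM a, by rw [mem_Gam, x10, map_zero]⟩
  Y := yG
  H := fun u => ⟨diagSL u, diagSL_mem_Gamma0 _ u⟩
  X_add := fun a a' => Subtype.ext (xM_add a a')
  Y_add := fun b b' hb hb' => Subtype.ext (by
    rw [yG_coe (by rw [map_add, hb, hb', add_zero]), Subgroup.coe_mul, yG_coe hb, yG_coe hb', yM_add])
  H_mul := fun u v => Subtype.ext (hM_mul u v)
  HX := fun u a => Subtype.ext (hM_xM u a)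
  HY := fun u b hb => Subtype.ext (by
    rw [Subgroup.coe_mul, Subgroup.coe_mul, yG_coe hb, yG_coe (pi_mul_zero _ hb), hM_yM])
  XY := fun a b v hb hv => Subtype.ext (by
    rw [Subgroup.coe_mul, Subgroup.coe_mul, Subgroup.coe_mul, yG_coe hb, yG_coe (pi_mul_zero _ hb)]
    exact xM_yM a b v hv)
  dec := fun g => by
    obtain ⟨b, u, a, hb, h⟩ := Gam_dec g.2
    exact ⟨b, u, a, hb, Subtype.ext (by rw [Subgroup.coe_mul, Subgroup.coe_mul, yG_coe hb]; exact h)⟩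
  dec_inj := fun b u a b' u' a' hb hb' h => by
    have := congrArg Subtype.val h
    rw [Subgroup.coe_mul, Subgroup.coe_mul, yG_coe hb, Subgroup.coe_mul, Subgroup.coe_mul, yG_coe hb'] at this
    exact yhx_inj b u a b' u' a' this

/-! ### The extension attached to a cocycle -/

/-- The cocycle identity. -/
def IsCoc {Q : Type} [Group Q] (f : Q → Q → I) : Prop :=
  ∀ g h k, f g h + f (g * h) k = f h k + f g (h * k)

/-- The underlying set of the central extension attached to a cocycle `f`. -/
structure TwExt {Q : Type} [Group Q] (f : Q → Q → I) where
  fst : I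
  snd : Q

namespace IsCoc
variable {Q : Type} [Group Q] {f : Q → Q → I} (hf : IsCoc f)
include hf

theorem one_left (g : Q) : f 1 g = f 1 1 := by
  have := hf 1 1 g
  simp only [one_mul] at this
  exact (add_right_cancel (b := f 1 g) (by rw [this])).symm

theorem one_right (g : Q) : f g 1 = f 1 1 := by
  have := hf g 1 1
  simp only [mul_one] at this
  exact add_right_cancel (b := f g 1) (by rw [this])

/-- The group structure on pairs twisted by `f`. -/
@[reducible] def group : Group (TwExt f) where
  mul a b := ⟨a.1 + b.1 + f a.2 b.2, a.2 * b.2⟩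
  one := ⟨-f 1 1, 1⟩
  inv a := ⟨-a.1 - f a.2⁻¹ a.2 - f 1 1, a.2⁻¹⟩
  mul_assoc a b c := by
    show TwExt.mk _ _ = TwExt.mk _ _
    congr 1
    · show a.1 + b.1 + f a.2 b.2 + c.1 + f (a.2 * b.2) c.2 = a.1 + (b.1 + c.1 + f b.2 c.2) + f a.2 (b.2 * c.2)
      have := hf a.2 b.2 c.2
      have e : a.1 + b.1 + f a.2 b.2 + c.1 + f (a.2 * b.2) c.2 =
        a.1 + b.1 + c.1 + (f a.2 b.2 + f (a.2 * b.2) c.2) := by abel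
      rw [e, this]; abel
    · exact mul_assoc _ _ _
  one_mul a := by
    obtain ⟨i, g⟩ := a
    show TwExt.mk _ _ = TwExt.mk _ _
    congr 1
    · show -f 1 1 + i + f 1 g = i
      rw [hf.one_left g]; abel
    · exact one_mul _
  mul_one a := by
    obtain ⟨i, g⟩ := a
    show TwExt.mk _ _ = TwExt.mk _ _
    congr 1
    · show i + -f 1 1 + f g 1 = i
      rw [hf.one_right g]; abel
    · exact mul_one _
  inv_mul_cancel a := by
    obtain ⟨i, g⟩ := a
    show TwExt.mk _ _ = TwExt.mk _ _
    congr 1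
    · show -i - f g⁻¹ g - f 1 1 + i + f g⁻¹ g = - f 1 1
      abel
    · exact inv_mul_cancel _

/-- The central extension attached to a cocycle. -/
def cext : @CExt I (TwExt f) Q _ hf.group _ :=
  letI := hf.group
  { q := { toFun := TwExt.snd, map_one' := rfl, map_mul' := fun _ _ => rfl }
    z := fun i => ⟨i - f 1 1, 1⟩
    z_add := fun i j => by
      show TwExt.mk _ _ = TwExt.mk _ _
      congr 1
      · show i + j - f 1 1 = i - f 1 1 + (j - f 1 1) + f 1 1
        abel
      · exact (one_mul _).symm
    z_comm := fun i e => by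
      show TwExt.mk _ _ = TwExt.mk _ _
      congr 1
      · show e.1 + (i - f 1 1) + f e.2 1 = i - f 1 1 + e.1 + f 1 e.2
        rw [hf.one_left e.2, hf.one_right e.2]; abel
      · show e.2 * 1 = 1 * e.2
        rw [one_mul, mul_one]
    z_inj := fun i j h => by
      have := congrArg TwExt.fst h
      exact sub_left_injective this
    q_z := fun _ => rfl
    ker := fun e he => ⟨e.1 + f 1 1, by
      obtain ⟨i, g⟩ := e
      have : g = 1 := he
      subst this
      simp⟩
    surj := fun g => ⟨⟨0, g⟩, rfl⟩ }

end IsCoc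

end

section
open LocR

variable {I A : Type} [AddCommGroup I] [CommRing A] [LocR A]

theorem Fc_cyc [Coef I] (η : Aˣ → Aˣ → I) (ε : Aˣ → I) (a b c : A × A) :
    Fc η ε a b c = Fc η ε b c a := by
  unfold Fc Gc
  rw [mul_comm (du a b * du b c), ← mul_assoc, mul_right_comm, mul_comm (du c a), mul_right_comm,
    mul_right_comm (du b c)]
  abel

theorem Fc_scale [Coef I] {η : Aˣ → Aˣ → I} {ε : Aˣ → I} (h : IsAlt η) (hε : IsEps ε) (u : Aˣ)
    (a b c : A × A) (hab : gp2 a b) (hca : gp2 c a) :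
    Fc η ε ((u : A) * a.1, (u : A) * a.2) b c = Fc η ε a b c + η u (du a b) - η u (du c a) := by
  have e1 : du ((u : A) * a.1, (u : A) * a.2) b = u * du a b := by
    have : dt ((u : A) * a.1, (u : A) * a.2) b = u * dt a b := by unfold dt; ring
    unfold du; rw [this, un_mul (pi_unit u) hab, un_unit]
  have e2 : du c ((u : A) * a.1, (u : A) * a.2) = u * du c a := by
    have : dt c ((u : A) * a.1, (u : A) * a.2) = u * dt c a := by unfold dt; ring
    unfold du; rw [this, un_mul (pi_unit u) hca, un_unit]
  unfold Fc Gc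
  rw [e1, e2]
  have e3 : ε (u * du a b * du b c * (u * du c a)) = ε (du a b * du b c * du c a) := by
    apply hε.eq_of_sq u
    rw [pow_two]
    simp only [mul_assoc, mul_left_comm]
  rw [e3]
  simp only [h.mul_left, h.mul_right, h.self]
  rw [h.skew (du b c) u, h.skew (du c a) u]
  have : η u (du c a) = -η (du c a) u := h.skew _ _
  abel

theorem act2_inv {g : SL2 A} {v w : A × A} (h : act2 g w = v) : act2 g⁻¹ v = w := by
  rw [← h, ← act2_mul, inv_mul_cancel, act2_one]

theorem gp2_ex3 (a b c d : A × A) {a' b' c' d' : A × A} (ha : gp2 a a') (hb : gp2 b b')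
    (hc : gp2 c c') (hd : gp2 d d') : ∃ w, gp2 w a ∧ gp2 w b ∧ gp2 w c ∧ gp2 w d := by
  have good : ∀ {v w : A × A}, gp2 v w → π v.1 ≠ 0 ∨ π v.2 ≠ 0 := by
    intro v w h
    by_contra hcon
    push Not at hcon
    apply h
    unfold dt; simp [hcon.1, hcon.2]
  obtain ⟨w, hw⟩ := gp2_ex [a, b, c, d] (by simp) (by simp [good ha, good hb, good hc, good hd])
  simp at hw
  exact ⟨w, hw⟩

section
variable {η : Aˣ → Aˣ → I} {ε : Aˣ → I} {φ : Gam A → A × A → I} {f : Gam A → Gam A → I}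

/-- Evaluation of an element of the extension at a vector. -/
def ev (φ : Gam A → A × A → I) (v : A × A) (z : TwExt f) : I := φ z.2 v + z.1

theorem ev_ext (v : A × A) {z z' : TwExt f} (h : z.2 = z'.2) (hv : ev φ v z = ev φ v z') : z = z' := by
  obtain ⟨i, g⟩ := z
  obtain ⟨j, g'⟩ := z'
  simp only at h
  subst h
  unfold ev at hv
  simp only at hv
  rw [add_left_cancel hv]

/-- The lift of `g` with prescribed value at `v`. -/
def lf (f : Gam A → Gam A → I) (φ : Gam A → A × A → I) (g : Gam A) (v : A × A) : TwExt f := ⟨-φ g v, g⟩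

theorem ev_lf (g : Gam A) (v w : A × A) : ev φ w (lf f φ g v) = φ g w - φ g v := by
  unfold ev lf; simp only; abel

theorem IsPhi.glift [Coef I] (h : IsAlt η) (hε : IsEps ε)
    (P : IsPhi (fun (g : Gam A) v => act2 (g : SL2 A) v) gp2 (1, 0) (Fc η ε) φ f) :
    ∃ Ψ : A → A → I, Nonempty (@GLift I (TwExt f) (Gam A) A _ (IsCoc.group P.coc) _ _ _
        (IsCoc.cext P.coc) (gdat A) η Ψ) ∧
      ∀ (a v : Aˣ) (b : A), π b = 0 → (v : A) = 1 + a * b →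
        Ψ a b = ε a - ε (a * v) + η a v := by
  have hf : IsCoc f := P.coc
  let _ := hf.group
  have z_ev : ∀ v i (z : TwExt f), ev φ v (hf.cext.z i * z) = i + ev φ v z := by
    intro v i z
    show φ (1 * z.2) v + (i - f 1 1 + z.1 + f 1 z.2) = i + (φ z.2 v + z.1)
    rw [one_mul, hf.one_left z.2]; abel
  have ev_mul : ∀ v (z z' : TwExt f), gp2 v (1, 0) → gp2 v (act2 z.2 (1, 0)) →
      gp2 v (act2 (z.2 * z'.2 : Gam A) (1, 0)) →
      ev φ v (z * z') = ev φ v z + ev φ (act2 (z.2 : SL2 A)⁻¹ v) z' := by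
    intro v z z' h1 h2 h3
    show φ (z.2 * z'.2) v + (z.1 + z'.1 + f z.2 z'.2) = _
    rw [P.val _ _ v h1 h2 h3]
    unfold ev
    simp only [Subgroup.coe_inv]
    abel
  -- the action of the generators
  have aX : ∀ a (v : A × A), act2 ((gdat A).X a : SL2 A) v = (v.1 + a * v.2, v.2) := by
    intro a v; show act2 (xM a) v = _
    unfold act2; rw [x00, x01, x10, x11]; simp
  have aH : ∀ u (v : A × A), act2 ((gdat A).H u : SL2 A) v = ((u : A) * v.1, ((u⁻¹ : Aˣ) : A) * v.2) := by
    intro a v; show act2 (diagSL a) v = _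
    unfold act2; rw [h00, h01, h10, h11]; simp
  have aY : ∀ b (v : A × A), π b = 0 → act2 ((gdat A).Y b : SL2 A) v = (v.1, b * v.1 + v.2) := by
    intro b v hb; show act2 (yG b : SL2 A) v = _
    rw [yG_coe hb]
    unfold act2; rw [y00, y01, y10, y11]; simp
  have iX : ∀ a (v : A × A), act2 ((gdat A).X a : SL2 A)⁻¹ v = (v.1 - a * v.2, v.2) := by
    intro a v; apply act2_inv; rw [aX]; ext <;> simp
  have iH : ∀ u (v : A × A), act2 ((gdat A).H u : SL2 A)⁻¹ v = (((u⁻¹ : Aˣ) : A) * v.1, (u : A) * v.2) := by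
    intro a v; apply act2_inv; rw [aH]; ext <;> simp
  have iY : ∀ b, π b = 0 → act2 ((gdat A).Y b : SL2 A)⁻¹ (0, 1) = ((0 : A), (1 : A)) := by
    intro b hb; apply act2_inv; rw [aY _ _ hb]; ext <;> simp
  have d1 : ∀ v : A × A, dt v (1, 0) = - v.2 := by intro v; unfold dt; simp
  have d2 : ∀ v : A × A, dt (1, 0) v = v.2 := by intro v; unfold dt; simp
  have g1 : ∀ v : A × A, gp2 v (1, 0) ↔ π v.2 ≠ 0 := by
    intro v; unfold gp2; rw [d1, map_neg, neg_ne_zero]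
  have ge2 : ∀ b : A, gp2 ((0 : A), (1 : A)) (1, b) := by intro b; unfold gp2 dt; simp
  -- values of the three families
  let xt : A → TwExt f := fun a => lf f φ ((gdat A).X a) (0, 1)
  let ht : Aˣ → TwExt f := fun u => lf f φ ((gdat A).H u) (0, 1)
  let yt : A → TwExt f := fun b => lf f φ ((gdat A).Y b) (0, 1)
  have e01 : gp2 ((0 : A), (1 : A)) (1, 0) := ge2 0
  have evx : ∀ a v, gp2 v (1, 0) → ev φ v (xt a) = 0 := by
    intro a v hv
    have he : act2 ((gdat A).X a : SL2 A) (1, 0) = (1, 0) := by rw [aX]; simp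
    obtain ⟨w, hw1, hw2, hw3, -⟩ := gp2_ex3 v (0, 1) (1, 0) (1, 0) hv e01 e01.symm e01.symm
    have e1 := P.diff ((gdat A).X a) w v hw3 (by rwa [he]) hv (by rwa [he]) hw1
    have e2 := P.diff ((gdat A).X a) w (0, 1) hw3 (by rwa [he]) e01 (by rwa [he]) hw2
    rw [he, sub_self, sub_eq_zero] at e1 e2
    simp only [xt]
    rw [ev_lf, ← e1, ← e2, sub_self]
  have evh : ∀ u v, gp2 v (1, 0) → ev φ v (ht u) = - η u (du (1, 0) v) := by
    intro u v hv
    have he : act2 ((gdat A).H u : SL2 A) (1, 0) = ((u : A) * 1, (u : A) * 0) := by rw [aH]; simp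
    have hg : ∀ x : A × A, gp2 x (1, 0) → gp2 x ((u : A) * 1, (u : A) * 0) := by
      intro x hx
      rw [g1] at hx
      unfold gp2 dt; simpa using hx
    obtain ⟨w, hw1, hw2, hw3, -⟩ := gp2_ex3 v (0, 1) (1, 0) (1, 0) hv e01 e01.symm e01.symm
    have key : ∀ x, gp2 x (1, 0) → gp2 w x → φ ((gdat A).H u) w - φ ((gdat A).H u) x =
        η u (du (1, 0) x) - η u (du (1, 0) w) := by
      intro x hx hwx
      have e1 := P.diff ((gdat A).H u) w x hw3 (by rw [he]; exact hg _ hw3) hx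
        (by rw [he]; exact hg _ hx) hwx
      rw [e1]
      show Fc η ε (1, 0) w x - Fc η ε (act2 ((gdat A).H u : SL2 A) (1, 0)) w x = _
      rw [he, Fc_scale h hε u (1, 0) w x hw3.symm hx, hx.symm.du_swap, h.neg_right]
      abel
    simp only [ht]
    rw [ev_lf]
    have e1 := key v hv hw1
    have e2 := key (0, 1) e01 hw2
    have e3 : du ((1 : A), (0 : A)) (0, 1) = 1 := by
      unfold du; rw [d2]; exact un_unit 1
    rw [e3, h.one_right] at e2
    have : φ ((gdat A).H u) v - φ ((gdat A).H u) (0, 1) =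
      (φ ((gdat A).H u) w - φ ((gdat A).H u) (0, 1)) - (φ ((gdat A).H u) w - φ ((gdat A).H u) v) := by abel
    rw [this, e1, e2]; abel
  have evh0 : ∀ u, ev φ (0, 1) (ht u) = 0 := by intro u; simp only [ht]; rw [ev_lf, sub_self]
  have evy0 : ∀ b, ev φ (0, 1) (yt b) = 0 := by intro u; simp only [yt]; rw [ev_lf, sub_self]
  have evyu : ∀ b (u : Aˣ), π b = 0 → ev φ (0, (u : A)) (yt b) = 0 := by
    intro b u hb
    have he : act2 ((gdat A).Y b : SL2 A) (1, 0) = (1, b) := by rw [aY _ _ hb]; simp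
    have hu0 : ∀ c : A, gp2 ((0 : A), (u : A)) (1, c) := by intro c; unfold gp2 dt; simp
    obtain ⟨w, hw1, hw2, hw3, hw4⟩ := gp2_ex3 (0, (u : A)) (0, 1) (1, 0) (1, b) (hu0 0) (ge2 0)
      (ge2 0).symm (ge2 b).symm
    have e1 := P.diff ((gdat A).Y b) (0, (u : A)) w (hu0 0) (by rw [he]; exact hu0 b) hw3
      (by rwa [he]) hw1.symm
    have e2 := P.diff ((gdat A).Y b) (0, 1) w (ge2 0) (by rw [he]; exact ge2 b) hw3
      (by rwa [he]) hw2.symm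
    have hs : ∀ c : A, gp2 w (1, c) → Fc η ε (1, c) (0, (u : A)) w = Fc η ε (1, c) (0, 1) w +
        η u (du (0, 1) w) := by
      intro c hc
      rw [Fc_cyc, Fc_cyc η ε (1, c)]
      have e3 := Fc_scale h hε u (0, 1) w (1, c) hw2.symm (ge2 c).symm
      simp only [mul_zero, mul_one] at e3
      have e4 : du ((1 : A), c) (0, 1) = 1 := by
        unfold du dt; simp only [mul_one, mul_zero, sub_zero]; exact un_unit 1
      rw [e3, e4, h.one_right, sub_zero]
    have e1' : φ ((gdat A).Y b) (0, (u : A)) - φ ((gdat A).Y b) w =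
      Fc η ε (1, 0) (0, (u : A)) w - Fc η ε (1, b) (0, (u : A)) w := by rw [e1, ← he]
    have e2' : φ ((gdat A).Y b) (0, 1) - φ ((gdat A).Y b) w =
      Fc η ε (1, 0) (0, 1) w - Fc η ε (1, b) (0, 1) w := by rw [e2, ← he]
    rw [hs 0 hw3, hs b hw4, add_sub_add_right_eq_sub, ← e2'] at e1'
    simp only [yt]
    rw [ev_lf, sub_left_injective e1', sub_self]
  have sX : ∀ a, (xt a).2 = (gdat A).X a := fun _ => rfl
  have sH : ∀ a, (ht a).2 = (gdat A).H a := fun _ => rfl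
  have sY : ∀ a, (yt a).2 = (gdat A).Y a := fun _ => rfl
  have sm : ∀ z z' : TwExt f, (z * z').2 = z.2 * z'.2 := fun _ _ => rfl
  have sz : ∀ i (z : TwExt f), (hf.cext.z i * z).2 = z.2 := fun _ _ => one_mul _
  refine ⟨fun a b => ev φ (-a, 1) (yt b), ⟨?_⟩, ?_⟩
  · refine ⟨xt, yt, ht, fun _ => rfl, fun _ _ => rfl, fun _ => rfl, ?_, ?_, ?_, ?_, ?_, ?_⟩
    · intro a a'
      apply ev_ext (φ := φ) (0, 1) (by rw [sm]; exact (gdat A).X_add a a')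
      rw [ev_mul _ _ _ e01 (by rw [sX, aX]; simpa using e01)
        (by rw [sX, sX, Subgroup.coe_mul, act2_mul, aX, aX]; simpa using e01), evx _ _ e01, evx _ _ e01,
        evx _ _ (by rw [sX, iX, g1]; simp), add_zero]
    · intro b b' hb hb'
      apply ev_ext (φ := φ) (0, 1) (by rw [sm]; exact (gdat A).Y_add b b' hb hb')
      rw [ev_mul _ _ _ e01 (by rw [sY, aY _ _ hb]; simpa using ge2 b)
        (by rw [sY, sY, Subgroup.coe_mul, act2_mul, aY _ _ hb', aY _ _ hb]; simpa using ge2 _), evy0,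
        evy0, sY, iY _ hb, evy0, add_zero]
    · intro u v
      apply ev_ext (φ := φ) (0, 1) (by rw [sm, sz]; exact ((gdat A).H_mul u v).symm)
      have hg : ∀ c : A, π c ≠ 0 → gp2 ((0 : A), (1 : A)) (c, 0) := by
        intro c hc; unfold gp2 dt; simpa using hc
      rw [z_ev, ev_mul _ _ _ e01 (by rw [sH, aH]; simpa using hg _ (by simp))
        (by rw [sH, sH, Subgroup.coe_mul, act2_mul, aH, aH]; simpa using hg _ (by simp)), evh0,
        evh0, sH, iH, evh _ _ (by rw [g1]; simp)]
      unfold du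
      rw [d2]
      simp only [mul_one, un_unit]
      rw [h.skew u v, zero_add, add_zero]
    · intro u a
      have hg : ∀ c : A, π c ≠ 0 → gp2 ((0 : A), (1 : A)) (c, 0) := by
        intro c hc; unfold gp2 dt; simpa using hc
      apply ev_ext (φ := φ) (0, 1) (by rw [sm]; exact (gdat A).HX u a)
      rw [ev_mul _ _ _ e01 (by rw [sH, aH]; simpa using hg _ (by simp))
        (by rw [sH, sX, Subgroup.coe_mul, act2_mul, aX, aH]; simpa using hg _ (by simp)),
        ev_mul _ _ _ e01 (by rw [sX, aX]; simpa using e01)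
        (by rw [sH, sX, Subgroup.coe_mul, act2_mul, aH, aX]; simpa using hg _ (by simp)), evh0,
        evx _ _ e01, sH, iH, evx _ _ (by rw [g1]; simp), sX, iX, evh _ _ (by rw [g1]; simp)]
      unfold du
      rw [d2]
      rw [show un (1 : A) = 1 from un_unit 1, h.one_right, neg_zero]
    · intro u b hb
      have hb' : π (((u⁻¹ : Aˣ) : A) ^ 2 * b) = 0 := pi_mul_zero _ hb
      have hg : ∀ c d : A, π c ≠ 0 → gp2 ((0 : A), (1 : A)) (c, d) := by
        intro c d hc; unfold gp2 dt; simpa using hc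
      apply ev_ext (φ := φ) (0, 1) (by rw [sm]; exact (gdat A).HY u b hb)
      rw [ev_mul _ _ _ e01 (by rw [sH, aH]; exact hg _ _ (by simp))
        (by rw [sH, sY, Subgroup.coe_mul, act2_mul, aY _ _ hb, aH]; exact hg _ _ (by simp)),
        ev_mul _ _ _ e01 (by rw [sY, aY _ _ hb']; exact hg _ _ (by simp))
        (by rw [sH, sY, Subgroup.coe_mul, act2_mul, aH, aY _ _ hb']; exact hg _ _ (by simp)), evh0,
        evy0, sH, sY, iH, iY _ hb', evh0]
      simp only [mul_zero, mul_one]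
      rw [evyu _ _ hb]
    · intro a b v hb hv
      have hb' : π (((v⁻¹ : Aˣ) : A) * b) = 0 := pi_mul_zero _ hb
      have hv1 : π (1 + a * b) ≠ 0 := by simp [hb]
      have hg : ∀ c d : A, π c ≠ 0 → gp2 ((0 : A), (1 : A)) (c, d) := by
        intro c d hc; unfold gp2 dt; simpa using hc
      apply ev_ext (φ := φ) (0, 1) (by rw [sm, sz]; exact (gdat A).XY a b v hb hv)
      rw [z_ev, ev_mul _ _ _ e01 (by rw [sX, aX]; exact hg _ _ (by simp))
        (by rw [sX, sY, Subgroup.coe_mul, act2_mul, aY _ _ hb, aX]; exact hg _ _ (by simpa using hv1)),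
        ev_mul _ (yt _ * ht _) _ e01
          (by rw [sm, sY, sH, Subgroup.coe_mul, act2_mul, aH, aY _ _ hb']; exact hg _ _ (by simp))
          (by rw [sm, sX, sY, sH, Subgroup.coe_mul, Subgroup.coe_mul, act2_mul, act2_mul, aX, aH,
                aY _ _ hb']; exact hg _ _ (by simp)),
        ev_mul _ (yt _) _ e01 (by rw [sY, aY _ _ hb']; exact hg _ _ (by simp))
          (by rw [sH, sY, Subgroup.coe_mul, act2_mul, aH, aY _ _ hb']; exact hg _ _ (by simp)),
        evx _ _ e01, evy0, sX, iX, sY, iY _ hb', evh0]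
      rw [sm, sY, sH, Subgroup.coe_mul, mul_inv_rev, act2_mul, iY _ hb', iH, evx _ _ (by rw [g1]; simp)]
      simp
  · intro a v b hb hv
    have he : act2 ((gdat A).Y b : SL2 A) (1, 0) = (1, b) := by rw [aY _ _ hb]; simp
    have p1 : gp2 (-(a : A), (1 : A)) (1, 0) := by rw [g1]; simp
    have p2 : gp2 (-(a : A), (1 : A)) (1, b) := by
      unfold gp2 dt; simp [hb]
    have p3 : gp2 (-(a : A), (1 : A)) (0, 1) := by unfold gp2 dt; simp
    have e1 := P.diff ((gdat A).Y b) (-(a : A), 1) (0, 1) p1 (by rwa [he]) e01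
      (by rw [he]; exact ge2 b) p3
    simp only [yt]
    rw [ev_lf, e1]
    show Fc η ε (1, 0) (-(a : A), 1) (0, 1) - Fc η ε (act2 ((gdat A).Y b : SL2 A) (1, 0)) (-(a : A), 1) (0, 1) = _
    rw [he]
    have q1 : du (-(a : A), (1 : A)) (0, 1) = -a := Units.ext (by rw [p3.coe]; unfold dt; simp)
    have q2 : ∀ c : A, du ((0 : A), (1 : A)) (1, c) = -1 := fun c =>
      Units.ext (by rw [(ge2 c).coe]; unfold dt; simp)
    have q3 : du ((1 : A), (0 : A)) (-(a : A), 1) = 1 := Units.ext (by rw [p1.symm.coe]; unfold dt; simp)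
    have q4 : du ((1 : A), b) (-(a : A), 1) = v :=
      Units.ext (by rw [p2.symm.coe]; unfold dt; simp only; rw [hv]; ring)
    unfold Fc Gc
    rw [q1, q2, q2, q3, q4]
    simp only [h.neg_left, h.neg_right, h.one_left, h.one_right, one_mul, mul_neg, mul_one, neg_neg]
    rw [h.skew a v, mul_comm v a]
    abel
end

end

section
open LocR

variable {I A : Type} [AddCommGroup I] [CommRing A] [LocR A]

/-! ### Cocycles on `Γ₀` -/

/-- Coboundaries. -/
def IsCob {Q : Type} [Group Q] (f : Q → Q → I) : Prop :=
  ∃ θ : Q → I, ∀ g h, f g h = θ g + θ h - θ (g * h)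

theorem PsiEq.agree {η : Aˣ → Aˣ → I} {Ψ Ψ' : A → A → I} (h : PsiEq η Ψ) (h' : PsiEq η Ψ')
    (hu : ∀ (a : Aˣ) b, π b = 0 → Ψ' a b = Ψ a b) (a b : A) (hb : π b = 0) : Ψ' a b = Ψ a b := by
  by_cases ha : π a = 0
  · have h1 : π (a - 1) ≠ 0 := by rw [map_sub, ha]; simp
    obtain ⟨a', ha'⟩ : ∃ a' : Aˣ, (a' : A) = a - 1 := ⟨_, un_coe h1⟩
    obtain ⟨v, hv, -⟩ := one_add_unit 1 hb
    have hb2 : π (((v⁻¹ : Aˣ) : A) * b) = 0 := pi_mul_zero _ hb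
    obtain ⟨v', hv', -⟩ := one_add_unit (a' : A) hb2
    have e : a = a' + 1 := by rw [ha']; ring
    rw [e, h.P3 _ _ _ v v' hb hv hv', h'.P3 _ _ _ v v' hb hv hv', hu _ _ hb2]
    have := hu 1 b hb
    rw [Units.val_one] at this
    rw [this]
  · have := hu (un a) b hb
    rwa [un_coe ha] at this

/-- Two cocycles on `Γ₀` whose extensions have the same invariants are cohomologous. -/
theorem cob_of_glift {f f' : Gam A → Gam A → I} (hf : IsCoc f) (hf' : IsCoc f')
    {η : Aˣ → Aˣ → I} (hη : IsAlt η) {Ψ Ψ' : A → A → I}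
    (L : @GLift I (TwExt f) (Gam A) A _ hf.group _ _ _ hf.cext (gdat A) η Ψ)
    (L' : @GLift I (TwExt f') (Gam A) A _ hf'.group _ _ _ hf'.cext (gdat A) η Ψ')
    (hu : ∀ (a : Aˣ) b, π b = 0 → Ψ' a b = Ψ a b) : IsCob (fun g h => f g h - f' g h) := by
  have hagree := PsiEq.agree (@GLift.psiEq _ _ _ _ _ _ _ hf.group _ _ _ _ _ L hη)
    (@GLift.psiEq _ _ _ _ _ _ _ hf'.group _ _ _ _ _ L' hη) hu
  obtain ⟨c, hc⟩ := GLift.exists_factor (gdat A) η Ψ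
  obtain ⟨s, hs, hs2⟩ := hc (TwExt f) hf.group hf.cext Ψ (fun _ _ _ => rfl) L
  obtain ⟨s', hs', hs2'⟩ := hc (TwExt f') hf'.group hf'.cext Ψ' hagree L'
  have key : ∀ {f : Gam A → Gam A → I} (hf : IsCoc f) (s : Gam A → TwExt f)
      (_ : ∀ g, (s g).2 = g) (_ : ∀ g g', letI := hf.group
        s g * s g' = hf.cext.z (c g g') * s (g * g')), ∀ g g',
      f g g' = c g g' + (s (g * g')).1 - (s g).1 - (s g').1 := by
    intro f hf s h1 h2 g g'
    have e : (s g).1 + (s g').1 + f (s g).2 (s g').2 =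
        (c g g' - f 1 1) + (s (g * g')).1 + f 1 (s (g * g')).2 := congrArg TwExt.fst (h2 g g')
    rw [h1, h1, h1, hf.one_left (g * g')] at e
    have : f g g' = ((s g).1 + (s g').1 + f g g') - (s g).1 - (s g').1 := by abel
    rw [this, e]; abel
  refine ⟨fun g => (s' g).1 - (s g).1, fun g h => ?_⟩
  simp only
  rw [key hf s hs hs2, key hf' s' hs' hs2']
  abel

/-- The commutator form of a cocycle on the torus. -/
def om (f : Gam A → Gam A → I) (u v : Aˣ) : I :=
  f ((gdat A).H u) ((gdat A).H v) - f ((gdat A).H v) ((gdat A).H u)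

theorem om_glift {f : Gam A → Gam A → I} (hf : IsCoc f)
    {η : Aˣ → Aˣ → I} (hη : IsAlt η) {Ψ : A → A → I}
    (L : @GLift I (TwExt f) (Gam A) A _ hf.group _ _ _ hf.cext (gdat A) η Ψ) (u v : Aˣ) :
    om f u v = η u v + η u v := by
  let _ := hf.group
  have h1 : (L.h u).2 = (gdat A).H u := L.qh u
  have h2 : (L.h v).2 = (gdat A).H v := L.qh v
  have e : (L.h u).1 + (L.h v).1 + f (L.h u).2 (L.h v).2 =
      (η u v + η u v - f 1 1) + ((L.h v).1 + (L.h u).1 + f (L.h v).2 (L.h u).2) +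
        f 1 ((L.h v).2 * (L.h u).2) := congrArg TwExt.fst (L.h_comm hη u v)
  rw [h1, h2, hf.one_left ((gdat A).H v * (gdat A).H u)] at e
  unfold om
  have : f ((gdat A).H u) ((gdat A).H v) =
    ((L.h u).1 + (L.h v).1 + f ((gdat A).H u) ((gdat A).H v)) - (L.h u).1 - (L.h v).1 := by abel
  rw [this, e]; abel

variable [Coef I]

/-- The commutator form of a cocycle on `Γ₀` is alternating, and its value at `(u, 1 - u)`
depends only on the residue of `u`. -/
theorem om_props {f : Gam A → Gam A → I} (hf : IsCoc f) : IsAlt (om f) ∧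
    ∀ u t u₂ t₂ : Aˣ, (u : A) + t = 1 → (u₂ : A) + t₂ = 1 → π (u : A) = π (u₂ : A) →
      om f u₂ t₂ = om f u t := by
  let _ := hf.group
  obtain ⟨η, Ψ, hη, ⟨L⟩⟩ := exists_GLift hf.cext (gdat A)
  have h := om_glift hf hη L
  refine ⟨⟨fun u u' v => ?_, fun u v => ?_⟩, fun u t u₂ t₂ hu hu₂ hpi => ?_⟩
  · rw [h, h, h, hη.mul_left]; abel
  · rw [h, h, hη.skew]; abel
  · rw [h, h, (L.psiEq hη).eta_const u t u₂ t₂ hu hu₂ hpi]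

/-- Every alternating form with the symbol property modulo `p` is a commutator form. -/
theorem exists_coc_of_alt {η : Aˣ → Aˣ → I} (hη : IsAlt η)
    (hc : ∀ u t u₂ t₂ : Aˣ, (u : A) + t = 1 → (u₂ : A) + t₂ = 1 → π (u : A) = π (u₂ : A) →
      η u t = η u₂ t₂) : ∃ f : Gam A → Gam A → I, IsCoc f ∧ ∀ u v, om f u v = η u v + η u v := by
  have hε : IsEps (fun _ : Aˣ => (0 : I)) := ⟨by simp, by simp, by simp⟩
  let P := GPos.mk2 (Gam A).subtype hη hε (fun g u t u₂ t₂ hu hu₂ h => hc u t u₂ t₂ hu hu₂ (h g.2))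
  obtain ⟨φ, f, h⟩ := P.exists_phi
  obtain ⟨Ψ, ⟨L⟩, -⟩ := IsPhi.glift (φ := φ) (f := f) hη hε h
  exact ⟨f, h.coc, om_glift h.coc hη L⟩

/-- A cocycle on `Γ₀` whose commutator form satisfies the Steinberg relation extends, up to a
coboundary, to a cocycle on `SL₂`. -/
theorem exists_coc_ext {f : Gam A → Gam A → I} (hf : IsCoc f)
    (h0 : ∀ u t : Aˣ, (u : A) + t = 1 → om f u t = 0) :
    ∃ F : SL2 A → SL2 A → I, IsCoc F ∧ IsCob (fun g h : Gam A => f g h - F g h) := by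
  let _ := hf.group
  obtain ⟨η, Ψ, hη, ⟨L⟩⟩ := exists_GLift hf.cext (gdat A)
  have h0' : ∀ u t : Aˣ, (u : A) + t = 1 → η u t = 0 := fun u t hu => by
    apply Coef.eq_of_add_self
    rw [← om_glift hf hη L, h0 u t hu, add_zero]
  obtain ⟨θ, ε, hθ, hε, hΨ⟩ := (L.psiEq hη).solve
  let P := GPos.mk2 (MonoidHom.id (SL2 A)) hη hε (fun g u t u₂ t₂ hu hu₂ h => by
    rw [h0' u t hu, h0' u₂ t₂ hu₂])
  obtain ⟨φ, F, h⟩ := P.exists_phi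
  have h' : IsPhi (fun (g : Gam A) v => act2 (g : SL2 A) v) gp2 (1, 0) (Fc η ε)
      (fun g => φ g) (fun g h => F g h) :=
    ⟨fun g v v' => h.diff g v v', fun g k v => h.val g k v, fun g k l => h.coc g k l⟩
  obtain ⟨Ψ', ⟨L'⟩, hΨ'⟩ := IsPhi.glift hη hε h'
  refine ⟨F, h.coc, cob_of_glift hf h'.coc hη (L.twist θ hθ) L' ?_⟩
  intro a b hb
  obtain ⟨v, hv, -⟩ := one_add_unit (a : A) hb
  rw [hΨ' a v b hb hv, hΨ a v b hb hv, ← hv, un_unit]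
  abel

end

section
open LocR

variable {I E A : Type} [AddCommGroup I] [Group E] [CommRing A] [LocR A]

/-! ### Central extensions of `SL₂` -/

/-- Lifts of the unipotent elements of `SL₂` to a central extension, compatible with
conjugation by the normalizer of the torus. -/
structure SLift (X : CExt I E (SL2 A)) where
  x : A → E
  y : A → E
  qx : ∀ a, X.q (x a) = xM a
  qy : ∀ b, X.q (y b) = yM b
  x_add : ∀ a a', x (a + a') = x a * x a'
  y_add : ∀ a a', y (a + a') = y a * y a'
  cx : ∀ t u, X.q t = diagSL u → ∀ a, t * x a * t⁻¹ = x ((u : A) ^ 2 * a)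
  cy : ∀ t u, X.q t = diagSL u → ∀ b, t * y b * t⁻¹ = y (((u⁻¹ : Aˣ) : A) ^ 2 * b)
  wx : ∀ t u, X.q t = diagSL u * wM → ∀ b, t * x b * t⁻¹ = y (-(((u⁻¹ : Aˣ) : A) ^ 2 * b))
  wy : ∀ t u, X.q t = diagSL u * wM → ∀ b, t * y b * t⁻¹ = x (-((u : A) ^ 2 * b))
  ux : ∀ t e a, X.q t = diagSL (u2 A) → X.q e = xM a → t * e * t⁻¹ * e⁻¹ = x (3 * a)
  uy : ∀ t e b, X.q t = diagSL (u2 A)⁻¹ → X.q e = yM b → t * e * t⁻¹ * e⁻¹ = y (3 * b)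

theorem hM_wM (u : Aˣ) : diagSL u * wM = wM * (diagSL u⁻¹ : SL2 A) := by
  apply SLext <;> simp only [mul00, mul01, mul10, mul11, h00, h01, h10, h11, w00, w01, w10, w11] <;>
    simp

theorem wM_sq : (wM * wM : SL2 A) = diagSL (-1) := by
  apply SLext <;> simp only [mul00, mul01, mul10, mul11, h00, h01, h10, h11, w00, w01, w10, w11] <;>
    simp

theorem wM_xM (b : A) : wM * xM b = yM (-b) * wM := by
  apply SLext <;> simp only [mul00, mul01, mul10, mul11, x00, x01, x10, x11, y00, y01, y10, y11,
    w00, w01, w10, w11] <;> simp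

theorem wM_yM (b : A) : wM * yM b = xM (-b) * wM := by
  apply SLext <;> simp only [mul00, mul01, mul10, mul11, x00, x01, x10, x11, y00, y01, y10, y11,
    w00, w01, w10, w11] <;> simp

theorem exists_SLift (X : CExt I E (SL2 A)) : Nonempty (SLift X) := by
  obtain ⟨x, hqx, hadd, hconj, hcomm⟩ := X.exists_lift (A := A) ⊤ xM (fun a _ b _ => xM_add a b)
    (diagSL (u2 A)) (fun a _ => by rw [hM_xM, u2_coe, mul_inv_cancel_right]; norm_num)
  have qx : ∀ a, X.q (x a) = xM a := fun a => hqx a trivial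
  have x_add : ∀ a a', x (a + a') = x a * x a' := fun a a' => hadd a trivial a' trivial
  obtain ⟨w, hw⟩ := X.surj wM
  have cx : ∀ t u, X.q t = diagSL u → ∀ a, t * x a * t⁻¹ = x ((u : A) ^ 2 * a) := by
    intro t u ht a
    refine hconj t _ (fun a _ => ?_) ?_ a trivial
    · rw [ht, hM_xM, mul_inv_cancel_right]
    · rw [ht]; exact diagSL_comm _ _
  let y : A → E := fun b => w * x (-b) * w⁻¹
  have qy : ∀ b, X.q (y b) = yM b := by
    intro b
    simp only [y]
    rw [map_mul, map_mul, map_inv, hw, qx, wM_xM, neg_neg, mul_inv_cancel_right]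
  have cy : ∀ t u, X.q t = diagSL u → ∀ b, t * y b * t⁻¹ = y (((u⁻¹ : Aˣ) : A) ^ 2 * b) := by
    intro t u ht b
    obtain ⟨t', ht'⟩ := X.surj (diagSL u⁻¹)
    have e1 : t * y b * t⁻¹ = (t * w) * x (-b) * (t * w)⁻¹ := by simp only [y]; group
    rw [e1, X.conj_eq (t' := w * t') (by rw [map_mul, map_mul, ht, hw, ht', hM_wM])]
    have e2 : w * t' * x (-b) * (w * t')⁻¹ = w * (t' * x (-b) * t'⁻¹) * w⁻¹ := by group
    rw [e2, cx t' _ ht', mul_neg]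
  have wx : ∀ t u, X.q t = diagSL u * wM → ∀ b, t * x b * t⁻¹ = y (-(((u⁻¹ : Aˣ) : A) ^ 2 * b)) := by
    intro t u ht b
    obtain ⟨t', ht'⟩ := X.surj (diagSL u)
    rw [X.conj_eq (t' := t' * w) (by rw [map_mul, ht, hw, ht'])]
    have e2 : t' * w * x b * (t' * w)⁻¹ = t' * (w * x b * w⁻¹) * t'⁻¹ := by group
    have e3 : w * x b * w⁻¹ = y (-b) := by simp only [y]; rw [neg_neg]
    rw [e2, e3, cy t' _ ht', mul_neg]
  have wy : ∀ t u, X.q t = diagSL u * wM → ∀ b, t * y b * t⁻¹ = x (-((u : A) ^ 2 * b)) := by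
    intro t u ht b
    have e1 : t * y b * t⁻¹ = (t * w) * x (-b) * (t * w)⁻¹ := by simp only [y]; group
    rw [e1, cx (t * w) (u * (-1)) (by rw [map_mul, ht, hw, mul_assoc, wM_sq, hM_mul])]
    congr 1
    push_cast
    ring
  refine ⟨x, y, qx, qy, x_add, ?_, cx, cy, wx, wy, ?_, ?_⟩
  · intro a a'
    simp only [y]
    rw [neg_add, x_add]; group
  · intro t e a ht he
    exact hcomm t e ht a trivial he
  · intro t e b ht he
    have := hcomm (w⁻¹ * t * w) (w⁻¹ * e * w)
      (by rw [map_mul, map_mul, map_inv, hw, ht, mul_assoc, hM_wM, inv_inv, inv_mul_cancel_left])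
      (-b) trivial (by
        rw [map_mul, map_mul, map_inv, hw, he]
        have := wM_xM (-b)
        rw [neg_neg] at this
        rw [mul_assoc, ← this, inv_mul_cancel_left])
    have e1 : t * e * t⁻¹ * e⁻¹ = w * (w⁻¹ * t * w * (w⁻¹ * e * w) * (w⁻¹ * t * w)⁻¹ * (w⁻¹ * e * w)⁻¹) * w⁻¹ := by
      group
    rw [e1, this, mul_neg]

namespace SLift
variable {X : CExt I E (SL2 A)} (L : SLift X)
include L

theorem x_zero : L.x 0 = 1 := by
  have := L.x_add 0 0
  rw [add_zero] at this
  exact left_eq_mul.mp this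

theorem y_zero : L.y 0 = 1 := by
  have := L.y_add 0 0
  rw [add_zero] at this
  exact left_eq_mul.mp this

theorem x_neg (a : A) : L.x (-a) = (L.x a)⁻¹ := by
  apply eq_inv_of_mul_eq_one_left
  rw [← L.x_add, neg_add_cancel, L.x_zero]

theorem y_neg (a : A) : L.y (-a) = (L.y a)⁻¹ := by
  apply eq_inv_of_mul_eq_one_left
  rw [← L.y_add, neg_add_cancel, L.y_zero]

/-- The lifted Weyl elements. -/
def w (u : Aˣ) : E := L.x u * L.y (-((u⁻¹ : Aˣ) : A)) * L.x u

theorem qw (u : Aˣ) : X.q (L.w u) = diagSL u * wM := by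
  unfold w
  rw [map_mul, map_mul, L.qx, L.qy]
  apply SLext <;> simp only [mul00, mul01, mul10, mul11, x00, x01, x10, x11, y00, y01, y10, y11,
    w00, w01, w10, w11, h00, h01, h10, h11] <;> simp

theorem w_x (u : Aˣ) (b : A) : L.w u * L.x b = L.y (-(((u⁻¹ : Aˣ) : A) ^ 2 * b)) * L.w u := by
  rw [← L.wx _ u (L.qw u), inv_mul_cancel_right]

theorem w_y (u : Aˣ) (b : A) : L.w u * L.y b = L.x (-((u : A) ^ 2 * b)) * L.w u := by
  rw [← L.wy _ u (L.qw u), inv_mul_cancel_right]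

theorem w_eq (u : Aˣ) : L.w u = L.y (-((u⁻¹ : Aˣ) : A)) * L.x u * L.y (-((u⁻¹ : Aˣ) : A)) := by
  have e : L.w u = L.w u * (L.x u * L.y (-((u⁻¹ : Aˣ) : A)) * L.x u) * (L.w u)⁻¹ := by
    change L.w u = L.w u * L.w u * (L.w u)⁻¹
    rw [mul_inv_cancel_right]
  have hu := Units.mul_inv u
  rw [e, ← mul_assoc, ← mul_assoc, L.w_x, mul_assoc _ (L.w u), L.w_y, ← mul_assoc, mul_assoc _ (L.w u),
    L.w_x, ← mul_assoc, mul_inv_cancel_right]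
  have e1 : -(((u⁻¹ : Aˣ) : A) ^ 2 * u) = -((u⁻¹ : Aˣ) : A) := by
    linear_combination (-((u⁻¹ : Aˣ) : A)) * hu
  have e2 : -((u : A) ^ 2 * -((u⁻¹ : Aˣ) : A)) = u := by
    linear_combination (u : A) * hu
  rw [e1, e2]

theorem w_neg (u : Aˣ) : L.w (-u) = (L.w u)⁻¹ := by
  unfold w
  rw [mul_inv_rev, mul_inv_rev, inv_neg]
  simp only [Units.val_neg]
  rw [L.x_neg, L.y_neg (-((u⁻¹ : Aˣ) : A)), mul_assoc]

/-- The lifted torus elements. -/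
def h (u : Aˣ) : E := L.w u * (L.w 1)⁻¹

theorem w_h (u : Aˣ) : L.w u = L.h u * L.w 1 := by unfold h; rw [inv_mul_cancel_right]

theorem qh (u : Aˣ) : X.q (L.h u) = diagSL u := by
  have e : (diagSL 1 : SL2 A) = 1 := by
    apply SLext <;> simp only [h00, h01, h10, h11] <;> simp
  unfold h
  rw [map_mul, map_inv, L.qw, L.qw, e, one_mul, mul_inv_cancel_right]

theorem h_one : L.h 1 = 1 := by unfold h; rw [mul_inv_cancel]

theorem h_x (u : Aˣ) (a : A) : L.h u * L.x a = L.x ((u : A) ^ 2 * a) * L.h u := by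
  rw [← L.cx _ u (L.qh u), inv_mul_cancel_right]

theorem h_y (u : Aˣ) (a : A) : L.h u * L.y a = L.y (((u⁻¹ : Aˣ) : A) ^ 2 * a) * L.h u := by
  rw [← L.cy _ u (L.qh u), inv_mul_cancel_right]

/-- The torus lifts are multiplicative on pairs `u + v = 1`. -/
theorem h_add_one (u v : Aˣ) (huv : (u : A) + v = 1) : L.h u * L.h v = L.h (u * v) := by
  have hu := Units.mul_inv u
  have hv := Units.mul_inv v
  have key : L.w u * L.w (-1) * L.w v = L.w (u * v) := by
    have e1 : L.w (-1) = L.y 1 * L.x (-1) * L.y 1 := by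
      rw [w_eq]; simp
    have e2 : L.y 1 * L.w v = L.w v * L.x (-((v : A) ^ 2)) := by
      have := L.w_y (-v) 1
      rw [L.w_neg, inv_mul_eq_iff_eq_mul, ← mul_assoc, eq_mul_inv_iff_mul_eq] at this
      rw [this]
      simp
    have e3 := L.w_y u 1
    rw [mul_one] at e3
    calc L.w u * L.w (-1) * L.w v = (L.w u * L.y 1) * L.x (-1) * (L.y 1 * L.w v) := by
          rw [e1]; simp only [mul_assoc]
      _ = L.x (-((u : A) ^ 2)) * L.w u * L.x (-1) * (L.w v * L.x (-((v : A) ^ 2))) := by rw [e2, e3]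
      _ = (L.x (-((u : A) ^ 2)) * L.x u) * L.y (-((u⁻¹ : Aˣ) : A)) * (L.x u * L.x (-1) * L.x v) *
            L.y (-((v⁻¹ : Aˣ) : A)) * (L.x v * L.x (-((v : A) ^ 2))) := by
          unfold w; simp only [mul_assoc]
      _ = L.x (u * v : Aˣ) * (L.y (-((u⁻¹ : Aˣ) : A)) * L.y (-((v⁻¹ : Aˣ) : A))) * L.x (u * v : Aˣ) := by
          rw [← L.x_add, ← L.x_add, ← L.x_add, ← L.x_add]
          have a1 : (u : A) + -1 + v = 0 := by linear_combination huv
          have a2 : -(u : A) ^ 2 + u = (u * v : Aˣ) := by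
            rw [Units.val_mul]; linear_combination (-(u : A)) * huv
          have a3 : (v : A) + -(v : A) ^ 2 = (u * v : Aˣ) := by
            rw [Units.val_mul]; linear_combination (-(v : A)) * huv
          rw [a1, a2, a3, L.x_zero, mul_one]
          simp only [mul_assoc]
      _ = L.w (u * v) := by
          rw [← L.y_add]
          unfold w
          congr 3
          rw [mul_inv, Units.val_mul]
          linear_combination (-(((u⁻¹ : Aˣ) : A) * ((v⁻¹ : Aˣ) : A))) * huv +
            ((v⁻¹ : Aˣ) : A) * hu + ((u⁻¹ : Aˣ) : A) * hv
  unfold h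
  rw [← key, L.w_neg]
  simp only [mul_assoc]

end SLift

/-- The commutator form of a cocycle on `SL₂` satisfies the Steinberg relation. -/
theorem om_SL2 {F : SL2 A → SL2 A → I} (hF : IsCoc F) (u v : Aˣ) (huv : (u : A) + v = 1) :
    om (fun g h : Gam A => F g h) u v = 0 := by
  let _ := hF.group
  obtain ⟨L⟩ := exists_SLift hF.cext
  have h1 := L.h_add_one u v huv
  have h2 := L.h_add_one v u (by rw [add_comm]; exact huv)
  rw [mul_comm v u, ← h1] at h2
  have e : (L.h v).1 + (L.h u).1 + F (L.h v).2 (L.h u).2 =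
      (L.h u).1 + (L.h v).1 + F (L.h u).2 (L.h v).2 := congrArg TwExt.fst h2
  have q1 : (L.h u).2 = diagSL u := L.qh u
  have q2 : (L.h v).2 = diagSL v := L.qh v
  rw [q1, q2, add_comm (L.h v).1] at e
  have e' := add_left_cancel e
  show F (diagSL u) (diagSL v) - F (diagSL v) (diagSL u) = 0
  rw [e', sub_self]

end

section
open LocR

variable {I E A : Type} [AddCommGroup I] [Group E] [CommRing A] [LocR A]

/-! ### Extending a splitting from `Γ₀` to `SL₂` -/

/-- A splitting over `Γ₀` of a central extension of `SL₂`, taking the standard generators to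
their standard lifts. -/
structure Spl {X : CExt I E (SL2 A)} (L : SLift X) where
  s : Gam A →* E
  qs : ∀ g, X.q (s g) = g
  sx : ∀ a, s ((gdat A).X a) = L.x a
  sy : ∀ b, π b = 0 → s ((gdat A).Y b) = L.y b
  sh : ∀ u, s ((gdat A).H u) = L.h u

section torus
variable {X : CExt I E (SL2 A)} (L : SLift X) (s : Gam A →* E) (qs : ∀ g, X.q (s g) = g)
include qs

theorem split_x (a : A) : s ((gdat A).X a) = L.x a := by
  obtain ⟨a', rfl⟩ : ∃ a', a = 3 * a' :=
    ⟨((u3 A)⁻¹ : Aˣ) * a, by rw [← u3_coe, ← mul_assoc, Units.mul_inv, one_mul]⟩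
  have h := L.ux (s ((gdat A).H (u2 A))) (s ((gdat A).X a')) a' (qs _) (qs _)
  rw [← h, ← map_inv, ← map_inv, ← map_mul, ← map_mul, ← map_mul]
  congr 1
  rw [(gdat A).HX, mul_inv_cancel_right, eq_mul_inv_iff_mul_eq, ← (gdat A).X_add, u2_coe]
  congr 1
  ring

theorem split_y (b : A) (hb : π b = 0) : s ((gdat A).Y b) = L.y b := by
  obtain ⟨b', rfl⟩ : ∃ b', b = 3 * b' :=
    ⟨((u3 A)⁻¹ : Aˣ) * b, by rw [← u3_coe, ← mul_assoc, Units.mul_inv, one_mul]⟩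
  have hb' : π b' = 0 := by
    rw [map_mul, map_ofNat] at hb
    exact (mul_eq_zero.mp hb).resolve_left three_ne
  have h := L.uy (s ((gdat A).H (u2 A)⁻¹)) (s ((gdat A).Y b')) b' (qs _)
    (by rw [qs]; exact yG_coe hb')
  rw [← h, ← map_inv, ← map_inv, ← map_mul, ← map_mul, ← map_mul]
  congr 1
  rw [(gdat A).HY _ _ hb', mul_inv_cancel_right, eq_mul_inv_iff_mul_eq, ← (gdat A).Y_add _ _ hb hb',
    inv_inv, u2_coe]
  congr 1
  ring

/-- On `1 + 𝔪` the splitting is given by quotients of Weyl elements. -/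
theorem split_h (a v : Aˣ) (hv : π (v : A) = 1) :
    L.w a * (L.w (a * v⁻¹))⁻¹ = s ((gdat A).H v) := by
  obtain ⟨b, hb⟩ : ∃ b : A, b = (v - 1) * ((a⁻¹ : Aˣ) : A) := ⟨_, rfl⟩
  have ha := Units.mul_inv a
  have hvi := Units.mul_inv v
  have hb0 : π b = 0 := by rw [hb, map_mul, map_sub, hv, map_one, sub_self, zero_mul]
  have e := congrArg s ((gdat A).XY a b v hb0 (by rw [hb]; linear_combination (1 - v : A) * ha))
  rw [map_mul, map_mul, map_mul, split_x L s qs, split_x L s qs, split_y L s qs _ hb0,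
    split_y L s qs _ (pi_mul_zero _ hb0)] at e
  rw [← L.w_neg, L.w_eq, L.w_eq]
  have e1 : -(((-(a * v⁻¹))⁻¹ : Aˣ) : A) = ((a⁻¹ : Aˣ) : A) * v := by
    rw [inv_neg, mul_inv, inv_inv]; simp
  have e2 : ((-(a * v⁻¹) : Aˣ) : A) = -(((v⁻¹ : Aˣ) : A) * a) := by simp [mul_comm]
  rw [e1, e2]
  calc L.y (-((a⁻¹ : Aˣ) : A)) * L.x a * L.y (-((a⁻¹ : Aˣ) : A)) *
        (L.y (((a⁻¹ : Aˣ) : A) * v) * L.x (-(((v⁻¹ : Aˣ) : A) * a)) * L.y (((a⁻¹ : Aˣ) : A) * v))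
      = L.y (-((a⁻¹ : Aˣ) : A)) * (L.x a * (L.y (-((a⁻¹ : Aˣ) : A)) * L.y (((a⁻¹ : Aˣ) : A) * v))) *
          L.x (-(((v⁻¹ : Aˣ) : A) * a)) * L.y (((a⁻¹ : Aˣ) : A) * v) := by
        simp only [mul_assoc]
    _ = L.y (-((a⁻¹ : Aˣ) : A)) * (L.x a * L.y b) * (L.x (((v⁻¹ : Aˣ) : A) * a))⁻¹ *
          L.y (((a⁻¹ : Aˣ) : A) * v) := by
        rw [← L.y_add, ← L.x_neg]
        congr 5
        rw [hb]; ring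
    _ = L.y (-((a⁻¹ : Aˣ) : A)) * L.y (((v⁻¹ : Aˣ) : A) * b) *
          (s ((gdat A).H v) * L.y (((a⁻¹ : Aˣ) : A) * v)) := by
        rw [e]; group
    _ = (L.y (-((a⁻¹ : Aˣ) : A)) * L.y (((v⁻¹ : Aˣ) : A) * b) *
          L.y (((v⁻¹ : Aˣ) : A) ^ 2 * (((a⁻¹ : Aˣ) : A) * v))) * s ((gdat A).H v) := by
        have := L.cy (s ((gdat A).H v)) v (qs _) (((a⁻¹ : Aˣ) : A) * v)
        rw [mul_inv_eq_iff_eq_mul] at this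
        rw [this]; simp only [mul_assoc]
    _ = s ((gdat A).H v) := by
        rw [← L.y_add, ← L.y_add]
        have : -((a⁻¹ : Aˣ) : A) + ((v⁻¹ : Aˣ) : A) * b +
            ((v⁻¹ : Aˣ) : A) ^ 2 * (((a⁻¹ : Aˣ) : A) * v) = 0 := by
          rw [hb]; linear_combination (((a⁻¹ : Aˣ) : A) + ((v⁻¹ : Aˣ) : A) * ((a⁻¹ : Aˣ) : A)) * hvi
        rw [this, L.y_zero, one_mul]

theorem exists_Spl_aux : ∃ ε : Aˣ → I, (∀ u v, ε (u * v) = ε u + ε v) ∧ (∀ v : Aˣ, π (v : A) = 1 → ε v = 0) ∧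
    ∀ u, L.h u = X.z (ε u) * s ((gdat A).H u) := by
  have hex : ∀ u, ∃ i, L.h u = X.z i * s ((gdat A).H u) := fun u =>
    X.cmp (by rw [L.qh, qs]; rfl)
  choose ε hε using hex
  have H1 : (gdat A).H 1 = 1 := by
    have := (gdat A).H_mul 1 1
    rw [one_mul] at this
    exact left_eq_mul.mp this
  have ε1 : ε 1 = 0 := by
    have := hε 1
    rw [L.h_one, H1, map_one, mul_one] at this
    exact X.z_inj (by rw [X.z_zero, ← this])
  have quot : ∀ u v, L.h u * (L.h v)⁻¹ = X.z (ε u - ε v) * s ((gdat A).H (u * v⁻¹)) := by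
    intro u v
    have : (gdat A).H (u * v⁻¹) = (gdat A).H u * ((gdat A).H v)⁻¹ := by
      rw [eq_mul_inv_iff_mul_eq, ← (gdat A).H_mul, inv_mul_cancel_right]
    rw [this, hε, hε, map_mul, map_inv, sub_eq_add_neg, X.z_add, mul_inv_rev, ← X.z_neg, X.z_comm]
    simp only [mul_assoc]
    rw [X.z_left]
  have ww : ∀ u v, L.w u * (L.w v)⁻¹ = L.h u * (L.h v)⁻¹ := by
    intro u v; unfold SLift.h; group
  have cong : ∀ a v : Aˣ, π (v : A) = 1 → ε (v * a) = ε a := by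
    intro a v hv
    have h := split_h L s qs (v * a) v hv
    have e : v * a * v⁻¹ = a := by rw [mul_comm v, mul_inv_cancel_right]
    rw [ww, quot, e, mul_inv_cancel_right] at h
    nth_rw 2 [← one_mul (s _)] at h
    rw [← X.z_zero] at h
    exact sub_eq_zero.mp (X.z_cancel h)
  have eq1 : ∀ v : Aˣ, π (v : A) = 1 → ε v = 0 := fun v hv => by rw [← mul_one v, cong _ _ hv, ε1]
  have sqm : ∀ t u : Aˣ, ε (t ^ 2 * u) = ε u + ε (t ^ 2) := by
    intro t u
    set T := s ((gdat A).H t) with hT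
    have hw : ∀ c : Aˣ, T * L.w c * T⁻¹ = L.w (t ^ 2 * c) := by
      intro c
      have c1 := L.cx T t (qs _) c
      have c2 := L.cy T t (qs _) (-((c⁻¹ : Aˣ) : A))
      have e : T * L.w c * T⁻¹ = (T * L.x c * T⁻¹) * (T * L.y (-((c⁻¹ : Aˣ) : A)) * T⁻¹) *
        (T * L.x c * T⁻¹) := by unfold SLift.w; group
      rw [e, c1, c2]
      unfold SLift.w
      simp [mul_inv, mul_comm]
    have h1 : T * L.h u * T⁻¹ = L.w (t ^ 2 * u) * (L.w (t ^ 2))⁻¹ := by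
      have := hw 1
      rw [mul_one] at this
      rw [← this, ← hw]; unfold SLift.h; group
    rw [ww, quot] at h1
    have e2 : t ^ 2 * u * (t ^ 2)⁻¹ = u := by rw [mul_comm, inv_mul_cancel_left]
    have h2 : T * L.h u * T⁻¹ = X.z (ε u) * s ((gdat A).H u) := by
      rw [hε, X.z_left, mul_assoc, hT, ← map_inv, ← map_mul, ← map_mul, ← (gdat A).H_mul, mul_comm t,
        (gdat A).H_mul, mul_inv_cancel_right]
    rw [e2, h2] at h1
    have := X.z_cancel h1
    rw [this]; abel
  have add1 : ∀ u v : Aˣ, (u : A) + v = 1 → ε u + ε v = ε (u * v) := by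
    intro u v huv
    have := L.h_add_one u v huv
    rw [hε, hε, hε, (gdat A).H_mul, map_mul, mul_assoc, X.z_left, ← mul_assoc, ← X.z_add] at this
    exact X.z_cancel this
  have sq : ∀ a b : Aˣ, IsSquare (π (a : A)) → ε (a * b) = ε a + ε b := by
    intro a b ha
    obtain ⟨t, v, hv, rfl⟩ := sq_decomp ha
    rw [mul_assoc, sqm, cong _ _ hv, sqm, eq1 _ hv, zero_add, add_comm]
  refine ⟨ε, ?_, eq1, hε⟩
  obtain ⟨m, n, hmn, hm, hn⟩ := exists_adj A
  have hn' : ¬ IsSquare (π ((n⁻¹ : Aˣ) : A)) := by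
    intro h; apply hn
    rw [pi_inv] at h
    simpa using h.inv
  have hmn' : ¬ IsSquare (π ((m * n⁻¹ : Aˣ) : A)) := by
    rw [Units.val_mul, map_mul]
    exact nsq_mul (pi_unit m) hm hn'
  intro a b
  by_cases ha : IsSquare (π (a : A))
  · exact sq _ _ ha
  by_cases hb : IsSquare (π (b : A))
  · rw [mul_comm, sq _ _ hb, add_comm]
  have ha' : IsSquare (π ((a * n : Aˣ) : A)) := by
    rw [Units.val_mul, map_mul]; exact sq_mul_of_not ha hn
  have hb' : IsSquare (π ((b * (m * n⁻¹) : Aˣ) : A)) := by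
    rw [Units.val_mul, map_mul]; exact sq_mul_of_not hb hmn'
  have hsum : ε n⁻¹ + ε (m * n⁻¹) = ε (n⁻¹ * (m * n⁻¹)) := by
    apply add1
    have := Units.mul_inv n
    rw [Units.val_mul]
    linear_combination this - ((n⁻¹ : Aˣ) : A) * hmn
  have hq : IsSquare (π (((m * n⁻¹) * (m * n⁻¹) : Aˣ) : A)) := by
    rw [Units.val_mul, map_mul]; exact ⟨_, rfl⟩
  have hr : IsSquare (π ((((m * n⁻¹) * (m * n⁻¹))⁻¹ : Aˣ) : A)) := by
    rw [pi_inv]; exact hq.inv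
  have f1 : ε a = ε (a * n) + ε n⁻¹ := by
    rw [← sq _ _ ha', mul_inv_cancel_right]
  have f2 : ε b = ε (b * (m * n⁻¹)) + (ε ((m * n⁻¹) * (m * n⁻¹))⁻¹ + ε (m * n⁻¹)) := by
    rw [← sq _ _ hr, ← sq _ _ hb']; congr 1; group
  have f3 : ε (a * b) = ε (a * n) + (ε (b * (m * n⁻¹)) + (ε ((m * n⁻¹) * (m * n⁻¹))⁻¹ +
      ε (n⁻¹ * (m * n⁻¹)))) := by
    rw [← sq _ _ hr, ← sq _ _ hb', ← sq _ _ ha']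
    congr 1
    apply uext
    simp only [map_mul, iota_inv, Units.val_mul, mul_inv]
    field_simp
  rw [f1, f2, f3, ← hsum]
  abel

theorem exists_Spl : Nonempty (Spl L) := by
  obtain ⟨ε, hmul, h1, hε⟩ := exists_Spl_aux L s qs
  have hc : ∀ u v : Aˣ, π (u : A) = π (v : A) → ε u = ε v := by
    intro u v h
    have e := h1 (u * v⁻¹) (by rw [Units.val_mul, map_mul, pi_inv, h, mul_inv_cancel₀ (pi_unit v)])
    rw [← inv_mul_cancel_right u v, hmul, e, zero_add]
  refine ⟨⟨MonoidHom.mk' (fun g => X.z (ε (un ((g : SL2 A) 0 0))) * s g) ?_, ?_, ?_, ?_, ?_⟩⟩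
  · intro g h
    have e : ε (un (((g * h : Gam A) : SL2 A) 0 0)) = ε (un ((g : SL2 A) 0 0)) + ε (un ((h : SL2 A) 0 0)) := by
      rw [← hmul]
      apply hc
      rw [Units.val_mul, un_coe (Gam_pi00 (g * h).2), un_coe (Gam_pi00 g.2), un_coe (Gam_pi00 h.2),
        Subgroup.coe_mul, mul00, map_add, map_mul _ (_ : A) ((h : SL2 A) 1 0), mem_Gam.mp h.2, mul_zero,
        add_zero]
    rw [e, X.z_add, map_mul]
    simp only [mul_assoc]
    rw [X.z_left _ (s g)]
  · intro g
    show X.q (X.z _ * s g) = g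
    rw [X.q_z_mul, qs]
  · intro a
    show X.z (ε (un (1 : A))) * s _ = _
    rw [h1 _ (by rw [un_coe] <;> simp), X.z_zero, one_mul, split_x L s qs]
  · intro b hb
    show X.z (ε (un ((yG b : SL2 A) 0 0))) * s _ = _
    rw [yG_coe hb, y00, h1 _ (by rw [un_coe] <;> simp), X.z_zero, one_mul, split_y L s qs _ hb]
  · intro u
    show X.z (ε (un (u : A))) * s _ = _
    rw [un_unit, hε]
end torus

namespace Spl
variable {X : CExt I E (SL2 A)} {L : SLift X} (S : Spl L)

/-- The candidate image of the extended splitting, given by the Bruhat-type decomposition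
`SL₂ = Γ₀ ∪ Γ₀ w U`. -/
def Sg (t : E) : Prop := (∃ g, t = S.s g) ∨ ∃ g a, t = S.s g * L.w 1 * L.x a

theorem w_h' (u : Aˣ) : L.w 1 * L.h u = L.h u⁻¹ * L.w 1 := by
  have e : L.w 1 * L.h u = L.w 1 * L.w u * (L.w 1)⁻¹ := by unfold SLift.h; group
  rw [← L.w_h, e, mul_inv_eq_iff_eq_mul]
  conv_lhs => unfold SLift.w
  rw [L.w_eq u⁻¹]
  have w1 := fun b => L.w_x 1 b
  have w2 := fun b => L.w_y 1 b
  simp only [inv_one, Units.val_one, one_pow, one_mul] at w1 w2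
  have w0 : L.x 1 * L.y (-1) * L.x 1 = L.w 1 := by unfold SLift.w; simp
  rw [inv_one, Units.val_one, w0, ← mul_assoc, ← mul_assoc, w1, mul_assoc _ (L.w 1), w2, ← mul_assoc,
    mul_assoc _ (L.w 1), w1]
  simp [mul_assoc]

theorem w_sq : L.w 1 * L.w 1 = (L.h (-1))⁻¹ := by
  have h := L.w_h (-1)
  rw [L.w_neg, ← mul_inv_eq_iff_eq_mul] at h
  rw [← h, mul_inv_rev, inv_inv]

variable {S}

theorem Sg.left {t : E} (h : S.Sg t) (g : Gam A) : S.Sg (S.s g * t) := by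
  rcases h with ⟨g', rfl⟩ | ⟨g', a, rfl⟩
  · exact Or.inl ⟨g * g', by rw [map_mul]⟩
  · exact Or.inr ⟨g * g', a, by rw [map_mul]; simp only [mul_assoc]⟩

theorem Sg.right_x {t : E} (h : S.Sg t) (a : A) : S.Sg (t * L.x a) := by
  rcases h with ⟨g', rfl⟩ | ⟨g', a', rfl⟩
  · exact Or.inl ⟨g' * (gdat A).X a, by rw [map_mul, S.sx]⟩
  · exact Or.inr ⟨g', a' + a, by rw [L.x_add]; simp only [mul_assoc]⟩

theorem Sg.right_h {t : E} (h : S.Sg t) (u : Aˣ) : S.Sg (t * L.h u) := by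
  rcases h with ⟨g', rfl⟩ | ⟨g', a', rfl⟩
  · exact Or.inl ⟨g' * (gdat A).H u, by rw [map_mul, S.sh]⟩
  · refine Or.inr ⟨g' * (gdat A).H u⁻¹, ((u⁻¹ : Aˣ) : A) ^ 2 * a', ?_⟩
    have e := L.h_x u (((u⁻¹ : Aˣ) : A) ^ 2 * a')
    rw [← mul_assoc, ← mul_pow, Units.mul_inv, one_pow, one_mul] at e
    rw [map_mul, S.sh, mul_assoc (S.s g') (L.h u⁻¹), ← w_h' u, mul_assoc _ (L.x a'), ← e]
    simp only [mul_assoc]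

variable (S)

theorem Sg_y (c : A) : S.Sg (L.y c) := by
  by_cases h : π c = 0
  · exact Or.inl ⟨(gdat A).Y c, (S.sy c h).symm⟩
  · obtain ⟨u, rfl⟩ : ∃ u : Aˣ, (u : A) = c := ⟨_, un_coe h⟩
    have hu := Units.mul_inv u
    refine Or.inr ⟨(gdat A).H (-u⁻¹) * (gdat A).X u, ((u⁻¹ : Aˣ) : A), ?_⟩
    rw [map_mul, S.sh, S.sx]
    have e : L.x u * L.w 1 = L.w 1 * L.y (-u) := by
      rw [L.w_y]; simp
    rw [mul_assoc (L.h _), e, ← mul_assoc, ← L.w_h, L.w_eq, inv_neg, inv_inv]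
    simp only [Units.val_neg, neg_neg, mul_assoc]
    rw [← mul_assoc (L.y u) (L.y (-u)), ← L.y_add, add_neg_cancel, L.y_zero, one_mul, ← L.x_add,
      neg_add_cancel, L.x_zero, mul_one]

variable {S}

theorem Sg.w {t : E} (h : S.Sg t) : S.Sg (L.w 1 * t) := by
  have w1 := fun b => L.w_x 1 b
  have w2 := fun b => L.w_y 1 b
  simp only [inv_one, Units.val_one, one_pow, one_mul] at w1 w2
  rcases h with ⟨g, rfl⟩ | ⟨g, a, rfl⟩
  · obtain ⟨b, u, a, hb, rfl⟩ := (gdat A).dec g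
    refine Or.inr ⟨(gdat A).X (-b) * (gdat A).H u⁻¹, a, ?_⟩
    rw [map_mul, map_mul, map_mul, S.sx, S.sx, S.sh, S.sh, S.sy b hb, mul_assoc (L.x (-b)), ← w_h' u,
      ← mul_assoc, ← mul_assoc, w2]
    simp only [mul_assoc]
  · obtain ⟨b, u, c, hb, hd⟩ := (gdat A).dec g⁻¹
    have hg : S.s g = (L.x c)⁻¹ * (L.h u)⁻¹ * (L.y b)⁻¹ := by
      rw [← inv_inv g, hd, map_inv, map_mul, map_mul, S.sx, S.sh, S.sy b hb]; group
    have e2 : (L.y b)⁻¹ * L.w 1 = L.w 1 * L.x b := by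
      rw [w1, L.y_neg]
    have e3 : (L.h u)⁻¹ * L.w 1 = L.w 1 * L.h u := by
      have := S.sh u
      rw [inv_mul_eq_iff_eq_mul, ← mul_assoc]
      have h1 := w_h' (L := L) u
      have h2 : L.h u * L.h u⁻¹ = 1 := by
        rw [← S.sh, ← S.sh, ← map_mul, ← (gdat A).H_mul, mul_inv_cancel, S.sh, L.h_one]
      rw [mul_assoc, h1, ← mul_assoc, h2, one_mul]
    have e4 : L.w 1 * (L.x c)⁻¹ = L.y c * L.w 1 := by
      rw [← L.x_neg, w1, neg_neg]
    have : L.w 1 * (S.s g * L.w 1 * L.x a) =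
        L.y c * (L.h (-1))⁻¹ * L.h u * L.x (b + a) := by
      rw [← w_sq, hg, L.x_add]
      calc _ = (L.w 1 * (L.x c)⁻¹) * (L.h u)⁻¹ * ((L.y b)⁻¹ * L.w 1) * L.x a := by
            simp only [mul_assoc]
        _ = L.y c * L.w 1 * ((L.h u)⁻¹ * L.w 1) * L.x b * L.x a := by
            rw [e2, e4]; simp only [mul_assoc]
        _ = _ := by rw [e3]; simp only [mul_assoc]
    rw [this]
    have e5 : (L.h (-1))⁻¹ = L.h (-1) := by
      rw [← S.sh, ← map_inv]
      congr 1
      rw [inv_eq_iff_mul_eq_one, ← (gdat A).H_mul]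
      have := (gdat A).H_mul 1 1
      rw [one_mul] at this
      simpa using left_eq_mul.mp this
    rw [e5]
    exact (((Sg_y S c).right_h _).right_h _).right_x _

theorem Sg.mul {t t' : E} (h : S.Sg t) (h' : S.Sg t') : S.Sg (t * t') := by
  rcases h with ⟨g, rfl⟩ | ⟨g, a, rfl⟩
  · exact h'.left g
  · rw [mul_assoc, mul_assoc, ← S.sx]
    exact ((h'.left _).w).left g

theorem q_w : X.q (L.w 1) = wM := by
  have e : (diagSL 1 : SL2 A) = 1 := by
    apply SLext <;> simp only [h00, h01, h10, h11] <;> simp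
  rw [L.qw, e, one_mul]

theorem not_mem (g : Gam A) (a : A) : (g : SL2 A) * wM * xM a ∉ Gam A := by
  rw [mem_Gam]
  simp only [mul10, mul11, mul00, mul01, w00, w01, w10, w11, x00, x01, x10, x11]
  intro h
  have hd := congrArg π (SL2_det (g : SL2 A))
  have hg := mem_Gam.mp g.2
  simp only [map_add, map_mul, map_sub, hg, map_one, map_zero, map_neg] at h hd
  simp at h
  simp [h] at hd

theorem Sg.inj {t t' : E} (h : S.Sg t) (h' : S.Sg t') (hq : X.q t = X.q t') : t = t' := by
  rcases h with ⟨g, rfl⟩ | ⟨g, a, rfl⟩ <;> rcases h' with ⟨g', rfl⟩ | ⟨g', a', rfl⟩ <;>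
    simp only [map_mul, S.qs, q_w, L.qx] at hq
  · rw [Subtype.ext hq]
  · exact (not_mem g' a' (hq ▸ g.2)).elim
  · exact (not_mem g a (hq ▸ g'.2)).elim
  · have e : ((g'⁻¹ * g : Gam A) : SL2 A) = yM (a - a') := by
      rw [Subgroup.coe_mul, Subgroup.coe_inv, inv_mul_eq_iff_eq_mul]
      have h1 : (g : SL2 A) * wM = (g' : SL2 A) * wM * xM (a' - a) := by
        have : (xM (a' - a) : SL2 A) = xM a' * (xM a)⁻¹ := by
          rw [eq_mul_inv_iff_mul_eq, ← xM_add, sub_add_cancel]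
        rw [this, ← mul_assoc, ← hq, mul_inv_cancel_right]
      rw [mul_assoc _ wM, wM_xM, neg_sub, ← mul_assoc] at h1
      exact mul_right_cancel h1
    have hb : π (a - a') = 0 := by
      have := (g'⁻¹ * g).2
      rw [mem_Gam, e] at this
      exact this
    have e2 : g = g' * (gdat A).Y (a - a') := by
      rw [← inv_mul_eq_iff_eq_mul]
      exact Subtype.ext (by rw [e]; exact (yG_coe hb).symm)
    rw [e2, map_mul, S.sy _ hb, mul_assoc _ (L.y _)]
    have := L.w_x 1 (a' - a)
    simp only [inv_one, Units.val_one, one_pow, one_mul, neg_sub] at this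
    rw [← this, mul_assoc, mul_assoc, ← L.x_add, sub_add_cancel, mul_assoc]

variable (S)

theorem Sg_surj (g : SL2 A) : ∃ t, S.Sg t ∧ X.q t = g := by
  by_cases h : g ∈ Gam A
  · exact ⟨S.s ⟨g, h⟩, Or.inl ⟨_, rfl⟩, S.qs _⟩
  · obtain ⟨u, hu⟩ : ∃ u : Aˣ, (u : A) = g 1 0 := ⟨_, un_coe h⟩
    have hui := Units.mul_inv u
    have hd := SL2_det g
    set a := ((u⁻¹ : Aˣ) : A) * g 1 1 with ha
    have hm : g * (xM a)⁻¹ * wM⁻¹ ∈ Gam A := by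
      obtain ⟨g', hg'⟩ : ∃ g', g' = g * (xM a)⁻¹ * wM⁻¹ := ⟨_, rfl⟩
      have e : g = g' * wM * xM a := by rw [hg']; group
      rw [← hg', mem_Gam]
      have e1 := congrArg (fun m : SL2 A => m 1 0) e
      have e2 := congrArg (fun m : SL2 A => m 1 1) e
      simp only [mul10, mul11, mul00, mul01, w00, w01, w10, w11, x00, x01, x10, x11] at e1 e2
      have : g' 1 0 = 0 := by
        rw [ha] at e2
        linear_combination (-1) * e2 + ((u⁻¹ : Aˣ) : A) * g 1 1 * e1 - (g 1 1) * hui + (g 1 1) *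
          ((u⁻¹ : Aˣ) : A) * hu
      rw [this, map_zero]
    refine ⟨S.s ⟨_, hm⟩ * L.w 1 * L.x a, Or.inr ⟨_, _, rfl⟩, ?_⟩
    rw [map_mul, map_mul, S.qs, q_w, L.qx]
    group

include S in
theorem exists_split : ∃ σ : SL2 A → E, (∀ g, X.q (σ g) = g) ∧ ∀ g h, σ (g * h) = σ g * σ h := by
  choose σ h1 h2 using S.Sg_surj
  exact ⟨σ, h2, fun g h => (h1 _).inj ((h1 g).mul (h1 h)) (by rw [map_mul, h2, h2, h2])⟩

end Spl

/-- A cocycle on `SL₂` which becomes trivial on `Γ₀` is trivial. -/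
theorem isCob_of_res {F : SL2 A → SL2 A → I} (hF : IsCoc F)
    (h : IsCob (fun g h : Gam A => F g h)) : IsCob F := by
  let _ := hF.group
  obtain ⟨θ, hθ⟩ := h
  obtain ⟨L⟩ := exists_SLift hF.cext
  let s : Gam A →* TwExt F := MonoidHom.mk' (fun g => ⟨-θ g, g⟩) (fun g h => by
    show TwExt.mk _ _ = TwExt.mk _ _
    congr 1
    show -θ (g * h) = -θ g + -θ h + F g h
    have := hθ g h
    simp only at this
    rw [this]; abel)
  obtain ⟨S⟩ := exists_Spl L s (fun _ => rfl)
  obtain ⟨σ, h1, h2⟩ := S.exists_split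
  have h1' : ∀ g, (σ g).2 = g := h1
  refine ⟨fun g => -(σ g).1, fun g h => ?_⟩
  have e : (σ (g * h)).1 = (σ g).1 + (σ h).1 + F (σ g).2 (σ h).2 := congrArg TwExt.fst (h2 g h)
  rw [h1', h1'] at e
  simp only [e]; abel

end

/-! ### The ring `ℤ[1/2]` -/

/-- The properties of the ring `ℤ[1/2]` that are used. -/
class HalfLike (κ : Type) [CommRing κ] : Prop where
  two_unit : IsUnit (2 : κ)
  surj : ∀ r : κ, ∃ (n : ℕ) (a : ℤ), (2 : κ) ^ n * r = (a : κ)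
  int_inj : ∀ a : ℤ, (a : κ) = 0 → a = 0

instance : HalfLike Half where
  two_unit := by
    have := IsLocalization.Away.algebraMap_isUnit (S := Half) (2 : ℤ)
    rwa [map_ofNat] at this
  surj r := by
    obtain ⟨n, a, hn⟩ := IsLocalization.Away.surj (2 : ℤ) r
    refine ⟨n, a, ?_⟩
    rw [map_ofNat, eq_intCast] at hn
    rw [mul_comm, hn]
  int_inj a h := by
    have hi : Function.Injective (algebraMap ℤ Half) :=
      IsLocalization.injective Half (M := Submonoid.powers (2 : ℤ))
        (powers_le_nonZeroDivisors_of_noZeroDivisors (by norm_num))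
    apply hi
    rw [map_zero, eq_intCast, h]

section
variable (κ : Type) [CommRing κ] [HalfLike κ] {M N : Type*} [AddCommGroup M] [Module κ M]
  [AddCommGroup N] [Module κ N]

theorem half_smul_inj (n : ℕ) {x : M} (h : (2 : κ) ^ n • x = 0) : x = 0 := by
  obtain ⟨u, hu⟩ := (HalfLike.two_unit (κ := κ)).pow n
  rw [← hu] at h
  have h2 := congrArg (fun y => ((u⁻¹ : κˣ) : κ) • y) h
  simpa [smul_smul] using h2

include κ in
theorem half_two_inj {x : M} (h : x + x = 0) : x = 0 := by
  apply half_smul_inj κ 1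
  rw [pow_one, two_smul, h]

theorem half_torsion {n : ℤ} (hn : n ≠ 0) {x : κ} (h : n • x = 0) : x = 0 := by
  obtain ⟨m, a, hm⟩ := HalfLike.surj x
  apply half_smul_inj κ m
  rw [smul_eq_mul, hm]
  have : ((n * a : ℤ) : κ) = 0 := by
    rw [Int.cast_mul, ← hm, mul_left_comm, ← zsmul_eq_mul, h, mul_zero]
  rcases mul_eq_zero.mp (HalfLike.int_inj _ this) with h | h
  · exact absurd h hn
  · rw [h, Int.cast_zero]

variable {κ} in
/-- Additive maps between `ℤ[1/2]`-modules are linear. -/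
def linOfAdd (g : M →+ N) : M →ₗ[κ] N where
  toFun := g
  map_add' := map_add g
  map_smul' r x := by
    obtain ⟨n, a, hn⟩ := HalfLike.surj r
    have e : (2 : κ) ^ n = ((2 ^ n : ℤ) : κ) := by push_cast; rfl
    apply sub_eq_zero.mp
    apply half_smul_inj κ n
    rw [RingHom.id_apply, smul_sub, smul_smul, hn, Int.cast_smul_eq_zsmul, ← map_zsmul, e,
      Int.cast_smul_eq_zsmul, ← map_zsmul, ← Int.cast_smul_eq_zsmul κ, ← Int.cast_smul_eq_zsmul κ,
      smul_smul, ← e, hn, sub_self]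

theorem baer_characterModule : Module.Baer ℤ (CharacterModule κ) := by
  have hA : Module.Baer ℤ (AddCircle (1 : ℚ)) := Module.Baer.of_divisible _
  let _ : DivisibleBy (CharacterModule κ) ℤ := divisibleByOfSMulRightSurj _ _ (by
    intro n hn c
    obtain ⟨g, hg⟩ := Module.Baer.extension_property_addMonoidHom hA
      (zsmulAddGroupHom n : κ →+ κ) (by
        rw [injective_iff_map_eq_zero]
        intro x hx
        exact half_torsion κ hn hx) c
    refine ⟨g, ?_⟩
    apply CharacterModule.ext
    intro x
    have h1 := DFunLike.congr_fun hg x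
    have h2 : g (n • x) = c x := h1
    rw [map_zsmul] at h2
    exact h2)
  exact Module.Baer.of_divisible _

instance : Coef (CharacterModule κ) where
  two_inj _ h := half_two_inj κ h
  baer := baer_characterModule κ

end

/-! ### The scissors congruence group of a field -/

section
variable (κ : Type) [CommRing κ] [HalfLike κ] {K : Type} [Field K]

/-- An element of a field different from `0` and `1`, as an element of `W_K`. -/
def wmk (x : K) (h0 : x ≠ 0) (h1 : x ≠ 1) : WU K :=
  ⟨Units.mk0 x h0, (sub_ne_zero.mpr h1.symm).isUnit⟩

theorem wmk_coe (x : K) (h0 : x ≠ 0) (h1 : x ≠ 1) : (((wmk x h0 h1).1 : Kˣ) : K) = x := rfl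

theorem WU.ne_zero (a : WU K) : ((a.1 : Kˣ) : K) ≠ 0 := a.1.ne_zero

theorem WU.ne_one (a : WU K) : ((a.1 : Kˣ) : K) ≠ 1 := fun h => by
  have := a.2
  rw [h, sub_self] at this
  exact not_isUnit_zero this

theorem WU.eq_wmk (a : WU K) : a = wmk (a.1 : K) a.ne_zero a.ne_one :=
  Subtype.ext (Units.ext rfl)

open Classical in
/-- The generator `[x]` of `P(K)[1/2]`, with `[0] = [1] = 0`. -/
def pX (x : K) : Pgrp κ K := if h : x ≠ 0 ∧ x ≠ 1 then pcl κ (wmk x h.1 h.2) else 0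

theorem pX_coe (a : WU K) : pX κ ((a.1 : Kˣ) : K) = pcl κ a := by
  unfold pX
  rw [dif_pos ⟨a.ne_zero, a.ne_one⟩, ← WU.eq_wmk]

theorem pX_pos {x : K} (h0 : x ≠ 0) (h1 : x ≠ 1) : pX κ x = pcl κ (wmk x h0 h1) := by
  unfold pX
  rw [dif_pos ⟨h0, h1⟩]

theorem pX_zero : pX κ (0 : K) = 0 := by unfold pX; rw [dif_neg (by simp)]
theorem pX_one : pX κ (1 : K) = 0 := by unfold pX; rw [dif_neg (by simp)]

theorem pX_oneSub (a : WU K) : pcl κ (WU.oneSub a) = pX κ (1 - ((a.1 : Kˣ) : K)) := by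
  rw [← pX_coe]
  congr 1

theorem pX_five {a b : K} (a0 : a ≠ 0) (a1 : a ≠ 1) (b0 : b ≠ 0) (b1 : b ≠ 1) (hab : a ≠ b) :
    pX κ a - pX κ b + pX κ (b / a) - pX κ ((1 - a⁻¹) / (1 - b⁻¹)) + pX κ ((1 - a) / (1 - b)) = 0 := by
  have ha : 1 - a ≠ 0 := sub_ne_zero.mpr a1.symm
  have hb : 1 - b ≠ 0 := sub_ne_zero.mpr b1.symm
  have ha' : 1 - a⁻¹ ≠ 0 := sub_ne_zero.mpr fun h => a1 (inv_eq_one.mp h.symm)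
  have hb' : 1 - b⁻¹ ≠ 0 := sub_ne_zero.mpr fun h => b1 (inv_eq_one.mp h.symm)
  have c0 : b / a ≠ 0 := div_ne_zero b0 a0
  have c1 : b / a ≠ 1 := fun h => hab ((div_eq_one_iff_eq a0).mp h).symm
  have d0 := div_ne_zero ha' hb'
  have d1 : (1 - a⁻¹) / (1 - b⁻¹) ≠ 1 := fun h => hab (by
    have := (div_eq_one_iff_eq hb').mp h
    exact inv_injective (sub_right_injective this))
  have e0 := div_ne_zero ha hb
  have e1 : (1 - a) / (1 - b) ≠ 1 := fun h => hab (by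
    have := (div_eq_one_iff_eq hb).mp h
    exact sub_right_injective this)
  rw [pX_pos κ a0 a1, pX_pos κ b0 b1, pX_pos κ c0 c1, pX_pos κ d0 d1, pX_pos κ e0 e1]
  unfold pcl
  rw [← Submodule.Quotient.mk_sub, ← Submodule.Quotient.mk_add, ← Submodule.Quotient.mk_sub,
    ← Submodule.Quotient.mk_add, Submodule.Quotient.mk_eq_zero]
  apply Submodule.subset_span
  refine ⟨_, _, _, _, _, ?_, ?_, ?_, rfl⟩
  · exact div_mul_cancel₀ _ a0
  · simp only [Units.val_inv_eq_inv_val, wmk_coe]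
    exact div_mul_cancel₀ _ hb'
  · exact div_mul_cancel₀ _ hb

/-- The elements `[s] + [s⁻¹]` are multiplicative in `s`, by adding two five-term relations. -/
theorem pX_br {s t : K} (s0 : s ≠ 0) (s1 : s ≠ 1) (t0 : t ≠ 0) (t1 : t ≠ 1) (st : t * s ≠ 1) :
    (pX κ s + pX κ s⁻¹) + (pX κ t + pX κ t⁻¹) = pX κ (t * s) + pX κ (t * s)⁻¹ := by
  have hts : t * s - 1 ≠ 0 := sub_ne_zero.mpr st
  have ht : t - 1 ≠ 0 := sub_ne_zero.mpr t1
  obtain ⟨x, hx⟩ : ∃ x, x = (t - 1) / (t * s - 1) := ⟨_, rfl⟩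
  have x0 : x ≠ 0 := by rw [hx]; exact div_ne_zero ht hts
  have hxe : x * (t * s - 1) = t - 1 := by rw [hx]; exact div_mul_cancel₀ _ hts
  have x1 : x ≠ 1 := by
    rintro rfl
    apply s1
    have : t * (s - 1) = 0 := by linear_combination hxe
    exact sub_eq_zero.mp ((mul_eq_zero.mp this).resolve_left t0)
  have y0 : s * x ≠ 0 := mul_ne_zero s0 x0
  have y1 : s * x ≠ 1 := by
    intro h
    apply s1
    apply sub_eq_zero.mp
    have h2 : (1 - x) = 0 := by linear_combination hxe - t * h
    have h3 : x = 1 := (sub_eq_zero.mp h2).symm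
    exact absurd h3 x1
  have hxy : x ≠ s * x := fun h => s1 (by
    have : x * (s - 1) = 0 := by linear_combination -h
    exact sub_eq_zero.mp ((mul_eq_zero.mp this).resolve_left x0))
  have r1 := pX_five κ x0 x1 y0 y1 hxy
  have r2 := pX_five κ y0 y1 x0 x1 hxy.symm
  have d1 : 1 - x ≠ 0 := sub_ne_zero.mpr x1.symm
  have d2 : 1 - s * x ≠ 0 := sub_ne_zero.mpr y1.symm
  have e1 : s * x / x = s := mul_div_cancel_right₀ s x0
  have e2 : x / (s * x) = s⁻¹ := by rw [← e1, inv_div, e1]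
  have e3 : (1 - x) / (1 - s * x) = t := by
    rw [div_eq_iff d2]; linear_combination hxe
  have e4 : (1 - s * x) / (1 - x) = t⁻¹ := by rw [← e3, inv_div]
  have e5 : (1 - x⁻¹) / (1 - (s * x)⁻¹) = t * s := by
    rw [← e3]
    have d3 : s * x - 1 ≠ 0 := sub_ne_zero.mpr y1
    have : 1 - (s * x)⁻¹ = (s * x - 1) / (s * x) := by field_simp
    rw [this]
    field_simp
    rw [← neg_sub 1 x, ← neg_sub 1 (x * s), neg_div_neg_eq]
  have e6 : (1 - (s * x)⁻¹) / (1 - x⁻¹) = (t * s)⁻¹ := by rw [← e5, inv_div]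
  rw [e1, e5, e3] at r1
  rw [e2, e6, e4] at r2
  rw [← sub_eq_zero, ← add_zero (0 : Pgrp κ K)]
  nth_rw 1 [← r1]
  rw [← r2]
  abel

/-- Fields with enough elements for the general position arguments. -/
def BigF (K : Type) [Field K] : Prop := ∀ s : K, ∃ t : K, t ≠ 0 ∧ t ≠ 1 ∧ t * s ≠ 1

theorem pX_inv (hK : BigF K) (s : K) : pX κ s⁻¹ = - pX κ s := by
  by_cases s0 : s = 0
  · subst s0; simp [pX_zero]
  by_cases s1 : s = 1
  · subst s1; simp [pX_one]
  obtain ⟨t, t0, t1, ts⟩ := hK s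
  have h1 := pX_br κ s0 s1 t0 t1 ts
  have h2 := pX_br κ (s := s⁻¹) (t := t * s) (inv_ne_zero s0) (by simpa using s1) (mul_ne_zero t0 s0) ts
    (by rwa [mul_inv_cancel_right₀ s0])
  rw [mul_inv_cancel_right₀ s0, inv_inv, ← h1] at h2
  apply eq_neg_of_add_eq_zero_left
  apply half_two_inj κ
  have : pX κ s⁻¹ + pX κ s + (pX κ s⁻¹ + pX κ s) =
    (pX κ s⁻¹ + pX κ s + (pX κ s + pX κ s⁻¹ + (pX κ t + pX κ t⁻¹))) - (pX κ t + pX κ t⁻¹) := by abel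
  rw [this, h2, sub_self]

theorem pX_const {x y : K} (x0 : x ≠ 0) (x1 : x ≠ 1) (y0 : y ≠ 0) (y1 : y ≠ 1) :
    pX κ x + pX κ (1 - x) = pX κ y + pX κ (1 - y) := by
  by_cases hxy : x = y
  · rw [hxy]
  have d1 : 1 - x ≠ 0 := sub_ne_zero.mpr x1.symm
  have d2 : 1 - y ≠ 0 := sub_ne_zero.mpr y1.symm
  have d3 : y - 1 ≠ 0 := sub_ne_zero.mpr y1
  have d4 : x - 1 ≠ 0 := sub_ne_zero.mpr x1
  have r1 := pX_five κ x0 x1 y0 y1 hxy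
  have r2 := pX_five κ (a := 1 - y) (b := 1 - x) d2 (by simpa using y0) d1 (by simpa using x0)
    (fun h => hxy (sub_right_injective h).symm)
  have e : (1 - (1 - y)⁻¹) / (1 - (1 - x)⁻¹) = (1 - x⁻¹) / (1 - y⁻¹) := by
    have f1 : 1 - (1 - y)⁻¹ = - y / (1 - y) := by field_simp; ring
    have f2 : 1 - (1 - x)⁻¹ = - x / (1 - x) := by field_simp; ring
    have f3 : 1 - y⁻¹ = (y - 1) / y := by field_simp
    have f4 : 1 - x⁻¹ = (x - 1) / x := by field_simp
    rw [f1, f2, f3, f4]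
    field_simp
    ring
  rw [e, sub_sub_cancel, sub_sub_cancel] at r2
  rw [← sub_eq_zero, ← sub_zero (0 : Pgrp κ K)]
  nth_rw 1 [← r1]
  rw [← r2]
  abel

variable (K) in
/-- The subgroup of `P(K)[1/2]` generated by the constant `c_K`. -/
def pC : Submodule κ (Pgrp κ K) :=
  Submodule.span κ {x : Pgrp κ K | ∃ a : WU K, x = pcl κ a + pcl κ (WU.oneSub a)}

theorem pX_one_sub_mem (x : K) : pX κ x + pX κ (1 - x) ∈ pC κ K := by
  by_cases x0 : x = 0
  · subst x0; simp [pX_zero, pX_one]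
  by_cases x1 : x = 1
  · subst x1; simp [pX_zero, pX_one]
  apply Submodule.subset_span
  refine ⟨wmk x x0 x1, ?_⟩
  rw [← pX_coe, pX_oneSub, wmk_coe]

/-- If `K` contains a primitive sixth root of unity `ζ`, then `c_K = [ζ] + [ζ⁻¹] = 0`. -/
theorem pC_eq_bot (hK : BigF K) (ζ : K) (hζ : ζ ^ 2 - ζ + 1 = 0) : pC κ K = ⊥ := by
  rw [pC, Submodule.span_eq_bot]
  rintro _ ⟨a, rfl⟩
  have z0 : ζ ≠ 0 := by rintro rfl; simp at hζ
  have z1 : ζ ≠ 1 := by rintro rfl; simp at hζ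
  rw [pX_oneSub, ← pX_coe, pX_const κ a.ne_zero a.ne_one z0 z1]
  have : 1 - ζ = ζ⁻¹ := by
    apply eq_inv_of_mul_eq_one_left
    linear_combination -hζ
  rw [this, pX_inv κ hK, add_neg_cancel]

theorem WU_ext_lin {M : Type*} [AddCommGroup M] [Module κ M] {f g : Pgrp κ K →ₗ[κ] M}
    (h : ∀ a, f (pcl κ a) = g (pcl κ a)) : f = g := by
  apply Submodule.linearMap_qext
  apply Finsupp.lhom_ext'
  intro a
  apply LinearMap.ext_ring
  exact h a

/-- The function on `K` induced by a functional on `P(K)[1/2]` killing `c_K`. -/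
structure IsBlochF {I : Type} [AddCommGroup I] (X : K → I) : Prop where
  zero : X 0 = 0
  one : X 1 = 0
  inv : ∀ x, X x⁻¹ = -X x
  one_sub : ∀ x, X (1 - x) = -X x
  five : ∀ a b c : K, a ≠ 0 → b ≠ 0 → c ≠ 0 →
    X (a / b) + X (b / c) - X (a / c) = X ((b - c) * a / ((a - c) * b)) - X ((b - c) / (a - c))

theorem isBlochF (hK : BigF K) {I : Type} [AddCommGroup I] [Module κ I]
    (χ : Pgrp κ K →ₗ[κ] I) (hχ : ∀ x ∈ pC κ K, χ x = 0) : IsBlochF (fun x => χ (pX κ x)) := by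
  have h0 : χ (pX κ 0) = 0 := by rw [pX_zero, map_zero]
  have h1 : χ (pX κ 1) = 0 := by rw [pX_one, map_zero]
  have hi : ∀ x, χ (pX κ x⁻¹) = -χ (pX κ x) := fun x => by rw [pX_inv κ hK, map_neg]
  have hs : ∀ x, χ (pX κ (1 - x)) = -χ (pX κ x) := fun x => by
    apply eq_neg_of_add_eq_zero_right
    rw [← map_add]
    exact hχ _ (pX_one_sub_mem κ x)
  refine ⟨h0, h1, hi, hs, ?_⟩
  intro a b c a0 b0 c0
  by_cases hab : a = b
  · subst hab
    rw [div_self a0, h1]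
    by_cases hz : a = c
    · subst hz; simp [h0, h1, a0]
    · have : a - c ≠ 0 := sub_ne_zero.mpr hz
      rw [div_self (mul_ne_zero this a0), div_self this]; simp
  by_cases hbc : b = c
  · subst hbc; simp [h0, h1, b0]
  by_cases hac : a = c
  · subst hac
    have := hi (a / b)
    rw [inv_div] at this
    simp [h0, h1, a0, this]
  have q0 : a - c ≠ 0 := sub_ne_zero.mpr hac
  have q1 : b - c ≠ 0 := sub_ne_zero.mpr hbc
  have q2 : c - a ≠ 0 := sub_ne_zero.mpr (Ne.symm hac)
  have q3 : a - b ≠ 0 := sub_ne_zero.mpr hab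
  -- the five-term relation for the pair `(a / c, b / c)`
  have r := congrArg χ (pX_five κ (a := a / c) (b := b / c) (div_ne_zero a0 c0)
    (fun h => hac ((div_eq_one_iff_eq c0).mp h)) (div_ne_zero b0 c0)
    (fun h => hbc ((div_eq_one_iff_eq c0).mp h)) (fun h => hab ((div_left_inj' c0).mp h)))
  have e1 : b / c / (a / c) = (a / b)⁻¹ := by field_simp
  have e2 : (1 - (a / c)⁻¹) / (1 - (b / c)⁻¹) = ((b - c) * a / ((a - c) * b))⁻¹ := by
    have f1 : 1 - (a / c)⁻¹ = (a - c) / a := by field_simp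
    have f2 : 1 - (b / c)⁻¹ = (b - c) / b := by field_simp
    rw [f1, f2]; field_simp
  have e3 : (1 - a / c) / (1 - b / c) = ((b - c) / (a - c))⁻¹ := by
    have f1 : 1 - a / c = (c - a) / c := by field_simp
    have f2 : 1 - b / c = (c - b) / c := by field_simp
    have q4 : c - b ≠ 0 := sub_ne_zero.mpr (Ne.symm hbc)
    rw [f1, f2, inv_div, div_div_div_cancel_right₀ c0, div_eq_div_iff q4 q1]; ring
  rw [e1, e2, e3] at r
  simp only [map_add, map_sub, map_zero, hi] at r
  rw [← sub_eq_zero, ← neg_eq_zero, ← r]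
  abel

end

section
open LocR

variable {I A : Type} [AddCommGroup I] [CommRing A] [LocR A]

/-! ### Pulling back along the place `ℚ → 𝔽_p ∪ {∞}` -/

open Classical in
variable (A) in
/-- The pull-back to `ℚ` of a function on the residue field, with value `0` off `ℤ_(p)`. -/
def Dp (X : k A → I) (r : ℚ) : I := if h : ∃ a : A, ι a = r then X (π (Classical.choose h)) else 0

theorem Dp_iota (X : k A → I) (a : A) : Dp A X (ι a) = X (π a) := by
  have h : ∃ b : A, ι b = ι a := ⟨a, rfl⟩
  unfold Dp
  rw [dif_pos h, ι_inj (Classical.choose_spec h)]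

/-- A rational number or its inverse lies in the valuation ring. -/
theorem val_cases (r : ℚ) : (∃ a : A, ι a = r) ∨ ∃ a : A, π a = 0 ∧ ι a ≠ 0 ∧ (ι a)⁻¹ = r := by
  by_cases hd : π ((r.den : ℕ) : A) = 0
  · right
    have hn : π ((r.num : ℤ) : A) ≠ 0 := by
      intro hn
      rw [map_natCast, ZMod.natCast_eq_zero_iff] at hd
      rw [map_intCast, ZMod.intCast_zmod_eq_zero_iff_dvd] at hn
      have h1 : p A ∣ r.num.natAbs := Int.natCast_dvd.mp hn
      have h2 := Nat.dvd_gcd h1 hd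
      rw [r.reduced] at h2
      exact (hp (A := A)).one_lt.ne' (Nat.dvd_one.mp h2)
    have e : ι ((r.den : A) * ((un (r.num : A))⁻¹ : Aˣ)) = r⁻¹ := by
      rw [map_mul, iota_inv, un_coe hn, map_natCast, map_intCast, ← div_eq_mul_inv]
      conv_rhs => rw [← Rat.num_div_den r, inv_div]
    have r0 : r ≠ 0 := by
      rintro rfl
      simp at hn
    refine ⟨(r.den : A) * ((un (r.num : A))⁻¹ : Aˣ), ?_, ?_, ?_⟩
    · rw [map_mul, hd, zero_mul]
    · rw [e]; exact inv_ne_zero r0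
    · rw [e, inv_inv]
  · left
    refine ⟨(r.num : A) * ((un (r.den : A))⁻¹ : Aˣ), ?_⟩
    rw [map_mul, iota_inv, un_coe hd, map_natCast, map_intCast, ← div_eq_mul_inv, Rat.num_div_den]

theorem iota_div {x y : A} (hy : π y ≠ 0) : ι x / ι y = ι (x * ((un y)⁻¹ : Aˣ)) := by
  rw [map_mul, iota_inv, un_coe hy, div_eq_mul_inv]

section
variable {X : k A → I} (hX : IsBlochF X)
include hX

theorem Dp_inv_zero {a : A} (ha : π a = 0) : Dp A X (ι a)⁻¹ = 0 := by
  by_cases h : ∃ b : A, ι b = (ι a)⁻¹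
  · obtain ⟨b, hb⟩ := h
    rw [← hb, Dp_iota]
    by_cases a0 : ι a = 0
    · rw [a0, inv_zero, ← map_zero (ι : A →+* ℚ)] at hb
      rw [ι_inj hb, map_zero, hX.zero]
    · exfalso
      have : ι (a * b) = ι (1 : A) := by rw [map_mul, hb, map_one, mul_inv_cancel₀ a0]
      have := congrArg π (ι_inj this)
      rw [map_mul, ha, zero_mul, map_one] at this
      exact zero_ne_one this
  · unfold Dp; rw [dif_neg h]

theorem Dq {x y : A} (h : π x ≠ 0 ∨ π y ≠ 0) : Dp A X (ι x / ι y) = X (π x / π y) := by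
  by_cases hy : π y = 0
  · have hx : π x ≠ 0 := h.resolve_right (fun h => h hy)
    rw [← inv_div, iota_div hx, Dp_inv_zero hX (by rw [map_mul, hy, zero_mul]), hy, div_zero, hX.zero]
  · rw [iota_div hy, Dp_iota, map_mul, pi_inv, un_coe hy, div_eq_mul_inv]

theorem Dv {x y : A} (h : π x ≠ 0) (hxy : π x = π y) (r : ℚ) :
    Dp A X (r * (ι x / ι y)) = Dp A X r := by
  have hy : π y ≠ 0 := hxy ▸ h
  rcases val_cases (A := A) r with ⟨a, rfl⟩ | ⟨a, ha, -, rfl⟩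
  · rw [← mul_div_assoc, ← map_mul, Dq hX (Or.inr hy), Dp_iota, map_mul, hxy,
      mul_div_cancel_right₀ _ hy]
  · have : (ι a)⁻¹ * (ι x / ι y) = ι x / ι (a * y) := by
      rw [map_mul, div_eq_mul_inv, div_eq_mul_inv, mul_inv]; ring
    rw [this, Dq hX (Or.inl h), Dp_inv_zero hX ha, map_mul, ha, zero_mul, div_zero, hX.zero]

theorem Dp_inv (r : ℚ) : Dp A X r⁻¹ = - Dp A X r := by
  have key : ∀ a : A, Dp A X (ι a)⁻¹ = X (π a)⁻¹ := fun a => by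
    have := Dq hX (x := 1) (y := a) (Or.inl (by simp))
    simpa using this
  rcases val_cases (A := A) r with ⟨a, rfl⟩ | ⟨a, -, -, rfl⟩
  · rw [key, Dp_iota, hX.inv]
  · rw [key, inv_inv, Dp_iota, hX.inv, neg_neg]

theorem Dp_one_sub (r : ℚ) : Dp A X (1 - r) = - Dp A X r := by
  rcases val_cases (A := A) r with ⟨a, rfl⟩ | ⟨a, ha, a0, rfl⟩
  · rw [← map_one (ι : A →+* ℚ), ← map_sub, Dp_iota, Dp_iota, map_sub, map_one, hX.one_sub]
  · have : 1 - (ι a)⁻¹ = ι (a - 1) / ι a := by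
      rw [map_sub, map_one]; field_simp
    rw [this, Dq hX (Or.inl (by rw [map_sub, ha]; simp)), Dp_inv_zero hX ha, ha, div_zero, hX.zero, neg_zero]

/-- The pull-back satisfies the five-term relation at points of the projective plane over `ℚ`
with primitive integral coordinates; the residues that vanish decide the shape of the argument. -/
theorem Dp_five (x y z : A) (h : π x ≠ 0 ∨ π y ≠ 0 ∨ π z ≠ 0)
    (x0 : ι x ≠ 0) (y0 : ι y ≠ 0) (z0 : ι z ≠ 0) (hxz : ι x - ι z ≠ 0) :
    Dp A X (ι x / ι y) + Dp A X (ι y / ι z) - Dp A X (ι x / ι z) =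
      Dp A X ((ι y - ι z) * ι x / ((ι x - ι z) * ι y)) - Dp A X ((ι y - ι z) / (ι x - ι z)) := by
  have e4 : (ι y - ι z) * ι x / ((ι x - ι z) * ι y) = ι ((y - z) * x) / ι ((x - z) * y) := by
    simp only [map_mul, map_sub]
  have e5 : (ι y - ι z) / (ι x - ι z) = ι (y - z) / ι (x - z) := by simp only [map_sub]
  by_cases hx : π x = 0 <;> by_cases hy : π y = 0 <;> by_cases hz : π z = 0
  · simp_all
  · rw [e5, Dq hX (x := y) (y := z) (Or.inr hz), Dq hX (x := x) (y := z) (Or.inr hz),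
      Dq hX (x := y - z) (y := x - z) (Or.inl (by rw [map_sub, hy, zero_sub]; exact neg_ne_zero.mpr hz))]
    have : (ι y - ι z) * ι x / ((ι x - ι z) * ι y) = (ι x / ι y) * (ι (y - z) / ι (x - z)) := by
      rw [← e5]; field_simp
    rw [this, Dv hX (by rw [map_sub, hy, zero_sub]; exact neg_ne_zero.mpr hz)
      (by rw [map_sub, map_sub, hx, hy])]
    have hz' : (0 : k A) - π z ≠ 0 := by rw [zero_sub]; exact neg_ne_zero.mpr hz
    rw [map_sub, map_sub, hx, hy, div_self hz', zero_div, hX.zero, hX.one]; simp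
  · rw [e5, Dq hX (x := x) (y := y) (Or.inr hy), Dq hX (x := y) (y := z) (Or.inl hy),
      Dq hX (x := y - z) (y := x - z) (Or.inl (by rw [map_sub, hz, sub_zero]; exact hy))]
    have : (ι y - ι z) * ι x / ((ι x - ι z) * ι y) = (1 - (ι x / ι z)⁻¹)⁻¹ * (ι (y - z) / ι y) := by
      have : 1 - (ι x / ι z)⁻¹ = (ι x - ι z) / ι x := by field_simp
      rw [this, map_sub]; field_simp
    rw [this, Dv hX (by rw [map_sub, hz, sub_zero]; exact hy) (by rw [map_sub, hz, sub_zero]),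
      Dp_inv hX, Dp_one_sub hX, Dp_inv hX, map_sub, map_sub, hx, hz]
    simp [hX.zero]
  · rw [e4, e5, Dq hX (x := x) (y := y) (Or.inr hy), Dq hX (x := y) (y := z) (Or.inr hz),
      Dq hX (x := x) (y := z) (Or.inr hz),
      Dq hX (x := (y - z) * x) (y := (x - z) * y)
        (Or.inr (by rw [map_mul, map_sub, hx, zero_sub]; exact mul_ne_zero (neg_ne_zero.mpr hz) hy)),
      Dq hX (x := y - z) (y := x - z) (Or.inr (by rw [map_sub, hx, zero_sub]; exact neg_ne_zero.mpr hz))]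
    have : (π y - π z) / (0 - π z) = 1 - π y / π z := by field_simp; ring
    simp only [map_mul, map_sub, hx]
    rw [this, hX.one_sub]
    simp [hX.zero]
  · rw [e5, Dq hX (x := x) (y := y) (Or.inl hx), Dq hX (x := x) (y := z) (Or.inl hx),
      Dq hX (x := y - z) (y := x - z) (Or.inr (by rw [map_sub, hz, sub_zero]; exact hx))]
    have : (ι y - ι z) * ι x / ((ι x - ι z) * ι y) = (1 - (ι y / ι z)⁻¹) * (ι x / ι (x - z)) := by
      have : 1 - (ι y / ι z)⁻¹ = (ι y - ι z) / ι y := by field_simp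
      rw [this, map_sub]; field_simp
    rw [this, Dv hX hx (by rw [map_sub, hz, sub_zero]),
      Dp_one_sub hX, Dp_inv hX, map_sub, map_sub, hy, hz]
    simp [hX.zero]
  · rw [e4, e5, Dq hX (x := x) (y := y) (Or.inl hx), Dq hX (x := y) (y := z) (Or.inr hz),
      Dq hX (x := x) (y := z) (Or.inr hz),
      Dq hX (x := (y - z) * x) (y := (x - z) * y)
        (Or.inl (by rw [map_mul, map_sub, hy, zero_sub]; exact mul_ne_zero (neg_ne_zero.mpr hz) hx)),
      Dq hX (x := y - z) (y := x - z) (Or.inl (by rw [map_sub, hy, zero_sub]; exact neg_ne_zero.mpr hz))]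
    have : (0 - π z) / (π x - π z) = (1 - π x / π z)⁻¹ := by
      have : 1 - π x / π z = (π z - π x) / π z := by field_simp
      rw [this, inv_div, zero_sub, ← neg_sub (π z), neg_div_neg_eq]
    simp only [map_mul, map_sub, hy]
    rw [this, hX.inv, hX.one_sub]
    simp [hX.zero]
  · rw [e4, e5, Dq hX (x := x) (y := y) (Or.inr hy), Dq hX (x := y) (y := z) (Or.inl hy),
      Dq hX (x := x) (y := z) (Or.inl hx),
      Dq hX (x := (y - z) * x) (y := (x - z) * y)
        (Or.inr (by rw [map_mul, map_sub, hz, sub_zero]; exact mul_ne_zero hx hy)),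
      Dq hX (x := y - z) (y := x - z) (Or.inr (by rw [map_sub, hz, sub_zero]; exact hx))]
    simp only [map_mul, map_sub, hz, sub_zero, div_zero]
    rw [mul_comm (π y), div_self (mul_ne_zero hx hy), ← inv_div (π x), hX.inv]
    simp [hX.zero, hX.one]
  · rw [Dq hX (x := x) (y := y) (Or.inr hy), Dq hX (x := y) (y := z) (Or.inr hz),
      Dq hX (x := x) (y := z) (Or.inr hz)]
    by_cases heq : π x = π z ∧ π y = π z
    · have : (ι y - ι z) * ι x / ((ι x - ι z) * ι y) = (ι y - ι z) / (ι x - ι z) * (ι x / ι y) := by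
        field_simp
      rw [this, Dv hX hx (heq.1.trans heq.2.symm), heq.1, heq.2, div_self hz, hX.one]; simp
    · have h5 : π (y - z) ≠ 0 ∨ π (x - z) ≠ 0 := by
        rw [map_sub, map_sub, sub_ne_zero, sub_ne_zero]
        tauto
      have h4 : π ((y - z) * x) ≠ 0 ∨ π ((x - z) * y) ≠ 0 := by
        rw [map_mul, map_mul]
        exact h5.imp (fun h => mul_ne_zero h hx) (fun h => mul_ne_zero h hy)
      rw [e4, e5, Dq hX h4, Dq hX h5]
      simp only [map_mul, map_sub]
      exact hX.five _ _ _ hx hy hz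

theorem isBloch_Dp : IsBloch (Dp A X) := by
  refine IsBloch.of_generic ?_ ?_ (Dp_inv hX) (Dp_one_sub hX) ?_
  · rw [← map_zero (ι : A →+* ℚ), Dp_iota, map_zero, hX.zero]
  · rw [← map_one (ι : A →+* ℚ), Dp_iota, map_one, hX.one]
  intro α β γ a0 b0 c0 _ _ hac
  -- primitive integral coordinates
  obtain ⟨s, x, y, z, s0, rfl, rfl, rfl, h⟩ : ∃ (s : ℚ) (x y z : A), s ≠ 0 ∧ s * ι x = α ∧ s * ι y = β ∧
      s * ι z = γ ∧ (π x ≠ 0 ∨ π y ≠ 0 ∨ π z ≠ 0) := by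
    obtain ⟨s, x, y, s0, hx, hy, h⟩ : ∃ (s : ℚ) (x y : A), s ≠ 0 ∧ s * ι x = α ∧ s * ι y = β ∧
        (π x ≠ 0 ∨ π y ≠ 0) := by
      rcases val_cases (A := A) (α / β) with ⟨a, ha⟩ | ⟨a, -, a0', ha⟩
      · exact ⟨β, a, 1, b0, by rw [ha]; field_simp, by simp, Or.inr (by simp)⟩
      · refine ⟨α, 1, a, a0, by simp, ?_, Or.inl (by simp)⟩
        rw [← inv_inv (ι a), ha]; field_simp
    rcases val_cases (A := A) (γ / s) with ⟨a, ha⟩ | ⟨a, -, a0', ha⟩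
    · refine ⟨s, x, y, a, s0, hx, hy, by rw [ha]; field_simp, ?_⟩
      tauto
    · have hs : γ * ι a = s := by rw [← inv_inv (ι a), ha]; field_simp
      refine ⟨γ, a * x, a * y, 1, c0, ?_, ?_, by simp, Or.inr (Or.inr (by simp))⟩
      · rw [map_mul, ← mul_assoc, hs, hx]
      · rw [map_mul, ← mul_assoc, hs, hy]
  have := Dp_five hX x y z h (right_ne_zero_of_mul a0) (right_ne_zero_of_mul b0)
    (right_ne_zero_of_mul c0) (fun h => hac (by rw [sub_eq_zero.mp h]))
  rw [mul_div_mul_left _ _ s0, mul_div_mul_left _ _ s0, mul_div_mul_left _ _ s0, ← mul_sub,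
    ← mul_sub, mul_div_mul_left _ _ s0, mul_mul_mul_comm s _ s (ι x),
    mul_mul_mul_comm s _ s (ι y), mul_div_mul_left _ _ (mul_ne_zero s0 s0)]
  exact this

end

end

section
open GroupHomology

/-! ### Homology classes and cocycles -/

section
variable {κ : Type} [CommRing κ] [HalfLike κ]

/-- Linear functionals with values in the character module extend. -/
theorem char_extend {M N : Type*} [AddCommGroup M] [AddCommGroup N] [Module κ M] [Module κ N]
    (φ : M →ₗ[κ] N) (D : M →ₗ[κ] CharacterModule κ) (h : ∀ x, φ x = 0 → D x = 0) :
    ∃ g : N →ₗ[κ] CharacterModule κ, ∀ x, g (φ x) = D x := by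
  obtain ⟨g, hg⟩ := Coef.extend φ.toAddMonoidHom D.toAddMonoidHom h
  exact ⟨linOfAdd g, hg⟩

/-- Linear functionals with values in the character module separate points from submodules. -/
theorem char_separate {M : Type*} [AddCommGroup M] [Module κ M] (N : Submodule κ M) (y : M)
    (h : ∀ l : M →ₗ[κ] CharacterModule κ, (∀ x ∈ N, l x = 0) → l y = 0) : y ∈ N := by
  rw [← Submodule.Quotient.mk_eq_zero]
  apply CharacterModule.eq_zero_of_character_apply
  intro c
  let l : (M ⧸ N) →ₗ[κ] CharacterModule κ :=
    { toFun := fun x => (c.comp ((LinearMap.toSpanSingleton κ (M ⧸ N) x).toAddMonoidHom) : κ →+ _)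
      map_add' := fun x x' => by
        apply CharacterModule.ext
        intro r
        change c (r • (x + x')) = c (r • x) + c (r • x')
        rw [smul_add, map_add]
      map_smul' := fun s x => by
        apply CharacterModule.ext
        intro r
        change c (r • (s • x)) = c ((s • r) • x)
        rw [smul_smul, smul_eq_mul, mul_comm] }
  have := h (l.comp N.mkQ) (fun x hx => by
    rw [LinearMap.comp_apply, Submodule.mkQ_apply, (Submodule.Quotient.mk_eq_zero N).mpr hx, map_zero])
  have h2 := DFunLike.congr_fun this (1 : κ)
  change c ((1 : κ) • (Submodule.Quotient.mk y : M ⧸ N)) = 0 at h2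
  rwa [one_smul] at h2

variable {G : Type} [Group G]

/-- Evaluation of a function of two variables on `2`-chains. -/
def ev2 (f : G → G → CharacterModule κ) : Ch κ G 2 →ₗ[κ] CharacterModule κ :=
  Finsupp.linearCombination κ (fun v : Fin 2 → G => f (v 0) (v 1))

theorem ev2_single (f : G → G → CharacterModule κ) (a b : G) : ev2 f (Finsupp.single ![a, b] 1) = f a b := by
  simp [ev2]

theorem dfun_two (a b : G) : dfun κ G ![a, b] =
    Finsupp.single ![b] (1 : κ) - Finsupp.single ![a * b] 1 + Finsupp.single ![a] 1 := by
  have f0 : face 0 ![a, b] = ![b] := by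
    funext m; fin_cases m; simp [face]
  have f1 : face 1 ![a, b] = ![a * b] := by
    funext m; fin_cases m; simp [face]
  have f2 : face 2 ![a, b] = ![a] := by
    funext m; fin_cases m; simp [face]
  unfold dfun
  rw [show (1 : ℕ) + 2 = 3 from rfl, Finset.sum_range_succ, Finset.sum_range_succ,
    Finset.sum_range_one, f0, f1, f2]
  simp only [pow_zero, pow_one, one_smul]
  module

theorem dfun_three (a b c : G) : dfun κ G ![a, b, c] =
    Finsupp.single ![b, c] (1 : κ) - Finsupp.single ![a * b, c] 1 + Finsupp.single ![a, b * c] 1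
      - Finsupp.single ![a, b] 1 := by
  have f0 : face 0 ![a, b, c] = ![b, c] := by
    funext m; fin_cases m <;> simp [face]
  have f1 : face 1 ![a, b, c] = ![a * b, c] := by
    funext m; fin_cases m <;> simp [face]
  have f2 : face 2 ![a, b, c] = ![a, b * c] := by
    funext m; fin_cases m <;> simp [face]
  have f3 : face 3 ![a, b, c] = ![a, b] := by
    funext m; fin_cases m <;> simp [face]
  unfold dfun
  rw [show (2 : ℕ) + 2 = 4 from rfl, Finset.sum_range_succ, Finset.sum_range_succ,
    Finset.sum_range_succ, Finset.sum_range_one, f0, f1, f2, f3]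
  module

theorem vec_two (v : Fin 2 → G) : v = ![v 0, v 1] := by
  funext m; fin_cases m <;> rfl

theorem vec_three (v : Fin 3 → G) : v = ![v 0, v 1, v 2] := by
  funext m; fin_cases m <;> rfl

theorem ev2_dd {f : G → G → CharacterModule κ} (hf : IsCoc f) (x : Ch κ G 3) : ev2 f (dd κ G 2 x) = 0 := by
  have : (ev2 f).comp (dd κ G 2) = 0 := by
    refine Finsupp.lhom_ext' (fun v => LinearMap.ext_ring ?_)
    rw [vec_three v]
    simp only [LinearMap.comp_apply, Finsupp.lsingle_apply, LinearMap.zero_apply]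
    rw [dd_single, dfun_three]
    simp only [map_add, map_sub, ev2_single]
    have := hf (v 0) (v 1) (v 2)
    rw [sub_eq_zero, sub_add_eq_add_sub, sub_eq_iff_eq_add, this.symm]
  exact DFunLike.congr_fun this x

/-- The functional on `H₂` defined by a cocycle. -/
def lam {f : G → G → CharacterModule κ} (hf : IsCoc f) : H κ G 2 →ₗ[κ] CharacterModule κ :=
  ((LinearMap.range (dd κ G 2)).liftQ (ev2 f) (by
    rintro _ ⟨x, rfl⟩
    exact ev2_dd hf x)).comp (Hsub κ G 2).subtype

theorem lam_hcl {f : G → G → CharacterModule κ} (hf : IsCoc f) (x : Ch κ G 2) (hx : x ∈ cycles κ G 2) :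
    lam hf (hcl κ G x hx) = ev2 f x := rfl

/-- Every functional on `H₂` is defined by a cocycle. -/
theorem exists_lam (l : H κ G 2 →ₗ[κ] CharacterModule κ) :
    ∃ (f : G → G → CharacterModule κ) (hf : IsCoc f), l = lam hf := by
  obtain ⟨g, hg⟩ := char_extend (Hsub κ G 2).subtype l (fun x hx => by
    have : x = 0 := Subtype.ext hx
    rw [this, map_zero])
  let f : G → G → CharacterModule κ := fun a b => g (Submodule.Quotient.mk (Finsupp.single ![a, b] 1))
  have hev : ∀ x, ev2 f x = g (Submodule.Quotient.mk x) := by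
    have : ev2 f = g.comp (LinearMap.range (dd κ G 2)).mkQ := by
      refine Finsupp.lhom_ext' (fun v => LinearMap.ext_ring ?_)
      rw [vec_two v]
      simp only [LinearMap.comp_apply, Finsupp.lsingle_apply]
      rw [ev2_single]
      rfl
    exact fun x => DFunLike.congr_fun this x
  have hf : IsCoc f := by
    intro a b c
    have h1 : ev2 f (dfun κ G ![a, b, c]) = 0 := by
      rw [hev, ← dd_single, (Submodule.Quotient.mk_eq_zero _).mpr (LinearMap.mem_range_self _ _), map_zero]
    rw [dfun_three] at h1
    simp only [map_add, map_sub, ev2_single] at h1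
    rw [sub_eq_zero, sub_add_eq_add_sub, sub_eq_iff_eq_add] at h1
    exact h1.symm
  refine ⟨f, hf, ?_⟩
  apply LinearMap.ext
  rintro ⟨_, x, hx, rfl⟩
  rw [← hg]
  exact (hev x).symm

theorem H_ind (y : H κ G 2) : ∃ x hx, y = hcl κ G x hx := by
  obtain ⟨_, x, hx, rfl⟩ := y
  exact ⟨x, hx, rfl⟩

theorem ev2_cob {f : G → G → CharacterModule κ} (hf : IsCob f) (x : Ch κ G 2) (hx : x ∈ cycles κ G 2) :
    ev2 f x = 0 := by
  obtain ⟨θ, hθ⟩ := hf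
  let e : Ch κ G 1 →ₗ[κ] CharacterModule κ :=
    Finsupp.linearCombination κ (fun v : Fin 1 → G => θ (v 0))
  have : ev2 f = e.comp (dd κ G 1) := by
    refine Finsupp.lhom_ext' (fun v => LinearMap.ext_ring ?_)
    rw [vec_two v]
    simp only [LinearMap.comp_apply, Finsupp.lsingle_apply]
    rw [dd_single, dfun_two, ev2_single, hθ]
    simp only [map_add, map_sub, e, Finsupp.linearCombination_single, one_smul, Matrix.cons_val_zero]
    abel
  rw [this, LinearMap.comp_apply]
  have hx' : dd κ G 1 x = 0 := hx
  rw [hx', map_zero]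

theorem cob_of_ev2 {f : G → G → CharacterModule κ} (h : ∀ x ∈ cycles κ G 2, ev2 f x = 0) : IsCob f := by
  obtain ⟨g, hg⟩ := char_extend (dd κ G 1) (ev2 f) h
  refine ⟨fun a => g (Finsupp.single ![a] 1), fun a b => ?_⟩
  have := hg (Finsupp.single ![a, b] 1)
  rw [dd_single, dfun_two, ev2_single] at this
  rw [← this, map_add, map_sub]
  abel

theorem lam_eq_zero_iff {f : G → G → CharacterModule κ} (hf : IsCoc f) : lam hf = 0 ↔ IsCob f := by
  constructor
  · intro h
    refine cob_of_ev2 (fun x hx => ?_)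
    rw [← lam_hcl hf x hx, h, LinearMap.zero_apply]
  · intro h
    apply LinearMap.ext
    intro y
    obtain ⟨x, hx, rfl⟩ := H_ind y
    rw [lam_hcl, ev2_cob h x hx, LinearMap.zero_apply]

theorem lam_Hmap {G' : Type} [Group G'] (φ : G' →* G) {f : G → G → CharacterModule κ} (hf : IsCoc f)
    (hf' : IsCoc (fun a b : G' => f (φ a) (φ b))) (y : H κ G' 2) :
    lam hf (Hmap κ φ 2 y) = lam hf' y := by
  obtain ⟨x, hx, rfl⟩ := H_ind y
  rw [Hmap_hcl, lam_hcl, lam_hcl]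
  have : (ev2 f).comp (chmap κ φ 2) = ev2 (fun a b : G' => f (φ a) (φ b)) := by
    refine Finsupp.lhom_ext' (fun v => LinearMap.ext_ring ?_)
    simp only [LinearMap.comp_apply, Finsupp.lsingle_apply]
    rw [chmap_single]
    simp [ev2]
  exact DFunLike.congr_fun this x

theorem IsCoc.comap {G' : Type} [Group G'] (φ : G' →* G) {f : G → G → CharacterModule κ} (hf : IsCoc f) :
    IsCoc (fun a b : G' => f (φ a) (φ b)) := by
  intro a b c
  simp only [map_mul]
  exact hf _ _ _

theorem lam_congr {f f' : G → G → CharacterModule κ} (hf : IsCoc f) (hf' : IsCoc f')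
    (h : IsCob (fun a b => f a b - f' a b)) : lam hf = lam hf' := by
  apply LinearMap.ext
  intro y
  obtain ⟨x, hx, rfl⟩ := H_ind y
  rw [lam_hcl, lam_hcl, ← sub_eq_zero, ← ev2_cob h x hx, ← LinearMap.sub_apply]
  congr 1
  refine Finsupp.lhom_ext' (fun v => LinearMap.ext_ring ?_)
  simp [ev2]

theorem lam_pont {f : G → G → CharacterModule κ} (hf : IsCoc f) (s t : G) (h : s * t = t * s) :
    lam hf (pontryagin κ s t h) = f s t - f t s := by
  unfold pontryagin
  rw [lam_hcl, map_sub, ev2_single, ev2_single]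

end

end

section
open LocR GroupHomology

section
variable {A : Type} [CommRing A] [LocR A] {κ : Type} [CommRing κ] [HalfLike κ]

/-! ### The map from the scissors congruence group to the homology of `Γ₀` -/

theorem bigF_k : BigF (k A) := by
  intro s
  have h2 : (2 : k A) ≠ 1 := fun h => one_ne_zero (α := k A) (by linear_combination h)
  have h3 : (3 : k A) ≠ 1 := fun h => two_ne (A := A) (by linear_combination h)
  by_cases h : 2 * s = 1
  · refine ⟨3, three_ne, h3, fun h' => ?_⟩
    have : s = 0 := by linear_combination h' - h
    rw [this, mul_zero] at h
    exact zero_ne_one h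
  · exact ⟨2, two_ne, h2, h⟩

variable (A) in
/-- A unit of `A` lifting an element of `W_k`. -/
def ulift (a : WU (k A)) : Aˣ := Classical.choose (exists_unit_lift (A := A) a.ne_zero)

theorem ulift_spec (a : WU (k A)) : π (ulift A a : A) = ((a.1 : (k A)ˣ) : k A) :=
  Classical.choose_spec (exists_unit_lift (A := A) a.ne_zero)

theorem one_sub_lift {u : A} (h : π u ≠ 1) : u + (un (1 - u) : A) = 1 := by
  rw [un_coe (by rw [map_sub, map_one]; exact sub_ne_zero.mpr h.symm)]; ring

theorem H_comm (u v : Aˣ) : (gdat A).H u * (gdat A).H v = (gdat A).H v * (gdat A).H u := by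
  rw [← (gdat A).H_mul, ← (gdat A).H_mul, mul_comm]

variable (A κ) in
/-- The homomorphism taking `[a]` to the Pontryagin product of the diagonal matrices of a lift
`u` of `a` and of `1 - u`, on the free module on `W_k`. -/
def xi0 : (WU (k A) →₀ κ) →ₗ[κ] H κ (Gam A) 2 :=
  Finsupp.linearCombination κ (fun a => pontryagin κ ((gdat A).H (ulift A a))
    ((gdat A).H (un (1 - (ulift A a : A)))) (H_comm _ _))

theorem lam_xi0 {f : Gam A → Gam A → CharacterModule κ} (hf : IsCoc f) (a : WU (k A)) (u t : Aˣ)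
    (h : (u : A) + t = 1) (ha : π (u : A) = ((a.1 : (k A)ˣ) : k A)) :
    lam hf (xi0 A κ (Finsupp.single a 1)) = om f u t := by
  unfold xi0
  rw [Finsupp.linearCombination_single, one_smul, lam_pont]
  exact (om_props hf).2 u t _ _ h (one_sub_lift (by rw [ulift_spec]; exact a.ne_one))
    (by rw [ulift_spec, ha])

theorem eq_zero_of_lam {G : Type} [Group G] (y : H κ G 2)
    (h : ∀ (f : G → G → CharacterModule κ) (hf : IsCoc f), lam hf y = 0) : y = 0 := by
  rw [← Submodule.mem_bot κ]
  apply char_separate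
  intro l _
  obtain ⟨f, hf, rfl⟩ := exists_lam l
  exact h f hf

/-- The alternating sum of the five terms `u ∧ (1 - u)` vanishes identically in the exterior
square of the units. -/
theorem IsAlt.five {I : Type} [AddCommGroup I] [Coef I] {η : Aˣ → Aˣ → I} (h : IsAlt η)
    (u v p q r : Aˣ) :
    η u p - η v q + η (v * u⁻¹) (r * u⁻¹) - η (p * v * u⁻¹ * q⁻¹) (r * u⁻¹ * q⁻¹)
      + η (p * q⁻¹) (r * q⁻¹) = 0 := by
  simp only [h.mul_left, h.mul_right, h.inv_left, h.inv_right, h.self]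
  rw [h.skew p u, h.skew q u]
  abel

theorem xi0_rel {x : WU (k A) →₀ κ} (hx : x ∈ PRel κ (k A)) : xi0 A κ x = 0 := by
  obtain ⟨a, b, c, d, e, hc, hd, he, rfl⟩ := hx
  apply eq_zero_of_lam
  intro f hf
  obtain ⟨u, hu⟩ : ∃ u : Aˣ, π (u : A) = ((a.1 : (k A)ˣ) : k A) := ⟨_, ulift_spec a⟩
  obtain ⟨v, hv⟩ : ∃ v : Aˣ, π (v : A) = ((b.1 : (k A)ˣ) : k A) := ⟨_, ulift_spec b⟩
  have hp := one_sub_lift (u := (u : A)) (by rw [hu]; exact a.ne_one)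
  have hq := one_sub_lift (u := (v : A)) (by rw [hv]; exact b.ne_one)
  generalize un (1 - (u : A)) = p at hp
  generalize un (1 - (v : A)) = q at hq
  obtain ⟨r, hr⟩ : ∃ r : Aˣ, (r : A) = u - v := by
    refine ⟨_, un_coe (A := A) ?_⟩
    rw [map_sub, hu, hv, ← hc]
    intro h0
    have : (1 - ((c.1 : (k A)ˣ) : k A)) * ((a.1 : (k A)ˣ) : k A) = 0 := by linear_combination h0
    exact c.ne_one (sub_eq_zero.mp ((mul_eq_zero.mp this).resolve_right a.ne_zero)).symm
  have hp' : (p : A) = 1 - u := by linear_combination hp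
  have hq' : (q : A) = 1 - v := by linear_combination hq
  have pp : π (p : A) = 1 - ((a.1 : (k A)ˣ) : k A) := by rw [hp', map_sub, map_one, hu]
  have pq : π (q : A) = 1 - ((b.1 : (k A)ˣ) : k A) := by rw [hq', map_sub, map_one, hv]
  have p0 : π (p : A) ≠ 0 := pi_unit p
  have q0 : π (q : A) ≠ 0 := pi_unit q
  rw [pp] at p0
  rw [pq] at q0
  have iu : (u : A) * ((u⁻¹ : Aˣ) : A) = 1 := Units.mul_inv u
  have iq : (q : A) * ((q⁻¹ : Aˣ) : A) = 1 := Units.mul_inv q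
  have c1 := lam_xi0 hf c (v * u⁻¹) (r * u⁻¹)
    (by simp only [Units.val_mul]; rw [hr]; linear_combination iu)
    (by rw [Units.val_mul, map_mul, pi_inv, hu, hv, ← hc, mul_inv_cancel_right₀ a.ne_zero])
  have c2 := lam_xi0 hf d (p * v * u⁻¹ * q⁻¹) (r * u⁻¹ * q⁻¹)
    (by
      simp only [Units.val_mul]
      linear_combination (((u⁻¹ : Aˣ) : A) * ((q⁻¹ : Aˣ) : A)) * (v * hp' + hr - u * hq') +
        (q * ((q⁻¹ : Aˣ) : A)) * iu + iq)
    (by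
      simp only [Units.val_mul, map_mul, pi_inv]
      rw [hu, hv, pp, pq]
      simp only [Units.val_inv_eq_inv_val] at hd
      have a0 := a.ne_zero
      have b0 := b.ne_zero
      have b1 : 1 - (((b.1 : (k A)ˣ) : k A))⁻¹ ≠ 0 :=
        sub_ne_zero.mpr fun h => b.ne_one (inv_eq_one.mp h.symm)
      apply mul_right_cancel₀ b1
      rw [hd]
      field_simp
      ring)
  have c3 := lam_xi0 hf e (p * q⁻¹) (r * q⁻¹)
    (by
      simp only [Units.val_mul]
      linear_combination ((q⁻¹ : Aˣ) : A) * (hp' + hr - hq') + iq)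
    (by rw [Units.val_mul, map_mul, pi_inv, pp, pq, ← he, mul_inv_cancel_right₀ q0])
  simp only [map_add, map_sub]
  rw [lam_xi0 hf a u p hp hu, lam_xi0 hf b v q hq hv, c1, c2, c3]
  exact (om_props hf).1.five u v p q r

variable (A κ) in
/-- The homomorphism `P(k)[1/2] → H₂(Γ₀, ℤ[1/2])`. -/
def xi : Pgrp κ (k A) →ₗ[κ] H κ (Gam A) 2 :=
  Submodule.liftQ _ (xi0 A κ) (Submodule.span_le.mpr fun _ hx => xi0_rel hx)

theorem lam_xi {f : Gam A → Gam A → CharacterModule κ} (hf : IsCoc f) (a : WU (k A)) (u t : Aˣ)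
    (h : (u : A) + t = 1) (ha : π (u : A) = ((a.1 : (k A)ˣ) : k A)) :
    lam hf (xi A κ (pcl κ a)) = om f u t := lam_xi0 hf a u t h ha

theorem lam_xi' {f : Gam A → Gam A → CharacterModule κ} (hf : IsCoc f) (a : WU (k A)) :
    lam hf (xi A κ (pcl κ a)) = om f (ulift A a) (un (1 - (ulift A a : A))) :=
  lam_xi hf a _ _ (one_sub_lift (by rw [ulift_spec]; exact a.ne_one)) (ulift_spec a)

theorem pC_le_ker : pC κ (k A) ≤ LinearMap.ker (xi A κ) := by
  rw [pC, Submodule.span_le]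
  rintro _ ⟨a, rfl⟩
  apply eq_zero_of_lam
  intro f hf
  have h := one_sub_lift (u := (ulift A a : A)) (by rw [ulift_spec]; exact a.ne_one)
  rw [map_add, map_add, lam_xi' hf a,
    lam_xi hf (WU.oneSub a) (un (1 - (ulift A a : A))) (ulift A a) (by rw [add_comm]; exact h) ?_,
    (om_props hf).1.skew, neg_add_cancel]
  have h2 := congrArg π h
  rw [map_add, map_one, ulift_spec] at h2
  change _ = ((WU.usub a : (k A)ˣ) : k A)
  rw [WU.usub_coe]
  linear_combination h2

/-- A functional on `P(k)[1/2]` killing `c_k` comes from a cocycle on `Γ₀`: its pull-back to `ℚ`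
satisfies the equations of the dilogarithm, hence is of the form `Φ(r, 1 - r)` with `Φ`
alternating, and `Φ` restricted to the units of `A` is the commutator form of a cocycle. -/
theorem exists_coc_char (χ : Pgrp κ (k A) →ₗ[κ] CharacterModule κ) (hχ : ∀ x ∈ pC κ (k A), χ x = 0) :
    ∃ (f : Gam A → Gam A → CharacterModule κ) (hf : IsCoc f), (lam hf).comp (xi A κ) = χ := by
  have hX := isBlochF κ bigF_k χ hχ
  obtain ⟨Φ, hΦ, hD⟩ := (isBloch_Dp hX).exists_alt
  let η : Aˣ → Aˣ → CharacterModule κ := fun u v => hf (Φ (ι (u : A)) (ι (v : A)))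
  have hη : IsAlt η := by
    refine ⟨fun u u' v => ?_, fun u v => ?_⟩
    · change hf _ = hf _ + hf _
      rw [Units.val_mul, map_mul, hΦ.mul _ _ _ (iota_unit u) (iota_unit u'), hf_add]
    · change hf _ = - hf _
      rw [hΦ.skew, hf_neg]
  have hηX : ∀ u t : Aˣ, (u : A) + t = 1 → η u t = hf (χ (pX κ (π (u : A)))) := by
    intro u t hut
    have : ι (t : A) = 1 - ι (u : A) := by
      rw [← map_one (ι : A →+* ℚ), ← hut, map_add]; ring
    change hf _ = _
    rw [this, ← hD, Dp_iota]
  obtain ⟨f, hf', hom⟩ := exists_coc_of_alt hη (fun u t u₂ t₂ h h₂ hpi => by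
    rw [hηX u t h, hηX u₂ t₂ h₂, hpi])
  refine ⟨f, hf', WU_ext_lin κ fun a => ?_⟩
  rw [LinearMap.comp_apply, lam_xi' hf' a, hom,
    hηX _ _ (one_sub_lift (by rw [ulift_spec]; exact a.ne_one)), hf_add_self, ulift_spec, pX_coe]

theorem ker_xi : LinearMap.ker (xi A κ) = pC κ (k A) := by
  apply le_antisymm _ pC_le_ker
  intro y hy
  apply char_separate
  intro χ hχ
  obtain ⟨f, hf, rfl⟩ := exists_coc_char χ hχ
  rw [LinearMap.comp_apply, LinearMap.mem_ker.mp hy, map_zero]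

theorem range_xi : LinearMap.range (xi A κ) = LinearMap.ker (Hmap κ (Gam A).subtype 2) := by
  apply le_antisymm
  · have : (Hmap κ (Gam A).subtype 2).comp (xi A κ) = 0 := by
      apply WU_ext_lin
      intro a
      apply eq_zero_of_lam
      intro F hF
      rw [LinearMap.comp_apply, lam_Hmap _ hF (hF.comap _), lam_xi']
      exact om_SL2 hF _ _ (one_sub_lift (by rw [ulift_spec]; exact a.ne_one))
    rintro _ ⟨x, rfl⟩
    exact DFunLike.congr_fun this x
  · intro y hy
    apply char_separate
    intro l hl
    obtain ⟨f, hf, rfl⟩ := exists_lam l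
    obtain ⟨F, hF, hcob⟩ := exists_coc_ext hf (fun u t hut => by
      have u1 : π (u : A) ≠ 1 := by
        intro h
        have := congrArg π hut
        rw [map_add, h, map_one] at this
        exact pi_unit t (by linear_combination this)
      rw [← lam_xi hf (wmk (π (u : A)) (pi_unit u) u1) u t hut rfl]
      exact hl _ ⟨_, rfl⟩)
    rw [lam_congr hf (hF.comap (Gam A).subtype) hcob, ← lam_Hmap _ hF, LinearMap.mem_ker.mp hy, map_zero]

theorem surj_Hmap : Function.Surjective (Hmap κ (Gam A).subtype 2) := by
  intro y
  change y ∈ LinearMap.range (Hmap κ (Gam A).subtype 2)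
  apply char_separate
  intro l hl
  obtain ⟨F, hF, rfl⟩ := exists_lam l
  have h0 : lam (hF.comap (Gam A).subtype) = 0 := by
    apply LinearMap.ext
    intro x
    rw [← lam_Hmap _ hF]
    exact hl _ ⟨x, rfl⟩
  rw [lam_eq_zero_iff] at h0
  have := (lam_eq_zero_iff hF).mpr (isCob_of_res hF h0)
  rw [this, LinearMap.zero_apply]

variable (A κ) in
/-- The surjection of `P(k)[1/2]` onto the kernel of `H₂(Γ₀) → H₂(SL₂)`. -/
def xiK : Pgrp κ (k A) →+ LinearMap.ker (Hmap κ (Gam A).subtype 2) :=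
  ((xi A κ).codRestrict _ (fun x => by rw [← range_xi]; exact ⟨x, rfl⟩)).toAddMonoidHom

theorem xiK_surj : Function.Surjective (xiK A κ) := by
  rintro ⟨y, hy⟩
  rw [← range_xi] at hy
  obtain ⟨x, rfl⟩ := hy
  exact ⟨x, rfl⟩

theorem xiK_ker : (xiK A κ).ker = (pC κ (k A)).toAddSubgroup := by
  ext x
  rw [Submodule.mem_toAddSubgroup, ← ker_xi, LinearMap.mem_ker, AddMonoidHom.mem_ker]
  exact Subtype.ext_iff

theorem ker_equiv : Nonempty (LinearMap.ker (Hmap κ (Gam A).subtype 2) ≃+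
    (Pgrp κ (k A) ⧸ (pC κ (k A)).toAddSubgroup)) := by
  rw [← xiK_ker]
  exact ⟨(QuotientAddGroup.quotientKerEquivOfSurjective _ xiK_surj).symm⟩

theorem ker_equiv' (h3 : p A % 3 = 1) :
    Nonempty (LinearMap.ker (Hmap κ (Gam A).subtype 2) ≃+ Pgrp κ (k A)) := by
  -- a primitive cube root of unity `ω` gives the sixth root of unity `-ω`
  obtain ⟨ζ, hζ⟩ : ∃ ζ : k A, ζ ^ 2 - ζ + 1 = 0 := by
    have hd : 3 ∣ Fintype.card (k A)ˣ := by
      rw [ZMod.card_units]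
      omega
    have : Fact (Nat.Prime 3) := ⟨Nat.prime_three⟩
    obtain ⟨w, hw⟩ := exists_prime_orderOf_dvd_card 3 hd
    have h1 : ((w : (k A)ˣ) : k A) ^ 3 = 1 := by
      rw [← Units.val_pow_eq_pow_val, ← hw, pow_orderOf_eq_one, Units.val_one]
    have h2 : ((w : (k A)ˣ) : k A) - 1 ≠ 0 := by
      intro h
      have : w = 1 := Units.ext (by rw [Units.val_one]; exact sub_eq_zero.mp h)
      rw [this, orderOf_one] at hw
      omega
    refine ⟨-w, ?_⟩
    have h4 : ((w : k A) - 1) * ((w : k A) ^ 2 + w + 1) = 0 := by linear_combination h1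
    linear_combination (mul_eq_zero.mp h4).resolve_left h2
  have hinj : Function.Injective (xiK A κ) := by
    rw [← AddMonoidHom.ker_eq_bot_iff, xiK_ker, pC_eq_bot κ bigF_k ζ hζ]
    rfl
  exact ⟨(AddEquiv.ofBijective (xiK A κ) ⟨hinj, xiK_surj⟩).symm⟩

end

end

/-! ### The localization of `ℤ` at `p` -/

section
variable {p : ℕ} {S : Submonoid ℤ}

theorem int_castZMod_unit (hp : p.Prime) (hS : ∀ x : ℤ, x ∈ S ↔ ¬ (p : ℤ) ∣ x) (y : S) :
    IsUnit (Int.castRingHom (ZMod p) y) := by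
  have : Fact p.Prime := ⟨hp⟩
  rw [isUnit_iff_ne_zero]
  intro h
  exact (hS y).mp y.2 ((ZMod.intCast_zmod_eq_zero_iff_dvd _ p).mp h)

theorem int_castRat_unit (hS : ∀ x : ℤ, x ∈ S ↔ ¬ (p : ℤ) ∣ x) (y : S) :
    IsUnit (Int.castRingHom ℚ y) := by
  rw [isUnit_iff_ne_zero]
  intro h
  have h0 : (y : ℤ) = 0 := by simpa using h
  exact (hS y).mp y.2 (h0 ▸ dvd_zero _)

/-- The reduction map `ℤ_(p) → 𝔽_p`. -/
def locPi (hp : p.Prime) (hS : ∀ x : ℤ, x ∈ S ↔ ¬ (p : ℤ) ∣ x) : Localization S →+* ZMod p :=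
  IsLocalization.lift (M := S) (int_castZMod_unit hp hS)

/-- The embedding `ℤ_(p) → ℚ`. -/
def locIota (hS : ∀ x : ℤ, x ∈ S ↔ ¬ (p : ℤ) ∣ x) : Localization S →+* ℚ :=
  IsLocalization.lift (M := S) (int_castRat_unit hS)

theorem loc_surj (a : Localization S) :
    ∃ (x : ℤ) (s : S), a * algebraMap ℤ (Localization S) s = algebraMap ℤ (Localization S) x := by
  obtain ⟨⟨x, s⟩, h⟩ := IsLocalization.surj S a
  exact ⟨x, s, h⟩

theorem locPi_alg (hp : p.Prime) (hS : ∀ x : ℤ, x ∈ S ↔ ¬ (p : ℤ) ∣ x) (x : ℤ) :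
    locPi hp hS (algebraMap ℤ (Localization S) x) = (x : ZMod p) :=
  IsLocalization.lift_eq _ _

theorem locIota_alg (hS : ∀ x : ℤ, x ∈ S ↔ ¬ (p : ℤ) ∣ x) (x : ℤ) :
    locIota hS (algebraMap ℤ (Localization S) x) = (x : ℚ) :=
  IsLocalization.lift_eq _ _

theorem locPi_eq_zero (hp : p.Prime) (hS : ∀ x : ℤ, x ∈ S ↔ ¬ (p : ℤ) ∣ x)
    {a : Localization S} {x : ℤ} {s : S}
    (h : a * algebraMap ℤ (Localization S) s = algebraMap ℤ (Localization S) x) :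
    locPi hp hS a = 0 ↔ (p : ℤ) ∣ x := by
  have : Fact p.Prime := ⟨hp⟩
  have h1 := congrArg (locPi hp hS) h
  rw [map_mul, locPi_alg, locPi_alg] at h1
  have hs : ((s : ℤ) : ZMod p) ≠ 0 := (int_castZMod_unit hp hS s).ne_zero
  rw [← ZMod.intCast_zmod_eq_zero_iff_dvd, ← h1, mul_eq_zero, or_iff_left hs]

theorem loc_unit_iff (hp : p.Prime) (hS : ∀ x : ℤ, x ∈ S ↔ ¬ (p : ℤ) ∣ x) (a : Localization S) :
    IsUnit a ↔ locPi hp hS a ≠ 0 := by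
  have : Fact p.Prime := ⟨hp⟩
  constructor
  · intro h
    exact (h.map (locPi hp hS)).ne_zero
  · intro h
    obtain ⟨x, s, hx⟩ := loc_surj a
    rw [Ne, locPi_eq_zero hp hS hx, ← hS] at h
    have hu : IsUnit (algebraMap ℤ (Localization S) x) :=
      IsLocalization.map_units (Localization S) (⟨x, h⟩ : S)
    rw [← hx] at hu
    exact isUnit_of_mul_isUnit_left hu

theorem locIota_inj (hS : ∀ x : ℤ, x ∈ S ↔ ¬ (p : ℤ) ∣ x) :
    Function.Injective (locIota hS) := by
  rw [injective_iff_map_eq_zero]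
  intro a ha
  obtain ⟨x, s, hx⟩ := loc_surj a
  have h1 := congrArg (locIota hS) hx
  rw [map_mul, ha, zero_mul, locIota_alg] at h1
  have h0 : x = 0 := by exact_mod_cast h1.symm
  rw [h0, map_zero] at hx
  exact (IsLocalization.map_units (Localization S) s).mul_left_eq_zero.mp hx

theorem loc_cyc (a b : Localization S) :
    ∃ (c : Localization S) (m n : ℤ), a = m * c ∧ b = n * c := by
  obtain ⟨x, s, hx⟩ := loc_surj a
  obtain ⟨y, t, hy⟩ := loc_surj b
  obtain ⟨u, hu⟩ := IsLocalization.map_units (Localization S) s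
  obtain ⟨v, hv⟩ := IsLocalization.map_units (Localization S) t
  rw [← hu] at hx
  rw [← hv] at hy
  -- both fractions are integer multiples of `gcd / (s t)`
  obtain ⟨m, hm⟩ := gcd_dvd_left (x * (t : ℤ)) (y * (s : ℤ))
  obtain ⟨n, hn⟩ := gcd_dvd_right (x * (t : ℤ)) (y * (s : ℤ))
  generalize gcd (x * (t : ℤ)) (y * (s : ℤ)) = g at hm hn
  have hm' := congrArg (algebraMap ℤ (Localization S)) hm
  have hn' := congrArg (algebraMap ℤ (Localization S)) hn
  rw [map_mul, map_mul, ← hv, ← hx] at hm'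
  rw [map_mul, map_mul, ← hu, ← hy] at hn'
  refine ⟨algebraMap ℤ (Localization S) g * ((u⁻¹ : (Localization S)ˣ) : Localization S) *
    ((v⁻¹ : (Localization S)ˣ) : Localization S), m, n, ?_, ?_⟩
  · have e : (m : Localization S) = algebraMap ℤ (Localization S) m := by simp
    rw [e]
    calc a = (a * u * v) * ((u⁻¹ : (Localization S)ˣ) : Localization S) *
          ((v⁻¹ : (Localization S)ˣ) : Localization S) := by
            rw [mul_assoc a, mul_comm (u : Localization S), ← mul_assoc, Units.mul_inv_cancel_right,
              Units.mul_inv_cancel_right]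
      _ = _ := by rw [hm']; ring
  · have e : (n : Localization S) = algebraMap ℤ (Localization S) n := by simp
    rw [e]
    calc b = (b * v * u) * ((u⁻¹ : (Localization S)ˣ) : Localization S) *
          ((v⁻¹ : (Localization S)ˣ) : Localization S) := by
            rw [Units.mul_inv_cancel_right, Units.mul_inv_cancel_right]
      _ = _ := by rw [hn']; ring

/-- `ℤ_(p)` is one of the rings treated above. -/
abbrev locLocR (hp : p.Prime) (hp11 : 11 ≤ p) (hS : ∀ x : ℤ, x ∈ S ↔ ¬ (p : ℤ) ∣ x) :
    LocR (Localization S) where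
  p := p
  hp := hp
  p11 := hp11
  π := locPi hp hS
  unit_iff := loc_unit_iff hp hS
  ι := locIota hS
  ι_inj := locIota_inj hS
  cyc := loc_cyc

theorem span_p_eq_ker (hp : p.Prime) (hS : ∀ x : ℤ, x ∈ S ↔ ¬ (p : ℤ) ∣ x) :
    Ideal.span {(p : Localization S)} = RingHom.ker (locPi hp hS) := by
  ext a
  rw [Ideal.mem_span_singleton, RingHom.mem_ker]
  constructor
  · rintro ⟨b, rfl⟩
    rw [map_mul, map_natCast, ZMod.natCast_self, zero_mul]
  · intro h
    obtain ⟨x, s, hx⟩ := loc_surj a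
    obtain ⟨y, rfl⟩ := (locPi_eq_zero hp hS hx).mp h
    refine ((IsLocalization.map_units (Localization S) s).dvd_mul_right).mp ?_
    rw [hx, map_mul]
    exact ⟨algebraMap ℤ (Localization S) y, by simp⟩

end

/-- Let `p ≥ 11` be a prime, `ℤ_(p)` the localization of `ℤ` at `p` (the localization at the
submonoid of integers not divisible by `p`), and `Γ₀ := {(a b; c d) ∈ SL₂(ℤ_(p)) : c ∈ pℤ_(p)}`.
Then `H₂(Γ₀, ℤ[1/2]) → H₂(SL₂(ℤ_(p)), ℤ[1/2])` (induced by inclusion) is surjective, and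
its kernel is isomorphic to `P(𝔽_p)[1/2]/⟨c_{𝔽_p}⟩` if `p ≡ 2 (mod 3)`, and to
`P(𝔽_p)[1/2]` if `p ≢ 2 (mod 3)`.  (Here `⟨c_{𝔽_p}⟩` is the subgroup of `P(𝔽_p)[1/2]`
generated by the elements `[a] + [1-a]`, `a ∈ W_{𝔽_p}`, all of which equal the constant
`c_{𝔽_p}`.) -/
theorem stmt19
    (p : ℕ) (hp : p.Prime) (hp11 : 11 ≤ p)
    (S : Submonoid ℤ) (hS : ∀ x : ℤ, x ∈ S ↔ ¬ (p : ℤ) ∣ x) :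
    Function.Surjective
      (GroupHomology.Hmap Half
        (Gamma0 (Ideal.span {(p : Localization S)})).subtype 2) ∧
    (p % 3 = 2 →
      Nonempty
        (↥(LinearMap.ker (GroupHomology.Hmap Half
            (Gamma0 (Ideal.span {(p : Localization S)})).subtype 2)) ≃+
          (Pgrp Half (ZMod p) ⧸
            (Submodule.span Half
              {x : Pgrp Half (ZMod p) | ∃ a : WU (ZMod p),
                x = pcl Half a + pcl Half (WU.oneSub a)}).toAddSubgroup))) ∧
    (p % 3 ≠ 2 →
      Nonempty
        (↥(LinearMap.ker (GroupHomology.Hmap Half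
            (Gamma0 (Ideal.span {(p : Localization S)})).subtype 2)) ≃+
          Pgrp Half (ZMod p))) := by
  let _ := locLocR hp hp11 hS
  rw [span_p_eq_ker hp hS]
  refine ⟨surj_Hmap (A := Localization S), fun _ => ker_equiv (A := Localization S), fun h => ?_⟩
  refine ker_equiv' (A := Localization S) ?_
  -- a prime `p ≥ 11` is not divisible by `3`
  have h0 : p % 3 ≠ 0 := fun h0 => by
    have h3 : 3 = p := (Nat.prime_dvd_prime_iff_eq Nat.prime_three hp).mp (Nat.dvd_of_mod_eq_zero h0)
    omega
  change p % 3 = 1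
  omega
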